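/- Let p = c² − 32d² be a prime with p ≡ 1 (mod 8), c,d > 0, π = c + 4d√2, L = ℚ(√2, √π, √p, i), k* = ℚ(√2, √p, i), and let h = h₂(ℚ(√(−π))) be the 2-part of the class number of ℚ(√(−π)). Then h₂(L) = (h/2)² · h₂(k*)/2 if (2/p)₄ = (p/2)₄ = 1, and h₂(L) = h₂(k*)/2 otherwise. -/

import Mathlib

/-!
The theorem is a comparison of class numbers by means of zeta functions. Write `k = ℚ(√2)`,
`F = ℚ(√2, √p)`, `E = ℚ(√2, √π)`, `P = ℚ(√2, √π, √p)`, `K = ℚ(√(-π))`, `N = F(√(-π))`,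
`π' = c - 4d√2` and `K' = ℚ(√(-π'))`, which is isomorphic to `K`. Then `L / F` and `N / k` are Klein
four extensions, with intermediate fields `P, k*, N` and `F, K, K'`. Comparing Euler factors
(`v4_zeta`) and eliminating the residue of `N` gives, for the residues `ρ` of the Dedekind zeta
functions at `1`,
`ρ_L ρ_F ρ_k² = ρ_P ρ_{k*} ρ_K²`.

Pairing each of the CM fields `L, k*, K` with its maximal real subfield `P, F, k`, the analytic class
number formula (`cm_residue`) eliminates the regulators: only class numbers, discriminants and the
orders `mm X` of the groups `{u / ū}` for units `u` remain. The result is an identity of natural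
numbers (`nat_rel`), of which only the 2-adic valuation `v` is used (`master`). The powers of two in
the discriminants follow from `discr_odd`, since all relevant quadratic extensions but those by `i`
can be generated by the square root of an element that is odd and `≡ 1 (mod 4)`. Moreover
`v(mm K) = 0`, `v(mm k*) = 2`, and `v(mm L)` is `2` if `c ≡ 1 (mod 4)` and `3` if `c ≡ 3 (mod 4)`.
Finally `c ≡ 1 (mod 4)` exactly when `(2/p)₄ = (p/2)₄` (`cong_equal`).

The remaining class numbers are controlled by Chevalley's ambiguous class number formula for
quadratic extensions (`chevalley`, `ram_bound`).

* If `c ≡ 1 (mod 4)`, then `P / F` is unramified and the 2-class group of `F` is cyclic, so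
  `h₂(P) = h₂(F) / 2` (`unram_class`) and `v(h_L) + 3 = v(h_{k*}) + 2 v(h_K)` (`main_eq`). If both
  symbols are `-1`, then `v(h_K) = 1` (`hK_two`), which gives `h₂(L) = h₂(k*) / 2`. The class numbers of
  `K` and `k*` are even, because `K(i) = K(√π)` and `L / k*` are unramified, so that halving is exact.
* If `c ≡ 3 (mod 4)`, then `F, E, P, K` have odd class numbers and `v(h_L) + 1 = v(h_{k*})`
  (`main_ne`).
-/

/- STATEMENT 15: Let p = c² − 32d² be prime, p ≡ 1 (mod 8), c,d > 0, π = c + 4d√2,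
L = ℚ(√2, √π, √p, i), k* = ℚ(√2, √p, i), h = h₂(ℚ(√(−π))). Then
h₂(L) = (h/2)²·h₂(k*)/2 if (2/p)₄ = (p/2)₄ = 1, and h₂(L) = h₂(k*)/2 otherwise,
where h₂ denotes the order of the 2-Sylow subgroup of the class group. -/

open Complex NumberField IntermediateField nonZeroDivisors

noncomputable section

/-- The real number π = c + 4d√2. -/
def piR (c d : ℤ) : ℝ := (c : ℝ) + 4 * (d : ℝ) * Real.sqrt 2

/-- ℚ(√(−π)) = ℚ(z) as a subfield of ℂ, where z² = −π. -/
def Qmpi (z : ℂ) : IntermediateField ℚ ℂ := ℚ⟮z⟯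

/-- k* = ℚ(√2, √p, i) as a subfield of ℂ. -/
def kstar (p : ℕ) : IntermediateField ℚ ℂ :=
  ℚ⟮(Real.sqrt 2 : ℂ), (Real.sqrt p : ℂ), (Complex.I : ℂ)⟯

/-- L = ℚ(√2, √π, √p, i) as a subfield of ℂ. -/
def Lfield (p : ℕ) (c d : ℤ) : IntermediateField ℚ ℂ :=
  ℚ⟮(Real.sqrt 2 : ℂ), (Real.sqrt (piR c d) : ℂ), (Real.sqrt p : ℂ), (Complex.I : ℂ)⟯

set_option linter.all false

/-! ### The Dedekind zeta function on the real axis -/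

namespace H15
open Filter Topology

section Zeta
variable (K : Type*) [Field K] [NumberField K]

/-- The summand `N(I)^(-s)` of the Dedekind zeta function; the zero ideal contributes `0`
when `s ≠ 0`. -/
def nrm (s : ℝ) (I : Ideal (𝓞 K)) : ℝ := (Ideal.absNorm I : ℝ) ^ (-s)

/-- The Dedekind zeta function on the real axis as a sum over ideals. -/
def Zr (s : ℝ) : ℝ := ∑' I : Ideal (𝓞 K), nrm K s I

variable {K}

lemma nrm_nonneg (s : ℝ) (I : Ideal (𝓞 K)) : 0 ≤ nrm K s I := by
  unfold nrm; positivity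

lemma nrm_mul (s : ℝ) (I J : Ideal (𝓞 K)) : nrm K s (I * J) = nrm K s I * nrm K s J := by
  unfold nrm
  rw [map_mul, Nat.cast_mul, Real.mul_rpow (by positivity) (by positivity)]

lemma nrm_top (s : ℝ) : nrm K s ⊤ = 1 := by
  unfold nrm; simp

lemma nrm_bot {s : ℝ} (hs : s ≠ 0) : nrm K s ⊥ = 0 := by
  unfold nrm; simp [hs]

/-- Absolute convergence for `s > 1` of the Dirichlet series counting ideals by norm. -/
lemma lseries_summable {s : ℝ} (hs : 1 < s) :
    LSeriesSummable (fun n ↦ ((Nat.card {I : Ideal (𝓞 K) // Ideal.absNorm I = n} : ℝ) : ℂ)) s := by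
  have key : Tendsto (fun n : ℕ ↦ (∑ k ∈ Finset.Icc 1 n,
      (Nat.card {I : Ideal (𝓞 K) // Ideal.absNorm I = k} : ℝ)) / (n : ℝ)) atTop
      (𝓝 (dedekindZeta_residue K)) := by
    refine ((Ideal.tendsto_norm_le_div_atTop₀ K).comp tendsto_natCast_atTop_atTop).congr fun n ↦ ?_
    simp only [Function.comp_apply, Nat.cast_le, ← Nat.cast_sum]
    congr
    rw [← add_left_inj 1, ← Ideal.card_norm_le_eq_card_norm_le_add_one,
      show Finset.Icc 1 n = Finset.Ioc 0 n from Finset.Icc_succ_left_eq_Ioc _ _,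
      show 1 = Nat.card {I : Ideal (𝓞 K) // Ideal.absNorm I = 0} by
        simp [Ideal.absNorm_eq_zero_iff],
      Finset.sum_Ioc_add_eq_sum_Icc (n.zero_le),
      ← Finset.card_preimage_eq_sum_card_image_eq
        (fun k _ ↦ Ideal.finite_setOfPred_absNorm_eq k)]
    simp [Set.coe_eq_subtype]
  refine LSeriesSummable_of_sum_norm_bigO_and_nonneg ?_ (fun _ ↦ Nat.cast_nonneg _)
    zero_le_one hs
  exact Asymptotics.isBigO_atTop_natCast_rpow_of_tendsto_div_rpow (a := dedekindZeta_residue K) (by simpa)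

lemma lterm {s : ℝ} (hs : s ≠ 0) (n : ℕ) :
    LSeries.term (fun n ↦ ((Nat.card {I : Ideal (𝓞 K) // Ideal.absNorm I = n} : ℝ) : ℂ)) s n
      = ((∑' I : {I : Ideal (𝓞 K) // Ideal.absNorm I = n}, nrm K s I : ℝ) : ℂ) := by
  have : Finite {I : Ideal (𝓞 K) // Ideal.absNorm I = n} :=
    Ideal.finite_setOfPred_absNorm_eq n
  have := Fintype.ofFinite {I : Ideal (𝓞 K) // Ideal.absNorm I = n}
  have h1 : ∀ I : {I : Ideal (𝓞 K) // Ideal.absNorm I = n}, nrm K s I = (n : ℝ) ^ (-s) := by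
    rintro ⟨I, hI⟩; simp [nrm, hI]
  simp only [h1, tsum_fintype, Finset.sum_const, Finset.card_univ]
  rcases Nat.eq_zero_or_pos n with rfl | hn
  · simp [hs]
  · rw [LSeries.term_of_ne_zero hn.ne', Nat.card_eq_fintype_card, nsmul_eq_mul,
      div_eq_mul_inv, Real.rpow_neg (by positivity)]
    push_cast
    rw [Complex.ofReal_cpow (by positivity)]
    simp

lemma nrm_summable {s : ℝ} (hs : 1 < s) : Summable (nrm K s) := by
  rw [← (Equiv.sigmaFiberEquiv (Ideal.absNorm (S := 𝓞 K))).summable_iff]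
  refine (summable_sigma_of_nonneg (fun x ↦ nrm_nonneg _ _)).mpr ?_
  have hs0 : s ≠ 0 := by linarith
  constructor
  · intro n
    have : Finite {I : Ideal (𝓞 K) // Ideal.absNorm I = n} :=
      Ideal.finite_setOfPred_absNorm_eq n
    exact Summable.of_finite
  · have h := lseries_summable (K := K) hs
    unfold LSeriesSummable at h
    rw [funext (lterm hs0)] at h
    exact Complex.summable_ofReal.mp h

lemma dedekindZeta_eq {s : ℝ} (hs : 1 < s) : dedekindZeta K s = (Zr K s : ℂ) := by
  have hs0 : s ≠ 0 := by linarith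
  have h1 : dedekindZeta K s = ∑' n, LSeries.term
      (fun n ↦ ((Nat.card {I : Ideal (𝓞 K) // Ideal.absNorm I = n} : ℝ) : ℂ)) s n := by
    simp [dedekindZeta, LSeries]
  rw [h1, funext (lterm hs0), ← Complex.ofReal_tsum]
  congr 1
  have h2 := (Equiv.sigmaFiberEquiv (Ideal.absNorm (S := 𝓞 K))).summable_iff.mpr
    (nrm_summable (K := K) hs)
  unfold Zr
  rw [← (Equiv.sigmaFiberEquiv (Ideal.absNorm (S := 𝓞 K))).tsum_eq]
  exact h2.tsum_sigma.symm

variable (K) in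
/-- The residue of the Dedekind zeta function, read off along the real axis from the right. -/
lemma tendsto_Zr : Tendsto (fun s : ℝ ↦ (s - 1) * Zr K s) (𝓝[>] 1)
    (𝓝 (dedekindZeta_residue K)) := by
  have h := tendsto_sub_one_mul_dedekindZeta_nhdsGT K
  have h2 : Tendsto (fun s : ℝ ↦ (((s - 1) * Zr K s : ℝ) : ℂ)) (𝓝[>] 1)
      (𝓝 ((dedekindZeta_residue K : ℝ) : ℂ)) := by
    refine h.congr' ?_
    filter_upwards [self_mem_nhdsWithin] with s hs
    rw [dedekindZeta_eq hs]; push_cast; rfl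
  have h3 := (Complex.continuous_re.tendsto _).comp h2
  simpa [Function.comp_def] using h3

lemma Zr_pos {s : ℝ} (hs : 1 < s) : 0 < Zr K s := by
  have := (nrm_summable (K := K) hs).tsum_pos (nrm_nonneg s) ⊤ (by rw [nrm_top]; norm_num)
  exact this

open IsDedekindDomain Classical in
/-- Removing finitely many Euler factors: the sum over the ideals prime to all `P ∈ T`. Letting `T` grow
gives the Euler product. -/
lemma sum_coprime {s : ℝ} (hs : 1 < s) (T : Finset (HeightOneSpectrum (𝓞 K))) :
    ∑' I : Ideal (𝓞 K), (if ∀ P ∈ T, ¬ P.asIdeal ∣ I then nrm K s I else 0) =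
      Zr K s * ∏ P ∈ T, (1 - nrm K s P.asIdeal) := by
  have hsum : ∀ T : Finset (HeightOneSpectrum (𝓞 K)),
      Summable fun I : Ideal (𝓞 K) ↦ (if ∀ P ∈ T, ¬ P.asIdeal ∣ I then nrm K s I else 0) := by
    intro T
    refine Summable.of_nonneg_of_le (fun I ↦ ?_) (fun I ↦ ?_) (nrm_summable (K := K) hs)
    · split_ifs; exacts [nrm_nonneg _ _, le_rfl]
    · split_ifs; exacts [le_rfl, nrm_nonneg _ _]
  induction T using Finset.induction_on with
  | empty => simp [Zr]
  | insert Q T hQ ih =>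
    rw [Finset.prod_insert hQ]
    have hinj : Function.Injective (fun I : Ideal (𝓞 K) ↦ Q.asIdeal * I) :=
      mul_right_injective₀ Q.ne_bot
    have key : ∑' I : Ideal (𝓞 K), (if ∀ P ∈ insert Q T, ¬ P.asIdeal ∣ I then nrm K s I else 0)
        = ∑' I : Ideal (𝓞 K), (if ∀ P ∈ T, ¬ P.asIdeal ∣ I then nrm K s I else 0)
        - ∑' I : Ideal (𝓞 K), (if (∀ P ∈ T, ¬ P.asIdeal ∣ I) ∧ Q.asIdeal ∣ I
            then nrm K s I else 0) := by
      rw [eq_sub_iff_add_eq, ← Summable.tsum_add (hsum _)]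
      · refine tsum_congr fun I ↦ ?_
        by_cases h1 : ∀ P ∈ T, ¬ P.asIdeal ∣ I
        · by_cases h2 : Q.asIdeal ∣ I <;> simp [h1, h2]
        · simp [h1]
      · refine Summable.of_nonneg_of_le (fun I ↦ ?_) (fun I ↦ ?_) (nrm_summable (K := K) hs)
        · split_ifs; exacts [nrm_nonneg _ _, le_rfl]
        · split_ifs; exacts [le_rfl, nrm_nonneg _ _]
    have key2 : ∑' I : Ideal (𝓞 K), (if (∀ P ∈ T, ¬ P.asIdeal ∣ I) ∧ Q.asIdeal ∣ I
            then nrm K s I else 0) = nrm K s Q.asIdeal *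
        ∑' I : Ideal (𝓞 K), (if ∀ P ∈ T, ¬ P.asIdeal ∣ I then nrm K s I else 0) := by
      rw [← hinj.tsum_eq, ← tsum_mul_left]
      · refine tsum_congr fun I ↦ ?_
        have : (∀ P ∈ T, ¬ P.asIdeal ∣ Q.asIdeal * I) ↔ ∀ P ∈ T, ¬ P.asIdeal ∣ I := by
          refine forall₂_congr fun P hP ↦ not_congr ⟨fun h ↦ ?_, fun h ↦ Dvd.dvd.mul_left h _⟩
          rcases P.prime.dvd_or_dvd h with h | h
          · exfalso
            apply hQ
            have h3 : Q.asIdeal ≤ P.asIdeal := Ideal.dvd_iff_le.mp h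
            have h4 := Q.isMaximal.eq_of_le P.isPrime.ne_top h3
            rwa [HeightOneSpectrum.ext h4]
          · exact h
        simp only [this, dvd_mul_right, and_true, nrm_mul, mul_ite, mul_zero]
      · intro I hI
        simp only [Function.mem_support, ne_eq, ite_eq_right_iff, not_forall] at hI
        obtain ⟨⟨-, J, rfl⟩, -⟩ := hI
        exact ⟨J, rfl⟩
    rw [key, key2, ih]; ring

open IsDedekindDomain Classical in
/-- The Euler product, in the form `∏ (1 - N(P)^(-s)) = 1 / ζ(s)`. -/
lemma hasProd_euler {s : ℝ} (hs : 1 < s) :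
    HasProd (fun P : HeightOneSpectrum (𝓞 K) ↦ 1 - nrm K s P.asIdeal) (Zr K s)⁻¹ := by
  have hs0 : s ≠ 0 := by linarith
  have h1 : Tendsto (fun T : Finset (HeightOneSpectrum (𝓞 K)) ↦
      ∑' I : Ideal (𝓞 K), (if ∀ P ∈ T, ¬ P.asIdeal ∣ I then nrm K s I else 0)) atTop
      (𝓝 (∑' I : Ideal (𝓞 K), if I = ⊤ then 1 else 0)) := by
    refine tendsto_tsum_of_dominated_convergence (nrm_summable (K := K) hs) (fun I ↦ ?_) ?_
    · by_cases hI : I = ⊤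
      · subst hI
        refine tendsto_const_nhds.congr fun T ↦ ?_
        rw [if_pos rfl, if_pos, nrm_top]
        intro P _ h
        exact P.isPrime.ne_top (top_le_iff.mp (Ideal.dvd_iff_le.mp h))
      · rw [if_neg hI]
        by_cases hI0 : I = ⊥
        · subst hI0
          refine tendsto_const_nhds.congr fun T ↦ ?_
          simp [nrm_bot hs0]
        · obtain ⟨M, hM, hIM⟩ := Ideal.exists_le_maximal I hI
          have hM0 : M ≠ ⊥ := fun h ↦ hI0 (le_bot_iff.mp (h ▸ hIM))
          refine tendsto_const_nhds.congr' ?_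
          filter_upwards [eventually_ge_atTop
            ({⟨M, hM.isPrime, hM0⟩} : Finset (HeightOneSpectrum (𝓞 K)))] with T hT
          rw [if_neg]
          intro h
          exact h ⟨M, hM.isPrime, hM0⟩ (hT (Finset.mem_singleton_self _))
            (Ideal.dvd_iff_le.mpr hIM)
    · refine Eventually.of_forall fun T I ↦ ?_
      split_ifs
      · rw [Real.norm_of_nonneg (nrm_nonneg _ _)]
      · simpa using nrm_nonneg s I
  rw [tsum_ite_eq] at h1
  simp only [sum_coprime hs] at h1
  have hz := (Zr_pos (K := K) hs).ne'
  have h2 := h1.const_mul (Zr K s)⁻¹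
  rw [mul_one] at h2
  rw [HasProd]
  refine h2.congr fun T ↦ ?_
  field_simp

end Zeta
end H15

/-! ### Euler factors in Galois extensions -/

namespace H15
open Filter Topology

section Gal
open IsDedekindDomain
variable {Y X : Type*} [Field Y] [NumberField Y] [Field X] [NumberField X] [Algebra Y X]

instance perfResidue (q : Ideal (𝓞 Y)) [q.IsMaximal] : PerfectField q.ResidueField := by
  by_cases h : q = ⊥
  · have : IsDomain (𝓞 Y) := inferInstance
    have : CharZero q.ResidueField := by
      subst h
      refine charZero_of_injective_algebraMap (R := 𝓞 Y) ?_
      rw [injective_iff_map_eq_zero]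
      intro x hx
      simpa using (Ideal.algebraMap_residueField_eq_zero.mp hx)
    infer_instance
  · have : Finite (𝓞 Y ⧸ q) := Ideal.finiteQuotientOfFreeOfNeBot q h
    have : Finite q.ResidueField := by
      refine Finite.of_surjective (algebraMap (𝓞 Y ⧸ q) q.ResidueField) ?_
      exact (Ideal.bijective_algebraMap_quotient_residueField q).2
    infer_instance

instance isGaloisGroupInt [IsGalois Y X] : IsGaloisGroup Gal(X/Y) (𝓞 Y) (𝓞 X) :=
  IsGaloisGroup.of_isFractionRing Gal(X/Y) (𝓞 Y) (𝓞 X) Y X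

lemma isGalois_two (h : Module.finrank Y X = 2) : IsGalois Y X := by
  have : Algebra.IsQuadraticExtension Y X := ⟨h⟩
  infer_instance

lemma nrm_liesOver (s : ℝ) (q : Ideal (𝓞 Y)) (P : Ideal (𝓞 X)) [P.LiesOver q] [hq : q.IsMaximal]
    [hP : P.IsMaximal] : nrm X s P = nrm Y s q ^ (P.inertiaDeg (𝓞 Y)) := by
  have hq0 : q ≠ ⊥ := NeZero.ne q
  unfold nrm
  rw [Ideal.absNorm_eq_pow_inertiaDeg'_of_liesOver P q hq.isPrime hq0,
    Ideal.inertiaDeg'_eq_inertiaDeg, Nat.cast_pow, ← Real.rpow_natCast, ← Real.rpow_natCast,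
    ← Real.rpow_mul (by positivity), ← Real.rpow_mul (by positivity), mul_comm]

/-- The primes of `X` above the prime `q` of `Y`, as a fibre of `HeightOneSpectrum.under`. -/
def fiberEquiv (q : HeightOneSpectrum (𝓞 Y)) :
    {P : HeightOneSpectrum (𝓞 X) // P.under (𝓞 Y) = q} ≃ q.asIdeal.primesOver (𝓞 X) where
  toFun P := ⟨P.1.asIdeal, P.1.isPrime, ⟨congrArg HeightOneSpectrum.asIdeal P.2.symm⟩⟩
  invFun P := ⟨⟨P.1, P.2.1, Ideal.ne_bot_of_mem_primesOver q.ne_bot P.2⟩,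
    HeightOneSpectrum.ext P.2.2.over.symm⟩
  left_inv _ := rfl
  right_inv _ := rfl

/-- The product of the Euler factors of `X` at the primes above `q`, which all have the same inertia
degree as `X / Y` is Galois. -/
lemma fiber_prod [IsGalois Y X] (s : ℝ) (q : HeightOneSpectrum (𝓞 Y)) :
    HasProd (fun P : {P : HeightOneSpectrum (𝓞 X) // P.under (𝓞 Y) = q} ↦
      1 - nrm X s P.1.asIdeal)
      ((1 - nrm Y s q.asIdeal ^ (q.asIdeal.inertiaDegIn (𝓞 X))) ^
        (q.asIdeal.primesOver (𝓞 X)).ncard) := by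
  have : q.asIdeal.IsMaximal := q.isMaximal
  have : Finite (q.asIdeal.primesOver (𝓞 X)) := IsDedekindDomain.primesOver_finite _ _
  have : Finite {P : HeightOneSpectrum (𝓞 X) // P.under (𝓞 Y) = q} :=
    Finite.of_equiv _ (fiberEquiv q).symm
  have := Fintype.ofFinite {P : HeightOneSpectrum (𝓞 X) // P.under (𝓞 Y) = q}
  convert hasProd_fintype _ using 1
  · rw [Finset.prod_congr rfl (g := fun _ ↦ (1 - nrm Y s q.asIdeal ^
      (q.asIdeal.inertiaDegIn (𝓞 X)))), Finset.prod_const, Finset.card_univ,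
      ← Nat.card_eq_fintype_card, Nat.card_congr (fiberEquiv q), Nat.card_coe_set_eq]
    rintro ⟨P, hP⟩ -
    have h1 : P.asIdeal.LiesOver q.asIdeal := ⟨by rw [← hP]; rfl⟩
    have h2 : P.asIdeal.IsMaximal := P.isMaximal
    have h3 := P.isPrime
    rw [nrm_liesOver s q.asIdeal P.asIdeal, Ideal.inertiaDegIn_eq_inertiaDeg q.asIdeal P.asIdeal
      Gal(X/Y)]

/-- The Euler product of `ζ_X`, grouped according to the primes of `Y`. -/
lemma hasProd_galois [IsGalois Y X] {s : ℝ} (hs : 1 < s) :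
    HasProd (fun q : HeightOneSpectrum (𝓞 Y) ↦
      ((1 - nrm Y s q.asIdeal ^ (q.asIdeal.inertiaDegIn (𝓞 X))) ^
        (q.asIdeal.primesOver (𝓞 X)).ncard)) (Zr X s)⁻¹ := by
  have h := hasProd_euler (K := X) hs
  rw [← (Equiv.sigmaFiberEquiv (fun P : HeightOneSpectrum (𝓞 X) ↦ P.under (𝓞 Y))).hasProd_iff] at h
  exact h.sigma (fun q ↦ fiber_prod s q)

end Gal
end H15

/-! ### Zeta functions in Klein four extensions -/

namespace H15
open Filter Topology

section V4
open IsDedekindDomain Pointwise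

/-- The local factor identity behind the Klein four zeta relation: `aᵢ`, `bᵢ` record whether the
three involutions lie in the decomposition and inertia groups. -/
lemma v4_arith (x : ℝ) (a1 a2 a3 b1 b2 b3 gL fL g1 g2 g3 f1 f2 f3 u1 u2 u3 v1 v2 v3 : ℕ)
    (ha1 : a1 ≤ 1) (ha2 : a2 ≤ 1) (ha3 : a3 ≤ 1) (hb1 : b1 ≤ a1) (hb2 : b2 ≤ a2) (hb3 : b3 ≤ a3)
    (hgL : gL * (1 + a1 + a2 + a3) = 4) (hD : 1 + a1 + a2 + a3 = (1 + b1 + b2 + b3) * fL)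
    (hf : fL ≤ 2)
    (h1 : g1 * u1 = gL ∧ u1 * (1 + a1) = 2 ∧ f1 * v1 = fL ∧ 1 + a1 = (1 + b1) * v1)
    (h2 : g2 * u2 = gL ∧ u2 * (1 + a2) = 2 ∧ f2 * v2 = fL ∧ 1 + a2 = (1 + b2) * v2)
    (h3 : g3 * u3 = gL ∧ u3 * (1 + a3) = 2 ∧ f3 * v3 = fL ∧ 1 + a3 = (1 + b3) * v3) :
    (1 - x ^ fL) ^ gL * (1 - x) ^ 2 =
      (1 - x ^ f1) ^ g1 * (1 - x ^ f2) ^ g2 * (1 - x ^ f3) ^ g3 := by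
  obtain ⟨h11, h12, h13, h14⟩ := h1
  obtain ⟨h21, h22, h23, h24⟩ := h2
  obtain ⟨h31, h32, h33, h34⟩ := h3
  have e1 : ∀ u a : ℕ, a ≤ 1 → u * (1 + a) = 2 → u = 2 - a := by
    intro u a ha h; interval_cases a <;> omega
  have e2 : ∀ v a b : ℕ, a ≤ 1 → b ≤ a → 1 + a = (1 + b) * v → v = 1 + a - b := by
    intro v a b ha hb h; interval_cases a <;> interval_cases b <;> omega
  obtain rfl := e1 _ _ ha1 h12
  obtain rfl := e1 _ _ ha2 h22
  obtain rfl := e1 _ _ ha3 h32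
  obtain rfl := e2 _ _ _ ha1 hb1 h14
  obtain rfl := e2 _ _ _ ha2 hb2 h24
  obtain rfl := e2 _ _ _ ha3 hb3 h34
  obtain rfl : gL = 4 / (1 + a1 + a2 + a3) :=
    (Nat.div_eq_of_eq_mul_left (by omega) hgL.symm).symm
  obtain rfl : fL = (1 + a1 + a2 + a3) / (1 + b1 + b2 + b3) :=
    (Nat.div_eq_of_eq_mul_right (by omega) hD).symm
  obtain rfl := (Nat.div_eq_of_eq_mul_left (by omega) h11.symm)
  obtain rfl := (Nat.div_eq_of_eq_mul_left (by omega) h21.symm)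
  obtain rfl := (Nat.div_eq_of_eq_mul_left (by omega) h31.symm)
  obtain rfl := (Nat.div_eq_of_eq_mul_left (by omega) h13.symm)
  obtain rfl := (Nat.div_eq_of_eq_mul_left (by omega) h23.symm)
  obtain rfl := (Nat.div_eq_of_eq_mul_left (by omega) h33.symm)
  clear e1 e2 h12 h22 h32 h14 h24 h34
  interval_cases a1 <;> interval_cases a2 <;> interval_cases a3 <;>
  interval_cases b1 <;> interval_cases b2 <;> interval_cases b3 <;>
    first
    | (exfalso; omega)
    | (simp only [Nat.reduceAdd, Nat.reduceSub, Nat.reduceDiv]; ring1)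

lemma card_sub2 {G : Type*} [Group G] (hG : Nat.card G = 2) (τ : G) (hτ : τ ≠ 1)
    (H : Subgroup G) [Decidable (τ ∈ H)] : Nat.card H = 1 + if τ ∈ H then 1 else 0 := by
  have : Finite G := Nat.finite_of_card_ne_zero (by omega)
  have hd := Subgroup.card_subgroup_dvd_card H
  rw [hG] at hd
  have h12 := (Nat.dvd_prime Nat.prime_two).mp hd
  split_ifs with h
  · rcases h12 with h1 | h1
    · rw [Subgroup.card_eq_one] at h1
      subst h1
      exact absurd (Subgroup.mem_bot.mp h) hτ
    · exact h1
  · rcases h12 with h1 | h1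
    · exact h1
    · exact absurd (((Subgroup.card_eq_iff_eq_top H).mp (h1.trans hG.symm)) ▸ Subgroup.mem_top τ) h

lemma card_sub4 {G : Type*} [Group G] (s1 s2 s3 : G) (h1 : s1 ≠ 1) (h2 : s2 ≠ 1) (h3 : s3 ≠ 1)
    (h12 : s1 ≠ s2) (h13 : s1 ≠ s3) (h23 : s2 ≠ s3)
    (hall : ∀ g : G, g = 1 ∨ g = s1 ∨ g = s2 ∨ g = s3) (H : Subgroup G)
    [Decidable (s1 ∈ H)] [Decidable (s2 ∈ H)] [Decidable (s3 ∈ H)] :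
    Nat.card H = 1 + (if s1 ∈ H then 1 else 0) + (if s2 ∈ H then 1 else 0) +
      (if s3 ∈ H then 1 else 0) := by
  classical
  have : (H : Set G) = (({1, s1, s2, s3} : Finset G).filter (· ∈ H) : Finset G) := by
    ext g
    have := hall g
    simp only [SetLike.mem_coe, Finset.coe_filter, Finset.mem_insert, Finset.mem_singleton,
      Set.mem_setOf_eq]
    tauto
  have h : Nat.card H = (({1, s1, s2, s3} : Finset G).filter (· ∈ H)).card := by
    rw [← Set.ncard_coe_finset, ← this]; rfl
  rw [h, Finset.card_filter, Finset.sum_insert, Finset.sum_insert, Finset.sum_insert,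
    Finset.sum_singleton]
  · simp only [one_mem, if_true]; split_ifs <;> rfl
  · simp [h23]
  · simp [h12, h13]
  · simp [h1.symm, h2.symm, h3.symm]


variable {k L : Type*} [Field k] [NumberField k] [Field L] [NumberField L] [Algebra k L]

/-- The residue extension is cyclic, and its Galois group is a quotient of a group of exponent two. -/
lemma inertiaDeg_le_two [IsGalois k L] (hG : ∀ g : Gal(L/k), g * g = 1) (q : Ideal (𝓞 k))
    (P : Ideal (𝓞 L)) [P.LiesOver q] [q.IsMaximal] [P.IsMaximal] :
    P.inertiaDeg (𝓞 k) ≤ 2 := by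
  have hP0 : P ≠ ⊥ := NeZero.ne P
  have hq0 : q ≠ ⊥ := NeZero.ne q
  have : Finite (𝓞 L ⧸ P) := Ideal.finiteQuotientOfFreeOfNeBot P hP0
  have : Finite (𝓞 k ⧸ q) := Ideal.finiteQuotientOfFreeOfNeBot q hq0
  obtain ⟨σ, hσ⟩ := IsArithFrobAt.exists_of_isInvariant (𝓞 k) Gal(L/k) P
  have hover : P.under (𝓞 k) = q := (Ideal.over_def P q).symm
  set n := Nat.card (𝓞 k ⧸ q) with hn
  have hn1 : 1 < n := Finite.one_lt_card_iff_nontrivial.mpr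
    (Ideal.Quotient.nontrivial_iff.mpr (Ideal.IsMaximal.ne_top inferInstance))
  have h1 : ∀ x : 𝓞 L, Ideal.Quotient.mk P (σ • x) = Ideal.Quotient.mk P x ^ n := by
    intro x
    have := hσ x
    rw [hover] at this
    rw [← map_pow, Ideal.Quotient.eq]
    exact this
  have h2 : ∀ y : 𝓞 L ⧸ P, y ^ (n * n) = y := by
    intro y
    obtain ⟨x, rfl⟩ := Ideal.Quotient.mk_surjective y
    rw [pow_mul, ← h1, ← h1, smul_smul, hG, one_smul]
  classical
  letI := Ideal.Quotient.field P
  have hcard : Nat.card (𝓞 L ⧸ P) ≤ n * n := by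
    have := Fintype.ofFinite (𝓞 L ⧸ P)
    have hne : (Polynomial.X ^ (n * n) - Polynomial.X : Polynomial (𝓞 L ⧸ P)) ≠ 0 :=
      FiniteField.X_pow_card_sub_X_ne_zero _ (by nlinarith)
    have hdeg := FiniteField.X_pow_card_sub_X_natDegree_eq (𝓞 L ⧸ P) (p := n * n) (by nlinarith)
    rw [Nat.card_eq_fintype_card, ← hdeg]
    refine le_trans ?_ (Polynomial.card_roots' _)
    refine le_trans ?_ (Multiset.toFinset_card_le _)
    refine Finset.card_le_card fun y _ ↦ ?_
    rw [Multiset.mem_toFinset, Polynomial.mem_roots hne]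
    simp [h2 y]
  have h3 := Ideal.absNorm_eq_pow_inertiaDeg'_of_liesOver P q inferInstance hq0
  rw [Ideal.inertiaDeg'_eq_inertiaDeg, Ideal.absNorm_apply, Ideal.absNorm_apply,
    Submodule.cardQuot_apply, Submodule.cardQuot_apply] at h3
  change Nat.card (𝓞 L ⧸ P) = n ^ _ at h3
  rw [h3, ← sq] at hcard
  exact (Nat.pow_le_pow_iff_right hn1).mp hcard

end V4
end H15

/-! ### Invariance under isomorphism -/

namespace H15
open Filter Topology

section V4b
open IsDedekindDomain Pointwise
variable {k L : Type*} [Field k] [NumberField k] [Field L] [NumberField L] [Algebra k L]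

/-- Splitting data of a prime in an intermediate field `K` with `[L:K] = 2`, in terms of the
non-trivial automorphism of `L/K`. -/
lemma interm (K : Type*) [Field K] [NumberField K] [Algebra k K] [Algebra K L]
    [IsScalarTower k K L] [IsGalois k L] [IsGalois k K] [IsGalois K L]
    (h2 : Module.finrank K L = 2) (τ : Gal(L/K)) (hτ : τ ≠ 1)
    (q : Ideal (𝓞 k)) (P : Ideal (𝓞 L)) [P.LiesOver q] [q.IsMaximal] [P.IsMaximal]
    (a b : ℕ) (ha1 : τ.restrictScalars k ∈ MulAction.stabilizer Gal(L/k) P → a = 1)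
    (ha0 : τ.restrictScalars k ∉ MulAction.stabilizer Gal(L/k) P → a = 0)
    (hb1 : τ.restrictScalars k ∈ P.inertia Gal(L/k) → b = 1)
    (hb0 : τ.restrictScalars k ∉ P.inertia Gal(L/k) → b = 0) :
    ∃ u v : ℕ, (q.primesOver (𝓞 K)).ncard * u = (q.primesOver (𝓞 L)).ncard ∧
      u * (1 + a) = 2 ∧ q.inertiaDegIn (𝓞 K) * v = q.inertiaDegIn (𝓞 L) ∧
      1 + a = (1 + b) * v := by
  classical
  set Q := P.under (𝓞 K) with hQ
  have hQP : P.LiesOver Q := ⟨rfl⟩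
  have hQq : Q.LiesOver q := ⟨by
    rw [hQ, Ideal.under_under]; exact Ideal.over_def P q⟩
  have hQm : Q.IsMaximal := Ideal.IsMaximal.under (𝓞 K) P
  have hc2 : Nat.card Gal(L/K) = 2 := by rw [IsGalois.card_aut_eq_finrank, h2]
  have hst : τ ∈ MulAction.stabilizer Gal(L/K) P ↔
      τ.restrictScalars k ∈ MulAction.stabilizer Gal(L/k) P := by
    rw [MulAction.mem_stabilizer_iff, MulAction.mem_stabilizer_iff]; rfl
  have hin : τ ∈ P.inertia Gal(L/K) ↔ τ.restrictScalars k ∈ P.inertia Gal(L/k) := Iff.rfl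
  have hD := card_sub2 hc2 τ hτ (MulAction.stabilizer Gal(L/K) P)
  have hI := card_sub2 hc2 τ hτ (P.inertia Gal(L/K))
  have ea : (if τ ∈ MulAction.stabilizer Gal(L/K) P then 1 else 0) = a := by
    split_ifs with h
    · exact (ha1 (hst.mp h)).symm
    · exact (ha0 (fun h' ↦ h (hst.mpr h'))).symm
  have eb : (if τ ∈ P.inertia Gal(L/K) then 1 else 0) = b := by
    split_ifs with h
    · exact (hb1 (hin.mp h)).symm
    · exact (hb0 (fun h' ↦ h (hin.mpr h'))).symm
  rw [ea] at hD
  rw [eb] at hI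
  have h3 := Ideal.card_stabilizer_eq_card_inertia_mul_finrank (G := Gal(L/K)) Q P
  have h4 := Ideal.ncard_primesOver_mul_card_inertia_mul_finrank (G := Gal(L/K)) Q P
  rw [mul_assoc, ← h3, hc2, hD] at h4
  rw [hD, hI] at h3
  have hne : Nonempty (Q.primesOver (𝓞 L)) := ⟨⟨P, inferInstance, hQP⟩⟩
  refine ⟨(Q.primesOver (𝓞 L)).ncard, Q.inertiaDegIn (𝓞 L), ?_, h4, ?_, ?_⟩
  · exact Ideal.ncard_primesOver_mul_ncard_primesOver Q Gal(K/k) (𝓞 L) Gal(L/k)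
  · exact Ideal.inertiaDegIn_mul_inertiaDegIn q Q Gal(K/k) (𝓞 L) Gal(L/k) Gal(L/K)
  · rw [Ideal.inertiaDegIn_eq_inertiaDeg Q P Gal(L/K)]; exact h3

variable {K1 K2 K3 : Type*} [Field K1] [NumberField K1] [Field K2] [NumberField K2]
  [Field K3] [NumberField K3] [Algebra k K1] [Algebra k K2] [Algebra k K3]
  [Algebra K1 L] [Algebra K2 L] [Algebra K3 L]
  [IsScalarTower k K1 L] [IsScalarTower k K2 L] [IsScalarTower k K3 L]

/-- A quadratic extension has a nontrivial automorphism; it is an involution with fixed field `K`. -/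
lemma exists_invol {K : Type*} [Field K] [NumberField K] [Algebra K L]
    (h2 : Module.finrank K L = 2) : ∃ τ : Gal(L/K), τ ≠ 1 ∧ τ * τ = 1 ∧
      ∀ x : L, τ x = x → ∃ y : K, algebraMap K L y = x := by
  have : IsGalois K L := isGalois_two h2
  have hc2 : Nat.card Gal(L/K) = 2 := by rw [IsGalois.card_aut_eq_finrank, h2]
  have : Nontrivial Gal(L/K) := Finite.one_lt_card_iff_nontrivial.mp (by omega)
  obtain ⟨τ, hτ⟩ := exists_ne (1 : Gal(L/K))
  have hall : ∀ g : Gal(L/K), g = 1 ∨ g = τ := by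
    intro g
    by_contra! h
    have := Nat.card_eq_two_iff.mp hc2
    obtain ⟨x, y, hxy, hu⟩ := this
    have e := fun g : Gal(L/K) ↦ hu ▸ Set.mem_univ g
    simp only [Set.mem_insert_iff, Set.mem_singleton_iff] at e
    have e1 := e 1; have e2 := e τ; have e3 := e g
    grind
  refine ⟨τ, hτ, ?_, ?_⟩
  · rcases hall (τ * τ) with h | h
    · exact h
    · exact absurd (mul_eq_left.mp h) hτ
  · intro x hx
    have := (IsGalois.mem_range_algebraMap_iff_fixed (F := K) x).mpr (by
      intro g
      rcases hall g with rfl | rfl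
      · rfl
      · exact hx)
    exact this

lemma ite_le_ite_of_imp {p q : Prop} [Decidable p] [Decidable q] (h : p → q) :
    (if p then 1 else 0 : ℕ) ≤ if q then 1 else 0 := by
  split_ifs <;> simp_all

lemma ite_le_one {p : Prop} [Decidable p] : (if p then 1 else 0 : ℕ) ≤ 1 := by
  split_ifs <;> simp

/-- Zeta residues in a Klein four extension `L/k` with intermediate fields `K1`, `K2`, `K3`. -/
theorem v4_zeta (hK1 : Module.finrank k K1 = 2) (hK2 : Module.finrank k K2 = 2)
    (hK3 : Module.finrank k K3 = 2) (hL1 : Module.finrank K1 L = 2)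
    (hL2 : Module.finrank K2 L = 2) (hL3 : Module.finrank K3 L = 2)
    (h12 : ∃ x : K1, ∀ y : K2, algebraMap K2 L y ≠ algebraMap K1 L x)
    (h13 : ∃ x : K1, ∀ y : K3, algebraMap K3 L y ≠ algebraMap K1 L x)
    (h23 : ∃ x : K2, ∀ y : K3, algebraMap K3 L y ≠ algebraMap K2 L x) :
    dedekindZeta_residue L * dedekindZeta_residue k ^ 2 =
      dedekindZeta_residue K1 * dedekindZeta_residue K2 * dedekindZeta_residue K3 := by
  classical
  have i1 : IsGalois k K1 := isGalois_two hK1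
  have i2 : IsGalois k K2 := isGalois_two hK2
  have i3 : IsGalois k K3 := isGalois_two hK3
  have j1 : IsGalois K1 L := isGalois_two hL1
  have j2 : IsGalois K2 L := isGalois_two hL2
  have j3 : IsGalois K3 L := isGalois_two hL3
  obtain ⟨t1, n1, o1, x1⟩ := exists_invol hL1
  obtain ⟨t2, n2, o2, x2⟩ := exists_invol hL2
  obtain ⟨t3, n3, o3, x3⟩ := exists_invol hL3
  set s1 : Gal(L/k) := t1.restrictScalars k with hs1
  set s2 : Gal(L/k) := t2.restrictScalars k with hs2
  set s3 : Gal(L/k) := t3.restrictScalars k with hs3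
  have m1 : s1 ≠ 1 := fun h ↦ n1 (AlgEquiv.ext fun x ↦ DFunLike.congr_fun h x)
  have m2 : s2 ≠ 1 := fun h ↦ n2 (AlgEquiv.ext fun x ↦ DFunLike.congr_fun h x)
  have m3 : s3 ≠ 1 := fun h ↦ n3 (AlgEquiv.ext fun x ↦ DFunLike.congr_fun h x)
  have p1 : s1 * s1 = 1 := AlgEquiv.ext fun x ↦ DFunLike.congr_fun o1 x
  have p2 : s2 * s2 = 1 := AlgEquiv.ext fun x ↦ DFunLike.congr_fun o2 x
  have p3 : s3 * s3 = 1 := AlgEquiv.ext fun x ↦ DFunLike.congr_fun o3 x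
  have d12 : s1 ≠ s2 := by
    intro h
    obtain ⟨x, hx⟩ := h12
    obtain ⟨y, hy⟩ := x2 (algebraMap K1 L x) (by
      have h1 : s2 (algebraMap K1 L x) = algebraMap K1 L x := by rw [← h]; exact t1.commutes x
      exact h1)
    exact hx y hy
  have d13 : s1 ≠ s3 := by
    intro h
    obtain ⟨x, hx⟩ := h13
    obtain ⟨y, hy⟩ := x3 (algebraMap K1 L x) (by
      have h1 : s3 (algebraMap K1 L x) = algebraMap K1 L x := by rw [← h]; exact t1.commutes x
      exact h1)
    exact hx y hy
  have d23 : s2 ≠ s3 := by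
    intro h
    obtain ⟨x, hx⟩ := h23
    obtain ⟨y, hy⟩ := x3 (algebraMap K2 L x) (by
      have h1 : s3 (algebraMap K2 L x) = algebraMap K2 L x := by rw [← h]; exact t2.commutes x
      exact h1)
    exact hx y hy
  have hdeg : Module.finrank k L = 4 := by
    rw [← Module.finrank_mul_finrank k K1 L, hK1, hL1]
  -- the three involutions come from three distinct index-two subgroups, so `L/k` is Galois
  have hcard : Nat.card Gal(L/k) = 4 := by
    have hdvd := (IntermediateField.finrank_fixedField_eq_card (F := k) (E := L) ⊤)
    have hle : Nat.card Gal(L/k) ≤ 4 := hdeg ▸ (by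
      rw [Nat.card_eq_fintype_card]; exact AlgEquiv.card_le)
    refine le_antisymm hle ?_
    have : (({1, s1, s2, s3} : Finset Gal(L/k))).card = 4 := by
      rw [Finset.card_insert_of_notMem, Finset.card_insert_of_notMem,
        Finset.card_insert_of_notMem, Finset.card_singleton]
      · simp [d23]
      · simp [d12, d13]
      · simp [m1.symm, m2.symm, m3.symm]
    rw [← this, Nat.card_eq_fintype_card]
    exact Finset.card_le_univ _
  have iL : IsGalois k L := IsGalois.of_card_aut_eq_finrank k L (by rw [hcard, hdeg])
  have hall : ∀ g : Gal(L/k), g = 1 ∨ g = s1 ∨ g = s2 ∨ g = s3 := by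
    have h4 : (({1, s1, s2, s3} : Finset Gal(L/k))).card = 4 := by
      rw [Finset.card_insert_of_notMem, Finset.card_insert_of_notMem,
        Finset.card_insert_of_notMem, Finset.card_singleton]
      · simp [d23]
      · simp [d12, d13]
      · simp [m1.symm, m2.symm, m3.symm]
    have h5 := (Finset.card_eq_iff_eq_univ _).mp (h4.trans (hcard.symm.trans Nat.card_eq_fintype_card))
    intro g
    have := h5 ▸ Finset.mem_univ g
    simpa using this
  have hexp : ∀ g : Gal(L/k), g * g = 1 := by
    intro g
    rcases hall g with rfl | rfl | rfl | rfl
    exacts [one_mul 1, p1, p2, p3]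
  have key : ∀ s : ℝ, 1 < s → (Zr L s) * (Zr k s) ^ 2 = Zr K1 s * Zr K2 s * Zr K3 s := by
    intro s hs
    have e1 := ((hasProd_galois (Y := k) (X := K1) hs).mul
      (hasProd_galois (Y := k) (X := K2) hs)).mul (hasProd_galois (Y := k) (X := K3) hs)
    have e2 := (hasProd_galois (Y := k) (X := L) hs).mul
      ((hasProd_euler (K := k) hs).mul (hasProd_euler (K := k) hs))
    have e3 := HasProd.unique e1 (e2.congr_fun ?_)
    · have z1 := (Zr_pos (K := K1) hs).ne'
      have z2 := (Zr_pos (K := K2) hs).ne'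
      have z3 := (Zr_pos (K := K3) hs).ne'
      have z4 := (Zr_pos (K := L) hs).ne'
      have z5 := (Zr_pos (K := k) hs).ne'
      field_simp at e3
      linarith
    · intro q
      have hqm : q.asIdeal.IsMaximal := q.isMaximal
      obtain ⟨⟨P, hPp, hPq⟩⟩ := (inferInstance : Nonempty (q.asIdeal.primesOver (𝓞 L)))
      have hPm : P.IsMaximal := hPp.isMaximal (Ideal.ne_bot_of_mem_primesOver q.ne_bot ⟨hPp, hPq⟩)
      have A := card_sub4 s1 s2 s3 m1 m2 m3 d12 d13 d23 hall (MulAction.stabilizer Gal(L/k) P)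
      have B := card_sub4 s1 s2 s3 m1 m2 m3 d12 d13 d23 hall (P.inertia Gal(L/k))
      have C := Ideal.card_stabilizer_eq_card_inertia_mul_finrank (G := Gal(L/k)) q.asIdeal P
      have D := Ideal.ncard_primesOver_mul_card_inertia_mul_finrank (G := Gal(L/k)) q.asIdeal P
      rw [mul_assoc, ← C, hcard] at D
      rw [A, B] at C
      rw [A] at D
      have hle : ∀ t, t ∈ P.inertia Gal(L/k) → t ∈ MulAction.stabilizer Gal(L/k) P :=
        fun t ht ↦ Ideal.inertia_le_stabilizer P ht
      have fle := inertiaDeg_le_two hexp q.asIdeal P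
      rw [← Ideal.inertiaDegIn_eq_inertiaDeg q.asIdeal P Gal(L/k)] at C fle
      obtain ⟨u1, v1, w1⟩ := interm (k := k) K1 hL1 t1 n1 q.asIdeal P _ _ (fun h ↦ if_pos h) (fun h ↦ if_neg h)
          (fun h ↦ if_pos h) (fun h ↦ if_neg h)
      obtain ⟨u2, v2, w2⟩ := interm (k := k) K2 hL2 t2 n2 q.asIdeal P _ _ (fun h ↦ if_pos h) (fun h ↦ if_neg h)
          (fun h ↦ if_pos h) (fun h ↦ if_neg h)
      obtain ⟨u3, v3, w3⟩ := interm (k := k) K3 hL3 t3 n3 q.asIdeal P _ _ (fun h ↦ if_pos h) (fun h ↦ if_neg h)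
          (fun h ↦ if_pos h) (fun h ↦ if_neg h)
      have := v4_arith (nrm k s q.asIdeal) _ _ _ _ _ _ _ _ _ _ _ _ _ _ u1 u2 u3 v1 v2 v3
        ite_le_one ite_le_one ite_le_one (ite_le_ite_of_imp (hle s1)) (ite_le_ite_of_imp (hle s2))
        (ite_le_ite_of_imp (hle s3)) D C fle w1 w2 w3
      rw [← this]
      ring
  have T1 := ((tendsto_Zr K1).mul (tendsto_Zr K2)).mul (tendsto_Zr K3)
  have T2 := (tendsto_Zr L).mul ((tendsto_Zr k).pow 2)
  refine tendsto_nhds_unique T2 (T1.congr' ?_)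
  filter_upwards [self_mem_nhdsWithin] with s hs
  linear_combination -(s - 1) ^ 3 * key s hs

end V4b
end H15

/-! ### The class number formula for CM fields -/

namespace H15
open Filter Topology

section Invariance
variable {K K' : Type*} [Field K] [NumberField K] [Field K'] [NumberField K']

lemma Zr_congr (f : K ≃+* K') (s : ℝ) : Zr K s = Zr K' s := by
  unfold Zr
  let e : 𝓞 K ≃+* 𝓞 K' := RingOfIntegers.mapRingEquiv f
  have hb : Function.Bijective (fun I : Ideal (𝓞 K') ↦ I.comap e.toRingHom) :=
    ⟨Ideal.comap_injective_of_surjective _ e.surjective,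
      fun I ↦ ⟨I.map e.toRingHom, Ideal.comap_map_of_bijective _ e.bijective⟩⟩
  rw [← (Equiv.ofBijective _ hb).tsum_eq]
  refine tsum_congr fun I ↦ ?_
  unfold nrm
  have : Ideal.absNorm (I.comap e.toRingHom) = Ideal.absNorm I := by
    simp only [Ideal.absNorm_apply, Submodule.cardQuot_apply]
    exact Nat.card_congr (Ideal.quotientEquiv (I.comap e.toRingHom) I e
      (Ideal.map_comap_of_surjective _ e.surjective I).symm).toEquiv
  simp only [Equiv.ofBijective_apply, this]

lemma residue_congr (f : K ≃+* K') : dedekindZeta_residue K = dedekindZeta_residue K' := by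
  have h1 := tendsto_Zr K
  have h2 := tendsto_Zr K'
  simp only [Zr_congr f] at h1
  exact tendsto_nhds_unique h1 h2

lemma classNumber_congr (f : K ≃+* K') : classNumber K = classNumber K' := by
  unfold classNumber
  exact Fintype.card_congr (ClassGroup.mulEquiv (RingOfIntegers.mapRingEquiv f)).toEquiv
end Invariance

open NumberField.InfinitePlace NumberField.IsCMField NumberField.Units

lemma torsion_pm {Y : Type*} [Field Y] [NumberField Y] [IsTotallyReal Y] (x : torsion Y) :
    (x : (𝓞 Y)ˣ) = 1 ∨ (x : (𝓞 Y)ˣ) = -1 := by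
  by_cases! hc : 2 < orderOf (x : (𝓞 Y)ˣ)
  · rw [← orderOf_units, ← orderOf_injective (algebraMap (𝓞 Y) Y : 𝓞 Y →* Y)
      RingOfIntegers.coe_injective] at hc
    have h1 := IsPrimitiveRoot.nrRealPlaces_eq_zero_of_two_lt hc (IsPrimitiveRoot.orderOf _)
    have h2 := IsTotallyReal.finrank (K := Y)
    have h3 := Module.finrank_pos (R := ℚ) (M := Y)
    omega
  · interval_cases hi : orderOf (x : (𝓞 Y)ˣ)
    · linarith [orderOf_pos_iff.2 ((CommGroup.mem_torsion x.1).1 x.2)]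
    · exact Or.intro_left _ (orderOf_eq_one_iff.1 hi)
    · rw [← orderOf_units, CharP.orderOf_eq_two_iff 0 (by decide)] at hi
      simp [← Units.val_inj, ← Units.val_inj, Units.val_neg, Units.val_one, hi]

lemma torsionOrder_real (Y : Type*) [Field Y] [NumberField Y] [IsTotallyReal Y] :
    torsionOrder Y = 2 := by
  classical
  let := Fintype.ofFinite (torsion Y)
  rw [torsionOrder, Nat.card_eq_fintype_card]
  refine (Finset.card_eq_two.2 ⟨1, ⟨-1, neg_one_mem_torsion⟩,
    by simp [← Subtype.coe_ne_coe], Finset.ext fun x ↦ ⟨fun _ ↦ ?_, fun _ ↦ Finset.mem_univ _⟩⟩)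
  rw [Finset.mem_insert, Finset.mem_singleton, ← Subtype.val_inj, ← Subtype.val_inj]
  exact torsion_pm x

/-- The order of the group of quotients `u / ū`, for `u` a unit of a CM field. -/
def mm (X : Type*) [Field X] [NumberField X] [IsCMField X] : ℕ :=
  Nat.card (unitsMulComplexConjInv X).range

/-- The ratio of the class number formulas of a CM field and its maximal real subfield. The quotient of
regulators and the number of roots of unity enter only through `mm X`. -/
lemma cm_residue_aux (X : Type*) [Field X] [NumberField X] [IsCMField X] :
    dedekindZeta_residue X * (2 * mm X * classNumber (maximalRealSubfield X) * √|(discr X : ℝ)|)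
     = dedekindZeta_residue (maximalRealSubfield X) *
       ((2 * Real.pi) ^ (Module.finrank ℚ (maximalRealSubfield X)) * classNumber X *
        √|(discr (maximalRealSubfield X) : ℝ)|) := by
  have hreg := regulator_div_regulator_eq_two_pow_mul_indexRealUnits_inv X
  have hidx := indexRealUnits_mul_eq X
  have hcard : mm X * (unitsMulComplexConjInv X).range.index = torsionOrder X := by
    rw [mm, Subgroup.card_mul_index, torsionOrder]
  have hr := units_rank_eq_units_rank X
  have hpl := card_infinitePlace_eq_card_infinitePlace X
  have hY : torsionOrder (maximalRealSubfield X) = 2 := torsionOrder_real _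
  have e1 : nrRealPlaces X = 0 := IsTotallyComplex.nrRealPlaces_eq_zero X
  have e2 : nrComplexPlaces (maximalRealSubfield X) = 0 := IsTotallyReal.nrComplexPlaces_eq_zero _
  have e3 : nrComplexPlaces X = Module.finrank ℚ (maximalRealSubfield X) := by
    have h1 := IsTotallyComplex.finrank (K := X)
    have h2 := Module.finrank_mul_finrank ℚ (maximalRealSubfield X) X
    have h3 := Algebra.IsQuadraticExtension.finrank_eq_two (maximalRealSubfield X) X
    rw [h3] at h2
    omega
  have e4 : nrRealPlaces (maximalRealSubfield X) = Module.finrank ℚ (maximalRealSubfield X) :=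
    (IsTotallyReal.finrank (K := maximalRealSubfield X)).symm
  have e5 : rank X + 1 = Module.finrank ℚ (maximalRealSubfield X) := by
    have h1 := card_eq_nrRealPlaces_add_nrComplexPlaces (K := X)
    have h2 : 0 < Module.finrank ℚ (maximalRealSubfield X) := Module.finrank_pos
    unfold rank
    omega
  have hdX : 0 < √|(discr X : ℝ)| := Real.sqrt_pos_of_pos <| abs_pos.mpr (Int.cast_ne_zero.mpr (discr_ne_zero X))
  have hdY : 0 < √|(discr (maximalRealSubfield X) : ℝ)| :=
    Real.sqrt_pos_of_pos <| abs_pos.mpr (Int.cast_ne_zero.mpr (discr_ne_zero _))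
  have hRY := regulator_pos (maximalRealSubfield X)
  rw [dedekindZeta_residue_def, dedekindZeta_residue_def, e1, e2, e3, e4, hY, ← e5]
  generalize hQ : indexRealUnits X = Q at *
  generalize hj : (unitsMulComplexConjInv X).range.index = j at *
  have hQ0 : (Q:ℝ) ≠ 0 := by
    rintro h; have : Q = 0 := by exact_mod_cast h
    subst this; simp at hidx
  have ht : (torsionOrder X : ℝ) ≠ 0 := by exact_mod_cast (torsionOrder_pos X).ne'
  rw [div_eq_iff hRY.ne'] at hreg
  have h3 : (torsionOrder X : ℝ) * Q = 2 * mm X := by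
    rw [← hcard];
    have : (Q * j : ℝ) = 2 := by exact_mod_cast hidx
    push_cast; linear_combination (mm X : ℝ) * this
  rw [hreg, ← h3]
  push_cast
  field_simp
  ring

/-- `cm_residue_aux` for an arbitrary totally real `Y` with `[X : Y] = 2`. -/
lemma cm_residue (Y X : Type*) [Field X] [NumberField X] [Field Y] [NumberField Y] [Algebra Y X]
    [IsTotallyReal Y] [IsCMField X] (h2 : Module.finrank Y X = 2) :
    dedekindZeta_residue X * (2 * mm X * classNumber Y * √|(discr X : ℝ)|)
     = dedekindZeta_residue Y *
       ((2 * Real.pi) ^ (Module.finrank ℚ Y) * classNumber X * √|(discr Y : ℝ)|) := by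
  have : Algebra.IsQuadraticExtension Y X := ⟨h2⟩
  let f := CMExtension.equivMaximalRealSubfield Y X
  have := cm_residue_aux X
  rw [residue_congr f, classNumber_congr f, discr_eq_discr_of_ringEquiv _ f]
  rw [show Module.finrank ℚ Y = Module.finrank ℚ (maximalRealSubfield X) from
    (AlgEquiv.ofRingEquiv (f := f) (fun _ ↦ by simp) : Y ≃ₐ[ℚ] _).toLinearEquiv.finrank_eq]
  exact this
end H15

/-! ### Discriminants of quadratic extensions -/

namespace H15
open Filter Topology

section Disc
variable {Y X : Type*} [Field Y] [NumberField Y] [Field X] [NumberField X] [Algebra Y X]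

open Polynomial in
/-- The derivative at `α` of the minimal polynomial of the integral generator `α` lies in the different. -/
lemma deriv_mem_different (h2 : Module.finrank Y X = 2) (α : 𝓞 X) (s n : 𝓞 Y)
    (hα : α ^ 2 - algebraMap (𝓞 Y) (𝓞 X) s * α + algebraMap (𝓞 Y) (𝓞 X) n = 0)
    (hn : ∀ y : Y, algebraMap Y X y ≠ α) :
    2 * α - algebraMap (𝓞 Y) (𝓞 X) s ∈ differentIdeal (𝓞 Y) (𝓞 X) := by
  have hint : IsIntegral (𝓞 Y) α := Algebra.IsIntegral.isIntegral α
  have hf : minpoly (𝓞 Y) α = Polynomial.X ^ 2 - C s * Polynomial.X + C n := by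
    have hm : (Polynomial.X ^ 2 - C s * Polynomial.X + C n : (𝓞 Y)[X]).Monic := by monicity!
    have hd : (Polynomial.X ^ 2 - C s * Polynomial.X + C n : (𝓞 Y)[X]).natDegree = 2 := by compute_degree!
    have hdvd : minpoly (𝓞 Y) α ∣ Polynomial.X ^ 2 - C s * Polynomial.X + C n := by
      apply minpoly.isIntegrallyClosed_dvd hint
      simpa using hα
    symm
    refine eq_of_monic_of_dvd_of_natDegree_le (minpoly.monic hint) hm hdvd ?_
    rw [hd]
    have h1 : 0 < (minpoly (𝓞 Y) α).natDegree := minpoly.natDegree_pos hint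
    by_contra hlt
    have : (minpoly (𝓞 Y) α).natDegree = 1 := by omega
    rw [minpoly.natDegree_eq_one_iff] at this
    obtain ⟨y, hy⟩ := this
    exact hn y (by rw [← hy]; rfl)
  have hadj : Algebra.adjoin Y {algebraMap (𝓞 X) X α} = ⊤ := by
    have hα' : IsIntegral Y (algebraMap (𝓞 X) X α) := Algebra.IsIntegral.isIntegral _
    rw [← IntermediateField.adjoin_simple_toSubalgebra_of_isAlgebraic hα'.isAlgebraic]
    rw [← IntermediateField.top_toSubalgebra]
    congr 1
    have : Algebra.IsQuadraticExtension Y X := ⟨h2⟩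
    refine ((IntermediateField.isSimpleOrder_of_finrank_prime Y X
      (h2 ▸ Nat.prime_two)).eq_bot_or_eq_top _).resolve_left fun h ↦ ?_
    rw [IntermediateField.adjoin_simple_eq_bot_iff, IntermediateField.mem_bot] at h
    obtain ⟨y, hy⟩ := h
    exact hn y hy
  have := aeval_derivative_mem_differentIdeal (𝓞 Y) Y X α hadj
  rw [hf] at this
  simpa [one_add_one_eq_two, map_ofNat] using! this

lemma gen_sq {α : 𝓞 X} {s n : 𝓞 Y}
    (hα : α ^ 2 - algebraMap (𝓞 Y) (𝓞 X) s * α + algebraMap (𝓞 Y) (𝓞 X) n = 0) :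
    (2 * α - algebraMap (𝓞 Y) (𝓞 X) s) ^ 2 = algebraMap (𝓞 Y) (𝓞 X) (s ^ 2 - 4 * n) := by
  simp only [map_sub, map_mul, map_pow, map_ofNat]
  linear_combination 4 * hα

/-- A prime ramified in `X / Y` contains the discriminant of every integral generator. -/
lemma ramified_disc_mem (h2 : Module.finrank Y X = 2) (α : 𝓞 X) (s n : 𝓞 Y)
    (hα : α ^ 2 - algebraMap (𝓞 Y) (𝓞 X) s * α + algebraMap (𝓞 Y) (𝓞 X) n = 0)
    (hn : ∀ y : Y, algebraMap Y X y ≠ α) (q : Ideal (𝓞 Y)) [hq : q.IsMaximal] (hq0 : q ≠ ⊥)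
    (P : Ideal (𝓞 X)) [hP : P.IsPrime] (hPq : P.comap (algebraMap (𝓞 Y) (𝓞 X)) = q)
    (hr : P ^ 2 ∣ q.map (algebraMap (𝓞 Y) (𝓞 X))) :
    s ^ 2 - 4 * n ∈ q := by
  have h1 := pow_sub_one_dvd_differentIdeal (𝓞 Y) P 2 hq0 hr
  simp only [Nat.add_one_sub_one, pow_one] at h1
  have h3 := Ideal.le_of_dvd h1 (deriv_mem_different h2 α s n hα hn)
  rw [← hPq, Ideal.mem_comap, ← gen_sq hα]
  exact Ideal.pow_mem_of_mem _ h3 2 (by norm_num)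

/-- If the discriminant of an integral generator of `X / Y` divides an odd integer, then the relative
discriminant is odd, and the tower formula gives the 2-part of the discriminant of `X`. -/
lemma discr_two_part (h2 : Module.finrank Y X = 2) (α : 𝓞 X) (s n : 𝓞 Y)
    (hα : α ^ 2 - algebraMap (𝓞 Y) (𝓞 X) s * α + algebraMap (𝓞 Y) (𝓞 X) n = 0)
    (hn : ∀ y : Y, algebraMap Y X y ≠ α) (m : ℕ) (hm : Odd m) (hd : s ^ 2 - 4 * n ∣ (m : 𝓞 Y)) :
    padicValInt 2 (discr X) = 2 * padicValInt 2 (discr Y) := by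
  have h := natAbs_discr_eq_absNorm_differentIdeal_mul_natAbs_discr_pow Y (𝓞 Y) X (𝓞 X)
  rw [h2] at h
  have hmem : (m : 𝓞 X) ∈ differentIdeal (𝓞 Y) (𝓞 X) := by
    have h4 : (algebraMap (𝓞 Y) (𝓞 X) (s ^ 2 - 4 * n)) ∣ (m : 𝓞 X) := by
      simpa using map_dvd (algebraMap (𝓞 Y) (𝓞 X)) hd
    rw [← gen_sq hα] at h4
    obtain ⟨t, ht⟩ := h4
    rw [ht]
    exact Ideal.mul_mem_right _ _
      (Ideal.pow_mem_of_mem _ (deriv_mem_different h2 α s n hα hn) 2 (by norm_num))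
  have hdv := Ideal.absNorm_dvd_norm_of_mem hmem
  have hodd : Odd (Ideal.absNorm (differentIdeal (𝓞 Y) (𝓞 X))) := by
    rw [show (m : 𝓞 X) = algebraMap ℤ (𝓞 X) m by simp, Algebra.norm_algebraMap] at hdv
    have : Odd ((m : ℤ) ^ Module.finrank ℤ (𝓞 X)) := (by exact_mod_cast hm : Odd (m : ℤ)).pow
    have h5 : Odd ((Ideal.absNorm (differentIdeal (𝓞 Y) (𝓞 X)) : ℤ)) := by
      rcases hdv with ⟨t, ht⟩; rw [ht] at this; exact (Int.odd_mul.mp this).1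
    exact_mod_cast h5
  have hv : padicValNat 2 (Ideal.absNorm (differentIdeal (𝓞 Y) (𝓞 X))) = 0 :=
    padicValNat.eq_zero_of_not_dvd (fun h ↦ by
      have := Nat.not_even_iff_odd.mpr hodd
      exact this (even_iff_two_dvd.mpr h))
  unfold padicValInt
  rw [h, padicValNat.mul hodd.pos.ne' (pow_ne_zero _ (Int.natAbs_ne_zero.mpr (discr_ne_zero Y))),
    hv, padicValNat.pow, zero_add]
end Disc
end H15

/-! ### Index computations for involutions -/

namespace H15
open Filter Topology

section AbstractGroup
open Subgroup

lemma relIndex_map_ker {M M' : Type*} [CommGroup M] [CommGroup M'] (f : M →* M') {A B : Subgroup M}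
    (hAB : A ≤ B) (h : B ⊓ f.ker ≤ A) : (A.map f).relIndex (B.map f) = A.relIndex B := by
  rw [← relIndex_comap, Subgroup.comap_map_eq, ← inf_relIndex_right, sup_inf_assoc_of_le _ hAB, inf_comm,
    sup_eq_left.2 h]

/-- `x ↦ x / s x`. -/
def dif {M : Type*} [CommGroup M] (s : M →* M) : M →* M := MonoidHom.id M / s
/-- `x ↦ x * s x`. -/
def nom {M : Type*} [CommGroup M] (s : M →* M) : M →* M := MonoidHom.id M * s

@[simp] lemma dif_apply {M : Type*} [CommGroup M] (s : M →* M) (x : M) : dif s x = x / s x := rfl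
@[simp] lemma nom_apply {M : Type*} [CommGroup M] (s : M →* M) (x : M) : nom s x = x * s x := rfl

/-- The index `[H : H²]`. -/
def sqi {M : Type*} [CommGroup M] (H : Subgroup M) : ℕ := (H.map (powMonoidHom 2)).relIndex H

variable {M I : Type*} [CommGroup M] [CommGroup I] (s : M →* M) (t : I →* I) (φ : M →* I)

/-- The index computation behind Chevalley's formula. For `φ` equivariant with respect to the
involutions `s` and `t`, with Hilbert 90 valid on both sides, it compares the invariants of the cokernel
of `φ` with the invariants of the target and the cohomology of the kernel. -/
lemma chev1 (hs : ∀ x, s (s x) = x) (hφ : ∀ x, φ (s x) = t (φ x))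
    (hM : ∀ x, x * s x = 1 → ∃ y, x = y / s y) (hI : ∀ x, x * t x = 1 → ∃ y, x = y / t y) (ht : ∀ x, t (t x) = x) :
    φ.range.relIndex (φ.range.comap (dif t)) * (φ.ker ⊓ (nom s).range).relIndex (φ.ker ⊓ (dif s).ker) *
      (φ.ker.map (dif s)).relIndex (φ.ker ⊓ (nom s).ker) =
    ((dif s).ker.map φ).relIndex (dif t).ker * (φ.ker.map (nom s)).relIndex (φ.ker ⊓ (dif s).ker) := by
  have kM : (nom s).ker = (dif s).range := by
    ext x
    simp only [MonoidHom.mem_ker, MonoidHom.mem_range, nom_apply, dif_apply]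
    constructor
    · intro h; obtain ⟨y, hy⟩ := hM x h; exact ⟨y, hy.symm⟩
    · rintro ⟨y, rfl⟩; simp [hs]
  have kI : (nom t).ker = (dif t).range := by
    ext x
    simp only [MonoidHom.mem_ker, MonoidHom.mem_range, nom_apply, dif_apply]
    constructor
    · intro h; obtain ⟨y, hy⟩ := hI x h; exact ⟨y, hy.symm⟩
    · rintro ⟨y, rfl⟩; simp [ht]
  have cD : ∀ x, φ (dif s x) = dif t (φ x) := by intro x; simp [hφ]
  have cN : ∀ x, φ (nom s x) = nom t (φ x) := by intro x; simp [hφ]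
  have rN : (nom s).range ≤ (dif s).ker := by
    rintro _ ⟨y, rfl⟩
    simp [MonoidHom.mem_ker, hs, mul_comm]
  have PA : φ.range ≤ φ.range.comap (dif t) := by
    rintro _ ⟨y, rfl⟩
    exact ⟨dif s y, cD y⟩
  have FA : (dif t).ker ≤ φ.range.comap (dif t) := fun x hx ↦ by
    rw [Subgroup.mem_comap, MonoidHom.mem_ker.1 hx]; exact one_mem _
  -- `[A₀ : P I^σ]`
  have e1 : (φ.range ⊔ (dif t).ker).relIndex (φ.range.comap (dif t)) =
      (φ.ker.map (nom s)).relIndex (φ.ker ⊓ (nom s).range) := by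
    rw [← relIndex_map_ker (dif t) (sup_le PA FA) (inf_le_right.trans le_sup_right)]
    have a1 : (φ.range ⊔ (dif t).ker).map (dif t) = (dif s).range.map φ := by
      rw [Subgroup.map_sup, (Subgroup.map_eq_bot_iff _).2 le_rfl, sup_bot_eq]
      ext x
      simp only [Subgroup.mem_map, MonoidHom.mem_range, exists_exists_eq_and, cD]
    have a2 : (φ.range.comap (dif t)).map (dif t) = ((dif t).range.comap φ).map φ := by
      rw [Subgroup.map_comap_eq, Subgroup.map_comap_eq, inf_comm]
    rw [a1, a2, ← kI, ← kM]
    have a3 : (nom t).ker.comap φ = φ.ker.comap (nom s) := by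
      ext x; simp only [Subgroup.mem_comap, MonoidHom.mem_ker, cN]
    rw [a3, ← relIndex_comap, Subgroup.comap_map_eq]
    rw [sup_comm, ← relIndex_map_ker (nom s) (A := φ.ker ⊔ (nom s).ker), Subgroup.map_sup,
      (Subgroup.map_eq_bot_iff (f := nom s) (nom s).ker).2 le_rfl, sup_bot_eq, Subgroup.map_comap_eq, inf_comm]
    · refine sup_le ?_ ?_
      · intro x hx
        rw [Subgroup.mem_comap, MonoidHom.mem_ker, cN, MonoidHom.mem_ker.1 hx, map_one]
      · intro x hx
        rw [Subgroup.mem_comap, MonoidHom.mem_ker.1 hx]; exact one_mem _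
    · exact inf_le_right.trans le_sup_right
  have e2 : ((dif s).ker.map φ).relIndex (φ.range ⊓ (dif t).ker) =
      (φ.ker.map (dif s)).relIndex (φ.ker ⊓ (nom s).ker) := by
    rw [← Subgroup.map_comap_eq]
    have a3 : (dif t).ker.comap φ = φ.ker.comap (dif s) := by
      ext x; simp only [Subgroup.mem_comap, MonoidHom.mem_ker, cD]
    rw [a3, ← relIndex_comap, Subgroup.comap_map_eq]
    rw [sup_comm, ← relIndex_map_ker (dif s) (A := φ.ker ⊔ (dif s).ker), Subgroup.map_sup,
      (Subgroup.map_eq_bot_iff (f := dif s) (dif s).ker).2 le_rfl, sup_bot_eq, Subgroup.map_comap_eq, inf_comm, kM]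
    · refine sup_le ?_ ?_
      · intro x hx
        rw [Subgroup.mem_comap, MonoidHom.mem_ker, cD, MonoidHom.mem_ker.1 hx, map_one]
      · intro x hx
        rw [Subgroup.mem_comap, MonoidHom.mem_ker.1 hx]; exact one_mem _
    · exact inf_le_right.trans le_sup_right
  have f1 := relIndex_mul_relIndex (φ.range) (φ.range ⊔ (dif t).ker) (φ.range.comap (dif t)) le_sup_left
    (sup_le PA FA)
  rw [relIndex_sup_left, e1] at f1
  have f2 := relIndex_mul_relIndex (φ.ker.map (nom s)) (φ.ker ⊓ (nom s).range) (φ.ker ⊓ (dif s).ker)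
    (le_inf (by rintro _ ⟨x, hx, rfl⟩
                rw [MonoidHom.mem_ker, cN, MonoidHom.mem_ker.1 hx, map_one])
      (Subgroup.map_le_range _ _)) (inf_le_inf_left _ rN)
  have f3 := relIndex_mul_relIndex ((dif s).ker.map φ) (φ.range ⊓ (dif t).ker) (dif t).ker
    (le_inf (Subgroup.map_le_range _ _) (by
      rintro _ ⟨x, hx, rfl⟩
      rw [MonoidHom.mem_ker, ← cD, MonoidHom.mem_ker.1 hx, map_one])) inf_le_right
  rw [e2, inf_relIndex_right] at f3
  rw [← f1, ← f2, ← f3]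
  ring

/-- The squares in the invariants (resp. in the kernel of the norm) of `E`, in terms of the Tate
cohomology of `E`. -/
lemma herb (hs : ∀ x, s (s x) = x) (E : Subgroup M) (hE : ∀ x ∈ E, s x ∈ E) :
    sqi (E ⊓ (dif s).ker) = (E.map (nom s)).relIndex (E ⊓ (dif s).ker) *
      (E ⊓ (dif s).ker ⊔ E ⊓ (nom s).ker).relIndex E ∧
    sqi (E ⊓ (nom s).ker) = (E.map (dif s)).relIndex (E ⊓ (nom s).ker) *
      (E ⊓ (dif s).ker ⊔ E ⊓ (nom s).ker).relIndex E := by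
  have hle : E ⊓ (dif s).ker ⊔ E ⊓ (nom s).ker ≤ E := sup_le inf_le_left inf_le_left
  constructor
  · rw [← relIndex_map_ker (nom s) hle le_sup_right, Subgroup.map_sup,
      (Subgroup.map_eq_bot_iff (f := nom s) (E ⊓ (nom s).ker)).2 inf_le_right, sup_bot_eq]
    have h : (E ⊓ (dif s).ker).map (nom s) = (E ⊓ (dif s).ker).map (powMonoidHom 2) := by
      ext x
      simp only [Subgroup.mem_map, Subgroup.mem_inf, MonoidHom.mem_ker, nom_apply, dif_apply, powMonoidHom_apply]
      refine exists_congr fun y ↦ and_congr_right fun hy ↦ ?_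
      rw [← div_eq_one.1 hy.2, sq]
    rw [mul_comm, sqi, ← h]
    refine (relIndex_mul_relIndex _ _ _ (Subgroup.map_mono inf_le_left) ?_).symm
    rintro _ ⟨x, hx, rfl⟩
    exact ⟨mul_mem hx (hE x hx), by simp [MonoidHom.mem_ker, hs, mul_comm]⟩
  · rw [← relIndex_map_ker (dif s) hle le_sup_left, Subgroup.map_sup,
      (Subgroup.map_eq_bot_iff (f := dif s) (E ⊓ (dif s).ker)).2 inf_le_right, bot_sup_eq]
    have h : (E ⊓ (nom s).ker).map (dif s) = (E ⊓ (nom s).ker).map (powMonoidHom 2) := by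
      ext x
      simp only [Subgroup.mem_map, Subgroup.mem_inf, MonoidHom.mem_ker, nom_apply, dif_apply, powMonoidHom_apply]
      refine exists_congr fun y ↦ and_congr_right fun hy ↦ ?_
      rw [eq_inv_of_mul_eq_one_right hy.2, div_inv_eq_mul, sq]
    rw [mul_comm, sqi, ← h]
    refine (relIndex_mul_relIndex _ _ _ (Subgroup.map_mono inf_le_left) ?_).symm
    rintro _ ⟨x, hx, rfl⟩
    exact ⟨E.div_mem hx (hE x hx), by simp [MonoidHom.mem_ker, hs]⟩

/-- If `E` has `{1, w}` as its 2-torsion, its invariants and the kernel of its norm together have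
twice the square index of `E`. Together with `herb` this computes the Herbrand quotient of `E`. -/
lemma sqi_prod (hs : ∀ x, s (s x) = x) (E : Subgroup M) (hE : ∀ x ∈ E, s x ∈ E) (w : M) (hw : w ∈ E)
    (hw1 : w ≠ 1) (hw2 : w ^ 2 = 1) (hsw : s w = w) (htor : ∀ x ∈ E, x ^ 2 = 1 → x = 1 ∨ x = w)
    (hfin : sqi E ≠ 0) :
    sqi (E ⊓ (dif s).ker) * sqi (E ⊓ (nom s).ker) = 2 * sqi E := by
  set A := E ⊓ (dif s).ker with hA
  set B := E ⊓ (nom s).ker with hB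
  have wA : w ∈ A := ⟨hw, by simp [MonoidHom.mem_ker, hsw]⟩
  have wB : w ∈ B := ⟨hw, by simp [MonoidHom.mem_ker, hsw, ← sq, hw2]⟩
  have hle : A ⊔ B ≤ E := sup_le inf_le_left inf_le_left
  -- `E² ≤ A B`
  have hsq : E.map (powMonoidHom 2) ≤ A ⊔ B := by
    rintro _ ⟨x, hx, rfl⟩
    rw [Subgroup.mem_sup]
    refine ⟨x * s x, ⟨mul_mem hx (hE x hx), by simp [MonoidHom.mem_ker, hs, mul_comm]⟩, x / s x,
      ⟨E.div_mem hx (hE x hx), by simp [MonoidHom.mem_ker, hs]⟩, ?_⟩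
    simp [sq]
  have hg : (A ⊔ B).relIndex E ≠ 0 := fun h ↦ hfin (relIndex_eq_zero_of_le_left hsq h)
  have h1 : sqi (A ⊔ B) = sqi E := by
    have e1 := relIndex_mul_relIndex ((A ⊔ B).map (powMonoidHom 2)) (A ⊔ B) E
      (by rintro _ ⟨x, hx, rfl⟩; exact pow_mem hx 2) hle
    have e2 := relIndex_mul_relIndex ((A ⊔ B).map (powMonoidHom 2)) (E.map (powMonoidHom 2)) E
      (Subgroup.map_mono hle) (by rintro _ ⟨x, hx, rfl⟩; exact pow_mem hx 2)
    rw [relIndex_map_ker _ hle] at e2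
    · rw [← e1, mul_comm] at e2
      exact (Nat.eq_of_mul_eq_mul_right (Nat.pos_of_ne_zero hg) e2).symm
    · rintro x ⟨hx, hx2⟩
      rcases htor x hx hx2 with rfl | rfl
      · exact one_mem _
      · exact Subgroup.mem_sup_left wA
  rw [← h1]
  let f : A × B →* M := (A.subtype).coprod B.subtype
  let T : Subgroup (A × B) := (⊤ : Subgroup A).map (powMonoidHom 2) |>.prod ((⊤ : Subgroup B).map (powMonoidHom 2))
  have fr : f.range = A ⊔ B := by
    ext x
    simp [f, Subgroup.mem_sup, MonoidHom.mem_range]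
  have hsub : ∀ H : Subgroup M, ((⊤ : Subgroup H).map (powMonoidHom 2)).index = sqi H := by
    intro H
    rw [sqi, relIndex]
    congr 1
    ext x
    simp [mem_subgroupOf, Subtype.ext_iff]
  have hT : T.index = sqi A * sqi B := by
    rw [index_prod, hsub, hsub]
  have hker : f.ker = zpowers (⟨⟨w, wA⟩, ⟨w, wB⟩⟩ : A × B) := by
    ext ⟨⟨a, ha⟩, ⟨b, hb⟩⟩
    constructor
    · intro h
      have hab : a * b = 1 := h
      have hsa : a / s a = 1 := ha.2
      have hsb : b * s b = 1 := hb.2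
      have h3 : a ^ 2 = 1 := by
        have hb' : b = a⁻¹ := eq_inv_of_mul_eq_one_right hab
        rw [hb', map_inv, ← div_eq_one.1 hsa, ← sq, inv_pow, inv_eq_one] at hsb
        exact hsb
      rcases htor a ha.1 h3 with rfl | rfl
      · have : b = 1 := by simpa using hab
        subst this
        exact one_mem _
      · have : b = a := by rw [eq_inv_of_mul_eq_one_right hab]; exact inv_eq_of_mul_eq_one_right (by rw [← sq, h3])
        subst this
        exact mem_zpowers _
    · intro h
      have : zpowers (⟨⟨w, wA⟩, ⟨w, wB⟩⟩ : A × B) ≤ f.ker := by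
        rw [zpowers_le, MonoidHom.mem_ker]
        simp [f, ← sq, hw2]
      exact this h
  have hcard : Nat.card f.ker = 2 := by
    rw [hker, Nat.card_zpowers]
    refine orderOf_eq_prime ?_ ?_
    · ext <;> simp [hw2]
    · intro h
      exact hw1 (congrArg (fun z : A × B ↦ (z.1 : M)) h)
  have hTk : T.relIndex f.ker = 2 := by
    rw [← inf_relIndex_right]
    have : T ⊓ f.ker = ⊥ := by
      rw [eq_bot_iff]
      rintro ⟨⟨a, ha⟩, ⟨b, hb⟩⟩ ⟨hT1, hk⟩
      obtain ⟨⟨⟨x, hxA⟩, -, hx⟩, ⟨⟨y, hyB⟩, -, hy⟩⟩ := hT1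
      have hx : x ^ 2 = a := congrArg Subtype.val hx
      have hy : y ^ 2 = b := congrArg Subtype.val hy
      have hab : a * b = 1 := hk
      have hsx : x / s x = 1 := hxA.2
      have hsy : y * s y = 1 := hyB.2
      have hxy : (x * y) ^ 2 = 1 := by rw [mul_pow, hx, hy, hab]
      have hxy' : s (x * y) = x * y := by
        rcases htor _ (mul_mem hxA.1 hyB.1) hxy with h | h <;> rw [h] <;> simp [hsw]
      have hyy : s y = y := by
        rw [map_mul, ← div_eq_one.1 hsx] at hxy'
        exact mul_left_cancel hxy'
      have hb1 : b = 1 := by rw [← hy, sq]; nth_rw 2 [← hyy]; exact hsy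
      have ha1 : a = 1 := by simpa [hb1] using hab
      subst hb1 ha1
      rfl
    rw [this, relIndex_bot_left, hcard]
  have e3 := relIndex_mul_index (H := T) (K := T ⊔ f.ker) le_sup_left
  rw [relIndex_sup_left, hTk, hT] at e3
  rw [← e3]
  congr 1
  have e4 : (T.map f).relIndex ((⊤ : Subgroup (A × B)).map f) = (T ⊔ f.ker).index := by
    rw [relIndex_map_map, top_sup_eq, relIndex_top_right]
  rw [← e4, ← MonoidHom.range_eq_map, fr, sqi]
  congr 1
  ext x
  simp only [Subgroup.mem_map]
  constructor
  · rintro ⟨⟨⟨a, ha⟩, ⟨b, hb⟩⟩, hT1, rfl⟩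
    obtain ⟨⟨⟨x, hxA⟩, -, hx⟩, ⟨⟨y, hyB⟩, -, hy⟩⟩ := hT1
    have hx : x ^ 2 = a := congrArg Subtype.val hx
    have hy : y ^ 2 = b := congrArg Subtype.val hy
    refine ⟨x * y, mul_mem (Subgroup.mem_sup_left hxA) (Subgroup.mem_sup_right hyB), ?_⟩
    simp [f, mul_pow, hx, hy]
  · rintro ⟨y, hy, rfl⟩
    obtain ⟨a, ha, b, hb, rfl⟩ := Subgroup.mem_sup.1 hy
    refine ⟨⟨⟨a, ha⟩ ^ 2, ⟨b, hb⟩ ^ 2⟩, ⟨⟨⟨a, ha⟩, trivial, rfl⟩, ⟨⟨b, hb⟩, trivial, rfl⟩⟩, ?_⟩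
    simp [f, mul_pow]

/-- The ambiguous class number formula, in terms of abstract groups. -/
lemma chev2 (hs : ∀ x, s (s x) = x) (ht : ∀ x, t (t x) = x) (hφ : ∀ x, φ (s x) = t (φ x))
    (hM : ∀ x, x * s x = 1 → ∃ y, x = y / s y) (hI : ∀ x, x * t x = 1 → ∃ y, x = y / t y)
    (w : M) (hw : w ∈ φ.ker)
    (hw1 : w ≠ 1) (hw2 : w ^ 2 = 1) (hsw : s w = w) (htor : ∀ x ∈ φ.ker, x ^ 2 = 1 → x = 1 ∨ x = w)
    (hfin : sqi φ.ker ≠ 0) :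
    φ.range.relIndex (φ.range.comap (dif t)) * (φ.ker ⊓ (nom s).range).relIndex (φ.ker ⊓ (dif s).ker) *
      (2 * sqi φ.ker) =
    ((dif s).ker.map φ).relIndex (dif t).ker * sqi (φ.ker ⊓ (dif s).ker) ^ 2 := by
  have hE : ∀ x ∈ φ.ker, s x ∈ φ.ker := fun x hx ↦ by
    rw [MonoidHom.mem_ker, hφ, MonoidHom.mem_ker.1 hx, map_one]
  have h1 := chev1 s t φ hs hφ hM hI ht
  obtain ⟨h2, h3⟩ := herb s hs φ.ker hE
  have h4 := sqi_prod s hs φ.ker hE w hw hw1 hw2 hsw htor hfin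
  rw [← h4, sq, h3]
  nth_rw 2 [h2]
  calc _ = (φ.range.relIndex (φ.range.comap (dif t)) * (φ.ker ⊓ (nom s).range).relIndex (φ.ker ⊓ (dif s).ker) *
      (φ.ker.map (dif s)).relIndex (φ.ker ⊓ (nom s).ker)) * (sqi (φ.ker ⊓ (dif s).ker) *
      (φ.ker ⊓ (dif s).ker ⊔ φ.ker ⊓ (nom s).ker).relIndex φ.ker) := by ring
    _ = _ := by rw [h1]; ring

end AbstractGroup
end H15

/-! ### Squares of units -/

namespace H15
open Filter Topology

section UnitIndex
open NumberField.Units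

lemma index_sq_free {A : Type*} [AddCommGroup A] {r : ℕ} (b : Module.Basis (Fin r) ℤ A) :
    (nsmulAddMonoidHom (α := A) 2).range.index = 2 ^ r := by
  let f : A →+ (Fin r → ZMod 2) :=
    (Pi.addMonoidHom fun i ↦ (Int.castAddHom (ZMod 2)).comp (Pi.evalAddMonoidHom _ i)).comp
      b.equivFun.toLinearMap.toAddMonoidHom
  have hf : ∀ x i, f x i = ((b.repr x i : ℤ) : ZMod 2) := fun x i ↦ rfl
  have hsurj : Function.Surjective f := by
    intro v
    refine ⟨b.equivFun.symm fun i ↦ ((v i).val : ℤ), ?_⟩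
    ext i
    rw [hf, ← b.equivFun_apply, LinearEquiv.apply_symm_apply]
    simp
  have hk : (nsmulAddMonoidHom (α := A) 2).range = f.ker := by
    ext x
    simp only [AddMonoidHom.mem_range, AddMonoidHom.mem_ker, nsmulAddMonoidHom_apply]
    constructor
    · rintro ⟨y, rfl⟩
      ext i
      rw [hf]
      simp only [map_nsmul, Finsupp.smul_apply, nsmul_eq_mul, Int.cast_mul, Pi.zero_apply]
      have : ((2 : ℕ) : ZMod 2) = 0 := by decide
      simp [show (2 : ZMod 2) = 0 by decide]
    · intro h
      have h2 : ∀ i, ∃ m : ℤ, b.repr x i = 2 * m := by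
        intro i
        have := congrFun h i
        rw [hf, Pi.zero_apply, ZMod.intCast_zmod_eq_zero_iff_dvd] at this
        exact_mod_cast this
      choose m hm using h2
      refine ⟨b.equivFun.symm m, ?_⟩
      apply b.equivFun.injective
      ext i
      rw [map_nsmul, LinearEquiv.apply_symm_apply, b.equivFun_apply, hm]
      simp
  rw [hk, AddSubgroup.index_ker, AddMonoidHom.range_eq_top.2 hsurj]
  simp

variable (X : Type*) [Field X] [NumberField X]

/-- Dirichlet's unit theorem: `[U : U²] = 2 ^ n` with `n` the number of infinite places, as `U` is the
product of a cyclic group of even order and a free group of rank `n - 1`. -/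
lemma sqi_units : sqi (⊤ : Subgroup (𝓞 X)ˣ) = 2 ^ Fintype.card (InfinitePlace X) := by
  set S := (⊤ : Subgroup (𝓞 X)ˣ).map (powMonoidHom 2) with hS
  have h1 := Subgroup.relIndex_mul_index (H := S) (K := torsion X ⊔ S) le_sup_right
  rw [Subgroup.relIndex_sup_right] at h1
  have h2 : S.relIndex (torsion X) = 2 := by
    have : S.subgroupOf (torsion X) = (powMonoidHom 2 : torsion X →* torsion X).range := by
      ext ⟨x, hx⟩
      simp only [Subgroup.mem_subgroupOf, hS, Subgroup.mem_map, Subgroup.mem_top, true_and, MonoidHom.mem_range,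
        powMonoidHom_apply, Subtype.exists, Subtype.ext_iff]
      constructor
      · rintro ⟨y, hy⟩
        refine ⟨y, ?_, hy⟩
        rw [torsion, CommGroup.mem_torsion] at hx ⊢
        rw [← hy] at hx
        exact hx.of_pow (by norm_num)
      · rintro ⟨y, _, hy⟩
        exact ⟨y, hy⟩
    rw [Subgroup.relIndex, this, IsCyclic.index_powMonoidHom_range, Nat.gcd_eq_right]
    exact (even_torsionOrder X).two_dvd
  have h3 : (torsion X ⊔ S).index = 2 ^ rank X := by
    rw [← index_sq_free (A := Additive ((𝓞 X)ˣ ⧸ torsion X)) (basisModTorsion X)]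
    have : torsion X ⊔ S = (powMonoidHom (α := (𝓞 X)ˣ ⧸ torsion X) 2).range.comap (QuotientGroup.mk' (torsion X)) := by
      ext x
      constructor
      · intro hx
        obtain ⟨t, ht, _, ⟨y, -, rfl⟩, rfl⟩ := Subgroup.mem_sup.1 hx
        refine ⟨QuotientGroup.mk' _ y, ?_⟩
        refine (QuotientGroup.eq (s := torsion X)).2 ?_
        simpa [mul_comm, mul_left_comm] using ht
      · rintro ⟨y, hy⟩
        obtain ⟨y, rfl⟩ := QuotientGroup.mk'_surjective _ y
        rw [powMonoidHom_apply, ← map_pow] at hy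
        have := (QuotientGroup.eq (s := torsion X)).1 hy
        rw [Subgroup.mem_sup]
        exact ⟨_, this, y ^ 2, ⟨y, trivial, rfl⟩, by simp⟩
    rw [this, Subgroup.index_comap_of_surjective _ (QuotientGroup.mk'_surjective _)]
    rfl
  rw [sqi, Subgroup.relIndex_top_right, ← h1, h2, h3, rank, ← pow_succ']
  congr 1
  have : 0 < Fintype.card (InfinitePlace X) := Fintype.card_pos
  omega

end UnitIndex
end H15

/-! ### Galois action on ideals and classes -/

namespace H15
open Filter Topology

section Conj
variable {Y X : Type*} [Field Y] [NumberField Y] [Field X] [NumberField X] [Algebra Y X]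

/-- The action of `τ` on the ring of integers. -/
def rI (τ : X ≃ₐ[Y] X) : 𝓞 X ≃+* 𝓞 X := RingOfIntegers.mapRingEquiv τ.toRingEquiv

@[simp] lemma coe_rI (τ : X ≃ₐ[Y] X) (x : 𝓞 X) : ((rI τ x : 𝓞 X) : X) = τ x := rfl

lemma rI_le (τ : X ≃ₐ[Y] X) : (𝓞 X)⁰ ≤ Submonoid.comap (rI τ : 𝓞 X →+* 𝓞 X) (𝓞 X)⁰ := by
  intro x hx
  rw [Submonoid.mem_comap, mem_nonZeroDivisors_iff_ne_zero]
  simpa using mem_nonZeroDivisors_iff_ne_zero.1 hx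

lemma loc_map (τ : X ≃ₐ[Y] X) (x : X) : IsLocalization.map (S := X) X (rI τ : 𝓞 X →+* 𝓞 X) (rI_le τ) x = τ x := by
  have := IsLocalization.map_unique (rI_le τ) (τ : X →+* X) (Q := X) (S := X) (fun x ↦ rfl)
  rw [this]; rfl

/-- Group of fractional ideals. -/
abbrev FI (X : Type*) [Field X] [NumberField X] := (FractionalIdeal (𝓞 X)⁰ X)ˣ

/-- The action of `τ` on fractional ideals. -/
def tF (τ : X ≃ₐ[Y] X) : FractionalIdeal (𝓞 X)⁰ X →+* FractionalIdeal (𝓞 X)⁰ X :=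
  FractionalIdeal.extendedHom' X (rI_le τ)

lemma tF_span (τ : X ≃ₐ[Y] X) (x : X) :
    tF τ (FractionalIdeal.spanSingleton _ x) = FractionalIdeal.spanSingleton _ (τ x) := by
  rw [← loc_map]
  exact FractionalIdeal.extended_spanSingleton (f := (rI τ : 𝓞 X →+* 𝓞 X)) X (rI_le τ) x

lemma tF_coe (τ : X ≃ₐ[Y] X) (J : Ideal (𝓞 X)) :
    tF τ (J : FractionalIdeal (𝓞 X)⁰ X) = (J.map (rI τ : 𝓞 X →+* 𝓞 X) : Ideal (𝓞 X)) :=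
  FractionalIdeal.extended_coeIdeal_eq_map (f := (rI τ : 𝓞 X →+* 𝓞 X)) X (rI_le τ) J

lemma mem_tF (τ : X ≃ₐ[Y] X) (hτ2 : τ * τ = 1) (J : FractionalIdeal (𝓞 X)⁰ X) (x : X) : x ∈ tF τ J ↔ τ x ∈ J := by
  have hinv : ∀ x, τ (τ x) = x := fun x ↦ congrArg (fun f : X ≃ₐ[Y] X ↦ f x) hτ2
  refine (FractionalIdeal.mem_extended_iff X (rI_le τ) J x).trans ?_
  constructor
  · intro h
    induction h using Submodule.span_induction with
    | mem x hx =>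
      obtain ⟨y, hy, rfl⟩ := hx
      rw [loc_map, hinv]; exact hy
    | zero => rw [map_zero]; exact J.zero_mem
    | add x y _ _ hx hy => rw [map_add]; exact Submodule.add_mem (J : Submodule (𝓞 X) X) hx hy
    | smul a x _ hx =>
      rw [Algebra.smul_def, map_mul]
      exact Submodule.smul_mem (J : Submodule (𝓞 X) X) (rI τ a) hx
  · intro h
    exact Submodule.subset_span ⟨τ x, h, by rw [loc_map, hinv]⟩

lemma tF_tF (τ : X ≃ₐ[Y] X) (hτ2 : τ * τ = 1) (J : FractionalIdeal (𝓞 X)⁰ X) : tF τ (tF τ J) = J := by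
  have hinv : ∀ x, τ (τ x) = x := fun x ↦ congrArg (fun f : X ≃ₐ[Y] X ↦ f x) hτ2
  apply SetLike.ext
  intro x
  rw [mem_tF τ hτ2, mem_tF τ hτ2, hinv]

/-- The action of `τ` on the group of fractional ideals. -/
def tI (τ : X ≃ₐ[Y] X) : FI X →* FI X := Units.map (tF τ : FractionalIdeal (𝓞 X)⁰ X →* FractionalIdeal (𝓞 X)⁰ X)
/-- The action of `τ` on `Xˣ`. -/
def sM (τ : X ≃ₐ[Y] X) : Xˣ →* Xˣ := Units.map (τ : X →* X)

@[simp] lemma coe_tI (τ : X ≃ₐ[Y] X) (J : FI X) : ((tI τ J : FI X) : FractionalIdeal (𝓞 X)⁰ X) = tF τ J := rfl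
@[simp] lemma coe_sM (τ : X ≃ₐ[Y] X) (x : Xˣ) : ((sM τ x : Xˣ) : X) = τ x := rfl

/-- The principal fractional ideals. -/
abbrev pr (X : Type*) [Field X] [NumberField X] : Xˣ →* FI X := toPrincipalIdeal (𝓞 X) X

lemma pr_sM (τ : X ≃ₐ[Y] X) (x : Xˣ) : pr X (sM τ x) = tI τ (pr X x) := by
  ext1
  simp [tF_span]

/-- Hilbert 90 for ideals. -/
lemma h90I (τ : X ≃ₐ[Y] X) (hτ2 : τ * τ = 1) (J : FI X) (hJ : J * tI τ J = 1) : ∃ A : FI X, J = A / tI τ A := by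
  have hne : (1 + (J : FractionalIdeal (𝓞 X)⁰ X)) ≠ 0 := by
    intro h
    have : (1 : FractionalIdeal (𝓞 X)⁰ X) ≤ 0 := h ▸ le_sup_left
    have h1 : (1 : X) ∈ (0 : FractionalIdeal (𝓞 X)⁰ X) := this (FractionalIdeal.one_mem_one _)
    rw [FractionalIdeal.mem_zero_iff] at h1
    exact one_ne_zero h1
  refine ⟨Units.mk0 _ hne, ?_⟩
  rw [eq_div_iff_mul_eq']
  ext1
  have hJ' : (J : FractionalIdeal (𝓞 X)⁰ X) * tF τ J = 1 := congrArg Units.val hJ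
  simp only [Units.val_mul, coe_tI, Units.val_mk0, map_add, map_one]
  rw [mul_add, mul_one, hJ', add_comm]

/-- Hilbert 90 for the involution `τ` acting on `Xˣ`. -/
lemma h90M (τ : X ≃ₐ[Y] X) (hτ1 : τ ≠ 1) (hτ2 : τ * τ = 1) (x : Xˣ) (hx : x * sM τ x = 1) :
    ∃ y : Xˣ, x = y / sM τ y := by
  have hinv : ∀ x, τ (τ x) = x := fun x ↦ congrArg (fun f : X ≃ₐ[Y] X ↦ f x) hτ2
  have hx' : (x : X) * τ x = 1 := congrArg Units.val hx
  by_cases h : (1 + x : X) = 0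
  · obtain ⟨a, ha⟩ : ∃ a, τ a ≠ a := by
      by_contra hh; push Not at hh
      exact hτ1 (AlgEquiv.ext hh)
    have ha' : a - τ a ≠ 0 := sub_ne_zero.2 (Ne.symm ha)
    refine ⟨Units.mk0 _ ha', ?_⟩
    rw [eq_div_iff_mul_eq']
    ext1
    have hx1 : (x : X) = -1 := by linear_combination h
    simp [hx1, hinv]
  · refine ⟨Units.mk0 _ h, ?_⟩
    rw [eq_div_iff_mul_eq']
    ext1
    simp only [Units.val_mul, coe_sM, Units.val_mk0, map_add, map_one]
    linear_combination hx'

/-- The action of `τ` on the ideal class group. -/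
def sCl (τ : X ≃ₐ[Y] X) : ClassGroup (𝓞 X) →* ClassGroup (𝓞 X) :=
  ((ClassGroup.equiv (R := 𝓞 X) X).symm.toMonoidHom.comp (QuotientGroup.map _ _ (tI τ) (by
    rintro _ ⟨x, rfl⟩
    exact ⟨sM τ x, pr_sM τ x⟩))).comp (ClassGroup.equiv (R := 𝓞 X) X).toMonoidHom

lemma equiv_mkX (J : FI X) : ClassGroup.equiv (R := 𝓞 X) X (ClassGroup.mk X J) = QuotientGroup.mk J := by
  rw [ClassGroup.equiv_mk, FractionalIdeal.canonicalEquiv_self]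
  congr 1

lemma sCl_mk (τ : X ≃ₐ[Y] X) (J : FI X) : sCl τ (ClassGroup.mk X J) = ClassGroup.mk X (tI τ J) := by
  apply (ClassGroup.equiv (R := 𝓞 X) X).injective
  rw [equiv_mkX]
  simp only [sCl, MonoidHom.comp_apply, MulEquiv.toMonoidHom_eq_coe, MonoidHom.coe_coe, MulEquiv.apply_symm_apply]
  rw [equiv_mkX]
  rfl

lemma ker_mkX : (ClassGroup.mk (R := 𝓞 X) X).ker = (pr X).range := by
  ext J
  rw [MonoidHom.mem_ker, ← (ClassGroup.equiv (R := 𝓞 X) X).injective.eq_iff, equiv_mkX, map_one, QuotientGroup.eq_one_iff]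

lemma mkX_surj : Function.Surjective (ClassGroup.mk (R := 𝓞 X) X) := fun c ↦
  ClassGroup.induction (R := 𝓞 X) X (P := fun c ↦ ∃ J, ClassGroup.mk X J = c) (fun J ↦ ⟨J, rfl⟩) c

/-- The number of ambiguous ideal classes, as an index in the group of fractional ideals. -/
lemma card_am (τ : X ≃ₐ[Y] X) :
    (pr X).range.relIndex ((pr X).range.comap (dif (tI τ))) = Nat.card (dif (sCl τ)).ker := by
  have : (pr X).range.comap (dif (tI τ)) = (dif (sCl τ)).ker.comap (ClassGroup.mk (R := 𝓞 X) X) := by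
    ext J
    rw [Subgroup.mem_comap, Subgroup.mem_comap, ← ker_mkX, MonoidHom.mem_ker, MonoidHom.mem_ker]
    simp [sCl_mk]
  rw [this, ← ker_mkX, Subgroup.relIndex_ker, Subgroup.map_comap_eq_self_of_surjective mkX_surj]

end Conj
end H15

/-! ### Chevalley's ambiguous class number formula -/

namespace H15
open Filter Topology

section Chev
variable {Y X : Type*} [Field Y] [NumberField Y] [Field X] [NumberField X] [Algebra Y X]

/-- Units of `X` inside `Xˣ`. -/
def uX (X : Type*) [Field X] [NumberField X] : (𝓞 X)ˣ →* Xˣ := Units.map (algebraMap (𝓞 X) X : 𝓞 X →* X)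

lemma uX_inj : Function.Injective (uX X) := Units.map_injective RingOfIntegers.coe_injective

/-- The elements generating the unit ideal are the units of `𝓞 X`. -/
lemma ker_pr : (pr X).ker = (uX X).range := by
  ext x
  rw [MonoidHom.mem_ker, toPrincipalIdeal_eq_iff, Units.val_one]
  constructor
  · intro h
    have hx : (x : X) ∈ (1 : FractionalIdeal (𝓞 X)⁰ X) := h ▸ FractionalIdeal.mem_spanSingleton_self _ _
    have hy : (1 : X) ∈ FractionalIdeal.spanSingleton (𝓞 X)⁰ (x : X) := h ▸ FractionalIdeal.one_mem_one _
    obtain ⟨a, ha⟩ := (FractionalIdeal.mem_one_iff _).1 hx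
    obtain ⟨b, hb⟩ := (FractionalIdeal.mem_spanSingleton _).1 hy
    rw [Algebra.smul_def, ← ha] at hb
    have hab : a * b = 1 := by
      apply RingOfIntegers.coe_injective
      rw [map_mul, mul_comm, hb, map_one]
    exact ⟨⟨a, b, hab, by rw [mul_comm, hab]⟩, by ext1; exact ha⟩
  · rintro ⟨u, rfl⟩
    rw [← FractionalIdeal.spanSingleton_one]
    apply SetLike.ext
    intro y
    simp only [FractionalIdeal.mem_spanSingleton]
    constructor
    · rintro ⟨z, rfl⟩
      exact ⟨z * u, by simp [Algebra.smul_def, uX]⟩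
    · rintro ⟨z, rfl⟩
      refine ⟨z * ((u⁻¹ : (𝓞 X)ˣ) : 𝓞 X), ?_⟩
      simp only [Algebra.smul_def, uX, Units.coe_map, MonoidHom.coe_coe, ← map_mul, mul_assoc, Units.inv_mul]
      simp

variable (Y X) in
/-- `Yˣ → Xˣ` -/
def iM : Yˣ →* Xˣ := Units.map (algebraMap Y X : Y →* X)

variable (Y X) in
/-- units of `Y` inside `Xˣ` -/
def iU : (𝓞 Y)ˣ →* Xˣ := (iM Y X).comp (uX Y)

lemma iM_inj : Function.Injective (iM Y X) := Units.map_injective (algebraMap Y X).injective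

lemma ker_dif_sM (τ : X ≃ₐ[Y] X) (hfix : ∀ x, τ x = x → ∃ y : Y, algebraMap Y X y = x) :
    (dif (sM τ)).ker = (iM Y X).range := by
  ext x
  rw [MonoidHom.mem_ker, dif_apply, div_eq_one]
  constructor
  · intro h
    obtain ⟨y, hy⟩ := hfix x (congrArg Units.val h).symm
    refine ⟨Units.mk0 y ?_, by ext1; exact hy⟩
    rintro rfl
    exact x.ne_zero (by rw [← hy, map_zero])
  · rintro ⟨y, rfl⟩
    ext1
    simp [iM]

lemma ker_inf (τ : X ≃ₐ[Y] X) (hfix : ∀ x, τ x = x → ∃ y : Y, algebraMap Y X y = x) :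
    (pr X).ker ⊓ (dif (sM τ)).ker = (iU Y X).range := by
  rw [ker_dif_sM τ hfix, ker_pr]
  ext x
  constructor
  · rintro ⟨⟨u, hu⟩, ⟨y, hy⟩⟩
    have hyu : algebraMap Y X y = algebraMap (𝓞 X) X u := by
      have := congrArg Units.val (hy.trans hu.symm); exact this
    have hyu' : algebraMap Y X ((y⁻¹ : Yˣ) : Y) = algebraMap (𝓞 X) X ((u⁻¹ : (𝓞 X)ˣ) : 𝓞 X) := by
      have := congrArg (fun z : Xˣ ↦ ((z⁻¹ : Xˣ) : X)) (hy.trans hu.symm)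
      simpa [iM, uX, ← map_inv] using! this
    have h1 : IsIntegral ℤ (y : Y) := by
      rw [← isIntegral_algebraMap_iff (B := X) (algebraMap Y X).injective, hyu]; exact RingOfIntegers.isIntegral_coe _
    have h2 : IsIntegral ℤ ((y⁻¹ : Yˣ) : Y) := by
      rw [← isIntegral_algebraMap_iff (B := X) (algebraMap Y X).injective, hyu']; exact RingOfIntegers.isIntegral_coe _
    refine ⟨⟨⟨y, h1⟩, ⟨_, h2⟩, ?_, ?_⟩, ?_⟩
    · apply RingOfIntegers.coe_injective; exact y.mul_inv
    · apply RingOfIntegers.coe_injective; exact y.inv_mul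
    · rw [← hy]; ext1; rfl
  · rintro ⟨u, rfl⟩
    refine ⟨⟨Units.map (algebraMap (𝓞 Y) (𝓞 X) : 𝓞 Y →* 𝓞 X) u, ?_⟩, ⟨uX Y u, rfl⟩⟩
    ext1
    rfl

lemma sqi_map {M M' : Type*} [CommGroup M] [CommGroup M'] (f : M →* M') (hf : Function.Injective f) :
    sqi f.range = sqi (⊤ : Subgroup M) := by
  rw [sqi, sqi, ← Subgroup.relIndex_map_map_of_injective _ _ hf, MonoidHom.range_eq_map]
  congr 1
  rw [Subgroup.map_map, Subgroup.map_map]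
  congr 1
  ext x
  simp

/-- Units of `Y` that are norms from `X`. -/
def NU (τ : X ≃ₐ[Y] X) : Subgroup (𝓞 Y)ˣ := ((nom (sM τ)).range).comap (iU Y X)

lemma mem_NU (τ : X ≃ₐ[Y] X) (u : (𝓞 Y)ˣ) : u ∈ NU τ ↔ ∃ x : X, x * τ x = algebraMap Y X (algebraMap (𝓞 Y) Y u) := by
  constructor
  · rintro ⟨x, hx⟩
    exact ⟨x, congrArg Units.val hx⟩
  · rintro ⟨x, hx⟩
    have hx0 : x ≠ 0 := by
      rintro rfl
      have : algebraMap Y X (algebraMap (𝓞 Y) Y u) ≠ 0 := (iU Y X u).ne_zero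
      exact this (by rw [← hx, zero_mul])
    exact ⟨Units.mk0 x hx0, by ext1; exact hx⟩

lemma sq_mem_NU (τ : X ≃ₐ[Y] X) (u : (𝓞 Y)ˣ) : u ^ 2 ∈ NU τ := by
  rw [mem_NU]
  exact ⟨algebraMap Y X (algebraMap (𝓞 Y) Y u), by simp [sq]⟩

/-- Squares of units are norms, so the index divides `[U : U²]`. -/
lemma NU_index_dvd (τ : X ≃ₐ[Y] X) : (NU τ).index ∣ 2 ^ Fintype.card (InfinitePlace Y) := by
  rw [← sqi_units, sqi, Subgroup.relIndex_top_right]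
  apply Subgroup.index_dvd_of_le
  rintro _ ⟨u, -, rfl⟩
  exact sq_mem_NU τ u

variable (Y X) in
/-- Extension of fractional ideals from `Y` to `X`. -/
def iI : FI Y →* FI X := Units.map (FractionalIdeal.extendedHom (A := 𝓞 Y) (K := Y) X (𝓞 X) :
  FractionalIdeal (𝓞 Y)⁰ Y →* FractionalIdeal (𝓞 X)⁰ X)

lemma iI_inj : Function.Injective (iI Y X) :=
  Units.map_injective (FractionalIdeal.extendedHom_injective (𝓞 Y) Y X (𝓞 X))

lemma iI_pr (y : Yˣ) : iI Y X (pr Y y) = pr X (iM Y X y) := by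
  ext1
  rw [coe_toPrincipalIdeal]
  refine (congrArg (FractionalIdeal.extendedHom (A := 𝓞 Y) (K := Y) X (𝓞 X)) (coe_toPrincipalIdeal y)).trans ?_
  rw [FractionalIdeal.extendedHom_spanSingleton]
  congr 1
  have := IsLocalization.map_unique (M := (𝓞 Y)⁰) (T := (𝓞 X)⁰) (g := algebraMap (𝓞 Y) (𝓞 X))
    (nonZeroDivisors_le_comap_nonZeroDivisors_of_injective _ (FaithfulSMul.algebraMap_injective _ _))
     (algebraMap Y X) (Q := X) (S := Y) (fun x ↦ rfl)
  exact congrArg (fun f : Y →+* X ↦ f y) this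

lemma pr_index : (pr Y).range.index = classNumber Y := by
  rw [classNumber, ← Nat.card_eq_fintype_card, Subgroup.index]
  exact (Nat.card_congr (ClassGroup.equiv (R := 𝓞 Y) Y).toEquiv).symm

lemma iI_fixed (τ : X ≃ₐ[Y] X) (J : FI Y) : tI τ (iI Y X J) = iI Y X J := by
  obtain ⟨I, hI⟩ : ∃ I : FI Y, I = J := ⟨J, rfl⟩
  ext1
  rw [coe_tI]
  refine (FractionalIdeal.extended_extended (A := 𝓞 Y) (K := Y) (M := (𝓞 Y)⁰) (L := X) (N := (𝓞 X)⁰) (f := algebraMap (𝓞 Y) (𝓞 X))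
     (C := 𝓞 X) (W := X) (P := (𝓞 X)⁰) (g := (rI τ : 𝓞 X →+* 𝓞 X)) _ J.1 (rI_le τ)).trans ?_
  have hc : (rI τ : 𝓞 X →+* 𝓞 X).comp (algebraMap (𝓞 Y) (𝓞 X)) = algebraMap (𝓞 Y) (𝓞 X) := by
    ext y
    simp only [RingHom.comp_apply, RingHom.coe_coe, coe_rI]
    exact τ.commutes (y : Y)
  simp only [hc]
  rfl

/-- **Ambiguous class number formula** for a quadratic extension. -/
theorem chevalley (τ : X ≃ₐ[Y] X) (hτ1 : τ ≠ 1) (hτ2 : τ * τ = 1)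
    (hfix : ∀ x, τ x = x → ∃ y : Y, algebraMap Y X y = x) :
    Nat.card (dif (sCl τ)).ker * (NU τ).index * 2 ^ (Fintype.card (InfinitePlace X) + 1) =
      (iI Y X).range.relIndex (dif (tI τ)).ker * classNumber Y * 2 ^ (2 * Fintype.card (InfinitePlace Y)) := by
  have hinv : ∀ x, τ (τ x) = x := fun x ↦ congrArg (fun f : X ≃ₐ[Y] X ↦ f x) hτ2
  have sqE : sqi (pr X).ker = 2 ^ Fintype.card (InfinitePlace X) := by
    rw [ker_pr, sqi_map _ uX_inj, sqi_units]
  have iUi : Function.Injective (iU Y X) := iM_inj.comp uX_inj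
  have sqE' : sqi ((pr X).ker ⊓ (dif (sM τ)).ker) = 2 ^ Fintype.card (InfinitePlace Y) := by
    rw [ker_inf τ hfix, sqi_map _ iUi, sqi_units]
  have key := chev2 (sM τ) (tI τ) (pr X) (fun x ↦ by ext1; simp [hinv]) (fun J ↦ by ext1; simp [tF_tF τ hτ2])
    (pr_sM τ) (h90M τ hτ1 hτ2) (h90I τ hτ2) (-1) (by
      rw [ker_pr]; exact ⟨-1, by ext1; simp [uX]⟩) (by
      intro h
      have := congrArg Units.val h
      norm_num at this) (by norm_num) (by ext1; simp) (fun x _ hx ↦ by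
      have hx' : (x : X) ^ 2 = 1 := congrArg Units.val hx
      rcases (sq_eq_sq_iff_eq_or_eq_neg.1 (hx'.trans (one_pow 2).symm)) with h | h
      · left; ext1; exact h
      · right; ext1; simpa using h) (by rw [sqE]; positivity)
  rw [card_am, sqE, sqE', ker_inf τ hfix] at key
  have e1 : ((pr X).ker ⊓ (nom (sM τ)).range).relIndex (iU Y X).range = (NU τ).index := by
    rw [MonoidHom.range_eq_map (iU Y X), ← Subgroup.relIndex_comap, Subgroup.relIndex_top_right]
    congr 1
    rw [NU, Subgroup.comap_inf, inf_eq_right]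
    intro u _
    have : iU Y X u ∈ (iU Y X).range := ⟨u, rfl⟩
    rw [← ker_inf τ hfix] at this
    exact this.1
  have e2 : ((dif (sM τ)).ker.map (pr X)).relIndex (dif (tI τ)).ker =
      classNumber Y * (iI Y X).range.relIndex (dif (tI τ)).ker := by
    have a1 : (dif (sM τ)).ker.map (pr X) = (pr Y).range.map (iI Y X) := by
      rw [ker_dif_sM τ hfix, MonoidHom.range_eq_map, MonoidHom.range_eq_map, Subgroup.map_map, Subgroup.map_map]
      congr 1
      ext y
      simp [iI_pr]
    have a2 : (iI Y X).range ≤ (dif (tI τ)).ker := by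
      rintro _ ⟨J, rfl⟩
      rw [MonoidHom.mem_ker, dif_apply, iI_fixed, div_self']
    rw [a1, ← Subgroup.relIndex_mul_relIndex _ _ _ (Subgroup.map_le_range _ _) a2]
    congr 1
    rw [MonoidHom.range_eq_map (iI Y X), Subgroup.relIndex_map_map_of_injective _ _ iI_inj, Subgroup.relIndex_top_right, pr_index]
  rw [e1, e2] at key
  rw [pow_succ, mul_comm (2 ^ Fintype.card (InfinitePlace X)) 2, key]
  ring

end Chev
end H15

/-! ### Invariant ideals and ramified primes -/

namespace H15
open Filter Topology

/-- Adjoining `n` elements whose squares lie in `H` gives an index dividing `2 ^ n`. -/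
lemma relIndex_closure_dvd {M : Type*} [CommGroup M] (H : Subgroup M) (T : Finset M) (hT : ∀ g ∈ T, g ^ 2 ∈ H) :
    H.relIndex (H ⊔ Subgroup.closure (T : Set M)) ∣ 2 ^ T.card := by
  classical
  induction T using Finset.induction_on with
  | empty => simp
  | insert a T ha ih =>
    rw [Finset.card_insert_of_notMem ha, pow_succ]
    have ih' := ih (fun g hg ↦ hT g (Finset.mem_insert_of_mem hg))
    set W := H ⊔ Subgroup.closure (T : Set M) with hW
    have e : H ⊔ Subgroup.closure ((insert a T : Finset M) : Set M) = W ⊔ Subgroup.zpowers a := by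
      rw [Finset.coe_insert, Set.insert_eq, Subgroup.closure_union, Subgroup.zpowers_eq_closure, hW]
      ac_rfl
    rw [e, ← Subgroup.relIndex_mul_relIndex H W _ le_sup_left le_sup_left]
    refine mul_dvd_mul ih' ?_
    rw [Subgroup.relIndex_sup_left, ← Subgroup.inf_relIndex_right]
    have : (Subgroup.zpowers (a ^ 2)) ≤ W ⊓ Subgroup.zpowers a := by
      rw [Subgroup.zpowers_le]
      exact ⟨(le_sup_left : H ≤ W) (hT a (Finset.mem_insert_self _ _)), Subgroup.pow_mem _ (Subgroup.mem_zpowers a) 2⟩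
    refine (Subgroup.relIndex_dvd_of_le_left _ this).trans ?_
    let N := (Subgroup.zpowers (a ^ 2)).subgroupOf (Subgroup.zpowers a)
    let b : Subgroup.zpowers a := ⟨a, Subgroup.mem_zpowers a⟩
    have hcard : orderOf (QuotientGroup.mk b : Subgroup.zpowers a ⧸ N) = Nat.card (Subgroup.zpowers a ⧸ N) := by
      apply orderOf_eq_card_of_forall_mem_zpowers
      intro x
      induction x using QuotientGroup.induction_on with | _ x
      obtain ⟨x, hx⟩ := x
      obtain ⟨n, rfl⟩ := Subgroup.mem_zpowers_iff.1 hx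
      exact ⟨n, rfl⟩
    change Nat.card (Subgroup.zpowers a ⧸ N) ∣ 2
    rw [← hcard]
    apply orderOf_dvd_of_pow_eq_one
    rw [← QuotientGroup.mk_pow, QuotientGroup.eq_one_iff, Subgroup.mem_subgroupOf]
    exact Subgroup.mem_zpowers _

section R
variable {Y X : Type*} [Field Y] [NumberField Y] [Field X] [NumberField X] [Algebra Y X]

lemma finrank_int (h2 : Module.finrank Y X = 2) : Module.finrank (𝓞 Y) (𝓞 X) = 2 := by
  rw [← h2]; exact (IsFractionRing.finrank_eq (𝓞 Y) Y (𝓞 X) X).symm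

lemma exists_mul_int (τ : X ≃ₐ[Y] X) (hτ2 : τ * τ = 1)
    (hfix : ∀ x, τ x = x → ∃ y : Y, algebraMap Y X y = x) (x : 𝓞 X) :
    ∃ y : 𝓞 Y, algebraMap (𝓞 Y) (𝓞 X) y = x * rI τ x := by
  have hinv : ∀ x, τ (τ x) = x := fun x ↦ congrArg (fun f : X ≃ₐ[Y] X ↦ f x) hτ2
  obtain ⟨y, hy⟩ := hfix ((x : X) * τ x) (by rw [map_mul, hinv, mul_comm])
  have hint : IsIntegral ℤ y := by
    rw [← isIntegral_algHom_iff (IsScalarTower.toAlgHom ℤ Y X) (algebraMap Y X).injective]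
    change IsIntegral ℤ (algebraMap Y X y)
    rw [hy]
    exact (RingOfIntegers.isIntegral_coe (x * rI τ x))
  refine ⟨⟨y, hint⟩, ?_⟩
  apply RingOfIntegers.coe_injective
  rw [map_mul]
  exact hy

/-- Primes over the same prime are conjugate. -/
lemma conj_primes (τ : X ≃ₐ[Y] X) (hτ2 : τ * τ = 1)
    (hfix : ∀ x, τ x = x → ∃ y : Y, algebraMap Y X y = x)
    (P Q : Ideal (𝓞 X)) [P.IsPrime] [Q.IsMaximal]
    (h : Q.comap (algebraMap (𝓞 Y) (𝓞 X)) = P.comap (algebraMap (𝓞 Y) (𝓞 X))) :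
    Q = P ∨ Q = P.comap (rI τ : 𝓞 X →+* 𝓞 X) := by
  have hPt : (P.comap (rI τ : 𝓞 X →+* 𝓞 X)).IsPrime := inferInstance
  have : (Q : Set (𝓞 X)) ⊆ (P : Set (𝓞 X)) ∪ (P.comap (rI τ : 𝓞 X →+* 𝓞 X) : Ideal _) := by
    intro x hx
    obtain ⟨y, hy⟩ := exists_mul_int τ hτ2 hfix x
    have : y ∈ Q.comap (algebraMap (𝓞 Y) (𝓞 X)) := by
      rw [Ideal.mem_comap, hy]; exact Q.mul_mem_right _ hx
    rw [h, Ideal.mem_comap, hy] at this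
    exact (Ideal.IsPrime.mem_or_mem ‹P.IsPrime› this)
  rcases (Ideal.subset_union).1 this with h1 | h1
  · exact Or.inl (Ideal.IsMaximal.eq_of_le ‹_› (Ideal.IsPrime.ne_top ‹P.IsPrime›) h1)
  · exact Or.inr (Ideal.IsMaximal.eq_of_le ‹_› (Ideal.IsPrime.ne_top hPt) h1)

/-- A prime whose square divides the extension of the prime below is totally ramified. -/
lemma sq_eq_map (h2 : Module.finrank Y X = 2) (q : Ideal (𝓞 Y)) [q.IsMaximal] (hq0 : q ≠ ⊥) (P : Ideal (𝓞 X)) [P.IsPrime]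
    (hPq : P.comap (algebraMap (𝓞 Y) (𝓞 X)) = q) (hr : P ^ 2 ∣ q.map (algebraMap (𝓞 Y) (𝓞 X))) :
    P ^ 2 = q.map (algebraMap (𝓞 Y) (𝓞 X)) := by
  obtain ⟨M, hM⟩ := hr
  have : P.LiesOver q := ⟨hPq.symm⟩
  obtain ⟨s, hs⟩ := Ideal.exists_relNorm_eq_pow_of_isPrime P q
  have hn := Ideal.relNorm_algebraMap (𝓞 X) q
  rw [finrank_int h2, hM, map_mul, map_pow, hs] at hn
  have hs0 : s ≠ 0 := by
    rintro rfl
    have h1 := Ideal.relNorm_le_comap (𝓞 Y) P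
    rw [hs, hPq, pow_zero, Ideal.one_eq_top] at h1
    exact Ideal.IsPrime.ne_top' (top_le_iff.1 h1)
  have hqp := Ideal.prime_of_isPrime hq0 (inferInstance : q.IsPrime)
  obtain ⟨t, rfl⟩ : ∃ t, s = t + 1 := ⟨s - 1, by omega⟩
  have hu : (q ^ t) ^ 2 * Ideal.relNorm (𝓞 Y) M = 1 := by
    apply mul_left_cancel₀ (pow_ne_zero 2 hqp.ne_zero)
    rw [mul_one]; refine Eq.trans ?_ hn; ring
  have hM1 : Ideal.relNorm (𝓞 Y) M = 1 := by
    have : Ideal.relNorm (𝓞 Y) M ∣ 1 := Dvd.intro_left _ hu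
    rw [Ideal.one_eq_top]
    exact Ideal.isUnit_iff.1 (isUnit_of_dvd_one this)
  have hMt : M = ⊤ := by
    have h1 := Ideal.relNorm_le_comap (𝓞 Y) M
    rw [hM1, Ideal.one_eq_top, top_le_iff, Ideal.comap_eq_top_iff] at h1
    exact h1
  rw [hM, hMt, ← Ideal.one_eq_top, mul_one]

/-- `mk0` of an integral ideal. -/
def kI (J : Ideal (𝓞 X)) (hJ : J ≠ ⊥) : FI X := Units.mk0 (J : FractionalIdeal (𝓞 X)⁰ X) (FractionalIdeal.coeIdeal_ne_zero.2 hJ)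

lemma kI_mul (J J' : Ideal (𝓞 X)) (hJ : J ≠ ⊥) (hJ' : J' ≠ ⊥) (h : J * J' ≠ ⊥) : kI (J * J') h = kI J hJ * kI J' hJ' := by
  ext1; simp [kI]

lemma map_ne_bot' {q : Ideal (𝓞 Y)} (hq : q ≠ ⊥) : q.map (algebraMap (𝓞 Y) (𝓞 X)) ≠ ⊥ := by
  rwa [Ne, Ideal.map_eq_bot_iff_of_injective (FaithfulSMul.algebraMap_injective _ _)]

lemma iI_kI (q : Ideal (𝓞 Y)) (hq : q ≠ ⊥) :
    iI Y X (kI q hq) = kI (q.map (algebraMap (𝓞 Y) (𝓞 X))) (map_ne_bot' hq) := by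
  ext1
  exact FractionalIdeal.extendedHom_coeIdeal_eq_map X (𝓞 X) q

lemma tI_kI (τ : X ≃ₐ[Y] X) (J : Ideal (𝓞 X)) (hJ : J ≠ ⊥) (hJ' : J.map (rI τ : 𝓞 X →+* 𝓞 X) ≠ ⊥) :
    tI τ (kI J hJ) = kI (J.map (rI τ : 𝓞 X →+* 𝓞 X)) hJ' := by
  ext1
  exact tF_coe τ J

lemma map_comap_rI (τ : X ≃ₐ[Y] X) (hτ2 : τ * τ = 1) (J : Ideal (𝓞 X)) :
    J.comap (rI τ : 𝓞 X →+* 𝓞 X) = J.map (rI τ : 𝓞 X →+* 𝓞 X) := by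
  have hinv : ∀ x : 𝓞 X, rI τ (rI τ x) = x := fun x ↦ RingOfIntegers.coe_injective (congrArg (fun f : X ≃ₐ[Y] X ↦ f x) hτ2)
  apply le_antisymm
  · intro x hx
    rw [← hinv x]
    exact Ideal.mem_map_of_mem (rI τ : 𝓞 X →+* 𝓞 X) hx
  · rw [Ideal.map_le_iff_le_comap]
    intro x hx
    simpa [hinv] using hx

lemma map_rI_map (τ : X ≃ₐ[Y] X) (q : Ideal (𝓞 Y)) :
    (q.map (algebraMap (𝓞 Y) (𝓞 X))).map (rI τ : 𝓞 X →+* 𝓞 X) = q.map (algebraMap (𝓞 Y) (𝓞 X)) := by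
  rw [Ideal.map_map]
  congr 1
  ext y
  exact τ.commutes (y : Y)

open Classical in
/-- The ramified prime above `q`, if there is one. -/
def gR (X : Type*) [Field X] [NumberField X] [Algebra Y X] (q : Ideal (𝓞 Y)) : FI X :=
  if h : ∃ P : Ideal (𝓞 X), P ≠ ⊥ ∧ P.IsPrime ∧ P ^ 2 = q.map (algebraMap (𝓞 Y) (𝓞 X)) then kI h.choose h.choose_spec.1 else 1

lemma gR_sq (q : Ideal (𝓞 Y)) : (gR X q) ^ 2 ∈ (iI Y X).range := by
  unfold gR
  split_ifs with h
  · have h1 := h.choose_spec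
    have h0 := h1.1
    change (kI h.choose h0) ^ 2 ∈ _
    generalize h.choose = P at h0 h1 ⊢
    have hq : q ≠ ⊥ := by
      rintro rfl
      rw [Ideal.map_bot] at h1
      exact h1.1 (pow_eq_zero_iff (two_ne_zero) |>.1 h1.2.2)
    refine ⟨kI q hq, ?_⟩
    rw [iI_kI]
    ext1
    rw [Units.val_pow_eq_pow_val]
    change ((q.map (algebraMap (𝓞 Y) (𝓞 X)) : Ideal (𝓞 X)) : FractionalIdeal (𝓞 X)⁰ X) = (P : FractionalIdeal (𝓞 X)⁰ X) ^ 2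
    rw [← h1.2.2, FractionalIdeal.coeIdeal_pow]
  · rw [one_pow]; exact Subgroup.one_mem _

lemma gR_eq (q : Ideal (𝓞 Y)) (P : Ideal (𝓞 X)) (hP0 : P ≠ ⊥) (hP : P.IsPrime) (h : P ^ 2 = q.map (algebraMap (𝓞 Y) (𝓞 X))) :
    gR X q = kI P hP0 := by
  have hex : ∃ P : Ideal (𝓞 X), P ≠ ⊥ ∧ P.IsPrime ∧ P ^ 2 = q.map (algebraMap (𝓞 Y) (𝓞 X)) := ⟨P, hP0, hP, h⟩
  unfold gR
  rw [dif_pos hex]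
  have h1 := hex.choose_spec
  have h0 := h1.1
  change (kI hex.choose h0) = _
  generalize hex.choose = Q at h0 h1 ⊢
  have h2 := h1.2.1
  have : Q = P := by
    have hd : Q ∣ P ^ 2 := by rw [h, ← h1.2.2]; exact dvd_pow_self _ two_ne_zero
    have hd' := (Ideal.prime_of_isPrime h1.1 h2).dvd_of_dvd_pow hd
    have := Ideal.IsPrime.isMaximal hP hP0
    exact (Ideal.IsMaximal.eq_of_le this h2.ne_top (Ideal.dvd_iff_le.1 hd')).symm
  simp only [this]

/-- A squarefree ideal divides `J` as soon as all its prime divisors do. -/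
lemma dvd_of_primes {I J : Ideal (𝓞 X)} (hI : Squarefree I) (hJ : J ≠ ⊥)
    (h : ∀ P : Ideal (𝓞 X), P.IsPrime → P ≠ ⊥ → P ∣ I → P ∣ J) : I ∣ J := by
  classical
  have hI0 : I ≠ 0 := hI.ne_zero
  rw [UniqueFactorizationMonoid.dvd_iff_normalizedFactors_le_normalizedFactors hI0 hJ]
  rw [Multiset.le_iff_subset ((UniqueFactorizationMonoid.squarefree_iff_nodup_normalizedFactors hI0).1 hI)]
  intro P hP
  have hp := UniqueFactorizationMonoid.prime_of_normalized_factor P hP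
  have := h P (Ideal.isPrime_of_prime hp) hp.ne_zero (UniqueFactorizationMonoid.dvd_of_mem_normalizedFactors hP)
  rw [UniqueFactorizationMonoid.mem_normalizedFactors_iff hJ]
  exact ⟨hp, this⟩

lemma rI_rI (τ : X ≃ₐ[Y] X) (hτ2 : τ * τ = 1) (x : 𝓞 X) : rI τ (rI τ x) = x :=
  RingOfIntegers.coe_injective (congrArg (fun f : X ≃ₐ[Y] X ↦ f x) hτ2)

lemma map_rI_rI (τ : X ≃ₐ[Y] X) (hτ2 : τ * τ = 1) (J : Ideal (𝓞 X)) :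
    (J.map (rI τ : 𝓞 X →+* 𝓞 X)).map (rI τ : 𝓞 X →+* 𝓞 X) = J := by
  have : (rI τ : 𝓞 X →+* 𝓞 X).comp (rI τ : 𝓞 X →+* 𝓞 X) = RingHom.id _ := RingHom.ext (rI_rI τ hτ2)
  rw [Ideal.map_map, this, Ideal.map_id]

/-- A ramified prime is invariant. -/
lemma ram_inv (τ : X ≃ₐ[Y] X) (hτ2 : τ * τ = 1) (q : Ideal (𝓞 Y)) (P : Ideal (𝓞 X)) (hPm : P.IsMaximal) (hP0 : P ≠ ⊥)
    (hsq : P ^ 2 = q.map (algebraMap (𝓞 Y) (𝓞 X))) : P.map (rI τ : 𝓞 X →+* 𝓞 X) = P := by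
  have h1 := congrArg (Ideal.map (rI τ : 𝓞 X →+* 𝓞 X)) hsq
  rw [map_rI_map, ← hsq, Ideal.map_pow] at h1
  have hPt : (P.map (rI τ : 𝓞 X →+* 𝓞 X)).IsPrime := by rw [← map_comap_rI τ hτ2]; infer_instance
  have : P ∣ (P.map (rI τ : 𝓞 X →+* 𝓞 X)) := (Ideal.prime_of_isPrime hP0 hPm.isPrime).dvd_of_dvd_pow (h1 ▸ dvd_pow_self P two_ne_zero)
  have h3 : (P.map (rI τ : 𝓞 X →+* 𝓞 X)) ≠ ⊥ := fun h ↦ hP0 (by rw [h] at h1; exact pow_eq_zero_iff (two_ne_zero) |>.1 (h1.symm.trans (zero_pow two_ne_zero)))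
  exact (Ideal.IsMaximal.eq_of_le (Ideal.IsPrime.isMaximal hPt h3) hPm.ne_top (Ideal.dvd_iff_le.1 this))

lemma dvd_map_conj (τ : X ≃ₐ[Y] X) (hτ2 : τ * τ = 1)
    (hfix : ∀ x, τ x = x → ∃ y : Y, algebraMap Y X y = x) (P : Ideal (𝓞 X)) (hPm : P.IsMaximal) (Q : Ideal (𝓞 X)) (hQ : Q.IsPrime) (hQ0 : Q ≠ ⊥)
    (hd : Q ∣ (P.comap (algebraMap (𝓞 Y) (𝓞 X))).map (algebraMap (𝓞 Y) (𝓞 X))) :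
    Q = P ∨ Q = P.comap (rI τ : 𝓞 X →+* 𝓞 X) := by
  have hqm : (P.comap (algebraMap (𝓞 Y) (𝓞 X))).IsMaximal := Ideal.isMaximal_comap_of_isIntegral_of_isMaximal P
  have hQm := Ideal.IsPrime.isMaximal hQ hQ0
  refine conj_primes τ hτ2 hfix P Q ?_
  have := Ideal.map_le_iff_le_comap.1 (Ideal.dvd_iff_le.1 hd)
  exact (Ideal.IsMaximal.eq_of_le hqm (Ideal.IsPrime.ne_top inferInstance) this).symm

lemma sqfree_of_not_ram (τ : X ≃ₐ[Y] X) (hτ2 : τ * τ = 1)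
    (hfix : ∀ x, τ x = x → ∃ y : Y, algebraMap Y X y = x) (P : Ideal (𝓞 X)) (hPm : P.IsMaximal) (hP0 : P ≠ ⊥)
    (hram : ¬ P ^ 2 ∣ (P.comap (algebraMap (𝓞 Y) (𝓞 X))).map (algebraMap (𝓞 Y) (𝓞 X))) :
    Squarefree ((P.comap (algebraMap (𝓞 Y) (𝓞 X))).map (algebraMap (𝓞 Y) (𝓞 X))) := by
  have hq0 : P.comap (algebraMap (𝓞 Y) (𝓞 X)) ≠ ⊥ := fun h ↦ hP0 (Ideal.eq_bot_of_comap_eq_bot h)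
  rw [squarefree_iff_no_irreducibles (map_ne_bot' hq0)]
  intro Q hQ hd2
  have hQp := hQ.prime
  have hd := (dvd_mul_right Q Q).trans hd2
  rw [← sq] at hd2
  rcases dvd_map_conj τ hτ2 hfix P hPm Q (Ideal.isPrime_of_prime hQp) hQp.ne_zero hd with rfl | rfl
  · exact hram hd2
  · apply hram
    rw [Ideal.dvd_iff_le] at hd2 ⊢
    have h1 := Ideal.map_mono (f := (rI τ : 𝓞 X →+* 𝓞 X)) hd2
    rwa [map_rI_map, Ideal.map_pow, map_comap_rI τ hτ2, map_rI_rI τ hτ2] at h1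

/-- The product of a prime and its conjugate comes from below. -/
lemma prime_mul_conj (h2 : Module.finrank Y X = 2) (τ : X ≃ₐ[Y] X) (hτ2 : τ * τ = 1)
    (hfix : ∀ x, τ x = x → ∃ y : Y, algebraMap Y X y = x) (P : Ideal (𝓞 X)) (hPm : P.IsMaximal) (hP0 : P ≠ ⊥) :
    ∃ I : Ideal (𝓞 Y), P * P.map (rI τ : 𝓞 X →+* 𝓞 X) = I.map (algebraMap (𝓞 Y) (𝓞 X)) := by
  set q := P.comap (algebraMap (𝓞 Y) (𝓞 X)) with hq
  have hqm : q.IsMaximal := Ideal.isMaximal_comap_of_isIntegral_of_isMaximal P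
  have hq0 : q ≠ ⊥ := fun h ↦ hP0 (Ideal.eq_bot_of_comap_eq_bot h)
  have hqP : P ∣ q.map (algebraMap (𝓞 Y) (𝓞 X)) := Ideal.dvd_iff_le.2 (Ideal.map_le_iff_le_comap.2 le_rfl)
  have hP2 : P.map (rI τ : 𝓞 X →+* 𝓞 X) ≠ ⊥ := fun h ↦ hP0 (by rw [← map_rI_rI τ hτ2 P, h, Ideal.map_bot])
  by_cases hram : P ^ 2 ∣ q.map (algebraMap (𝓞 Y) (𝓞 X))
  · have hsq := sq_eq_map h2 q hq0 P rfl hram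
    exact ⟨q, by rw [ram_inv τ hτ2 q P hPm hP0 hsq, ← sq, hsq]⟩
  have hsf := sqfree_of_not_ram τ hτ2 hfix P hPm hP0 hram
  have hcm := map_comap_rI τ hτ2 P
  by_cases hPP : P.map (rI τ : 𝓞 X →+* 𝓞 X) = P
  · have h1 : q.map (algebraMap (𝓞 Y) (𝓞 X)) ∣ P := by
      refine dvd_of_primes hsf hP0 fun Q hQ hQ0 hd ↦ ?_
      rcases dvd_map_conj τ hτ2 hfix P hPm Q hQ hQ0 hd with rfl | rfl
      · exact dvd_rfl
      · rw [hcm, hPP]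
    have h3 : P = q.map (algebraMap (𝓞 Y) (𝓞 X)) := dvd_antisymm hqP h1
    exact ⟨q * q, by rw [hPP, Ideal.map_mul, ← h3]⟩
  · refine ⟨q, dvd_antisymm ?_ ?_⟩
    · have hP2m : (P.map (rI τ : 𝓞 X →+* 𝓞 X)).IsMaximal := by
        have : (P.map (rI τ : 𝓞 X →+* 𝓞 X)).IsPrime := by rw [← hcm]; infer_instance
        exact this.isMaximal hP2
      have hc : IsCoprime P (P.map (rI τ : 𝓞 X →+* 𝓞 X)) := by
        rw [Ideal.isCoprime_iff_sup_eq]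
        exact hPm.coprime_of_ne hP2m (Ne.symm hPP)
      refine hc.mul_dvd hqP ?_
      rw [Ideal.dvd_iff_le, ← map_rI_map τ]
      exact Ideal.map_mono (Ideal.dvd_iff_le.1 hqP)
    · refine dvd_of_primes hsf (mul_ne_zero hP0 hP2) fun Q hQ hQ0 hd ↦ ?_
      rcases dvd_map_conj τ hτ2 hfix P hPm Q hQ hQ0 hd with rfl | rfl
      · exact dvd_mul_right _ _
      · rw [hcm]; exact dvd_mul_left _ _

/-- The ideal `J · τ(J)` is extended from `Y`. -/
lemma mul_conj (h2 : Module.finrank Y X = 2) (τ : X ≃ₐ[Y] X) (hτ2 : τ * τ = 1)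
    (hfix : ∀ x, τ x = x → ∃ y : Y, algebraMap Y X y = x) (J : Ideal (𝓞 X)) (hJ : J ≠ ⊥) :
    ∃ I : Ideal (𝓞 Y), J * J.map (rI τ : 𝓞 X →+* 𝓞 X) = I.map (algebraMap (𝓞 Y) (𝓞 X)) := by
  induction J using UniqueFactorizationMonoid.induction_on_prime with
  | h₁ => exact absurd rfl hJ
  | h₂ x hx =>
    refine ⟨⊤, ?_⟩
    rw [Ideal.isUnit_iff.1 hx, Ideal.map_top, Ideal.map_top, Ideal.top_mul]
  | h₃ J P hJ0 hP ih =>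
    obtain ⟨I, hI⟩ := ih hJ0
    obtain ⟨I', hI'⟩ := prime_mul_conj h2 τ hτ2 hfix P (Ideal.IsPrime.isMaximal (Ideal.isPrime_of_prime hP) hP.ne_zero) hP.ne_zero
    refine ⟨I' * I, ?_⟩
    rw [Ideal.map_mul, Ideal.map_mul, ← hI, ← hI']
    ac_rfl

/-- By induction on the norm, an invariant integral ideal is a product of ideals extended from `Y` and
of ramified primes; `W` is any group of fractional ideals containing these. -/
lemma int_mem (h2 : Module.finrank Y X = 2) (τ : X ≃ₐ[Y] X) (hτ2 : τ * τ = 1)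
    (hfix : ∀ x, τ x = x → ∃ y : Y, algebraMap Y X y = x) (S : Finset (Ideal (𝓞 Y)))
    (hS : ∀ q : Ideal (𝓞 Y), q.IsMaximal → q ≠ ⊥ → ∀ P : Ideal (𝓞 X), P.IsPrime → P.comap (algebraMap (𝓞 Y) (𝓞 X)) = q →
      P ^ 2 ∣ q.map (algebraMap (𝓞 Y) (𝓞 X)) → q ∈ S) (W : Subgroup (FI X)) (hW : (iI Y X).range ≤ W) (hW' : ∀ q ∈ S, gR X q ∈ W) :
    ∀ n : ℕ, ∀ (J : Ideal (𝓞 X)) (hJ : J ≠ ⊥), J.map (rI τ : 𝓞 X →+* 𝓞 X) = J → Ideal.absNorm J ≤ n → kI J hJ ∈ W := by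
  intro n
  induction n with
  | zero =>
    intro J hJ _ h
    exact absurd (Ideal.absNorm_eq_zero_iff.1 (Nat.le_zero.1 h)) hJ
  | succ n ih =>
    intro J hJ hinv hn
    -- peeling off an invariant factor
    have peel : ∀ A : Ideal (𝓞 X), A ≠ ⊤ → A.map (rI τ : 𝓞 X →+* 𝓞 X) = A → A ∣ J → (∀ hA : A ≠ ⊥, kI A hA ∈ W) → kI J hJ ∈ W := by
      rintro A hAt hA ⟨J', rfl⟩ hAW
      have hA0 : A ≠ ⊥ := fun h ↦ hJ (by rw [h]; exact Ideal.bot_mul _)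
      have hJ0 : J' ≠ ⊥ := fun h ↦ hJ (by rw [h]; exact Ideal.mul_bot _)
      rw [kI_mul _ _ hA0 hJ0]
      refine W.mul_mem (hAW hA0) (ih J' hJ0 ?_ ?_)
      · rw [Ideal.map_mul, hA] at hinv
        exact mul_left_cancel₀ (a := A) hA0 hinv
      · rw [map_mul] at hn
        have h1 : Ideal.absNorm A ≠ 0 := fun h ↦ hA0 (Ideal.absNorm_eq_zero_iff.1 h)
        have h3 : Ideal.absNorm A ≠ 1 := fun h ↦ hAt (Ideal.absNorm_eq_one_iff.1 h)
        have h4 : Ideal.absNorm J' ≠ 0 := fun h ↦ hJ0 (Ideal.absNorm_eq_zero_iff.1 h)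
        have : 2 * Ideal.absNorm J' ≤ Ideal.absNorm A * Ideal.absNorm J' := Nat.mul_le_mul_right _ (by omega)
        omega
    by_cases hJt : J = ⊤
    · have : kI J hJ = 1 := by ext1; simp [kI, hJt]
      rw [this]; exact W.one_mem
    obtain ⟨P, hPm, hJP⟩ := Ideal.exists_le_maximal J hJt
    have hP0 : P ≠ ⊥ := fun h ↦ hJ (le_bot_iff.1 (h ▸ hJP))
    set q := P.comap (algebraMap (𝓞 Y) (𝓞 X)) with hq
    have hqm : q.IsMaximal := Ideal.isMaximal_comap_of_isIntegral_of_isMaximal P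
    have hq0 : q ≠ ⊥ := fun h ↦ hP0 (Ideal.eq_bot_of_comap_eq_bot h)
    by_cases hram : P ^ 2 ∣ q.map (algebraMap (𝓞 Y) (𝓞 X))
    · have hsq := sq_eq_map h2 q hq0 P rfl hram
      refine peel P hPm.ne_top ?_ (Ideal.dvd_iff_le.2 hJP) (fun hA ↦ ?_)
      · exact ram_inv τ hτ2 q P hPm hP0 hsq
      · rw [← gR_eq q P hP0 hPm.isPrime hsq]
        exact hW' q (hS q hqm hq0 P hPm.isPrime rfl hram)
    · have hover := dvd_map_conj τ hτ2 hfix P hPm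
      have hsf := sqfree_of_not_ram τ hτ2 hfix P hPm hP0 hram
      refine peel _ ?_ (map_rI_map τ q) (dvd_of_primes hsf hJ fun Q hQ hQ0 hd ↦ ?_) (fun hA ↦ ?_)
      · intro h
        have : q.map (algebraMap (𝓞 Y) (𝓞 X)) ≤ P := Ideal.map_le_iff_le_comap.2 le_rfl
        exact hPm.ne_top (top_le_iff.1 (h ▸ this))
      · rw [Ideal.dvd_iff_le]
        rcases hover Q hQ hQ0 hd with rfl | rfl
        · exact hJP
        · rw [← Ideal.map_le_iff_le_comap, hinv]; exact hJP
      · rw [← iI_kI q hq0]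
        exact hW ⟨_, rfl⟩

/-- An invariant fractional ideal becomes integral after scaling by an element of `Y`. -/
lemma frac_int (τ : X ≃ₐ[Y] X) (I : FI X) (hI : tI τ I = I) :
    ∃ (y : Yˣ) (J : Ideal (𝓞 X)) (hJ : J ≠ ⊥), J.map (rI τ : 𝓞 X →+* 𝓞 X) = J ∧ I = iI Y X (pr Y y) * kI J hJ := by
  obtain ⟨a, aI, ha, hI'⟩ := FractionalIdeal.exists_eq_spanSingleton_mul (I : FractionalIdeal (𝓞 X)⁰ X)
  set n := Ideal.absNorm (Ideal.span {a}) with hn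
  have hn0 : n ≠ 0 := by
    rw [hn, Ne, Ideal.absNorm_eq_zero_iff, Ideal.span_singleton_eq_bot]; exact ha
  have hnm : (n : 𝓞 X) ∈ Ideal.span {a} := Ideal.absNorm_mem _
  obtain ⟨b, hb⟩ := Ideal.mem_span_singleton'.1 hnm
  have haX : (algebraMap (𝓞 X) X a) ≠ 0 := by simpa using ha
  have hnX : (n : X) ≠ 0 := by exact_mod_cast hn0
  have hnY : (n : Y) ≠ 0 := by exact_mod_cast hn0
  have hbX : (algebraMap (𝓞 X) X b) * (algebraMap (𝓞 X) X a) = n := by rw [← map_mul, hb, map_natCast]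
  let y : Yˣ := (Units.mk0 (n : Y) hnY)⁻¹
  have key : (iI Y X (pr Y y))⁻¹ * I = (iI Y X (pr Y y⁻¹)) * I := by
    congr 1; exact ((congrArg (iI Y X) (map_inv (pr Y) y)).trans (map_inv _ _)).symm
  have hJ : (((iI Y X (pr Y y))⁻¹ * I : FI X) : FractionalIdeal (𝓞 X)⁰ X) = ((Ideal.span {b} * aI : Ideal (𝓞 X)) : FractionalIdeal (𝓞 X)⁰ X) := by
    rw [key, iI_pr, Units.val_mul, coe_toPrincipalIdeal, hI', ← mul_assoc, FractionalIdeal.spanSingleton_mul_spanSingleton, FractionalIdeal.coeIdeal_mul,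
      FractionalIdeal.coeIdeal_span_singleton]
    congr 2
    simp only [iM, y, inv_inv, Units.coe_map, Units.val_mk0, MonoidHom.coe_coe, map_natCast]
    rw [← hbX]; field_simp
  have hJ0 : (Ideal.span {b} * aI : Ideal (𝓞 X)) ≠ ⊥ := by
    intro h
    rw [h] at hJ
    exact Units.ne_zero _ (hJ.trans (by simp))
  have hk : kI _ hJ0 = (iI Y X (pr Y y))⁻¹ * I := by ext1; exact hJ.symm
  refine ⟨y, _, hJ0, ?_, by rw [hk, mul_inv_cancel_left]⟩
  have h1 : tI τ (kI _ hJ0) = kI _ hJ0 := by rw [hk, map_mul, map_inv, iI_fixed, hI]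
  have h2 := congrArg Units.val h1
  rw [coe_tI] at h2
  change tF τ ((Ideal.span {b} * aI : Ideal (𝓞 X)) : FractionalIdeal (𝓞 X)⁰ X) = ((Ideal.span {b} * aI : Ideal (𝓞 X)) : FractionalIdeal (𝓞 X)⁰ X) at h2
  rw [tF_coe] at h2
  exact FractionalIdeal.coeIdeal_injective h2

/-- The group of extended ideals has index dividing `2 ^ #S` in the group of invariant ideals, where `S`
contains the ramified primes. -/
theorem ram_bound (h2 : Module.finrank Y X = 2) (τ : X ≃ₐ[Y] X) (hτ2 : τ * τ = 1)
    (hfix : ∀ x, τ x = x → ∃ y : Y, algebraMap Y X y = x) (S : Finset (Ideal (𝓞 Y)))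
    (hS : ∀ q : Ideal (𝓞 Y), q.IsMaximal → q ≠ ⊥ → ∀ P : Ideal (𝓞 X), P.IsPrime → P.comap (algebraMap (𝓞 Y) (𝓞 X)) = q →
      P ^ 2 ∣ q.map (algebraMap (𝓞 Y) (𝓞 X)) → q ∈ S) :
    (iI Y X).range.relIndex (dif (tI τ)).ker ∣ 2 ^ S.card := by
  classical
  set T := S.image (gR X) with hT
  set W := (iI Y X).range ⊔ Subgroup.closure (T : Set (FI X)) with hW
  have h1 : (iI Y X).range.relIndex W ∣ 2 ^ T.card := by
    apply relIndex_closure_dvd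
    intro g hg
    obtain ⟨q, _, rfl⟩ := Finset.mem_image.1 hg
    exact gR_sq q
  have h3 : (dif (tI τ)).ker ≤ W := by
    intro I hI
    rw [MonoidHom.mem_ker, dif_apply, div_eq_one] at hI
    obtain ⟨y, J, hJ, hinv, rfl⟩ := frac_int τ I hI.symm
    refine W.mul_mem ((le_sup_left : _ ≤ W) ⟨_, rfl⟩) ?_
    refine int_mem h2 τ hτ2 hfix S hS W le_sup_left (fun q hq ↦ (le_sup_right : _ ≤ W) (Subgroup.subset_closure ?_)) _ J hJ hinv le_rfl
    exact Finset.mem_coe.2 (Finset.mem_image_of_mem _ hq)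
  have h4 : (iI Y X).range ≤ (dif (tI τ)).ker := by
    rintro _ ⟨J, rfl⟩
    rw [MonoidHom.mem_ker, dif_apply, div_eq_one, iI_fixed]
  refine (Dvd.intro _ (Subgroup.relIndex_mul_relIndex _ _ _ h4 h3)).trans (h1.trans (pow_dvd_pow 2 Finset.card_image_le))

/-- If the lower class number is one, `τ` acts on classes by inversion. -/
lemma sCl_inv (h2 : Module.finrank Y X = 2) (τ : X ≃ₐ[Y] X) (hτ2 : τ * τ = 1)
    (hfix : ∀ x, τ x = x → ∃ y : Y, algebraMap Y X y = x) (h1 : classNumber Y = 1) (c : ClassGroup (𝓞 X)) :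
    sCl τ c = c⁻¹ := by
  have hpid : IsPrincipalIdealRing (𝓞 Y) := (classNumber_eq_one_iff).1 h1
  obtain ⟨⟨J, hJ⟩, rfl⟩ := ClassGroup.mk0_surjective c
  have hJ0 : J ≠ ⊥ := by simpa using hJ
  have hJ1 : J.map (rI τ : 𝓞 X →+* 𝓞 X) ≠ ⊥ := fun h ↦ hJ0 (by rw [← map_rI_rI τ hτ2 J, h, Ideal.map_bot])
  have e : ∀ (A : Ideal (𝓞 X)) (hA : A ∈ (Ideal (𝓞 X))⁰) (hA' : A ≠ ⊥), ClassGroup.mk0 ⟨A, hA⟩ = ClassGroup.mk X (kI A hA') := by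
    intro A hA hA'
    rw [← ClassGroup.mk_mk0 X]
    congr 1
  rw [e J hJ hJ0, sCl_mk, tI_kI τ J hJ0 hJ1, eq_comm, inv_eq_iff_mul_eq_one, ← map_mul, ← kI_mul _ _ _ _ (mul_ne_zero hJ0 hJ1),
    ← e _ (by simpa using ⟨hJ0, hJ1⟩), ClassGroup.mk0_eq_one_iff]
  obtain ⟨I, hI⟩ := mul_conj h2 τ hτ2 hfix J hJ0
  rw [hI]
  obtain ⟨a, ha⟩ := (hpid.principal I).principal
  rw [ha, Ideal.submodule_span_eq, Ideal.map_span, Set.image_singleton]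
  exact ⟨_, rfl⟩

end R
end H15

/-! ### Finite abelian groups with involution and local norm obstructions -/

namespace H15
open Filter Topology

section groups
variable {A B : Type*} [CommGroup A] [Finite A] [CommGroup B] [Finite B]

/-- On a group of even order an involution `s` fixes some `v` of order two: otherwise `v / s v` will do. -/
lemma odd_of_fixed (s : A →* A) (hs : ∀ x, s (s x) = x) (h : ¬ 2 ∣ Nat.card (dif s).ker) : ¬ 2 ∣ Nat.card A := by
  intro hA
  apply h
  have : Fact (Nat.Prime 2) := ⟨Nat.prime_two⟩
  obtain ⟨v, hv⟩ := exists_prime_orderOf_dvd_card' 2 hA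
  have hv2 : v ^ 2 = 1 := hv ▸ pow_orderOf_eq_one v
  have key : ∀ x : A, x ^ 2 = 1 → x ≠ 1 → dif s x = 1 → 2 ∣ Nat.card (dif s).ker := by
    intro x hx hx1 hd
    have h1 : orderOf (⟨x, MonoidHom.mem_ker.2 hd⟩ : (dif s).ker) = 2 := by
      rw [Subgroup.orderOf_mk]
      exact orderOf_eq_prime hx hx1
    rw [← h1]; exact orderOf_dvd_natCard _
  have hv1 : v ≠ 1 := by rintro rfl; simp at hv
  by_cases hd : dif s v = 1
  · exact key v hv2 hv1 hd
  · refine key (dif s v) (by rw [← map_pow, hv2, map_one]) hd ?_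
    have e : dif s (dif s v) = v ^ 2 / s (v ^ 2) := by
      simp only [dif_apply, map_div, hs, map_pow]
      rw [div_div_div_eq, ← sq, ← sq]
    rw [e, hv2, map_one, div_one]

/-- If there is at most one element of order two, and it is not a square, then the 2-part of the group has
order two. -/
lemma two_exact (h2 : Nat.card (powMonoidHom 2 : A →* A).ker ∣ 2) (c : A) (hc : c ^ 2 = 1) (hns : ∀ x, x ^ 2 ≠ c) :
    2 ∣ Nat.card A ∧ ¬ 4 ∣ Nat.card A := by
  classical
  have : Fact (Nat.Prime 2) := ⟨Nat.prime_two⟩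
  have hc1 : c ≠ 1 := fun h ↦ hns 1 (by rw [h, one_pow])
  have ho : orderOf c = 2 := orderOf_eq_prime hc hc1
  refine ⟨ho ▸ orderOf_dvd_natCard c, fun h4 ↦ ?_⟩
  have hk : (powMonoidHom 2 : A →* A).ker = Subgroup.zpowers c := by
    symm
    apply Subgroup.eq_of_le_of_card_ge
    · rw [Subgroup.zpowers_le]; exact hc
    · rw [Nat.card_zpowers, ho]; exact Nat.le_of_dvd two_pos h2
  have hcard : Nat.card (powMonoidHom 2 : A →* A).range * Nat.card (powMonoidHom 2 : A →* A).ker = Nat.card A := by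
    rw [← Subgroup.index_ker, Subgroup.index_mul_card]
  rw [hk, Nat.card_zpowers, ho] at hcard
  have h2r : 2 ∣ Nat.card (powMonoidHom 2 : A →* A).range := by omega
  obtain ⟨⟨v, hv⟩, hvo⟩ := exists_prime_orderOf_dvd_card' 2 h2r
  rw [Subgroup.orderOf_mk] at hvo
  have hv1 : v ≠ 1 := by rintro rfl; simp at hvo
  have hvk : v ∈ Subgroup.zpowers c := by
    rw [← hk, MonoidHom.mem_ker]; exact hvo ▸ pow_orderOf_eq_one v
  rw [mem_zpowers_iff_mem_range_orderOf, ho] at hvk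
  have : v = c := by
    simp only [Finset.mem_image, Finset.mem_range] at hvk
    obtain ⟨n, hn, rfl⟩ := hvk
    interval_cases n
    · simp at hv1
    · simp
  obtain ⟨x, hx⟩ := hv
  exact hns x (this ▸ hx)

/-- The group theory behind unramified quadratic extensions of a field with cyclic `2`-class group. -/
lemma unram_card (s : A →* A) (hs : ∀ x, s (s x) = x) (j : B →* A) (n : A →* B) (hj : ∀ b, s (j b) = j b)
    (hnj : ∀ b, n (j b) = b ^ 2) (hn : ∀ a, n (s a) = n a) (hB : Nat.card (powMonoidHom 2 : B →* B).ker ∣ 2)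
    (h : Nat.card (dif s).ker * 2 ∣ Nat.card B) : ∃ o, ¬ 2 ∣ o ∧ Nat.card A * 2 = Nat.card B * o := by
  set D := (dif s).range with hD
  have hAD : Nat.card D * Nat.card (dif s).ker = Nat.card A := by
    rw [← Subgroup.index_ker, Subgroup.index_mul_card]
  have hDi : D.index = Nat.card (dif s).ker := by
    have h1 := D.index_mul_card
    rw [← hAD, mul_comm (Nat.card D)] at h1
    exact Nat.eq_of_mul_eq_mul_right (Nat.card_pos) h1
  let φ : B →* A ⧸ D := (QuotientGroup.mk' D).comp j
  have hker : φ.ker ≤ (powMonoidHom 2 : B →* B).ker := by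
    intro b hb
    rw [MonoidHom.mem_ker] at hb ⊢
    have : j b ∈ D := (QuotientGroup.eq_one_iff _).1 hb
    obtain ⟨a, ha⟩ := this
    change b ^ 2 = 1
    rw [← hnj, ← ha, dif_apply, map_div, hn, div_self']
  have h1 : Nat.card φ.range * Nat.card φ.ker = Nat.card B := by
    rw [← Subgroup.index_ker, Subgroup.index_mul_card]
  have h2 : Nat.card φ.ker ≤ 2 := Nat.le_of_dvd two_pos ((Subgroup.card_dvd_of_le hker).trans hB)
  have h3 : Nat.card φ.range ≤ Nat.card (A ⧸ D) := Subgroup.card_le_card_group _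
  have h4 : Nat.card (A ⧸ D) = Nat.card (dif s).ker := hDi
  have h5 : Nat.card (dif s).ker * 2 ≤ Nat.card B := Nat.le_of_dvd Nat.card_pos h
  have h6 : Nat.card (dif s).ker * 2 = Nat.card B := by
    apply le_antisymm h5
    rw [← h1, ← h4]
    exact Nat.mul_le_mul h3 h2
  have hr : φ.range = ⊤ := by
    apply Subgroup.eq_top_of_le_card
    rw [h4]
    have : Nat.card φ.range * Nat.card φ.ker ≤ Nat.card φ.range * 2 := Nat.mul_le_mul_left _ h2
    omega
  refine ⟨Nat.card D, ?_, by rw [← hAD, ← h6]; ring⟩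
  -- every element of `D` is a square of an element of `D`
  have hsq : Function.Surjective (powMonoidHom 2 : D →* D) := by
    rintro ⟨_, a, rfl⟩
    obtain ⟨b, hb⟩ : (QuotientGroup.mk a : A ⧸ D) ∈ φ.range := hr ▸ Subgroup.mem_top _
    have hb' : (j b)⁻¹ * a ∈ D := QuotientGroup.eq.1 hb
    obtain ⟨e, he⟩ := hb'
    refine ⟨⟨(dif s e), e, rfl⟩, ?_⟩
    ext1
    change (dif s e) ^ 2 = dif s a
    have : a = j b * dif s e := by rw [he, mul_inv_cancel_left]
    rw [this, map_mul]
    simp only [dif_apply, hj, div_self', one_mul, map_div, hs]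
    rw [div_div_div_eq, ← sq, ← sq, div_pow]
  intro h2D
  have : Fact (Nat.Prime 2) := ⟨Nat.prime_two⟩
  obtain ⟨v, hv⟩ := exists_prime_orderOf_dvd_card' 2 h2D
  have hinj := (Finite.injective_iff_surjective).2 hsq
  have : v = 1 := hinj (by change v ^ 2 = 1 ^ 2; rw [one_pow, ← hv, pow_orderOf_eq_one])
  rw [this] at hv; simp at hv

end groups

section res
variable {Y X : Type*} [Field Y] [NumberField Y] [Field X] [NumberField X] [Algebra Y X]

/-- If `u e² = a² - m b²` with `m` of valuation exactly one at `q` and `u` prime to `q`, then `u` is a square modulo `q`. -/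
lemma sq_mod (q : Ideal (𝓞 Y)) [q.IsPrime] (hq0 : q ≠ ⊥) (m : 𝓞 Y) (hm : m ∈ q) (hm2 : m ∉ q ^ 2) (u : 𝓞 Y) (n : ℕ) :
    ∀ a b e : 𝓞 Y, e ∉ q ^ n → a ^ 2 - m * b ^ 2 = u * e ^ 2 → ∃ t, u - t ^ 2 ∈ q := by
  induction n with
  | zero => intro a b e he; simp at he
  | succ n ih =>
    intro a b e he heq
    have hqm : q.IsMaximal := Ideal.IsPrime.isMaximal ‹_› hq0
    by_cases heq1 : e ∈ q
    · have hle : q ^ 2 ≤ q := Ideal.pow_le_self two_ne_zero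
      have ha : a ∈ q := by
        have : a ^ 2 ∈ q := by
          have : a ^ 2 = m * b ^ 2 + u * e ^ 2 := by linear_combination heq
          rw [this]
          exact q.add_mem (q.mul_mem_right _ hm) (q.mul_mem_left _ (Ideal.pow_mem_of_mem _ heq1 2 two_pos))
        exact Ideal.IsPrime.mem_of_pow_mem ‹_› 2 this
      have hb : b ∈ q := by
        have h1 : m * b ^ 2 ∈ q ^ 2 := by
          have : m * b ^ 2 = a ^ 2 - u * e ^ 2 := by linear_combination -heq
          rw [this]
          exact Ideal.sub_mem _ (Ideal.pow_mem_pow ha 2) (Ideal.mul_mem_left _ _ (Ideal.pow_mem_pow heq1 2))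
        rw [mul_comm] at h1
        rcases Ideal.IsPrime.mul_mem_pow q h1 with h | h
        · exact Ideal.IsPrime.mem_of_pow_mem ‹_› 2 h
        · exact absurd h hm2
      -- choose `w ∈ q ∖ q²` and `t ∉ q` with `t q ⊆ (w)`
      obtain ⟨I, hI⟩ : q ∣ Ideal.span {m} := Ideal.dvd_span_singleton.2 hm
      have hIq : ¬ I ≤ q := by
        intro h
        apply hm2
        rw [sq]
        have : m ∈ Ideal.span {m} := Ideal.mem_span_singleton_self m
        rw [hI] at this
        exact Ideal.mul_mono_right h this
      obtain ⟨t, htI, htq⟩ := SetLike.not_le_iff_exists.1 hIq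
      have hdiv : ∀ x ∈ q, ∃ y, t * x = m * y := by
        intro x hx
        have : x * t ∈ Ideal.span {m} := hI ▸ Ideal.mul_mem_mul hx htI
        obtain ⟨y, hy⟩ := Ideal.mem_span_singleton'.1 this
        exact ⟨y, by rw [mul_comm t, ← hy, mul_comm]⟩
      obtain ⟨a', ha'⟩ := hdiv a ha
      obtain ⟨b', hb'⟩ := hdiv b hb
      obtain ⟨e', he'⟩ := hdiv e heq1
      have hm0 : m ≠ 0 := fun h ↦ hm2 (h ▸ Ideal.zero_mem _)
      refine ih a' b' e' ?_ ?_
      · intro h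
        apply he
        have : t * e ∈ q ^ (n + 1) := by
          rw [he', pow_succ, mul_comm (q ^ n)]; exact Ideal.mul_mem_mul hm h
        rcases Ideal.IsPrime.mul_mem_pow q this with h | h
        · exact absurd h htq
        · exact h
      · apply mul_left_cancel₀ (pow_ne_zero 2 hm0)
        linear_combination t ^ 2 * heq - (t*a + m*a') * ha' + m * (t*b + m*b') * hb' + u * (t * e + m * e') * he'
    · obtain ⟨f, hf⟩ := Ideal.Quotient.exists_inv (I := q) (a := Ideal.Quotient.mk q e) (by rwa [Ne, Ideal.Quotient.eq_zero_iff_mem])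
      obtain ⟨f, rfl⟩ := Ideal.Quotient.mk_surjective f
      rw [← map_mul, ← map_one (Ideal.Quotient.mk q), Ideal.Quotient.eq] at hf
      refine ⟨a * f, ?_⟩
      rw [← Ideal.Quotient.eq, map_one, map_mul] at hf
      rw [← Ideal.Quotient.eq]
      have h1 := congrArg (Ideal.Quotient.mk q) heq
      have hm' : Ideal.Quotient.mk q m = 0 := Ideal.Quotient.eq_zero_iff_mem.2 hm
      simp only [map_sub, map_mul, map_pow, hm'] at h1 ⊢
      linear_combination (- Ideal.Quotient.mk q f ^ 2) * h1 - Ideal.Quotient.mk q u * (Ideal.Quotient.mk q e * Ideal.Quotient.mk q f + 1) * hf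

lemma exists_notMem_pow (q : Ideal (𝓞 Y)) (hq : q ≠ ⊤) (e : 𝓞 Y) (he : e ≠ 0) : ∃ n, e ∉ q ^ n := by
  by_contra h
  push Not at h
  have := Ideal.iInf_pow_eq_bot_of_isDomain q hq
  have h1 : e ∈ (⨅ i, q ^ i : Ideal (𝓞 Y)) := by rw [Ideal.mem_iInf]; exact h
  rw [this] at h1; exact he h1

/-- The version of `sq_mod` with elements of the field. -/
lemma sq_mod' (q : Ideal (𝓞 Y)) [q.IsPrime] (hq0 : q ≠ ⊥) (m : 𝓞 Y) (hm : m ∈ q) (hm2 : m ∉ q ^ 2) (u : 𝓞 Y) (A B : Y)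
    (h : A ^ 2 - m * B ^ 2 = u) : ∃ t, u - t ^ 2 ∈ q := by
  classical
  obtain ⟨⟨e, he⟩, hi⟩ := IsLocalization.exist_integer_multiples_of_finset ((𝓞 Y)⁰) ({A, B} : Finset Y)
  obtain ⟨a, ha⟩ := hi A (by simp)
  obtain ⟨b, hb⟩ := hi B (by simp)
  simp only [Algebra.smul_def] at ha hb
  have he0 : e ≠ 0 := nonZeroDivisors.ne_zero he
  obtain ⟨n, hn⟩ := exists_notMem_pow q (Ideal.IsPrime.ne_top ‹_›) e he0
  refine sq_mod q hq0 m hm hm2 u n a b e hn ?_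
  apply RingOfIntegers.coe_injective
  simp only [map_sub, map_mul, map_pow, ha, hb]
  linear_combination (algebraMap (𝓞 Y) Y e) ^ 2 * h

lemma tau_neg (τ : X ≃ₐ[Y] X) (hfix : ∀ x, τ x = x → ∃ y : Y, algebraMap Y X y = x) (β : X) (m : Y) (hβ : β ^ 2 = algebraMap Y X m)
    (hn : ∀ y, algebraMap Y X y ≠ β) : τ β = - β := by
  have h1 : (τ β) ^ 2 = β ^ 2 := by rw [← map_pow, hβ, τ.commutes]
  rcases sq_eq_sq_iff_eq_or_eq_neg.1 h1 with h | h
  · obtain ⟨y, hy⟩ := hfix β h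
    exact absurd hy (hn y)
  · exact h

/-- Elements, conjugates and norms in `X = Y(√m)` in coordinates. -/
lemma norm_form (τ : X ≃ₐ[Y] X) (hτ2 : τ * τ = 1) (hfix : ∀ x, τ x = x → ∃ y : Y, algebraMap Y X y = x) (β : X) (m : Y) (hβ : β ^ 2 = algebraMap Y X m)
    (hn : ∀ y, algebraMap Y X y ≠ β) (x : X) : ∃ A B : Y, x = algebraMap Y X A + algebraMap Y X B * β ∧
      τ x = algebraMap Y X A - algebraMap Y X B * β ∧
      x * τ x = algebraMap Y X (A ^ 2 - m * B ^ 2) := by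
  have hinv : ∀ x, τ (τ x) = x := fun x ↦ congrArg (fun f : X ≃ₐ[Y] X ↦ f x) hτ2
  have hb := tau_neg τ hfix β m hβ hn
  have hb0 : β ≠ 0 := fun h ↦ hn 0 (by rw [map_zero, h])
  obtain ⟨A, hA⟩ := hfix ((x + τ x) / 2) (by rw [map_div₀, map_add, hinv, map_ofNat, add_comm])
  obtain ⟨B, hB⟩ := hfix ((x - τ x) / (2 * β)) (by
    rw [map_div₀, map_sub, map_mul, hinv, map_ofNat, hb]; field_simp; ring)
  have hx : x = algebraMap Y X A + algebraMap Y X B * β := by rw [hA, hB]; field_simp; ring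
  have hx' : τ x = algebraMap Y X A - algebraMap Y X B * β := by rw [hA, hB]; field_simp; ring
  refine ⟨A, B, hx, hx', ?_⟩
  rw [hx', hx, map_sub, map_mul, map_pow, map_pow, ← hβ]; ring

/-- A unit which is a nonresidue modulo a ramified prime is not a norm. -/
lemma not_norm (τ : X ≃ₐ[Y] X) (hτ2 : τ * τ = 1) (hfix : ∀ x, τ x = x → ∃ y : Y, algebraMap Y X y = x) (β : X) (m : 𝓞 Y) (hβ : β ^ 2 = algebraMap Y X m)
    (hn : ∀ y, algebraMap Y X y ≠ β) (q : Ideal (𝓞 Y)) (hqp : q.IsPrime) (hq0 : q ≠ ⊥) (hm : m ∈ q) (hm2 : m ∉ q ^ 2)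
    (u : (𝓞 Y)ˣ) (hu : ∀ t, (u : 𝓞 Y) - t ^ 2 ∉ q) : u ∉ NU τ := by
  intro h
  obtain ⟨x, hx⟩ := (mem_NU τ u).1 h
  obtain ⟨A, B, -, -, hN⟩ := norm_form τ hτ2 hfix β m hβ hn x
  rw [hN] at hx
  obtain ⟨t, ht⟩ := sq_mod' q hq0 m hm hm2 u A B ((algebraMap Y X).injective hx)
  exact hu t ht

lemma NU_index_even (τ : X ≃ₐ[Y] X) (u : (𝓞 Y)ˣ) (hu : u ∉ NU τ) : 2 ∣ (NU τ).index := by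
  rcases (Nat.dvd_prime_pow Nat.prime_two).1 (NU_index_dvd τ) with ⟨k, -, hk⟩
  rcases k with _ | k
  · rw [pow_zero, Subgroup.index_eq_one] at hk
    exact absurd (hk ▸ Subgroup.mem_top u) hu
  · rw [hk]; exact dvd_pow_self 2 (Nat.succ_ne_zero k)

lemma sCl_sCl (τ : X ≃ₐ[Y] X) (hτ2 : τ * τ = 1) (c : ClassGroup (𝓞 X)) : sCl τ (sCl τ c) = c := by
  obtain ⟨J, rfl⟩ := mkX_surj c
  rw [sCl_mk, sCl_mk]
  congr 1
  ext1
  exact tF_tF τ hτ2 J.1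

/-- Nonzero ideals have nonzero norm. -/
def rN (Y : Type*) {X : Type*} [Field Y] [NumberField Y] [Field X] [NumberField X] [Algebra Y X] : (Ideal (𝓞 X))⁰ →* (Ideal (𝓞 Y))⁰ where
  toFun J := ⟨Ideal.relNorm (𝓞 Y) J.1, by
    rw [mem_nonZeroDivisors_iff_ne_zero]
    intro h
    exact nonZeroDivisors.ne_zero J.2 (Ideal.relNorm_eq_bot_iff.1 h)⟩
  map_one' := by ext1; simp
  map_mul' a b := by ext1; simp

lemma rN_compat (I J : (Ideal (𝓞 X))⁰) (h : ClassGroup.mk0 I = ClassGroup.mk0 J) : ClassGroup.mk0 (rN Y I) = ClassGroup.mk0 (rN Y J) := by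
  obtain ⟨x, y, hx, hy, hxy⟩ := ClassGroup.mk0_eq_mk0_iff.1 h
  refine ClassGroup.mk0_eq_mk0_iff.2 ⟨Algebra.intNorm (𝓞 Y) (𝓞 X) x, Algebra.intNorm (𝓞 Y) (𝓞 X) y, ?_, ?_, ?_⟩
  · rwa [Ne, Algebra.intNorm_eq_zero]
  · rwa [Ne, Algebra.intNorm_eq_zero]
  · have := congrArg (Ideal.relNorm (𝓞 Y)) hxy
    rwa [map_mul, map_mul, Ideal.relNorm_singleton, Ideal.relNorm_singleton] at this

variable (Y X) in
/-- The norm map on ideal classes. -/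
def nC : ClassGroup (𝓞 X) →* ClassGroup (𝓞 Y) where
  toFun c := ClassGroup.mk0 (rN Y (ClassGroup.mk0_surjective c).choose)
  map_one' := by
    refine (rN_compat _ 1 ?_).trans (by rw [map_one, map_one])
    exact (ClassGroup.mk0_surjective (1 : ClassGroup (𝓞 X))).choose_spec.trans (map_one _).symm
  map_mul' a b := by
    rw [← map_mul, ← map_mul]
    apply rN_compat
    rw [(ClassGroup.mk0_surjective _).choose_spec, map_mul, (ClassGroup.mk0_surjective _).choose_spec, (ClassGroup.mk0_surjective _).choose_spec]

lemma nC_mk0 (J : (Ideal (𝓞 X))⁰) : nC Y X (ClassGroup.mk0 J) = ClassGroup.mk0 (rN Y J) :=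
  rN_compat _ _ (ClassGroup.mk0_surjective _).choose_spec

lemma mk0_kI (A : Ideal (𝓞 X)) (hA : A ∈ (Ideal (𝓞 X))⁰) (hA' : A ≠ ⊥) : ClassGroup.mk0 ⟨A, hA⟩ = ClassGroup.mk X (kI A hA') := by
  rw [← ClassGroup.mk_mk0 X]
  congr 1

lemma map_rI_ne (τ : X ≃ₐ[Y] X) (hτ2 : τ * τ = 1) {J : Ideal (𝓞 X)} (hJ : J ≠ ⊥) : J.map (rI τ : 𝓞 X →+* 𝓞 X) ≠ ⊥ :=
  fun h ↦ hJ (by rw [← map_rI_rI τ hτ2 J, h, Ideal.map_bot])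

lemma sCl_mk0 (τ : X ≃ₐ[Y] X) (hτ2 : τ * τ = 1) (J : Ideal (𝓞 X)) (hJ : J ∈ (Ideal (𝓞 X))⁰) :
    sCl τ (ClassGroup.mk0 ⟨J, hJ⟩) = ClassGroup.mk0 ⟨J.map (rI τ : 𝓞 X →+* 𝓞 X), by
      rw [mem_nonZeroDivisors_iff_ne_zero]
      exact map_rI_ne τ hτ2 (nonZeroDivisors.ne_zero hJ)⟩ := by
  have hJ0 : J ≠ ⊥ := nonZeroDivisors.ne_zero hJ
  rw [mk0_kI J hJ hJ0, sCl_mk, tI_kI τ J hJ0 (map_rI_ne τ hτ2 hJ0), ← mk0_kI]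

/-- `τ` as an automorphism of `𝓞 X` over `𝓞 Y`. -/
def rA (τ : X ≃ₐ[Y] X) : 𝓞 X ≃ₐ[𝓞 Y] 𝓞 X := AlgEquiv.ofRingEquiv (f := rI τ) (fun y ↦ RingOfIntegers.coe_injective (τ.commutes (y : Y)))

lemma nC_sCl (τ : X ≃ₐ[Y] X) (hτ2 : τ * τ = 1) (c : ClassGroup (𝓞 X)) : nC Y X (sCl τ c) = nC Y X c := by
  obtain ⟨⟨J, hJ⟩, rfl⟩ := ClassGroup.mk0_surjective c
  rw [sCl_mk0 τ hτ2, nC_mk0, nC_mk0]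
  congr 1
  ext1
  exact Ideal.relNorm_map_algEquiv (rA τ) J

/-- Extending an ideal class to a quadratic extension and taking the norm is squaring. -/
lemma nC_ext (h2 : Module.finrank Y X = 2) (c : ClassGroup (𝓞 Y)) : nC Y X (ClassGroup.extendedHom (𝓞 Y) (𝓞 X) c) = c ^ 2 := by
  obtain ⟨J, rfl⟩ := ClassGroup.mk0_surjective c
  rw [ClassGroup.extendedHom_mk0, nC_mk0, ← map_pow]
  congr 1
  ext1
  refine (Ideal.relNorm_algebraMap (𝓞 X) J.1).trans ?_
  rw [finrank_int h2]; rfl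

lemma sCl_ext (τ : X ≃ₐ[Y] X) (hτ2 : τ * τ = 1) (c : ClassGroup (𝓞 Y)) :
    sCl τ (ClassGroup.extendedHom (𝓞 Y) (𝓞 X) c) = ClassGroup.extendedHom (𝓞 Y) (𝓞 X) c := by
  obtain ⟨J, rfl⟩ := ClassGroup.mk0_surjective c
  rw [ClassGroup.extendedHom_mk0]
  refine (sCl_mk0 τ hτ2 _ _).trans ?_
  congr 1
  ext1
  exact map_rI_map τ J.1

end res
end H15

/-! ### Biquadratic symbols and the residue of c modulo 4 -/

namespace H15

section cong
variable {p : ℕ} [hp : Fact p.Prime]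

/-- Euler's criterion for a square root of two modulo `p`. -/
lemma isSquare_root (hp8 : p % 8 = 1) (r : ZMod p) (hr : r ^ 2 = 2) :
    IsSquare r ↔ (2 : ZMod p) ^ ((p - 1) / 4) = 1 := by
  have h2 : (2 : ZMod p) ≠ 0 := by
    intro h
    have h2 : ((2 : ℕ) : ZMod p) = 0 := by exact_mod_cast h
    rw [ZMod.natCast_eq_zero_iff] at h2
    have := Nat.le_of_dvd two_pos h2
    have := hp.out.two_le
    have : p = 2 := by omega
    omega
  have hr0 : r ≠ 0 := by rintro rfl; apply h2; rw [← hr]; ring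
  rw [ZMod.euler_criterion p hr0, ← hr, ← pow_mul]
  have : p / 2 = 2 * ((p - 1) / 4) := by omega
  rw [this]

/-- With `ζ` a primitive eighth root of unity modulo `p` such that `r = ζ + ζ⁻¹`, one has
`ζ (2 + r) = (1 + ζ)²`, so `2 + r` is a square exactly when `ζ` is, that is, when `16 ∣ p - 1`. -/
lemma isSquare_two_add (hp8 : p % 8 = 1) (r : ZMod p) (hr : r ^ 2 = 2) :
    IsSquare (2 + r) ↔ (-1 : ℤ) ^ ((p - 1) / 8) = 1 := by
  have h2 : (2 : ZMod p) ≠ 0 := by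
    intro h
    have h2 : ((2 : ℕ) : ZMod p) = 0 := by exact_mod_cast h
    rw [ZMod.natCast_eq_zero_iff] at h2
    have := Nat.le_of_dvd two_pos h2
    have := hp.out.two_le
    have : p = 2 := by omega
    omega
  obtain ⟨i, hi⟩ : IsSquare (-1 : ZMod p) := ZMod.exists_sq_eq_neg_one_iff.2 (by omega)
  have hi2 : i ^ 2 = -1 := by rw [hi]; ring
  obtain ⟨ζ, hζ⟩ : ∃ ζ : ZMod p, 2 * ζ = r * (1 + i) := ⟨r * (1 + i) / 2, by field_simp⟩
  have hζ2 : ζ ^ 2 = i := by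
    apply mul_left_cancel₀ (pow_ne_zero 2 h2)
    rw [← mul_pow, hζ, mul_pow, hr]; linear_combination 2 * hi2
  have hζ4 : ζ ^ 4 = -1 := by rw [show ζ ^ 4 = (ζ ^ 2) ^ 2 by ring, hζ2, hi2]
  have hζ0 : ζ ≠ 0 := by
    rintro rfl
    have : (1 : ZMod p) = 0 := by linear_combination hζ4
    exact one_ne_zero this
  have hfor : ζ * (2 + r) = (1 + ζ) ^ 2 := by
    apply mul_left_cancel₀ (pow_ne_zero 2 h2)
    have : r * ζ * 2 = 2 * (1 + i) := by rw [mul_assoc, mul_comm ζ, hζ]; linear_combination (1 + i) * hr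
    linear_combination 2 * this - 4 * hζ2
  have h1ζ : 1 + ζ ≠ 0 := by
    intro h
    have : ζ = -1 := by linear_combination h
    rw [this] at hζ4
    apply h2; linear_combination hζ4
  have hs : IsSquare (2 + r) ↔ IsSquare ζ := by
    constructor
    · rintro ⟨w, hw⟩
      have hw0 : w ≠ 0 := by
        rintro rfl
        rw [hw] at hfor
        exact pow_ne_zero 2 h1ζ (by rw [← hfor]; ring)
      refine ⟨(1 + ζ) / w, ?_⟩
      field_simp
      rw [← hfor, hw]; ring
    · rintro ⟨w, hw⟩
      have hw0 : w ≠ 0 := by rintro rfl; exact hζ0 (by rw [hw]; ring)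
      refine ⟨(1 + ζ) / w, ?_⟩
      field_simp
      rw [← hfor, hw]; ring
  rw [hs, ZMod.euler_criterion p hζ0]
  have : p / 2 = 4 * ((p - 1) / 8) := by omega
  rw [this, pow_mul, hζ4]
  rcases Nat.even_or_odd ((p - 1) / 8) with h | h
  · rw [h.neg_one_pow, h.neg_one_pow]; simp
  · rw [h.neg_one_pow, h.neg_one_pow]
    constructor
    · intro h
      exact absurd (by linear_combination -h) h2
    · intro h; norm_num at h

/-- The symbol `(2/p)₄` in terms of `c`. As `2` is the square of `c / (4d)` modulo `p`, it is the Jacobi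
symbol of `c d`, which reciprocity turns into that of `-2` modulo `c`. -/
lemma quartic_two (hp8 : p % 8 = 1) (c d : ℕ) (hc : 0 < c) (hd : 0 < d) (hcd : (p : ℤ) = c ^ 2 - 32 * d ^ 2) :
    (2 : ZMod p) ^ ((p - 1) / 4) = 1 ↔ (c % 8 = 1 ∨ c % 8 = 3) := by
  have hp0 := hp.out.pos
  have hcodd : c % 2 = 1 := by
    rcases Nat.even_or_odd c with h | h
    · exfalso
      obtain ⟨t, rfl⟩ := h
      push_cast at hcd
      have : (p : ℤ) = 2 * (2 * t ^ 2 - 16 * d ^ 2) := by rw [hcd]; ring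
      omega
    · exact Nat.odd_iff.1 h
  have hpodd : p % 2 = 1 := by omega
  -- coprimality
  have hpd : ¬ p ∣ d := by
    intro h
    have h1 : (p : ℤ) ∣ d := by exact_mod_cast h
    have h2 : (p : ℤ) ∣ (c : ℤ) ^ 2 := ⟨1 + 32 * d * (d / p), by
      have := Int.mul_ediv_cancel' h1
      linear_combination (-hcd) + 32 * (d : ℤ) * (-this)⟩
    have h3 : (p : ℤ) ∣ c := Int.Prime.dvd_pow' hp.out h2
    have h4 : (p : ℤ) * p ∣ p := by
      conv_rhs => rw [hcd]
      apply dvd_sub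
      · rw [sq]; exact mul_dvd_mul h3 h3
      · rw [sq]; exact Dvd.dvd.mul_left (mul_dvd_mul h1 h1) _
    have h5 := Int.le_of_dvd (by exact_mod_cast hp0) h4
    have : (2 : ℤ) ≤ p := by exact_mod_cast hp.out.two_le
    nlinarith
  have hd0 : (d : ZMod p) ≠ 0 := by rwa [Ne, ZMod.natCast_eq_zero_iff]
  have h2 : (2 : ZMod p) ≠ 0 := by
    intro h
    have h2 : ((2 : ℕ) : ZMod p) = 0 := by exact_mod_cast h
    rw [ZMod.natCast_eq_zero_iff] at h2
    have := Nat.le_of_dvd two_pos h2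
    have := hp.out.two_le
    have : p = 2 := by omega
    omega
  have hz : (c : ZMod p) ^ 2 = 32 * (d : ZMod p) ^ 2 := by
    have := congrArg (Int.cast (R := ZMod p)) hcd
    push_cast at this
    rw [CharP.cast_eq_zero] at this
    linear_combination -this
  have h4d : (4 * d : ZMod p) ≠ 0 := by
    rw [show (4 : ZMod p) = 2 * 2 by norm_num]
    exact mul_ne_zero (mul_ne_zero h2 h2) hd0
  have hr : ((c : ZMod p) / (4 * d)) ^ 2 = 2 := by
    rw [div_pow, hz, div_eq_iff (pow_ne_zero 2 h4d)]; ring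
  rw [← isSquare_root hp8 _ hr]
  have hc0 : (c : ZMod p) ≠ 0 := by
    intro h; rw [h] at hr; apply h2; rw [← hr]; ring
  have hsq : IsSquare ((c : ZMod p) / (4 * d)) ↔ IsSquare ((c * d : ℕ) : ZMod p) := by
    constructor
    · rintro ⟨w, hw⟩
      rw [div_eq_iff h4d] at hw
      refine ⟨w * (2 * d), ?_⟩
      push_cast; rw [hw]; ring
    · rintro ⟨w, hw⟩
      push_cast at hw
      refine ⟨w / (2 * d), ?_⟩
      have h4 : (4 : ZMod p) ≠ 0 := fun h ↦ h4d (by rw [h]; ring)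
      field_simp
      rw [sq w, ← hw]; ring
  rw [hsq]
  have hcd0 : ((c * d : ℕ) : ZMod p) ≠ 0 := by push_cast; exact mul_ne_zero hc0 hd0
  have hl : IsSquare ((c * d : ℕ) : ZMod p) ↔ jacobiSym (c * d : ℕ) p = 1 := by
    rw [← jacobiSym.legendreSym.to_jacobiSym, legendreSym.eq_one_iff]
    · push_cast; rfl
    · exact_mod_cast hcd0
  rw [hl]
  have hjd : jacobiSym d p = 1 := by
    obtain ⟨j, e, he, hde⟩ := Nat.exists_eq_two_pow_mul_odd hd.ne'
    have h2p : jacobiSym 2 p = 1 := by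
      rw [jacobiSym.at_two (Nat.odd_iff.2 hpodd), ZMod.χ₈_nat_eq_if_mod_eight]
      simp [hpodd, hp8]
    have hep : jacobiSym e p = 1 := by
      rw [jacobiSym.quadratic_reciprocity_one_mod_four' he (by omega), hcd]
      rw [jacobiSym.mod_left, show ((c : ℤ) ^ 2 - 32 * d ^ 2) % e = (c : ℤ) ^ 2 % e by
        rw [hde]; push_cast
        apply Int.ModEq.symm
        apply Int.modEq_of_dvd
        exact ⟨-(32 * 2 ^ j * (2 ^ j * e)), by ring⟩, ← jacobiSym.mod_left]
      apply jacobiSym.sq_one'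
      -- gcd c e = 1
      have : Nat.gcd c e = 1 := by
        by_contra hg
        obtain ⟨l, hl, hlg⟩ := Nat.exists_prime_and_dvd hg
        have h1 := hlg.trans (Nat.gcd_dvd_left c e)
        have h2 := (hlg.trans (Nat.gcd_dvd_right c e)).trans (show e ∣ d from ⟨2 ^ j, by rw [hde]; ring⟩)
        have h3 : (l : ℤ) ∣ p := by
          rw [hcd]
          apply dvd_sub
          · exact dvd_pow (by exact_mod_cast h1) two_ne_zero
          · exact Dvd.dvd.mul_left (dvd_pow (by exact_mod_cast h2) two_ne_zero) _
        have h4 : l ∣ p := by exact_mod_cast h3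
        rcases (Nat.dvd_prime hp.out).1 h4 with h | h
        · exact hl.one_lt.ne' h
        · exact hpd (h ▸ h2)
      exact_mod_cast this
    rw [hde]; push_cast
    rw [jacobiSym.mul_left, jacobiSym.pow_left, h2p, hep]; norm_num
  push_cast
  rw [jacobiSym.mul_left, hjd, mul_one, jacobiSym.quadratic_reciprocity_one_mod_four' (Nat.odd_iff.2 hcodd) (by omega), hcd, jacobiSym.mod_left, show ((c : ℤ) ^ 2 - 32 * d ^ 2) % c = (-2 * (4 * d) ^ 2) % c by
        apply Int.ModEq.symm
        apply Int.modEq_of_dvd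
        exact ⟨c, by ring⟩, ← jacobiSym.mod_left, jacobiSym.mul_left, jacobiSym.sq_one', mul_one, jacobiSym.at_neg_two (Nat.odd_iff.2 hcodd), ZMod.χ₈'_nat_eq_if_mod_eight]
  · rw [if_neg (by omega)]
    split_ifs with h
    · simpa using h
    · simpa using h
  · have : Nat.gcd (4 * d) c = 1 := by
      by_contra hg
      obtain ⟨l, hl, hlg⟩ := Nat.exists_prime_and_dvd hg
      have h1 := hlg.trans (Nat.gcd_dvd_right _ c)
      have h2 := (hlg.trans (Nat.gcd_dvd_left (4 * d) c))
      have hl2 : l ≠ 2 := by rintro rfl; omega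
      have h2' : l ∣ d := by
        refine (Nat.Coprime.dvd_of_dvd_mul_left ?_ h2)
        exact ((Nat.coprime_primes hl Nat.prime_two).2 hl2).pow_right 2
      have h3 : (l : ℤ) ∣ p := by
        rw [hcd]
        apply dvd_sub
        · exact dvd_pow (by exact_mod_cast h1) two_ne_zero
        · exact Dvd.dvd.mul_left (dvd_pow (by exact_mod_cast h2') two_ne_zero) _
      have h4 : l ∣ p := by exact_mod_cast h3
      rcases (Nat.dvd_prime hp.out).1 h4 with h | h
      · exact hl.one_lt.ne' h
      · exact hpd (h ▸ h2')
    exact_mod_cast this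

/-- The symbol `(p/2)₄` in terms of `c`: modulo `16`, the prime `p` is `c²`. -/
lemma quartic_p (c d : ℕ) (hp8 : p % 8 = 1) (hcd : (p : ℤ) = c ^ 2 - 32 * d ^ 2) :
    (-1 : ℤ) ^ ((p - 1) / 8) = 1 ↔ (c % 8 = 1 ∨ c % 8 = 7) := by
  have h1 : (p : ℤ) % 16 = (c : ℤ) ^ 2 % 16 := by rw [hcd]; omega
  have h2 : p % 16 = c ^ 2 % 16 := by exact_mod_cast h1
  have h3 : c ^ 2 % 16 = (c % 8) ^ 2 % 16 := by
    conv_lhs => rw [← Nat.div_add_mod c 8]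
    rw [show (8 * (c / 8) + c % 8) ^ 2 = 16 * (4 * (c / 8) ^ 2 + (c / 8) * (c % 8)) + (c % 8) ^ 2 by ring]
    omega
  rw [h3] at h2
  have h4 : c % 8 < 8 := Nat.mod_lt _ (by norm_num)
  rw [neg_one_pow_eq_one_iff_even (by norm_num), Nat.even_iff]
  generalize c % 8 = e at *
  interval_cases e <;> norm_num at * <;> omega

/-- `c ≡ 1 (mod 4)` exactly when the two quartic symbols agree. -/
lemma cong_equal (hp8 : p % 8 = 1) (c d : ℕ) (hc : 0 < c) (hd : 0 < d) (hcd : (p : ℤ) = c ^ 2 - 32 * d ^ 2) :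
    c % 4 = 1 ↔ ((2 : ZMod p) ^ ((p - 1) / 4) = 1 ↔ (-1 : ℤ) ^ ((p - 1) / 8) = 1) := by
  rw [quartic_two hp8 c d hc hd hcd, quartic_p c d hp8 hcd]
  have hcodd : c % 2 = 1 := by
    rcases Nat.even_or_odd c with h | h
    · exfalso
      obtain ⟨t, rfl⟩ := h
      push_cast at hcd
      have : (p : ℤ) = 2 * (2 * t ^ 2 - 16 * d ^ 2) := by rw [hcd]; ring
      omega
    · exact Nat.odd_iff.1 h
  omega

/-- If the quartic symbols differ, `1 + √2` is a non-residue. -/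
lemma not_isSquare_unit (hp8 : p % 8 = 1) (h : ¬ ((2 : ZMod p) ^ ((p - 1) / 4) = 1 ↔ (-1 : ℤ) ^ ((p - 1) / 8) = 1))
    (r : ZMod p) (hr : r ^ 2 = 2) : ¬ IsSquare (1 + r) := by
  intro h1
  apply h
  rw [← isSquare_root hp8 r hr, ← isSquare_two_add hp8 r hr, show 2 + r = r * (1 + r) by linear_combination -hr]
  obtain ⟨w, hw⟩ := h1
  have hw0 : w ≠ 0 := by
    rintro rfl
    have : r = -1 := by linear_combination hw
    rw [this] at hr
    have : (1 : ZMod p) = 0 := by linear_combination -hr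
    exact one_ne_zero this
  constructor
  · rintro ⟨v, hv⟩; exact ⟨v * w, by rw [hw]; nth_rw 1 [hv]; ring⟩
  · rintro ⟨v, hv⟩
    refine ⟨v / w, ?_⟩
    rw [hw] at hv
    field_simp
    linear_combination hv

/-- If both quartic symbols are `-1`, `√2 (1 + √2)` is a non-residue. -/
lemma not_isSquare_two_add (hp8 : p % 8 = 1) (h : ¬ (-1 : ℤ) ^ ((p - 1) / 8) = 1)
    (r : ZMod p) (hr : r ^ 2 = 2) : ¬ IsSquare (r * (1 + r)) := by
  rw [← isSquare_two_add hp8 r hr, show 2 + r = r * (1 + r) by linear_combination -hr] at h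
  exact h
end cong
end H15

/-! ### Quadratic extensions and the field ℚ(√2) -/

namespace H15
open Filter Topology

section quad
variable {Y X : Type*} [Field Y] [NumberField Y] [Field X] [NumberField X] [Algebra Y X]

lemma coe_alg (y : 𝓞 Y) : algebraMap (𝓞 X) X (algebraMap (𝓞 Y) (𝓞 X) y) = algebraMap Y X y := by
  rw [← IsScalarTower.algebraMap_apply, IsScalarTower.algebraMap_apply (𝓞 Y) Y X]

/-- `(1 + √m) / 2` is an integral generator of `X / Y` when `m ≡ 1 (mod 4)`. -/
lemma half_gen (β : 𝓞 X) (t : 𝓞 Y) (hβ : β ^ 2 = algebraMap (𝓞 Y) (𝓞 X) (1 + 4 * t)) (hn : ∀ y : Y, algebraMap Y X y ≠ β) :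
    ∃ α : 𝓞 X, α ^ 2 - algebraMap (𝓞 Y) (𝓞 X) 1 * α + algebraMap (𝓞 Y) (𝓞 X) (-t) = 0 ∧ 2 * α = 1 + β ∧
      ∀ y : Y, algebraMap Y X y ≠ α := by
  have hβ' : (β : X) ^ 2 = algebraMap Y X (1 + 4 * t) := by
    have := congrArg (algebraMap (𝓞 X) X) hβ
    rw [map_pow, coe_alg] at this
    rw [this]; simp only [map_add, map_mul, map_one, map_ofNat]
  set a : X := (1 + β) / 2 with ha
  have h2 : (2 : X) ≠ 0 := two_ne_zero
  have hq : a ^ 2 - a - algebraMap Y X t = 0 := by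
    have : 4 * (a ^ 2 - a - algebraMap Y X t) = 0 := by
      rw [ha]; simp only [map_add, map_one, map_mul, map_ofNat] at hβ'
      field_simp; linear_combination 4 * hβ'
    simpa using this
  have hint : IsIntegral (𝓞 Y) a := by
    refine ⟨Polynomial.X ^ 2 - Polynomial.X - Polynomial.C t, ?_, ?_⟩
    · monicity!
    · simp only [Polynomial.eval₂_sub, Polynomial.eval₂_pow, Polynomial.eval₂_X, Polynomial.eval₂_C]
      rw [IsScalarTower.algebraMap_apply (𝓞 Y) Y X]
      exact hq
  have hint' : IsIntegral ℤ a := isIntegral_trans a hint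
  refine ⟨⟨a, hint'⟩, ?_, ?_, ?_⟩
  · apply RingOfIntegers.coe_injective
    have : algebraMap (𝓞 X) X (algebraMap (𝓞 Y) (𝓞 X) t) = algebraMap Y X t := by
      rw [← IsScalarTower.algebraMap_apply, IsScalarTower.algebraMap_apply (𝓞 Y) Y X]
    simp only [map_add, map_sub, map_mul, map_pow, map_neg, map_one, map_zero, this]
    change a ^ 2 - 1 * a + - algebraMap Y X t = 0
    linear_combination hq
  · apply RingOfIntegers.coe_injective
    simp only [map_add, map_mul, map_one, map_ofNat]
    change 2 * a = 1 + (β : X)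
    rw [ha]; field_simp
  · intro y hy
    apply hn (2 * y - 1)
    change algebraMap Y X y = a at hy
    rw [map_sub, map_mul, map_ofNat, map_one, hy, ha]; field_simp; ring

/-- For `m ≡ 1 (mod 4)`, only primes dividing `m` ramify in `Y(√m)`. -/
lemma ram_mem_one (h2 : Module.finrank Y X = 2) (β : 𝓞 X) (m t : 𝓞 Y) (hβ : β ^ 2 = algebraMap (𝓞 Y) (𝓞 X) m) (hm : m = 1 + 4 * t)
    (hn : ∀ y : Y, algebraMap Y X y ≠ β) (q : Ideal (𝓞 Y)) (hq : q.IsMaximal) (hq0 : q ≠ ⊥)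
    (P : Ideal (𝓞 X)) (hP : P.IsPrime) (hPq : P.comap (algebraMap (𝓞 Y) (𝓞 X)) = q)
    (hr : P ^ 2 ∣ q.map (algebraMap (𝓞 Y) (𝓞 X))) : m ∈ q := by
  obtain ⟨α, h1, -, h3⟩ := half_gen β t (hm ▸ hβ) hn
  have := ramified_disc_mem h2 α 1 (-t) h1 h3 q hq0 P hPq hr
  rw [hm]; convert this using 1; ring

/-- Only primes dividing `4m` ramify in `Y(√m)`. -/
lemma ram_mem_four (h2 : Module.finrank Y X = 2) (β : 𝓞 X) (m : 𝓞 Y) (hβ : β ^ 2 = algebraMap (𝓞 Y) (𝓞 X) m)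
    (hn : ∀ y : Y, algebraMap Y X y ≠ β) (q : Ideal (𝓞 Y)) (hq : q.IsMaximal) (hq0 : q ≠ ⊥)
    (P : Ideal (𝓞 X)) (hP : P.IsPrime) (hPq : P.comap (algebraMap (𝓞 Y) (𝓞 X)) = q)
    (hr : P ^ 2 ∣ q.map (algebraMap (𝓞 Y) (𝓞 X))) : 4 * m ∈ q := by
  have := ramified_disc_mem h2 β 0 (-m) (by rw [hβ]; simp) hn q hq0 P hPq hr
  convert this using 1; ring

/-- For `m ≡ 1 (mod 4)` odd, `Y(√m) / Y` is unramified above two, which determines the 2-part of the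
discriminant. -/
lemma discr_odd (h2 : Module.finrank Y X = 2) (β : 𝓞 X) (m t : 𝓞 Y) (hβ : β ^ 2 = algebraMap (𝓞 Y) (𝓞 X) m) (hm : m = 1 + 4 * t)
    (hn : ∀ y : Y, algebraMap Y X y ≠ β) (M : ℕ) (hM : Odd M) (hd : m ∣ (M : 𝓞 Y)) :
    padicValInt 2 (discr X) = 2 * padicValInt 2 (discr Y) := by
  obtain ⟨α, h1, -, h3⟩ := half_gen β t (hm ▸ hβ) hn
  exact discr_two_part h2 α 1 (-t) h1 h3 M hM (by convert hd using 1; rw [hm]; ring)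

lemma norm_two (h2 : Module.finrank Y X = 2) (τ : X ≃ₐ[Y] X) (hτ : τ ≠ 1) (x : X) :
    algebraMap Y X (Algebra.norm Y x) = x * τ x := by
  have : IsGalois Y X := isGalois_two h2
  classical
  rw [Algebra.norm_eq_prod_automorphisms]
  have hc : Fintype.card (X ≃ₐ[Y] X) = 2 := by rw [← Nat.card_eq_fintype_card, IsGalois.card_aut_eq_finrank, h2]
  have hu : (Finset.univ : Finset (X ≃ₐ[Y] X)) = {1, τ} := by
    symm; apply Finset.eq_univ_of_card
    rw [hc, Finset.card_pair hτ.symm]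
  rw [hu, Finset.prod_pair hτ.symm]; rfl

lemma res_field {p : ℕ} [Fact p.Prime] (q : Ideal (𝓞 X)) (hq : Ideal.absNorm q = p) :
    ∃ f : 𝓞 X →+* ZMod p, ∀ x, f x = 0 ↔ x ∈ q := by
  have hc : Nat.card (𝓞 X ⧸ q) = p := by rw [← hq]; rfl
  have : Finite (𝓞 X ⧸ q) := Nat.finite_of_card_ne_zero (by rw [hc]; exact (Fact.out : p.Prime).ne_zero)
  have := Fintype.ofFinite (𝓞 X ⧸ q)
  let e := ZMod.ringEquivOfPrime (𝓞 X ⧸ q) (Fact.out : p.Prime) (by rw [← Nat.card_eq_fintype_card, hc])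
  refine ⟨(e.symm : (𝓞 X ⧸ q) →+* ZMod p).comp (Ideal.Quotient.mk q), fun x ↦ ?_⟩
  simp [Ideal.Quotient.eq_zero_iff_mem]

lemma prime_of_absNorm {p : ℕ} (hp : p.Prime) (q : Ideal (𝓞 X)) (hq : Ideal.absNorm q = p) : q.IsPrime :=
  Ideal.isPrime_of_irreducible_absNorm (by rw [hq]; exact hp)

/-- If the quartic symbols differ, `1 + √2` is a non-residue modulo a prime of norm `p`. -/
lemma nonres_unit {p : ℕ} [Fact p.Prime] (hp8 : p % 8 = 1) (h : ¬ ((2 : ZMod p) ^ ((p - 1) / 4) = 1 ↔ (-1 : ℤ) ^ ((p - 1) / 8) = 1))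
    (q : Ideal (𝓞 X)) (hq : Ideal.absNorm q = p) (s : 𝓞 X) (hs : s ^ 2 = 2) (t : 𝓞 X) : (1 + s) - t ^ 2 ∉ q := by
  obtain ⟨f, hf⟩ := res_field q hq
  rw [← hf]
  intro h0
  refine not_isSquare_unit hp8 h (f s) (by rw [← map_pow, hs, map_ofNat]) ⟨f t, ?_⟩
  simp only [map_sub, map_add, map_one, map_pow] at h0
  linear_combination h0

/-- If `(p/2)₄ = -1`, then `√2 (1 + √2) = 2 + √2` is a quadratic nonresidue modulo primes of norm `p`. -/
lemma nonres_two {p : ℕ} [Fact p.Prime] (hp8 : p % 8 = 1) (h : ¬ (-1 : ℤ) ^ ((p - 1) / 8) = 1)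
    (q : Ideal (𝓞 X)) (hq : Ideal.absNorm q = p) (s : 𝓞 X) (hs : s ^ 2 = 2) (t : 𝓞 X) : s * (1 + s) - t ^ 2 ∉ q := by
  obtain ⟨f, hf⟩ := res_field q hq
  rw [← hf]
  intro h0
  refine not_isSquare_two_add hp8 h (f s) (by rw [← map_pow, hs, map_ofNat]) ⟨f t, ?_⟩
  simp only [map_sub, map_add, map_one, map_pow, map_mul] at h0
  linear_combination h0

lemma card_places_real [IsTotallyReal X] : Fintype.card (InfinitePlace X) = Module.finrank ℚ X := by
  rw [IsTotallyReal.finrank, InfinitePlace.card_eq_nrRealPlaces_add_nrComplexPlaces, IsTotallyReal.nrComplexPlaces_eq_zero, add_zero]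

lemma card_places_complex [IsTotallyComplex X] : 2 * Fintype.card (InfinitePlace X) = Module.finrank ℚ X := by
  rw [IsTotallyComplex.finrank, InfinitePlace.card_eq_nrRealPlaces_add_nrComplexPlaces, IsTotallyComplex.nrRealPlaces_eq_zero, zero_add]

lemma not_int_of_sq (β : X) (m : Y) (hβ : β ^ 2 = algebraMap Y X m) (h : ¬ IsSquare m) (y : Y) : algebraMap Y X y ≠ β := by
  rintro rfl
  apply h
  rw [← map_pow] at hβ
  exact ⟨y, by rw [← (algebraMap Y X).injective hβ]; ring⟩

lemma exists_real [IsTotallyReal Y] (φ : Y →+* ℂ) : ∃ ψ : Y →+* ℝ, ∀ y, φ y = (ψ y : ℂ) :=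
  ⟨(IsTotallyReal.complexEmbedding_isReal φ).embedding, fun y ↦ by simp⟩

/-- Adjoining the square root of a totally positive element to a totally real field. -/
lemma totally_real_step [IsTotallyReal Y] (h2 : Module.finrank Y X = 2) (β : X) (m : Y) (hβ : β ^ 2 = algebraMap Y X m)
    (hn : ∀ y : Y, algebraMap Y X y ≠ β) (hpos : ∀ φ : Y →+* ℝ, 0 < φ m) : IsTotallyReal X := by
  obtain ⟨τ, -, hτ2, hfix⟩ := exists_invol h2
  refine ⟨fun v ↦ ?_⟩
  rw [InfinitePlace.isReal_iff, ComplexEmbedding.isReal_iff]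
  obtain ⟨ψ, hψ⟩ := exists_real (v.embedding.comp (algebraMap Y X))
  simp only [RingHom.comp_apply] at hψ
  have hb : (v.embedding β) ^ 2 = ((Real.sqrt (ψ m) : ℝ) : ℂ) ^ 2 := by
    rw [← map_pow, hβ, hψ, ← Complex.ofReal_pow, Real.sq_sqrt (hpos ψ).le]
  have hbr : (starRingEnd ℂ) (v.embedding β) = v.embedding β := by
    rcases sq_eq_sq_iff_eq_or_eq_neg.1 hb with h | h <;> rw [h] <;> simp
  ext x
  obtain ⟨A, B, hx, -, -⟩ := norm_form τ hτ2 hfix β m hβ hn x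
  rw [ComplexEmbedding.conjugate_coe_eq, hx]
  simp only [map_add, map_mul, hbr, hψ, Complex.conj_ofReal]

lemma totally_complex_of (β : X) (m : Y) (hβ : β ^ 2 = algebraMap Y X m) (hneg : ∀ φ : Y →+* ℝ, φ m < 0) : IsTotallyComplex X := by
  refine ⟨fun v ↦ ?_⟩
  rw [← InfinitePlace.not_isReal_iff_isComplex, InfinitePlace.isReal_iff]
  intro h
  have h1 := hneg (h.embedding.comp (algebraMap Y X))
  rw [RingHom.comp_apply, ← hβ, map_pow] at h1
  nlinarith [sq_nonneg (h.embedding β)]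

lemma cm_of [IsTotallyReal Y] (h2 : Module.finrank Y X = 2) [IsTotallyComplex X] : IsCMField X := by
  have : Algebra.IsQuadraticExtension Y X := ⟨h2⟩
  exact IsCMField.ofCMExtension Y X

end quad

section base
variable {Y : Type*} [Field Y] [NumberField Y]

lemma sq_coe (s : 𝓞 Y) (hs : s ^ 2 = 2) : (s : Y) ^ 2 = 2 := by rw [← map_pow, hs, map_ofNat]

lemma base_not_rat (s : 𝓞 Y) (hs : s ^ 2 = 2) (y : ℚ) : algebraMap ℚ Y y ≠ s := by
  refine not_int_of_sq (s : Y) (2 : ℚ) ?_ ?_ y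
  · rw [sq_coe s hs, map_ofNat]
  · rintro ⟨r, hr⟩
    refine irrational_sqrt_two ⟨|r|, ?_⟩
    rw [Rat.cast_abs, ← Real.sqrt_sq_eq_abs]; congr 1
    rw [sq]; exact_mod_cast hr.symm

lemma base_real (h2 : Module.finrank ℚ Y = 2) (s : 𝓞 Y) (hs : s ^ 2 = 2) : IsTotallyReal Y := by
  refine totally_real_step (Y := ℚ) h2 (s : Y) (2 : ℚ) ?_ (base_not_rat s hs) (fun φ ↦ by simp)
  rw [sq_coe s hs, map_ofNat]

/-- The conjugation of `ℚ(√2)`. -/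
lemma base_conj (h2 : Module.finrank ℚ Y = 2) (s : 𝓞 Y) (hs : s ^ 2 = 2) :
    ∃ σ : Y ≃ₐ[ℚ] Y, σ ≠ 1 ∧ σ s = - (s : Y) := by
  obtain ⟨τ, h1, hτ2, hfix⟩ := exists_invol h2
  exact ⟨τ, h1, tau_neg τ hfix (s : Y) 2 (by rw [sq_coe s hs, map_ofNat]) (base_not_rat s hs)⟩

lemma base_absNorm (h2 : Module.finrank ℚ Y = 2) (s : 𝓞 Y) (hs : s ^ 2 = 2) (a b : ℤ) :
    Ideal.absNorm (Ideal.span {(a : 𝓞 Y) + b * s}) = (a ^ 2 - 2 * b ^ 2).natAbs := by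
  obtain ⟨σ, hσ, hσs⟩ := base_conj h2 s hs
  rw [Ideal.absNorm_span_singleton]
  congr 1
  have h : ((Algebra.norm ℤ ((a : 𝓞 Y) + b * s) : ℤ) : ℚ) = a ^ 2 - 2 * b ^ 2 := by
    rw [Algebra.coe_norm_int]
    apply (algebraMap ℚ Y).injective
    have hs' := sq_coe s hs
    rw [norm_two h2 σ hσ]
    simp only [map_add, map_mul, map_intCast, hσs, map_sub, map_pow, map_ofNat]
    linear_combination - (b : Y) ^ 2 * hs'
  exact_mod_cast h

/-- The ring of integers of `ℚ(√2)` is principal, by Minkowski's bound. -/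
lemma base_classNumber (h2 : Module.finrank ℚ Y = 2) (s : 𝓞 Y) (hs : s ^ 2 = 2) : classNumber Y = 1 := by
  have := base_real h2 s hs
  rw [classNumber_eq_one_iff]
  apply RingOfIntegers.isPrincipalIdealRing_of_abs_discr_lt
  rw [IsTotallyReal.nrComplexPlaces_eq_zero, h2]
  have hmem := deriv_mem_different (Y := ℚ) h2 s 0 (-2) (by rw [hs, map_neg, map_ofNat]; simp) (base_not_rat s hs)
  have h := natAbs_discr_eq_absNorm_differentIdeal_mul_natAbs_discr_pow ℚ (𝓞 ℚ) Y (𝓞 Y)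
  have h3 : Ideal.absNorm (Ideal.span {2 * s}) = 8 := by
    have := base_absNorm h2 s hs 0 2
    simpa using this
  have h4 : Ideal.absNorm (differentIdeal (𝓞 ℚ) (𝓞 Y)) ∣ 8 := by
    rw [← h3]
    apply Ideal.absNorm_dvd_absNorm_of_le
    rw [Ideal.span_singleton_le_iff_mem]
    simpa using hmem
  rw [discr_rat] at h
  have h5 : (discr Y).natAbs ≤ 8 := by rw [h]; simpa using Nat.le_of_dvd (by norm_num) h4
  have h6 : |discr Y| ≤ 8 := by rw [Int.abs_eq_natAbs]; exact_mod_cast h5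
  have h7 : ((|discr Y| : ℤ) : ℝ) ≤ 8 := by exact_mod_cast h6
  refine lt_of_le_of_lt h7 ?_
  norm_num [Nat.factorial]

end base
end H15

/-! ### Parity of class numbers in quadratic extensions -/

namespace H15
open Filter Topology

/-- `c + 4 d s`, where `s` plays the role of `√2`. -/
def pE {R : Type*} [CommRing R] (c d : ℤ) (s : R) : R := c + 4 * d * s

section ring
variable {R R' : Type*} [CommRing R] [CommRing R']

lemma map_pE (f : R →+* R') (c d : ℤ) (s : R) : f (pE c d s) = pE c d (f s) := by
  simp only [pE, map_add, map_mul, map_intCast, map_ofNat]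

lemma pE_mul {p : ℕ} {c d : ℤ} (hcd : (p : ℤ) = c ^ 2 - 32 * d ^ 2) (s : R) (hs : s ^ 2 = 2) :
    pE c d s * pE c (-d) s = p := by
  have := congrArg (Int.cast (R := R)) hcd
  push_cast at this
  simp only [pE]; push_cast
  rw [this]; linear_combination - 16 * (d : R) ^ 2 * hs

lemma coprime_c {p : ℕ} (hp : p.Prime) (hp2 : p % 2 = 1) {c d : ℤ} (hcd : (p : ℤ) = c ^ 2 - 32 * d ^ 2) : IsCoprime (2 * c) (p : ℤ) := by
  have hpp : Prime (p : ℤ) := Nat.prime_iff_prime_int.1 hp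
  rw [isCoprime_comm, Prime.coprime_iff_not_dvd hpp]
  intro h
  have hp2' : ¬ (p : ℤ) ∣ 2 := by
    intro h
    have h3 : p ∣ 2 := by exact_mod_cast h
    have := Nat.le_of_dvd two_pos h3
    have := hp.two_le
    omega
  have hc : (p : ℤ) ∣ c := (hpp.dvd_or_dvd h).resolve_left hp2'
  have hd2 : (p : ℤ) ∣ 2 ^ 5 * d ^ 2 := by
    have : (2 : ℤ) ^ 5 * d ^ 2 = c ^ 2 - p := by rw [hcd]; ring
    rw [this]
    exact dvd_sub (dvd_pow hc two_ne_zero) dvd_rfl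
  have hd : (p : ℤ) ∣ d := by
    rcases hpp.dvd_or_dvd hd2 with h | h
    · exact absurd (hpp.dvd_of_dvd_pow h) hp2'
    · exact hpp.dvd_of_dvd_pow h
  have h4 : (p : ℤ) * p ∣ p := by
    conv_rhs => rw [hcd]
    apply dvd_sub
    · rw [sq]; exact mul_dvd_mul hc hc
    · rw [sq]; exact Dvd.dvd.mul_left (mul_dvd_mul hd hd) _
  have h5 := Int.le_of_dvd (by exact_mod_cast hp.pos) h4
  have : (2 : ℤ) ≤ p := by exact_mod_cast hp.two_le
  nlinarith

/-- The conjugates `π` and `π'` are coprime, as their sum `2c` is prime to `p = ππ'`. -/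
lemma pE_coprime {p : ℕ} (hp : p.Prime) (hp2 : p % 2 = 1) {c d : ℤ} (hcd : (p : ℤ) = c ^ 2 - 32 * d ^ 2) (s : R) (hs : s ^ 2 = 2) :
    IsCoprime (pE c d s) (pE c (-d) s) := by
  obtain ⟨a, b, hab⟩ := coprime_c hp hp2 hcd
  have h1 := congrArg (Int.cast (R := R)) hab
  push_cast at h1
  have h2 := pE_mul hcd s hs
  refine ⟨a + b * pE c (-d) s, a, ?_⟩
  have h3 : pE c d s + pE c (-d) s = 2 * (c : R) := by simp only [pE]; push_cast; ring
  rw [← h1, ← h2]; linear_combination (a : R) * h3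
end ring

section gen
variable {Y X : Type*} [Field Y] [NumberField Y] [Field X] [NumberField X] [Algebra Y X]

lemma not_square_of_val (q : Ideal (𝓞 Y)) (hq : q.IsPrime) (m : 𝓞 Y) (hm : m ∈ q) (hm2 : m ∉ q ^ 2) : ¬ IsSquare (m : Y) := by
  rintro ⟨y, hy⟩
  have hint : IsIntegral ℤ y := by
    have h1 : IsIntegral ℤ (y ^ 2) := by rw [sq, ← hy]; exact m.2
    exact h1.of_pow two_pos
  obtain ⟨z, rfl⟩ : ∃ z : 𝓞 Y, (z : Y) = y := ⟨⟨y, hint⟩, rfl⟩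
  have h2 : m = z ^ 2 := by
    apply RingOfIntegers.coe_injective
    rw [map_pow, sq]; exact hy
  apply hm2
  rw [h2] at hm ⊢
  exact Ideal.pow_mem_pow (hq.mem_of_pow_mem 2 hm) 2

lemma not_mem_of_val (β : 𝓞 X) (q : Ideal (𝓞 Y)) (hq : q.IsPrime) (m : 𝓞 Y) (hm : m ∈ q) (hm2 : m ∉ q ^ 2)
    (hβ : β ^ 2 = algebraMap (𝓞 Y) (𝓞 X) m) (y : Y) : algebraMap Y X y ≠ β := by
  refine not_int_of_sq (β : X) (m : Y) ?_ (not_square_of_val q hq m hm hm2) y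
  rw [← map_pow, hβ, coe_alg]

lemma coe_sq {β : 𝓞 X} {m : 𝓞 Y} (hβ : β ^ 2 = algebraMap (𝓞 Y) (𝓞 X) m) : (β : X) ^ 2 = algebraMap Y X m := by
  rw [← map_pow, hβ, coe_alg]

/-- Chevalley's formula as a divisibility, when no infinite place ramifies in `X / Y`. -/
lemma chev_same (h2 : Module.finrank Y X = 2) (hpl : Fintype.card (InfinitePlace X) = 2 * Fintype.card (InfinitePlace Y))
    (S : Finset (Ideal (𝓞 Y)))
    (hS : ∀ q : Ideal (𝓞 Y), q.IsMaximal → q ≠ ⊥ → ∀ P : Ideal (𝓞 X), P.IsPrime → P.comap (algebraMap (𝓞 Y) (𝓞 X)) = q →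
      P ^ 2 ∣ q.map (algebraMap (𝓞 Y) (𝓞 X)) → q ∈ S)
    (τ : X ≃ₐ[Y] X) (hτ1 : τ ≠ 1) (hτ2 : τ * τ = 1) (hfix : ∀ x, τ x = x → ∃ y : Y, algebraMap Y X y = x) :
    Nat.card (dif (sCl τ)).ker * (NU τ).index * 2 ∣ 2 ^ S.card * classNumber Y := by
  have h := chevalley τ hτ1 hτ2 hfix
  have hr := ram_bound h2 τ hτ2 hfix S hS
  rw [hpl, pow_succ, mul_comm (2 ^ _) 2, ← mul_assoc] at h
  rw [Nat.eq_of_mul_eq_mul_right (by positivity) h]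
  exact mul_dvd_mul_right hr _

lemma card_class : Nat.card (ClassGroup (𝓞 X)) = classNumber X := by
  rw [classNumber, Nat.card_eq_fintype_card]

/-- If at most one finite prime and no infinite place ramify in `X / Y`, an odd class number of `Y`
implies an odd class number of `X`. -/
lemma chev_odd_one (h2 : Module.finrank Y X = 2) (hpl : Fintype.card (InfinitePlace X) = 2 * Fintype.card (InfinitePlace Y))
    (S : Finset (Ideal (𝓞 Y)))
    (hS : ∀ q : Ideal (𝓞 Y), q.IsMaximal → q ≠ ⊥ → ∀ P : Ideal (𝓞 X), P.IsPrime → P.comap (algebraMap (𝓞 Y) (𝓞 X)) = q →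
      P ^ 2 ∣ q.map (algebraMap (𝓞 Y) (𝓞 X)) → q ∈ S) (hS1 : S.card ≤ 1) (hY : ¬ 2 ∣ classNumber Y) : ¬ 2 ∣ classNumber X := by
  obtain ⟨τ, hτ1, hτ2, hfix⟩ := exists_invol h2
  have h := chev_same h2 hpl S hS τ hτ1 hτ2 hfix
  rw [← card_class]
  refine odd_of_fixed (sCl τ) (sCl_sCl τ hτ2) fun h3 ↦ hY ?_
  have h4 : 2 * 2 ∣ 2 * classNumber Y := by
    refine dvd_trans ?_ (h.trans (mul_dvd_mul_right (pow_dvd_pow 2 hS1) _))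
    exact mul_dvd_mul_right (Dvd.dvd.mul_right h3 _) _
  exact Nat.dvd_of_mul_dvd_mul_left two_pos h4

/-- With at most two ramified finite primes, an odd class number of `Y` implies an odd class number of `X`,
provided some unit of `Y` is a nonresidue modulo a prime `q` exactly dividing `m`: that unit is not a norm. -/
lemma chev_odd_two (h2 : Module.finrank Y X = 2) (hpl : Fintype.card (InfinitePlace X) = 2 * Fintype.card (InfinitePlace Y))
    (S : Finset (Ideal (𝓞 Y)))
    (hS : ∀ q : Ideal (𝓞 Y), q.IsMaximal → q ≠ ⊥ → ∀ P : Ideal (𝓞 X), P.IsPrime → P.comap (algebraMap (𝓞 Y) (𝓞 X)) = q →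
      P ^ 2 ∣ q.map (algebraMap (𝓞 Y) (𝓞 X)) → q ∈ S) (hS1 : S.card ≤ 2) (hY : ¬ 2 ∣ classNumber Y)
    (β : 𝓞 X) (m : 𝓞 Y) (hβ : β ^ 2 = algebraMap (𝓞 Y) (𝓞 X) m) (q : Ideal (𝓞 Y)) (hqp : q.IsPrime) (hm : m ∈ q) (hm2 : m ∉ q ^ 2)
    (u : (𝓞 Y)ˣ) (hu : ∀ t, (u : 𝓞 Y) - t ^ 2 ∉ q) : ¬ 2 ∣ classNumber X := by
  obtain ⟨τ, hτ1, hτ2, hfix⟩ := exists_invol h2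
  have h := chev_same h2 hpl S hS τ hτ1 hτ2 hfix
  have hq0 : q ≠ ⊥ := by
    rintro rfl
    rw [Ideal.mem_bot] at hm
    exact hm2 (by rw [hm]; exact Ideal.zero_mem _)
  have hi := NU_index_even τ u (not_norm τ hτ2 hfix (β : X) m (coe_sq hβ) (not_mem_of_val β q hqp m hm hm2 hβ) q hqp hq0 hm hm2 u hu)
  rw [← card_class]
  refine odd_of_fixed (sCl τ) (sCl_sCl τ hτ2) fun h3 ↦ hY ?_
  have h4 : 2 ^ 2 * 2 ∣ 2 ^ 2 * classNumber Y := by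
    refine dvd_trans ?_ (h.trans (mul_dvd_mul_right (pow_dvd_pow 2 hS1) _))
    rw [sq]
    exact mul_dvd_mul_right (mul_dvd_mul h3 hi) _
  exact Nat.dvd_of_mul_dvd_mul_left (by norm_num) h4

/-- Over a base of class number one, ambiguous classes are the classes of order dividing two. -/
lemma dif_ker (h2 : Module.finrank Y X = 2) (τ : X ≃ₐ[Y] X) (hτ2 : τ * τ = 1)
    (hfix : ∀ x, τ x = x → ∃ y : Y, algebraMap Y X y = x) (h1 : classNumber Y = 1) :
    (dif (sCl τ)).ker = (powMonoidHom 2 : ClassGroup (𝓞 X) →* ClassGroup (𝓞 X)).ker := by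
  congr 1
  ext c
  rw [dif_apply, sCl_inv h2 τ hτ2 hfix h1, powMonoidHom_apply, div_inv_eq_mul, sq]

end gen

section base
variable {Y : Type*} [Field Y] [NumberField Y] {p : ℕ} {c d : ℤ}

lemma pE_absNorm (h2 : Module.finrank ℚ Y = 2) (s : 𝓞 Y) (hs : s ^ 2 = 2) (hcd : (p : ℤ) = c ^ 2 - 32 * d ^ 2) :
    Ideal.absNorm (Ideal.span {pE c d s}) = p := by
  have := base_absNorm h2 s hs c (4 * d)
  rw [show c ^ 2 - 2 * (4 * d) ^ 2 = (p : ℤ) by rw [hcd]; ring, Int.natAbs_natCast] at this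
  rw [← this]; simp only [pE]; push_cast; rfl

lemma s_absNorm (h2 : Module.finrank ℚ Y = 2) (s : 𝓞 Y) (hs : s ^ 2 = 2) : Ideal.absNorm (Ideal.span {s}) = 2 := by
  have := base_absNorm h2 s hs 0 1
  simpa using this

lemma not_mem_sq {x : 𝓞 Y} {l : ℕ} (hl : l.Prime) (hx : Ideal.absNorm (Ideal.span {x}) = l) : x ∉ (Ideal.span {x}) ^ 2 := by
  intro h
  have h1 : Ideal.absNorm (Ideal.span {x} ^ 2) ∣ Ideal.absNorm (Ideal.span {x}) :=
    Ideal.absNorm_dvd_absNorm_of_le ((Ideal.span_singleton_le_iff_mem _).2 h)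
  rw [map_pow, hx] at h1
  have := Nat.le_of_dvd hl.pos h1
  nlinarith [hl.two_le]

lemma span_max {x : 𝓞 Y} {l : ℕ} (hl : l.Prime) (hx : Ideal.absNorm (Ideal.span {x}) = l) : (Ideal.span {x}).IsMaximal := by
  have h1 := prime_of_absNorm hl _ hx
  refine h1.isMaximal ?_
  intro h
  rw [h, Ideal.absNorm_bot] at hx
  exact hl.ne_zero hx.symm

lemma eq_span {x : 𝓞 Y} {l : ℕ} (hl : l.Prime) (hx : Ideal.absNorm (Ideal.span {x}) = l) (q : Ideal (𝓞 Y)) (hq : q.IsPrime) (hxq : x ∈ q) :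
    q = Ideal.span {x} :=
  ((span_max hl hx).eq_of_le hq.ne_top ((Ideal.span_singleton_le_iff_mem _).2 hxq)).symm

/-- The fundamental unit `1 + √2`. -/
def eps (s : 𝓞 Y) (hs : s ^ 2 = 2) : (𝓞 Y)ˣ := ⟨1 + s, s - 1, by linear_combination hs, by linear_combination hs⟩

lemma p_not_mem_sq (h2 : Module.finrank ℚ Y = 2) (s : 𝓞 Y) (hs : s ^ 2 = 2) (hp : p.Prime) (hp2 : p % 2 = 1) (hcd : (p : ℤ) = c ^ 2 - 32 * d ^ 2) :
    (p : 𝓞 Y) ∈ Ideal.span {pE c d s} ∧ (p : 𝓞 Y) ∉ Ideal.span {pE c d s} ^ 2 := by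
  have hm := pE_mul hcd s hs
  have ha := pE_absNorm h2 s hs hcd
  constructor
  · rw [Ideal.mem_span_singleton]; exact ⟨_, hm.symm⟩
  · rw [Ideal.span_singleton_pow, Ideal.mem_span_singleton, ← hm, sq]
    have h0 : pE c d s ≠ 0 := by
      intro h
      rw [h, Ideal.span_singleton_eq_bot.2 rfl, Ideal.absNorm_bot] at ha
      exact hp.ne_zero ha.symm
    intro h
    have h3 := (mul_dvd_mul_iff_left h0).1 h
    have h4 := (pE_coprime hp hp2 hcd s hs).isUnit_of_dvd' dvd_rfl h3
    rw [Ideal.span_singleton_eq_top.2 h4, Ideal.absNorm_top] at ha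
    exact hp.one_lt.ne ha

end base
end H15

/-! ### Class numbers of the real fields -/

namespace H15
open Filter Topology

section gen
variable {Y X : Type*} [Field Y] [NumberField Y] [Field X] [NumberField X] [Algebra Y X]

lemma places_real [IsTotallyReal Y] [IsTotallyReal X] (h2 : Module.finrank Y X = 2) :
    Fintype.card (InfinitePlace X) = 2 * Fintype.card (InfinitePlace Y) := by
  rw [card_places_real, card_places_real, ← Module.finrank_mul_finrank ℚ Y X, h2, mul_comm]

lemma places_complex [IsTotallyComplex Y] [IsTotallyComplex X] (h2 : Module.finrank Y X = 2) :
    Fintype.card (InfinitePlace X) = 2 * Fintype.card (InfinitePlace Y) := by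
  have h := Module.finrank_mul_finrank ℚ Y X
  rw [h2, ← card_places_complex (X := Y), ← card_places_complex (X := X)] at h
  omega

lemma places_cm [IsTotallyReal Y] [IsTotallyComplex X] (h2 : Module.finrank Y X = 2) :
    Fintype.card (InfinitePlace X) = Fintype.card (InfinitePlace Y) := by
  have h := Module.finrank_mul_finrank ℚ Y X
  rw [h2, ← card_places_real (X := Y), ← card_places_complex (X := X)] at h
  omega

/-- If `X = Y(√m) = Y(√n)` with `m, n ≡ 1 (mod 4)` coprime, no finite prime of `Y` ramifies in `X`. -/
lemma unram_pair (h2 : Module.finrank Y X = 2) (β γ : 𝓞 X) (m n t u : 𝓞 Y)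
    (hβ : β ^ 2 = algebraMap (𝓞 Y) (𝓞 X) m) (hγ : γ ^ 2 = algebraMap (𝓞 Y) (𝓞 X) n) (hm : m = 1 + 4 * t) (hn : n = 1 + 4 * u)
    (hmn : IsCoprime m n) (hβn : ∀ y : Y, algebraMap Y X y ≠ β) (hγn : ∀ y : Y, algebraMap Y X y ≠ γ) :
    ∀ q : Ideal (𝓞 Y), q.IsMaximal → q ≠ ⊥ → ∀ P : Ideal (𝓞 X), P.IsPrime → P.comap (algebraMap (𝓞 Y) (𝓞 X)) = q →
      P ^ 2 ∣ q.map (algebraMap (𝓞 Y) (𝓞 X)) → q ∈ (∅ : Finset (Ideal (𝓞 Y))) := by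
  intro q hq hq0 P hP hPq hr
  exfalso
  have h1 := ram_mem_one h2 β m t hβ hm hβn q hq hq0 P hP hPq hr
  have h3 := ram_mem_one h2 γ n u hγ hn hγn q hq hq0 P hP hPq hr
  obtain ⟨a, b, hab⟩ := hmn
  apply hq.ne_top
  rw [Ideal.eq_top_iff_one, ← hab]
  exact q.add_mem (q.mul_mem_left _ h1) (q.mul_mem_left _ h3)

/-- A field with a quadratic extension unramified at all places has even class number. -/
lemma unram_even (h2 : Module.finrank Y X = 2) (hpl : Fintype.card (InfinitePlace X) = 2 * Fintype.card (InfinitePlace Y))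
    (hS : ∀ q : Ideal (𝓞 Y), q.IsMaximal → q ≠ ⊥ → ∀ P : Ideal (𝓞 X), P.IsPrime → P.comap (algebraMap (𝓞 Y) (𝓞 X)) = q →
      P ^ 2 ∣ q.map (algebraMap (𝓞 Y) (𝓞 X)) → q ∈ (∅ : Finset (Ideal (𝓞 Y)))) : 2 ∣ classNumber Y := by
  obtain ⟨τ, hτ1, hτ2, hfix⟩ := exists_invol h2
  have h := chev_same h2 hpl ∅ hS τ hτ1 hτ2 hfix
  rw [Finset.card_empty, pow_zero, one_mul] at h
  exact (Dvd.intro_left _ rfl).trans h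

/-- If `X / Y` is quadratic and unramified at all places, and the 2-class group of `Y` is cyclic, then
`h₂(X) = h₂(Y) / 2`. -/
lemma unram_class (h2 : Module.finrank Y X = 2) (hpl : Fintype.card (InfinitePlace X) = 2 * Fintype.card (InfinitePlace Y))
    (hS : ∀ q : Ideal (𝓞 Y), q.IsMaximal → q ≠ ⊥ → ∀ P : Ideal (𝓞 X), P.IsPrime → P.comap (algebraMap (𝓞 Y) (𝓞 X)) = q →
      P ^ 2 ∣ q.map (algebraMap (𝓞 Y) (𝓞 X)) → q ∈ (∅ : Finset (Ideal (𝓞 Y))))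
    (hB : Nat.card (powMonoidHom 2 : ClassGroup (𝓞 Y) →* ClassGroup (𝓞 Y)).ker ∣ 2) :
    ∃ o, ¬ 2 ∣ o ∧ classNumber X * 2 = classNumber Y * o := by
  obtain ⟨τ, hτ1, hτ2, hfix⟩ := exists_invol h2
  have h := chev_same h2 hpl ∅ hS τ hτ1 hτ2 hfix
  rw [Finset.card_empty, pow_zero, one_mul] at h
  rw [← card_class, ← card_class]
  refine unram_card (sCl τ) (sCl_sCl τ hτ2) (ClassGroup.extendedHom (𝓞 Y) (𝓞 X)) (nC Y X) (sCl_ext τ hτ2) (nC_ext h2) (nC_sCl τ hτ2) hB ?_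
  rw [card_class]
  refine dvd_trans ?_ h
  exact mul_dvd_mul_right (Dvd.intro _ rfl) _

end gen

section real
variable {c d : ℤ}
lemma pE_pos {p : ℕ} (hp : p.Prime) (hcd : (p : ℤ) = c ^ 2 - 32 * d ^ 2) (hc : 0 < c) (r : ℝ) (hr : r ^ 2 = 2) : 0 < pE c d r := by
  have h1 : (c : ℝ) ^ 2 - 32 * d ^ 2 = p := by exact_mod_cast hcd.symm
  have hp0 : (0 : ℝ) < p := by exact_mod_cast hp.pos
  have hc' : (0 : ℝ) < c := by exact_mod_cast hc
  have h3 : (4 * (d : ℝ) * r) ^ 2 < (c : ℝ) ^ 2 := by nlinarith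
  have h4 := abs_lt_of_sq_lt_sq' h3 hc'.le
  simp only [pE]; linarith [h4.1]

lemma pE_pos_hom {Y : Type*} [Field Y] [NumberField Y] {p : ℕ} (hp : p.Prime) (hcd : (p : ℤ) = c ^ 2 - 32 * d ^ 2) (hc : 0 < c) (s : 𝓞 Y)
    (hs : s ^ 2 = 2) (φ : Y →+* ℝ) : 0 < φ (pE c d s : 𝓞 Y) := by
  have := pE_pos hp hcd hc (φ s) (by rw [← map_pow, sq_coe s hs, map_ofNat])
  have e : ((pE c d s : 𝓞 Y) : Y) = pE c d (s : Y) := map_pE (algebraMap (𝓞 Y) Y) c d s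
  rw [e, map_pE]
  exact this
end real

section base
variable {Y X : Type*} [Field Y] [NumberField Y] [Field X] [NumberField X] [Algebra Y X] {p : ℕ} {c d : ℤ}

lemma F_not_mem (h2Y : Module.finrank ℚ Y = 2) (s : 𝓞 Y) (hs : s ^ 2 = 2) (hp : p.Prime) (hp8 : p % 8 = 1) (hcd : (p : ℤ) = c ^ 2 - 32 * d ^ 2)
    (β : 𝓞 X) (hβ : β ^ 2 = p) (y : Y) : algebraMap Y X y ≠ β := by
  obtain ⟨hm, hm2⟩ := p_not_mem_sq h2Y s hs hp (by omega) hcd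
  exact not_mem_of_val β _ (prime_of_absNorm hp _ (pE_absNorm h2Y s hs hcd)) _ hm hm2 (by rw [hβ, map_natCast]) y

lemma p_four (hp8 : p % 8 = 1) : (p : 𝓞 Y) = 1 + 4 * ((p / 4 : ℕ) : 𝓞 Y) := by
  have : p = 1 + 4 * (p / 4) := by omega
  exact_mod_cast congrArg (Nat.cast (R := 𝓞 Y)) this

lemma F_real [IsTotallyReal Y] (h2 : Module.finrank Y X = 2) (hp : p.Prime)
    (β : 𝓞 X) (hβ : β ^ 2 = p) (hn : ∀ y : Y, algebraMap Y X y ≠ β) : IsTotallyReal X := by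
  refine totally_real_step h2 (β : X) (p : Y) ?_ hn ?_
  · rw [← map_pow, hβ, map_natCast, map_natCast]
  · intro φ; rw [map_natCast]; exact_mod_cast hp.pos

lemma E_real [IsTotallyReal Y] (h2 : Module.finrank Y X = 2) (s : 𝓞 Y) (hs : s ^ 2 = 2) (hp : p.Prime) (hcd : (p : ℤ) = c ^ 2 - 32 * d ^ 2) (hc : 0 < c)
    (β : 𝓞 X) (hβ : β ^ 2 = algebraMap (𝓞 Y) (𝓞 X) (pE c d s)) (hn : ∀ y : Y, algebraMap Y X y ≠ β) : IsTotallyReal X :=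
  totally_real_step h2 (β : X) (pE c d s : 𝓞 Y) (coe_sq hβ) hn (pE_pos_hom hp hcd hc s hs)

lemma pE_neg_data (h2Y : Module.finrank ℚ Y = 2) (s : 𝓞 Y) (hs : s ^ 2 = 2) (hp : p.Prime) (hcd : (p : ℤ) = c ^ 2 - 32 * d ^ 2) :
    (-pE c d s) ∈ Ideal.span {pE c d s} ∧ (-pE c d s) ∉ Ideal.span {pE c d s} ^ 2 := by
  rw [Ideal.neg_mem_iff, Ideal.neg_mem_iff]
  exact ⟨Ideal.mem_span_singleton_self _, not_mem_sq hp (pE_absNorm h2Y s hs hcd)⟩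

lemma E_not_mem (h2Y : Module.finrank ℚ Y = 2) (s : 𝓞 Y) (hs : s ^ 2 = 2) (hp : p.Prime) (hcd : (p : ℤ) = c ^ 2 - 32 * d ^ 2)
    (β : 𝓞 X) (hβ : β ^ 2 = algebraMap (𝓞 Y) (𝓞 X) (pE c d s)) (y : Y) : algebraMap Y X y ≠ β :=
  not_mem_of_val β _ (prime_of_absNorm hp _ (pE_absNorm h2Y s hs hcd)) _ (Ideal.mem_span_singleton_self _)
    (not_mem_sq hp (pE_absNorm h2Y s hs hcd)) hβ y

lemma K_not_mem (h2Y : Module.finrank ℚ Y = 2) (s : 𝓞 Y) (hs : s ^ 2 = 2) (hp : p.Prime) (hcd : (p : ℤ) = c ^ 2 - 32 * d ^ 2)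
    (β : 𝓞 X) (hβ : β ^ 2 = algebraMap (𝓞 Y) (𝓞 X) (-pE c d s)) (y : Y) : algebraMap Y X y ≠ β :=
  not_mem_of_val β _ (prime_of_absNorm hp _ (pE_absNorm h2Y s hs hcd)) _ (pE_neg_data h2Y s hs hp hcd).1 (pE_neg_data h2Y s hs hp hcd).2 hβ y

/-- With `Y = ℚ(√2)`, only the two primes above `p` ramify in `X = Y(√p)`. -/
lemma F_ram (h2 : Module.finrank Y X = 2) (h2Y : Module.finrank ℚ Y = 2) (s : 𝓞 Y) (hs : s ^ 2 = 2) (hp : p.Prime) (hp8 : p % 8 = 1) (hcd : (p : ℤ) = c ^ 2 - 32 * d ^ 2)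
    (β : 𝓞 X) (hβ : β ^ 2 = p) :
    ∃ S : Finset (Ideal (𝓞 Y)), S.card ≤ 2 ∧
     ∀ q : Ideal (𝓞 Y), q.IsMaximal → q ≠ ⊥ → ∀ P : Ideal (𝓞 X), P.IsPrime → P.comap (algebraMap (𝓞 Y) (𝓞 X)) = q →
      P ^ 2 ∣ q.map (algebraMap (𝓞 Y) (𝓞 X)) → q ∈ S := by
  classical
  refine ⟨{Ideal.span {pE c d s}, Ideal.span {pE c (-d) s}}, Finset.card_le_two, ?_⟩
  intro q hq hq0 P hP hPq hr
  have h := ram_mem_one h2 β p _ (by rw [hβ, map_natCast]) (p_four hp8) (F_not_mem h2Y s hs hp hp8 hcd β hβ) q hq hq0 P hP hPq hr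
  rw [← pE_mul hcd s hs] at h
  rw [Finset.mem_insert, Finset.mem_singleton]
  rcases hq.isPrime.mem_or_mem h with h | h
  · exact Or.inl (eq_span hp (pE_absNorm h2Y s hs hcd) q hq.isPrime h)
  · exact Or.inr (eq_span hp (pE_absNorm h2Y s hs (by rw [hcd]; ring)) q hq.isPrime h)

/-- The 2-class group of `ℚ(√2, √p)` is cyclic. -/
lemma F_cyc (h2 : Module.finrank Y X = 2) (h2Y : Module.finrank ℚ Y = 2) (s : 𝓞 Y) (hs : s ^ 2 = 2) (hp : p.Prime) (hp8 : p % 8 = 1) (hcd : (p : ℤ) = c ^ 2 - 32 * d ^ 2)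
    (β : 𝓞 X) (hβ : β ^ 2 = p) : Nat.card (powMonoidHom 2 : ClassGroup (𝓞 X) →* ClassGroup (𝓞 X)).ker ∣ 2 := by
  obtain ⟨S, hS2, hS⟩ := F_ram h2 h2Y s hs hp hp8 hcd β hβ
  have := base_real h2Y s hs
  have := F_real h2 hp β hβ (F_not_mem h2Y s hs hp hp8 hcd β hβ)
  obtain ⟨τ, hτ1, hτ2, hfix⟩ := exists_invol h2
  have h := chev_same h2 (places_real h2) S hS τ hτ1 hτ2 hfix
  have h1 := base_classNumber h2Y s hs
  rw [h1, mul_one] at h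
  rw [← dif_ker h2 τ hτ2 hfix h1]
  have h3 := h.trans (pow_dvd_pow 2 hS2)
  rw [sq] at h3
  exact (Dvd.intro _ rfl).trans (Nat.dvd_of_mul_dvd_mul_right two_pos h3)

/-- For `Y = ℚ(√2)` and `(2/p)₄ ≠ (p/2)₄`, the class number of `X = Y(√p)` is odd: two primes ramify,
and `1 + √2` is a nonresidue modulo a prime above `p`. -/
lemma F_odd (h2 : Module.finrank Y X = 2) (h2Y : Module.finrank ℚ Y = 2) (s : 𝓞 Y) (hs : s ^ 2 = 2) [hpF : Fact p.Prime] (hp8 : p % 8 = 1) (hcd : (p : ℤ) = c ^ 2 - 32 * d ^ 2)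
    (hne : ¬ ((2 : ZMod p) ^ ((p - 1) / 4) = 1 ↔ (-1 : ℤ) ^ ((p - 1) / 8) = 1))
    (β : 𝓞 X) (hβ : β ^ 2 = p) : ¬ 2 ∣ classNumber X := by
  have hp := hpF.out
  obtain ⟨S, hS2, hS⟩ := F_ram h2 h2Y s hs hp hp8 hcd β hβ
  have := base_real h2Y s hs
  have := F_real h2 hp β hβ (F_not_mem h2Y s hs hp hp8 hcd β hβ)
  have ha := pE_absNorm h2Y s hs hcd
  obtain ⟨hm, hm2⟩ := p_not_mem_sq h2Y s hs hp (by omega) hcd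
  refine chev_odd_two h2 (places_real h2) S hS hS2 (by rw [base_classNumber h2Y s hs]; norm_num) β p (by rw [hβ, map_natCast])
    (Ideal.span {pE c d s}) (prime_of_absNorm hp _ ha) hm hm2 (eps s hs) (fun t ↦ ?_)
  exact nonres_unit hp8 hne _ ha s hs t

/-- Ramification of `√m`, `m = ±π`, over `ℚ(√2)`. -/
lemma E_ram (h2 : Module.finrank Y X = 2) (h2Y : Module.finrank ℚ Y = 2) (s : 𝓞 Y) (hs : s ^ 2 = 2) (hp : p.Prime) (hcd : (p : ℤ) = c ^ 2 - 32 * d ^ 2)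
    (β : 𝓞 X) (m : 𝓞 Y) (hm : m = pE c d s ∨ m = - pE c d s) (hβ : β ^ 2 = algebraMap (𝓞 Y) (𝓞 X) m) (hn : ∀ y : Y, algebraMap Y X y ≠ β) :
    ∃ S : Finset (Ideal (𝓞 Y)), S.card ≤ 2 ∧
     ∀ q : Ideal (𝓞 Y), q.IsMaximal → q ≠ ⊥ → ∀ P : Ideal (𝓞 X), P.IsPrime → P.comap (algebraMap (𝓞 Y) (𝓞 X)) = q →
      P ^ 2 ∣ q.map (algebraMap (𝓞 Y) (𝓞 X)) → q ∈ S := by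
  classical
  refine ⟨{Ideal.span {pE c d s}, Ideal.span {s}}, Finset.card_le_two, ?_⟩
  intro q hq hq0 P hP hPq hr
  have h := ram_mem_four h2 β m hβ hn q hq hq0 P hP hPq hr
  have h' : 4 * pE c d s ∈ q := by
    rcases hm with rfl | rfl
    · exact h
    · rwa [mul_neg, Ideal.neg_mem_iff] at h
  rw [Finset.mem_insert, Finset.mem_singleton]
  rcases hq.isPrime.mem_or_mem h' with h | h
  · right
    rw [show (4 : 𝓞 Y) = s ^ 4 by rw [show s ^ 4 = (s ^ 2) ^ 2 by ring, hs]; norm_num] at h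
    exact eq_span Nat.prime_two (s_absNorm h2Y s hs) q hq.isPrime (hq.isPrime.mem_of_pow_mem 4 h)
  · exact Or.inl (eq_span hp (pE_absNorm h2Y s hs hcd) q hq.isPrime h)

/-- For `Y = ℚ(√2)` and `(2/p)₄ ≠ (p/2)₄`, the class number of `X = Y(√π)` is odd: only `π` and `√2` can
ramify, and `1 + √2` is a nonresidue modulo `π`. -/
lemma E_odd (h2 : Module.finrank Y X = 2) (h2Y : Module.finrank ℚ Y = 2) (s : 𝓞 Y) (hs : s ^ 2 = 2) [hpF : Fact p.Prime] (hp8 : p % 8 = 1) (hcd : (p : ℤ) = c ^ 2 - 32 * d ^ 2)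
    (hc : 0 < c) (hne : ¬ ((2 : ZMod p) ^ ((p - 1) / 4) = 1 ↔ (-1 : ℤ) ^ ((p - 1) / 8) = 1))
    (β : 𝓞 X) (hβ : β ^ 2 = algebraMap (𝓞 Y) (𝓞 X) (pE c d s)) : ¬ 2 ∣ classNumber X := by
  have hp := hpF.out
  have hn := E_not_mem h2Y s hs hp hcd β hβ
  obtain ⟨S, hS2, hS⟩ := E_ram h2 h2Y s hs hp hcd β _ (Or.inl rfl) hβ hn
  have := base_real h2Y s hs
  have := E_real h2 s hs hp hcd hc β hβ hn
  have ha := pE_absNorm h2Y s hs hcd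
  refine chev_odd_two h2 (places_real h2) S hS hS2 (by rw [base_classNumber h2Y s hs]; norm_num) β _ hβ
    (Ideal.span {pE c d s}) (prime_of_absNorm hp _ ha) (Ideal.mem_span_singleton_self _) (not_mem_sq hp ha) (eps s hs) (fun t ↦ ?_)
  exact nonres_unit hp8 hne _ ha s hs t

lemma absNorm_ext (h2 : Module.finrank Y X = 2) (x : 𝓞 Y) :
    Ideal.absNorm (Ideal.span {algebraMap (𝓞 Y) (𝓞 X) x}) = Ideal.absNorm (Ideal.span {x}) ^ 2 := by
  have := Ideal.absNorm_algebraMap (R := 𝓞 Y) (S := 𝓞 X) (I := Ideal.span {x})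
  rw [finrank_int h2] at this
  rw [← this, Ideal.map_span, Set.image_singleton]

/-- This is applied with `Y = ℚ(√2, √π')` and `X = Y(√p) = Y(√π)`; `pE c d s` is `π`. Only primes above `π`
ramify in `X / Y`, and if there are two of them, `1 + √2` is a nonresidue modulo each. -/
lemma P_odd [IsTotallyReal Y] [IsTotallyReal X] (h2 : Module.finrank Y X = 2) (s : 𝓞 Y) (hs : s ^ 2 = 2) [hpF : Fact p.Prime] (hp8 : p % 8 = 1) (hcd : (p : ℤ) = c ^ 2 - 32 * d ^ 2)
    (hne : ¬ ((2 : ZMod p) ^ ((p - 1) / 4) = 1 ↔ (-1 : ℤ) ^ ((p - 1) / 8) = 1))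
    (hN : Ideal.absNorm (Ideal.span {pE c d s}) = p ^ 2) (hY : ¬ 2 ∣ classNumber Y)
    (β γ : 𝓞 X) (hβ : β ^ 2 = p) (hγ : γ ^ 2 = algebraMap (𝓞 Y) (𝓞 X) (pE c d s))
    (hβn : ∀ y : Y, algebraMap Y X y ≠ β) (hγn : ∀ y : Y, algebraMap Y X y ≠ γ) : ¬ 2 ∣ classNumber X := by
  classical
  have hp := hpF.out
  have hram : ∀ q : Ideal (𝓞 Y), q.IsMaximal → q ≠ ⊥ → ∀ P : Ideal (𝓞 X), P.IsPrime → P.comap (algebraMap (𝓞 Y) (𝓞 X)) = q →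
      P ^ 2 ∣ q.map (algebraMap (𝓞 Y) (𝓞 X)) → pE c d s ∈ q := by
    intro q hq hq0 P hP hPq hr
    have h1 := ram_mem_one h2 β p _ (by rw [hβ, map_natCast]) (p_four hp8) hβn q hq hq0 P hP hPq hr
    have h3 := ram_mem_four h2 γ _ hγ hγn q hq hq0 P hP hPq hr
    refine (hq.isPrime.mem_or_mem h3).resolve_left fun h4 ↦ hq.ne_top ?_
    rw [Ideal.eq_top_iff_one, show (1 : 𝓞 Y) = p - 4 * ((p / 4 : ℕ) : 𝓞 Y) by rw [p_four hp8 (Y := Y)]; simp]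
    exact q.sub_mem h1 (q.mul_mem_right _ h4)
  have hp0 : pE c d s ≠ 0 := by
    intro h
    rw [h, Ideal.span_singleton_eq_bot.2 rfl, Ideal.absNorm_bot] at hN
    exact pow_ne_zero 2 hp.ne_zero hN.symm
  by_cases hq : ∃ q₁ q₂ : Ideal (𝓞 Y), q₁.IsMaximal ∧ q₂.IsMaximal ∧ q₁ ≠ q₂ ∧ pE c d s ∈ q₁ ∧ pE c d s ∈ q₂
  · obtain ⟨q₁, q₂, h1, h3, h12, hm1, hm2⟩ := hq
    have hd : q₁ * q₂ ∣ Ideal.span {pE c d s} := by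
      rw [Ideal.dvd_iff_le, Ideal.span_singleton_le_iff_mem, Ideal.mul_eq_inf_of_coprime (Ideal.isCoprime_iff_sup_eq.1 (Ideal.isCoprime_of_isMaximal h12))]
      exact ⟨hm1, hm2⟩
    have hne1 : ∀ q : Ideal (𝓞 Y), q.IsMaximal → Ideal.absNorm q ≠ 1 := fun q hq h ↦ hq.ne_top (Ideal.absNorm_eq_one_iff.1 h)
    obtain ⟨r, hr⟩ := hd
    have hN' := hN
    rw [hr, map_mul, map_mul] at hN'
    have ha1 : Ideal.absNorm q₁ ∣ p ^ 2 := ⟨_, by rw [← hN', mul_assoc]⟩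
    have ha2 : Ideal.absNorm q₂ ∣ p ^ 2 := ⟨Ideal.absNorm q₁ * Ideal.absNorm r, by rw [← hN']; ring⟩
    obtain ⟨i, -, hi⟩ := (Nat.dvd_prime_pow hp).1 ha1
    obtain ⟨j, -, hj⟩ := (Nat.dvd_prime_pow hp).1 ha2
    have hi0 : i ≠ 0 := by rintro rfl; exact hne1 q₁ h1 (by rw [hi, pow_zero])
    have hj0 : j ≠ 0 := by rintro rfl; exact hne1 q₂ h3 (by rw [hj, pow_zero])
    have hle : i + j ≤ 2 := by
      have : p ^ (i + j) ∣ p ^ 2 := ⟨_, by rw [← hN', hi, hj, pow_add]⟩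
      exact (Nat.pow_dvd_pow_iff_le_right hp.one_lt).1 this
    have hi1 : i = 1 := by omega
    have hj1 : j = 1 := by omega
    rw [hi1, pow_one] at hi
    rw [hj1, pow_one] at hj
    have hr1 : r = 1 := by
      rw [hi, hj, ← sq] at hN'
      have : Ideal.absNorm r = 1 := Nat.eq_of_mul_eq_mul_left (pow_pos hp.pos 2) (by rw [hN', mul_one])
      rw [Ideal.one_eq_top]; exact Ideal.absNorm_eq_one_iff.1 this
    rw [hr1, mul_one] at hr
    have hmem : ∀ q : Ideal (𝓞 Y), q.IsMaximal → pE c d s ∈ q → q ∈ ({q₁, q₂} : Finset (Ideal (𝓞 Y))) := by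
      intro q hq hmq
      have h4 : q₁ * q₂ ≤ q := by rw [← hr]; exact (Ideal.span_singleton_le_iff_mem _).2 hmq
      rw [Finset.mem_insert, Finset.mem_singleton]
      rcases (hq.isPrime.mul_le).1 h4 with h | h
      · exact Or.inl (h1.eq_of_le hq.ne_top h).symm
      · exact Or.inr (h3.eq_of_le hq.ne_top h).symm
    refine chev_odd_two h2 (places_real h2) {q₁, q₂} (fun q hq hq0 P hP hPq hr ↦ hmem q hq (hram q hq hq0 P hP hPq hr)) Finset.card_le_two hY γ _ hγ
      q₁ h1.isPrime hm1 ?_ (eps s hs) (fun t ↦ nonres_unit hp8 hne q₁ hi s hs t)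
    intro h
    have h5 : q₁ ^ 2 ∣ q₁ * q₂ := by
      rw [← hr, Ideal.dvd_iff_le]; exact (Ideal.span_singleton_le_iff_mem _).2 h
    have hq10 : q₁ ≠ 0 := by
      rintro rfl
      rw [Ideal.zero_eq_bot, Ideal.mem_bot] at hm1
      exact hp0 hm1
    rw [sq, mul_dvd_mul_iff_left hq10, Ideal.dvd_iff_le] at h5
    exact h12 (h3.eq_of_le h1.ne_top h5).symm
  · push Not at hq
    by_cases hq1 : ∃ q₁ : Ideal (𝓞 Y), q₁.IsMaximal ∧ pE c d s ∈ q₁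
    · obtain ⟨q₁, h1, hm1⟩ := hq1
      refine chev_odd_one h2 (places_real h2) {q₁} (fun q hq' hq0 P hP hPq hr ↦ ?_) (by simp) hY
      rw [Finset.mem_singleton]
      by_contra hne'
      exact hq q q₁ hq' h1 hne' (hram q hq' hq0 P hP hPq hr) hm1
    · push Not at hq1
      exact chev_odd_one h2 (places_real h2) ∅ (fun q hq' hq0 P hP hPq hr ↦ absurd (hram q hq' hq0 P hP hPq hr) (hq1 q hq')) (by simp) hY

end base
end H15

/-! ### The class number of ℚ(√(-π)) -/

namespace H15
open Filter Topology

section K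
variable {Y X : Type*} [Field Y] [NumberField Y] [Field X] [NumberField X] [Algebra Y X] {p : ℕ} {c d : ℤ}

/-- The two real embeddings of `ℚ(√2)`. -/
lemma base_embs (h2Y : Module.finrank ℚ Y = 2) (s : 𝓞 Y) (hs : s ^ 2 = 2) :
    ∃ (φ ψ : Y →+* ℝ) (r : ℝ), φ s = r ∧ ψ s = -r ∧ r ^ 2 = 2 := by
  have := base_real h2Y s hs
  obtain ⟨σ, -, hσ⟩ := base_conj h2Y s hs
  obtain ⟨φ, -⟩ := exists_real (Classical.arbitrary (Y →+* ℂ))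
  refine ⟨φ, φ.comp (σ : Y →+* Y), φ s, rfl, ?_, ?_⟩
  · simp [hσ]
  · rw [← map_pow, sq_coe s hs, map_ofNat]

/-- Norms from `Y(√−m)` with `m` totally positive are totally nonnegative. -/
lemma norm_nonneg' (τ : X ≃ₐ[Y] X) (hτ2 : τ * τ = 1) (hfix : ∀ x, τ x = x → ∃ y : Y, algebraMap Y X y = x)
    (β : X) (m : Y) (hβ : β ^ 2 = algebraMap Y X (-m)) (hn : ∀ y, algebraMap Y X y ≠ β) (φ : Y →+* ℝ) (hm : 0 < φ m)
    (x : X) (y : Y) (h : x * τ x = algebraMap Y X y) : 0 ≤ φ y := by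
  obtain ⟨A, B, -, -, h3⟩ := norm_form τ hτ2 hfix β (-m) hβ hn x
  rw [h] at h3
  have := (algebraMap Y X).injective h3
  rw [this]
  simp only [map_sub, map_mul, map_neg, map_pow]
  nlinarith [sq_nonneg (φ A), sq_nonneg (φ B), mul_nonneg hm.le (sq_nonneg (φ B))]

/-- Norms from `ℚ(√(-π))` are nonnegative in both real embeddings of `ℚ(√2)`, as `π` is totally positive. -/
lemma K_norm_pos (h2Y : Module.finrank ℚ Y = 2) (s : 𝓞 Y) (hs : s ^ 2 = 2) (hp : p.Prime) (hcd : (p : ℤ) = c ^ 2 - 32 * d ^ 2) (hc : 0 < c)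
    (β : 𝓞 X) (hβ : β ^ 2 = algebraMap (𝓞 Y) (𝓞 X) (-pE c d s))
    (τ : X ≃ₐ[Y] X) (hτ2 : τ * τ = 1) (hfix : ∀ x, τ x = x → ∃ y : Y, algebraMap Y X y = x)
    (x : X) (y : Y) (h : x * τ x = algebraMap Y X y) (φ : Y →+* ℝ) : 0 ≤ φ y := by
  refine norm_nonneg' τ hτ2 hfix (β : X) ((pE c d s : 𝓞 Y) : Y) ?_ (K_not_mem h2Y s hs hp hcd β hβ) φ (pE_pos_hom hp hcd hc s hs φ) x y h
  have := coe_sq hβ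
  rw [this]; simp

/-- The units `-1`, `1 + √2` and their product are not totally positive, hence not norms. -/
lemma K_NU (h2Y : Module.finrank ℚ Y = 2) (s : 𝓞 Y) (hs : s ^ 2 = 2) (hp : p.Prime) (hcd : (p : ℤ) = c ^ 2 - 32 * d ^ 2) (hc : 0 < c)
    (β : 𝓞 X) (hβ : β ^ 2 = algebraMap (𝓞 Y) (𝓞 X) (-pE c d s))
    (τ : X ≃ₐ[Y] X) (hτ2 : τ * τ = 1) (hfix : ∀ x, τ x = x → ∃ y : Y, algebraMap Y X y = x) :
    (-1 : (𝓞 Y)ˣ) ∉ NU τ ∧ eps s hs ∉ NU τ ∧ -1 * eps s hs ∉ NU τ := by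
  obtain ⟨φ, ψ, r, h1, h2, hr⟩ := base_embs h2Y s hs
  have key := K_norm_pos h2Y s hs hp hcd hc β hβ τ hτ2 hfix
  have he : ((eps s hs : 𝓞 Y) : Y) = 1 + s := by simp [eps]
  refine ⟨fun h ↦ ?_, fun h ↦ ?_, fun h ↦ ?_⟩
  all_goals
    obtain ⟨x, hx⟩ := (mem_NU τ _).1 h
    have a := key x _ hx φ
    have b := key x _ hx ψ
    simp [he, h1, h2] at a b
  · linarith
  · nlinarith
  · nlinarith

/-- The units of `ℚ(√2)` that are norms from `ℚ(√(-π))` are the squares. -/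
lemma K_index (h2Y : Module.finrank ℚ Y = 2) (s : 𝓞 Y) (hs : s ^ 2 = 2) (hp : p.Prime) (hcd : (p : ℤ) = c ^ 2 - 32 * d ^ 2) (hc : 0 < c)
    (β : 𝓞 X) (hβ : β ^ 2 = algebraMap (𝓞 Y) (𝓞 X) (-pE c d s))
    (τ : X ≃ₐ[Y] X) (hτ2 : τ * τ = 1) (hfix : ∀ x, τ x = x → ∃ y : Y, algebraMap Y X y = x) : (NU τ).index = 4 := by
  obtain ⟨h1, h2, h3⟩ := K_NU h2Y s hs hp hcd hc β hβ τ hτ2 hfix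
  have := base_real h2Y s hs
  have h := NU_index_dvd τ
  rw [card_places_real, h2Y] at h
  obtain ⟨k, hk, he⟩ := (Nat.dvd_prime_pow Nat.prime_two).1 h
  interval_cases k
  · rw [pow_zero, Subgroup.index_eq_one] at he
    exact absurd (he ▸ Subgroup.mem_top _) h1
  · rw [pow_one] at he
    exact absurd ((Subgroup.mul_mem_iff_of_index_two he).2 (by simp [h1, h2])) h3
  · simpa using he

lemma K_complex (s : 𝓞 Y) (hs : s ^ 2 = 2) (hp : p.Prime) (hcd : (p : ℤ) = c ^ 2 - 32 * d ^ 2) (hc : 0 < c)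
    (β : 𝓞 X) (hβ : β ^ 2 = algebraMap (𝓞 Y) (𝓞 X) (-pE c d s)) : IsTotallyComplex X := by
  refine totally_complex_of (β : X) _ (coe_sq hβ) fun φ ↦ ?_
  have := pE_pos_hom hp hcd hc s hs φ
  simpa using this

/-- Chevalley's formula for `K = ℚ(√(-π))` over `ℚ(√2)`; the ambiguous classes are those of order
dividing two, since `ℚ(√2)` has class number one. -/
lemma K_chev (h2 : Module.finrank Y X = 2) (h2Y : Module.finrank ℚ Y = 2) (s : 𝓞 Y) (hs : s ^ 2 = 2) (hp : p.Prime) (hcd : (p : ℤ) = c ^ 2 - 32 * d ^ 2) (hc : 0 < c)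
    (β : 𝓞 X) (hβ : β ^ 2 = algebraMap (𝓞 Y) (𝓞 X) (-pE c d s)) (S : Finset (Ideal (𝓞 Y)))
    (hS : ∀ q : Ideal (𝓞 Y), q.IsMaximal → q ≠ ⊥ → ∀ P : Ideal (𝓞 X), P.IsPrime → P.comap (algebraMap (𝓞 Y) (𝓞 X)) = q →
      P ^ 2 ∣ q.map (algebraMap (𝓞 Y) (𝓞 X)) → q ∈ S)  :
    2 * Nat.card (powMonoidHom 2 : ClassGroup (𝓞 X) →* ClassGroup (𝓞 X)).ker ∣ 2 ^ S.card := by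
  have := base_real h2Y s hs
  have := K_complex s hs hp hcd hc β hβ
  obtain ⟨τ, hτ1, hτ2, hfix⟩ := exists_invol h2
  have h := chevalley τ hτ1 hτ2 hfix
  have h1 := base_classNumber h2Y s hs
  rw [dif_ker h2 τ hτ2 hfix h1, h1, K_index h2Y s hs hp hcd hc β hβ τ hτ2 hfix, places_cm h2, card_places_real, h2Y] at h
  have hR := ram_bound h2 τ hτ2 hfix S hS
  convert hR using 1
  omega

/-- For `c ≡ 3 (mod 4)`, only `π` ramifies in `K = ℚ(√(-π))`. -/
lemma K_odd (h2 : Module.finrank Y X = 2) (h2Y : Module.finrank ℚ Y = 2) (s : 𝓞 Y) (hs : s ^ 2 = 2) (hp : p.Prime) (hcd : (p : ℤ) = c ^ 2 - 32 * d ^ 2) (hc : 0 < c)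
    (hc4 : c % 4 = 3) (β : 𝓞 X) (hβ : β ^ 2 = algebraMap (𝓞 Y) (𝓞 X) (-pE c d s)) : ¬ 2 ∣ classNumber X := by
  classical
  have hn := K_not_mem h2Y s hs hp hcd β hβ
  have h := K_chev h2 h2Y s hs hp hcd hc β hβ {Ideal.span {pE c d s}} (fun q hq hq0 P hP hPq hr ↦ by
    have h := ram_mem_one h2 β (-pE c d s) (-((c / 4 : ℤ) : 𝓞 Y) - 1 - d * s) hβ (by
      have : c = 4 * (c / 4) + 3 := by omega
      have h' : (c : 𝓞 Y) = 4 * ((c / 4 : ℤ) : 𝓞 Y) + 3 := by exact_mod_cast congrArg (Int.cast : ℤ → 𝓞 Y) this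
      simp only [pE]
      linear_combination - h') hn q hq hq0 P hP hPq hr
    rw [Ideal.neg_mem_iff] at h
    rw [Finset.mem_singleton]
    exact eq_span hp (pE_absNorm h2Y s hs hcd) q hq.isPrime h)
  rw [Finset.card_singleton, pow_one] at h
  have h' : Nat.card (powMonoidHom 2 : ClassGroup (𝓞 X) →* ClassGroup (𝓞 X)).ker = 1 := by
    have := Nat.le_of_dvd two_pos h
    have : 0 < Nat.card (powMonoidHom 2 : ClassGroup (𝓞 X) →* ClassGroup (𝓞 X)).ker := Nat.card_pos
    omega
  obtain ⟨τ, hτ1, hτ2, hfix⟩ := exists_invol h2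
  rw [← dif_ker h2 τ hτ2 hfix (base_classNumber h2Y s hs)] at h'
  rw [← card_class]
  exact odd_of_fixed (sCl τ) (sCl_sCl τ hτ2) (by rw [h']; norm_num)

/-- Only `π` and `√2` can ramify in `K = ℚ(√(-π))`, so the 2-class group of `K` is cyclic. -/
lemma K_cyc (h2 : Module.finrank Y X = 2) (h2Y : Module.finrank ℚ Y = 2) (s : 𝓞 Y) (hs : s ^ 2 = 2) (hp : p.Prime) (hcd : (p : ℤ) = c ^ 2 - 32 * d ^ 2) (hc : 0 < c)
    (β : 𝓞 X) (hβ : β ^ 2 = algebraMap (𝓞 Y) (𝓞 X) (-pE c d s)) :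
    Nat.card (powMonoidHom 2 : ClassGroup (𝓞 X) →* ClassGroup (𝓞 X)).ker ∣ 2 := by
  obtain ⟨S, hS, h⟩ := E_ram h2 h2Y s hs hp hcd β _ (Or.inr rfl) hβ (K_not_mem h2Y s hs hp hcd β hβ)
  have h := (K_chev h2 h2Y s hs hp hcd hc β hβ S h).trans (pow_dvd_pow 2 hS)
  rw [sq] at h
  exact Nat.dvd_of_mul_dvd_mul_left two_pos h

/-- The prime above `√2`, ramified when `c ≡ 1 (mod 4)`. -/
lemma K_prime (s : 𝓞 Y) (hs : s ^ 2 = 2) (hc4 : c % 4 = 1)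
    (β : 𝓞 X) (hβ : β ^ 2 = algebraMap (𝓞 Y) (𝓞 X) (-pE c d s)) :
    ∃ 𝔭 : Ideal (𝓞 X), 𝔭 ^ 2 = Ideal.span {algebraMap (𝓞 Y) (𝓞 X) s} := by
  set S := algebraMap (𝓞 Y) (𝓞 X) s with hS
  have hS2 : S ^ 2 = 2 := by rw [hS, ← map_pow, hs, map_ofNat]
  obtain ⟨e, he⟩ : ∃ e, c = 1 + 4 * e := ⟨c / 4, by omega⟩
  have hβ' : β ^ 2 = -(1 + 4 * e + 4 * d * S) := by
    rw [hβ]; simp only [pE, he, map_neg, map_add, map_mul, map_intCast, map_ofNat, map_one, Int.cast_add, Int.cast_mul, Int.cast_one, Int.cast_ofNat, hS]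
  have hS0 : (S : X) ≠ 0 := by
    intro h
    have h3 : S = 0 := by exact_mod_cast h
    rw [h3] at hS2
    norm_num at hS2
  have hS2' : (S : X) ^ 2 = 2 := by rw [← map_pow, hS2, map_ofNat]
  have hβ'' : (β : X) ^ 2 = -(1 + 4 * e + 4 * d * S) := by
    rw [← map_pow, hβ']; simp only [map_neg, map_add, map_mul, map_intCast, map_ofNat, map_one]
  have hγ : ((1 + (β : X)) / S) ^ 2 - S * ((1 + (β : X)) / S) + (1 + 2 * (e + d * S)) = 0 := by
    field_simp
    linear_combination hβ'' + (2 * e + 2 * d * (S:X)- β) * hS2'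
  obtain ⟨γ, hγ'⟩ : ∃ γ : 𝓞 X, (γ : X) = (1 + (β : X)) / S := by
    have hint : IsIntegral (𝓞 X) ((1 + (β : X)) / S) := by
      refine ⟨Polynomial.X ^ 2 + (- Polynomial.C S * Polynomial.X + Polynomial.C (1 + 2 * (e + d * S))), ?_, ?_⟩
      · apply Polynomial.monic_X_pow_add
        compute_degree!
      · simp only [Polynomial.eval₂_add, Polynomial.eval₂_mul, Polynomial.eval₂_pow, Polynomial.eval₂_X, Polynomial.eval₂_C, Polynomial.eval₂_neg]
        simp only [map_add, map_mul, map_one, map_ofNat, map_intCast]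
        linear_combination hγ
    obtain ⟨γ, h⟩ := IsIntegrallyClosed.isIntegral_iff.1 hint
    exact ⟨γ, h⟩
  rw [← hγ'] at hγ
  have hγ2 : γ ^ 2 - S * γ + (1 + 2 * (e + d * S)) = 0 := by
    apply RingOfIntegers.coe_injective
    simp only [map_neg, map_add, map_sub, map_pow, map_mul, map_intCast, map_ofNat, map_one, map_zero]
    exact hγ
  refine ⟨Ideal.span {S, γ - 1}, ?_⟩
  rw [sq, Ideal.span_pair_mul_span_pair]
  have e1 : (γ - 1) * (γ - 1) = S * (-((S - 1) * (γ - 1) + (S - 1 + S * (e + d * S)))) := by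
    linear_combination hγ2 - (-γ  - (e + d * S)) * hS2
  apply le_antisymm
  · rw [Ideal.span_le]
    rintro x (rfl | rfl | rfl | rfl)
    · exact Ideal.mem_span_singleton.2 ⟨_, rfl⟩
    · exact Ideal.mem_span_singleton.2 ⟨_, rfl⟩
    · exact Ideal.mem_span_singleton.2 ⟨_, mul_comm _ _⟩
    · exact Ideal.mem_span_singleton.2 ⟨_, e1⟩
  · rw [Ideal.span_singleton_le_iff_mem]
    have : S = (1 + e + d * S) * (S * S) + (γ - 1) * (γ - 1) + (S - 1) * (S * (γ - 1)) := by
      rw [e1]; ring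
    have h' : (1 + e + d * S) * (S * S) + (γ - 1) * (γ - 1) + (S - 1) * (S * (γ - 1)) ∈
        Ideal.span {S * S, S * (γ - 1), (γ - 1) * S, (γ - 1) * (γ - 1)} := ?_
    · rwa [← this] at h'
    refine Ideal.add_mem _ (Ideal.add_mem _ (Ideal.mul_mem_left _ _ ?_) ?_) (Ideal.mul_mem_left _ _ ?_) <;>
      exact Ideal.subset_span (by simp)

/-- The four classes `±1, ±(1+√2)` exhaust the units modulo norms. -/
lemma K_coset (h2Y : Module.finrank ℚ Y = 2) (s : 𝓞 Y) (hs : s ^ 2 = 2) (hp : p.Prime) (hcd : (p : ℤ) = c ^ 2 - 32 * d ^ 2) (hc : 0 < c)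
    (β : 𝓞 X) (hβ : β ^ 2 = algebraMap (𝓞 Y) (𝓞 X) (-pE c d s))
    (τ : X ≃ₐ[Y] X) (hτ2 : τ * τ = 1) (hfix : ∀ x, τ x = x → ∃ y : Y, algebraMap Y X y = x) (u : (𝓞 Y)ˣ) :
    u ∈ NU τ ∨ -1 * u ∈ NU τ ∨ eps s hs * u ∈ NU τ ∨ (-1 * eps s hs) * u ∈ NU τ := by
  obtain ⟨h1, h2, h3⟩ := K_NU h2Y s hs hp hcd hc β hβ τ hτ2 hfix
  have h4 := K_index h2Y s hs hp hcd hc β hβ τ hτ2 hfix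
  by_contra! hcon
  obtain ⟨g1, g2, g3, g4⟩ := hcon
  -- otherwise five distinct cosets would exist
  have hsq := sq_mem_NU τ
  have hm : ∀ a b : (𝓞 Y)ˣ, ((a : (𝓞 Y)ˣ ⧸ NU τ) = b ↔ a * b ∈ NU τ) := by
    intro a b
    rw [QuotientGroup.eq]
    constructor
    · intro h
      have := (NU τ).mul_mem (hsq a) h
      rwa [show a ^ 2 * (a⁻¹ * b) = a * b by group] at this
    · intro h
      have := (NU τ).mul_mem ((NU τ).inv_mem (hsq a)) h
      rwa [show (a ^ 2)⁻¹ * (a * b) = a⁻¹ * b by group] at this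
  set e := eps s hs with he
  let f : Fin 5 → (𝓞 Y)ˣ ⧸ NU τ := ![((1 : (𝓞 Y)ˣ) : (𝓞 Y)ˣ ⧸ NU τ), ((-1 : (𝓞 Y)ˣ) : (𝓞 Y)ˣ ⧸ NU τ), (e : (𝓞 Y)ˣ ⧸ NU τ), ((-1 * e : (𝓞 Y)ˣ) : (𝓞 Y)ˣ ⧸ NU τ), (u : (𝓞 Y)ˣ ⧸ NU τ)]
  have hd : ∀ a b : (𝓞 Y)ˣ, a ∉ NU τ → b ^ 2 * a ∉ NU τ := fun a b ha h ↦ ha (by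
    have := (NU τ).mul_mem ((NU τ).inv_mem (hsq b)) h
    rwa [inv_mul_cancel_left] at this)
  have hf : Function.Injective f := by
    have n1 : ¬ ((1 : (𝓞 Y)ˣ) : (𝓞 Y)ˣ ⧸ NU τ) = (-1 : (𝓞 Y)ˣ) := by rw [hm, one_mul]; exact h1
    have n2 : ¬ ((1 : (𝓞 Y)ˣ) : (𝓞 Y)ˣ ⧸ NU τ) = e := by rw [hm, one_mul]; exact h2
    have n3 : ¬ ((1 : (𝓞 Y)ˣ) : (𝓞 Y)ˣ ⧸ NU τ) = (-1 * e : (𝓞 Y)ˣ) := by rw [hm, one_mul]; exact h3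
    have n4 : ¬ ((1 : (𝓞 Y)ˣ) : (𝓞 Y)ˣ ⧸ NU τ) = u := by rw [hm, one_mul]; exact g1
    have n5 : ¬ ((-1 : (𝓞 Y)ˣ) : (𝓞 Y)ˣ ⧸ NU τ) = e := by rw [hm]; exact h3
    have n6 : ¬ ((-1 : (𝓞 Y)ˣ) : (𝓞 Y)ˣ ⧸ NU τ) = (-1 * e : (𝓞 Y)ˣ) := by
      rw [hm, show (-1 : (𝓞 Y)ˣ) * (-1 * e) = (-1) ^ 2 * e by rw [sq, mul_assoc]]; exact hd _ _ h2
    have n7 : ¬ ((-1 : (𝓞 Y)ˣ) : (𝓞 Y)ˣ ⧸ NU τ) = u := by rw [hm]; exact g2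
    have n8 : ¬ (e : (𝓞 Y)ˣ ⧸ NU τ) = (-1 * e : (𝓞 Y)ˣ) := by
      rw [hm, show e * (-1 * e) = e ^ 2 * (-1) by rw [mul_left_comm, ← sq, mul_comm]]; exact hd _ _ h1
    have n9 : ¬ (e : (𝓞 Y)ˣ ⧸ NU τ) = u := by rw [hm]; exact g3
    have n10 : ¬ ((-1 * e : (𝓞 Y)ˣ) : (𝓞 Y)ˣ ⧸ NU τ) = u := by rw [hm]; exact g4
    intro i j hij
    fin_cases i <;> fin_cases j <;> first | rfl | (exfalso; simp only [f] at hij; first | exact n1 hij | exact n1 hij.symm | exact n2 hij | exact n2 hij.symm | exact n3 hij | exact n3 hij.symm | exact n4 hij | exact n4 hij.symm | exact n5 hij | exact n5 hij.symm | exact n6 hij | exact n6 hij.symm | exact n7 hij | exact n7 hij.symm | exact n8 hij | exact n8 hij.symm | exact n9 hij | exact n9 hij.symm | exact n10 hij | exact n10 hij.symm)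
  have hfin : Finite ((𝓞 Y)ˣ ⧸ NU τ) := Nat.finite_of_card_ne_zero (by
    show (NU τ).index ≠ 0
    rw [h4]; norm_num)
  have := Nat.card_le_card_of_injective f hf
  rw [Nat.card_fin] at this
  change 5 ≤ (NU τ).index at this
  omega

/-- If `(p/2)₄ = -1`, no unit multiple of `√2` is a norm from `K = ℚ(√(-π))`: modulo norms of units and
by positivity the product is `√2 (1 + √2)`, which is a nonresidue modulo `π`. -/
lemma K_not_norm_two (h2Y : Module.finrank ℚ Y = 2) (s : 𝓞 Y) (hs : s ^ 2 = 2) [hpF : Fact p.Prime] (hp8 : p % 8 = 1) (hcd : (p : ℤ) = c ^ 2 - 32 * d ^ 2) (hc : 0 < c)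
    (h : ¬ (-1 : ℤ) ^ ((p - 1) / 8) = 1)
    (β : 𝓞 X) (hβ : β ^ 2 = algebraMap (𝓞 Y) (𝓞 X) (-pE c d s))
    (τ : X ≃ₐ[Y] X) (hτ2 : τ * τ = 1) (hfix : ∀ x, τ x = x → ∃ y : Y, algebraMap Y X y = x) (u : (𝓞 Y)ˣ) (w : X)
    (hw : w * τ w = algebraMap Y X ((s * u : 𝓞 Y) : Y)) : False := by
  have hp := hpF.out
  obtain ⟨φ, ψ, r, h1, h2, hr⟩ := base_embs h2Y s hs
  have key := K_norm_pos h2Y s hs hp hcd hc β hβ τ hτ2 hfix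
  have he : ((eps s hs : 𝓞 Y) : Y) = 1 + s := by simp [eps]
  have step : ∀ g : (𝓞 Y)ˣ, g * u ∈ NU τ → ∃ x : X, x * τ x = algebraMap Y X ((s * g : 𝓞 Y) : Y) := by
    intro g hg
    obtain ⟨v, hv⟩ := (mem_NU τ _).1 hg
    have hu : algebraMap Y X ((u : 𝓞 Y) : Y) ≠ 0 := by simp
    refine ⟨w * v / algebraMap Y X ((u : 𝓞 Y) : Y), ?_⟩
    rw [map_div₀, map_mul, AlgEquiv.commutes]
    field_simp
    calc w * v * τ w * τ v = (w * τ w) * (v * τ v) := by ring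
      _ = _ := by rw [hw, hv]; simp only [map_mul, Units.val_mul]; ring
  rcases K_coset h2Y s hs hp hcd hc β hβ τ hτ2 hfix u with g | g | g | g
  · obtain ⟨x, hx⟩ := step 1 (by simpa using g)
    have a := key x _ hx φ
    have b := key x _ hx ψ
    simp [h1, h2] at a b
    nlinarith
  · obtain ⟨x, hx⟩ := step _ g
    have a := key x _ hx φ
    have b := key x _ hx ψ
    simp [h1, h2] at a b
    nlinarith
  · obtain ⟨x, hx⟩ := step _ g
    obtain ⟨A, B, -, -, h3⟩ := norm_form τ hτ2 hfix (β : X) _ (coe_sq hβ) (K_not_mem h2Y s hs hp hcd β hβ) x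
    rw [hx] at h3
    have hq := pE_absNorm h2Y s hs hcd
    have hprime := prime_of_absNorm hp _ hq
    have hd := pE_neg_data h2Y s hs hp hcd
    have hq0 : Ideal.span {pE c d s} ≠ ⊥ := fun h0 ↦ by
      rw [h0, Ideal.absNorm_bot] at hq; exact hp.ne_zero hq.symm
    obtain ⟨t, ht⟩ := sq_mod' (Ideal.span {pE c d s}) hq0 _ hd.1 hd.2 _ A B ((algebraMap Y X).injective h3).symm
    exact nonres_two hp8 h _ hq s hs t ht
  · obtain ⟨x, hx⟩ := step _ g
    have a := key x _ hx φ
    simp [h1, he] at a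
    have : r > -2 := by nlinarith
    nlinarith

/-- If `c ≡ 1 (mod 4)` and `(p/2)₄ = -1`, the class of the prime of `K` above `√2` has square one but is
itself not a square, so the cyclic 2-class group of `K` has order two. -/
lemma K_two (h2 : Module.finrank Y X = 2) (h2Y : Module.finrank ℚ Y = 2) (s : 𝓞 Y) (hs : s ^ 2 = 2) [hpF : Fact p.Prime] (hp8 : p % 8 = 1) (hcd : (p : ℤ) = c ^ 2 - 32 * d ^ 2) (hc : 0 < c)
    (hc4 : c % 4 = 1) (h : ¬ (-1 : ℤ) ^ ((p - 1) / 8) = 1)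
    (β : 𝓞 X) (hβ : β ^ 2 = algebraMap (𝓞 Y) (𝓞 X) (-pE c d s)) : 2 ∣ classNumber X ∧ ¬ 4 ∣ classNumber X := by
  have hp := hpF.out
  obtain ⟨𝔭, h𝔭⟩ := K_prime s hs hc4 β hβ
  have hs0 : s ≠ 0 := by rintro rfl; norm_num at hs
  have hS0 : algebraMap (𝓞 Y) (𝓞 X) s ≠ 0 := by
    rw [Ne, FaithfulSMul.algebraMap_eq_zero_iff]; exact hs0
  have hp0 : 𝔭 ≠ 0 := by
    rintro rfl
    rw [zero_pow two_ne_zero, eq_comm, Ideal.zero_eq_bot, Ideal.span_singleton_eq_bot] at h𝔭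
    exact hS0 h𝔭
  have hpm : 𝔭 ∈ (Ideal (𝓞 X))⁰ := mem_nonZeroDivisors_of_ne_zero hp0
  obtain ⟨τ, hτ1, hτ2, hfix⟩ := exists_invol h2
  rw [← card_class]
  refine two_exact (K_cyc h2 h2Y s hs hp hcd hc β hβ) (ClassGroup.mk0 ⟨𝔭, hpm⟩) ?_ ?_
  · rw [← map_pow, ClassGroup.mk0_eq_one_iff]
    · exact ⟨⟨_, h𝔭⟩⟩
  intro x hx
  obtain ⟨⟨J, hJ⟩, rfl⟩ := ClassGroup.mk0_surjective x
  rw [← map_pow, ClassGroup.mk0_eq_mk0_iff] at hx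
  obtain ⟨a, b, ha, hb, hab⟩ := hx
  replace hab : Ideal.span {a} * J ^ 2 = Ideal.span {b} * 𝔭 := hab
  have hn : Ideal.relNorm (𝓞 Y) 𝔭 = Ideal.span {s} := by
    have h1 := congrArg (Ideal.relNorm (𝓞 Y)) h𝔭
    have h3 : Ideal.relNorm (𝓞 Y) (Ideal.span {algebraMap (𝓞 Y) (𝓞 X) s}) = Ideal.span {s} ^ 2 := by
      have := Ideal.relNorm_algebraMap (R := 𝓞 Y) (𝓞 X) (Ideal.span {s})
      rw [Ideal.map_span, Set.image_singleton, finrank_int h2] at this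
      exact this
    rw [h3, map_pow] at h1
    exact pow_left_injective two_ne_zero h1
  have h1 := base_classNumber h2Y s hs
  have hpid : IsPrincipalIdealRing (𝓞 Y) := classNumber_eq_one_iff.1 h1
  obtain ⟨e, he⟩ := (hpid.principal (Ideal.relNorm (𝓞 Y) J)).principal
  replace he : Ideal.relNorm (𝓞 Y) J = Ideal.span {e} := he
  have hab' := congrArg (Ideal.relNorm (𝓞 Y)) hab
  rw [map_mul, map_mul, map_pow, hn, he, Ideal.relNorm_singleton, Ideal.relNorm_singleton, Ideal.span_singleton_pow, Ideal.span_singleton_mul_span_singleton, Ideal.span_singleton_mul_span_singleton, Ideal.span_singleton_eq_span_singleton] at hab'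
  obtain ⟨u, hu⟩ := hab'
  have hi : ∀ x : 𝓞 X, algebraMap Y X ((Algebra.intNorm (𝓞 Y) (𝓞 X) x : 𝓞 Y) : Y) = (x : X) * τ x := by
    intro x
    rw [← norm_two h2 τ hτ1]
    exact congrArg _ (Algebra.algebraMap_intNorm (A := 𝓞 Y) (K := Y) (L := X) (B := 𝓞 X) x)
  have hu' : algebraMap Y X (((Algebra.intNorm (𝓞 Y) (𝓞 X) a * e ^ 2 * u : 𝓞 Y) : Y)) = algebraMap Y X (((Algebra.intNorm (𝓞 Y) (𝓞 X) b * s : 𝓞 Y) : Y)) := by rw [hu]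
  simp only [map_mul, map_pow, hi] at hu'
  have hb' : (b : X) ≠ 0 := by simpa using hb
  have hb'' : τ (b : X) ≠ 0 := by simpa using hb
  refine K_not_norm_two h2Y s hs hp8 hcd hc h β hβ τ hτ2 hfix u⁻¹ (a * algebraMap Y X (e : Y) / b) ?_
  have hu0 : algebraMap Y X ((u : 𝓞 Y) : Y) ≠ 0 := by simp
  have hinv : algebraMap Y X ((u : 𝓞 Y) : Y) * algebraMap Y X (((u⁻¹ : (𝓞 Y)ˣ) : 𝓞 Y) : Y) = 1 := by
    rw [← map_mul, ← map_mul, Units.mul_inv, map_one, map_one]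
  simp only [map_mul, map_div₀, AlgEquiv.commutes]
  rw [div_mul_div_comm, div_eq_iff (mul_ne_zero hb' hb'')]
  apply mul_left_cancel₀ hu0
  linear_combination hu' - algebraMap Y X (s : Y) * (b * τ b) * hinv

/-- `X = Y(i) = Y(√m)` with `m ≡ 1 (mod 4)` is unramified over the totally complex field `Y`, so `Y` has
even class number. -/
lemma K_even [IsTotallyComplex Y] (h2 : Module.finrank Y X = 2) (m t : 𝓞 Y) (hm : m = 1 + 4 * t)
    (β γ : 𝓞 X) (hβ : β ^ 2 = algebraMap (𝓞 Y) (𝓞 X) m) (hγ : γ ^ 2 = -1)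
    (hβn : ∀ y : Y, algebraMap Y X y ≠ β) (hγn : ∀ y : Y, algebraMap Y X y ≠ γ) : 2 ∣ classNumber Y := by
  have hγ' : γ ^ 2 = algebraMap (𝓞 Y) (𝓞 X) (-1) := by rw [hγ]; simp
  have : IsTotallyComplex X := totally_complex_of (Y := Y) (γ : X) (-1) (by rw [← map_pow, hγ]; simp) (by simp)
  refine unram_even h2 (places_complex h2) fun q hq hq0 P hP hPq hr ↦ ?_
  exfalso
  have h1 := ram_mem_one h2 β m t hβ hm hβn q hq hq0 P hP hPq hr
  have h3 := ram_mem_four h2 γ (-1) hγ' hγn q hq hq0 P hP hPq hr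
  refine hq.ne_top ((Ideal.eq_top_iff_one _).2 ?_)
  have : (1 : 𝓞 Y) = m + t * (4 * (-1)) := by rw [hm]; ring
  rw [this]
  exact Ideal.add_mem _ h1 (Ideal.mul_mem_left _ _ h3)
end K
end H15

/-! ### Unit quotients u / ū -/

namespace H15
open Filter Topology

section mmdef
open NumberField.IsCMField NumberField.Units
variable {Y X : Type*} [Field Y] [NumberField Y] [Field X] [NumberField X] [Algebra Y X]

/-- The nontrivial automorphism of a CM field over a totally real subfield of index two is complex
conjugation. -/
lemma complexConj_eq [IsTotallyReal Y] [IsCMField X] (h2 : Module.finrank Y X = 2) (τ : X ≃ₐ[Y] X) (hτ1 : τ ≠ 1) (x : X) :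
    complexConj X x = τ x := by
  have := isGalois_two h2
  have hcard : Nat.card (X ≃ₐ[Y] X) = 2 := by rw [IsGalois.card_aut_eq_finrank, h2]
  let φ : X →+* ℂ := Classical.choice (inferInstance : Nonempty _)
  have hfix : ∀ y : Y, complexConj X (algebraMap Y X y) = algebraMap Y X y := by
    intro y
    apply φ.injective
    rw [complexEmbedding_complexConj]
    obtain ⟨ψ, hψ⟩ := exists_real (φ.comp (algebraMap Y X))
    have := hψ y
    simp only [RingHom.comp_apply] at this
    rw [this, Complex.conj_ofReal]
  let g : X ≃ₐ[Y] X := AlgEquiv.ofRingEquiv (f := (complexConj X).toRingEquiv) hfix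
  have hg : g ≠ 1 := by
    intro h
    apply complexConj_ne_one X
    ext z
    exact DFunLike.congr_fun h z
  have : g = τ := by
    rw [Nat.card_eq_two_iff' 1] at hcard
    exact hcard.unique hg hτ1
  exact DFunLike.congr_fun this x

/-- The quotients `u / ū` form a finite cyclic group of roots of unity. -/
lemma mm_iff [IsTotallyReal Y] [IsCMField X] (h2 : Module.finrank Y X = 2) (τ : X ≃ₐ[Y] X) (hτ1 : τ ≠ 1) (n : ℕ) :
    2 ^ n ∣ mm X ↔ ∃ (u : (𝓞 X)ˣ) (ζ : X), IsPrimitiveRoot ζ (2 ^ n) ∧ ((u : 𝓞 X) : X) = ζ * τ ((u : 𝓞 X) : X) := by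
  have hinj : Function.Injective (fun z : torsion X ↦ (((z : (𝓞 X)ˣ) : 𝓞 X) : X)) := by
    intro a b h
    apply Subtype.ext
    apply Units.ext
    exact RingOfIntegers.coe_injective h
  let f : torsion X →* X := ⟨⟨fun z : torsion X ↦ (((z : (𝓞 X)ˣ) : 𝓞 X) : X), by simp⟩, fun a b ↦ by simp⟩
  have hτu : ∀ u : (𝓞 X)ˣ, (((unitsComplexConj X u : (𝓞 X)ˣ) : 𝓞 X) : X) = τ ((u : 𝓞 X) : X) := by
    intro u
    rw [← complexConj_eq h2 τ hτ1]
    rfl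
  have happ : ∀ u : (𝓞 X)ˣ, ((u : 𝓞 X) : X) = f (unitsMulComplexConjInv X u) * τ ((u : 𝓞 X) : X) := by
    intro u
    rw [← hτu]
    show _ = (((unitsMulComplexConjInv X u : (𝓞 X)ˣ) : 𝓞 X) : X) * _
    rw [unitsMulComplexConjInv_apply, ← map_mul, ← Units.val_mul, inv_mul_cancel_right]
  constructor
  · intro h
    obtain ⟨g, hg⟩ := IsCyclic.exists_ofOrder_eq_natCard (α := (unitsMulComplexConjInv X).range)
    obtain ⟨k, hk⟩ := h
    have hk' : Nat.card (unitsMulComplexConjInv X).range = 2 ^ n * k := hk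
    have hk0 : k ≠ 0 := by
      rintro rfl
      rw [mul_zero] at hk'
      exact (Nat.card_pos (α := (unitsMulComplexConjInv X).range)).ne' hk'
    obtain ⟨⟨z, u, rfl⟩, hz⟩ : ∃ z : (unitsMulComplexConjInv X).range, orderOf z = 2 ^ n := by
      refine ⟨g ^ k, ?_⟩
      rw [orderOf_pow_of_dvd hk0 (by rw [hg, hk']; exact Dvd.intro_left _ rfl), hg, hk', Nat.mul_div_cancel _ (Nat.pos_of_ne_zero hk0)]
    refine ⟨u, f (unitsMulComplexConjInv X u), ?_, happ u⟩
    rw [IsPrimitiveRoot.iff_orderOf, orderOf_injective f hinj, ← hz]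
    exact Subgroup.orderOf_coe (⟨unitsMulComplexConjInv X u, u, rfl⟩ : (unitsMulComplexConjInv X).range)
  · rintro ⟨u, ζ, hζ, hu⟩
    have h := happ u
    have h0 : τ ((u : 𝓞 X) : X) ≠ 0 := by simp
    have : f (unitsMulComplexConjInv X u) = ζ := mul_right_cancel₀ h0 (h.symm.trans hu)
    rw [← this, IsPrimitiveRoot.iff_orderOf, orderOf_injective f hinj] at hζ
    rw [← hζ]
    exact Subgroup.orderOf_dvd_natCard _ ⟨u, rfl⟩

end mmdef

section mm
variable {Y X : Type*} [Field Y] [NumberField Y] [Field X] [NumberField X] [Algebra Y X] {p : ℕ} {c d : ℤ}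

lemma cmul (a b : 𝓞 Y) : ((a * b : 𝓞 Y) : Y) = (a : Y) * (b : Y) := map_mul (algebraMap (𝓞 Y) Y) a b
lemma cadd (a b : 𝓞 Y) : ((a + b : 𝓞 Y) : Y) = (a : Y) + (b : Y) := map_add (algebraMap (𝓞 Y) Y) a b
lemma cpow (a : 𝓞 Y) (n : ℕ) : ((a ^ n : 𝓞 Y) : Y) = (a : Y) ^ n := map_pow (algebraMap (𝓞 Y) Y) a n
lemma cone : ((1 : 𝓞 Y) : Y) = 1 := map_one (algebraMap (𝓞 Y) Y)
lemma cneg (a : 𝓞 Y) : ((-a : 𝓞 Y) : Y) = -(a : Y) := map_neg (algebraMap (𝓞 Y) Y) a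
lemma cinv (v : (𝓞 Y)ˣ) : (((v⁻¹ : (𝓞 Y)ˣ) : 𝓞 Y) : Y) = ((v : 𝓞 Y) : Y)⁻¹ := by
  rw [← mul_eq_one_iff_eq_inv₀ (by simp), ← cmul, Units.inv_mul, cone]
lemma coe_inj' {a b : 𝓞 Y} (h : (a : Y) = (b : Y)) : a = b := RingOfIntegers.coe_injective h

lemma calg (y : 𝓞 Y) : ((algebraMap (𝓞 Y) (𝓞 X) y : 𝓞 X) : X) = algebraMap Y X (y : Y) := coe_alg y

lemma unit_norm (τ : X ≃ₐ[Y] X) (hτ2 : τ * τ = 1) (hfix : ∀ x, τ x = x → ∃ y : Y, algebraMap Y X y = x) (u : (𝓞 X)ˣ) :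
    ∃ v : (𝓞 Y)ˣ, algebraMap Y X ((v : 𝓞 Y) : Y) = (u : 𝓞 X) * τ ((u : 𝓞 X) : X) := by
  obtain ⟨a, ha⟩ := exists_mul_int τ hτ2 hfix (u : 𝓞 X)
  obtain ⟨b, hb⟩ := exists_mul_int τ hτ2 hfix ((u⁻¹ : (𝓞 X)ˣ) : 𝓞 X)
  have hab : a * b = 1 := by
    apply FaithfulSMul.algebraMap_injective (𝓞 Y) (𝓞 X)
    rw [map_mul, ha, hb, map_one, mul_mul_mul_comm, ← map_mul (rI τ), Units.mul_inv, map_one, mul_one]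
  refine ⟨⟨a, b, hab, by rw [mul_comm, hab]⟩, ?_⟩
  have := congrArg (algebraMap (𝓞 X) X) ha
  rw [coe_alg, map_mul] at this
  exact this

/-- For `K = ℚ(√(-π))`, no unit `u` satisfies `u = -ū`, as it would be a unit times a square root of
`-π` over `ℚ(√2)`. -/
lemma K_mm [IsCMField X] (h2 : Module.finrank Y X = 2) (h2Y : Module.finrank ℚ Y = 2) (s : 𝓞 Y) (hs : s ^ 2 = 2) (hp : p.Prime) (hcd : (p : ℤ) = c ^ 2 - 32 * d ^ 2)
    (β : 𝓞 X) (hβ : β ^ 2 = algebraMap (𝓞 Y) (𝓞 X) (-pE c d s)) : ¬ 2 ∣ mm X := by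
  have := base_real h2Y s hs
  obtain ⟨τ, hτ1, hτ2, hfix⟩ := exists_invol h2
  rw [← pow_one 2, mm_iff h2 τ hτ1 1]
  rintro ⟨u, ζ, hζ, hu⟩
  have hζ' : ζ = -1 := by
    rw [pow_one] at hζ
    exact hζ.eq_neg_one_of_two_right
  obtain ⟨v, hv⟩ := unit_norm τ hτ2 hfix u
  obtain ⟨A, B, hA, hB, h3⟩ := norm_form τ hτ2 hfix (β : X) _ (coe_sq hβ) (K_not_mem h2Y s hs hp hcd β hβ) ((u : 𝓞 X) : X)
  rw [hζ', hB, hA] at hu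
  have hA0 : A = 0 := by
    have : algebraMap Y X A = 0 := by linear_combination hu / 2
    simpa using this
  rw [← hv, hA0] at h3
  have h4 := (algebraMap Y X).injective h3
  have hd := pE_neg_data h2Y s hs hp hcd
  have hprime := prime_of_absNorm hp _ (pE_absNorm h2Y s hs hcd)
  refine not_square_of_val _ hprime (pE c d s * v) (Ideal.mul_mem_right _ _ (Ideal.mem_span_singleton_self _)) ?_
    ⟨pE c d s * B, ?_⟩
  · intro h
    rw [Ideal.mul_unit_mem_iff_mem _ v.isUnit] at h
    exact hd.2 (neg_mem h)
  · rw [cmul, h4, cneg]; ring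

/-- A squarefree `(s)` stays squarefree in a quadratic extension unramified at `s`. -/
lemma sqfree_step (h2 : Module.finrank Y X = 2) (s : 𝓞 Y) (hs0 : s ≠ 0) (hs : Squarefree (Ideal.span {s}))
    (β : 𝓞 X) (m t : 𝓞 Y) (hβ : β ^ 2 = algebraMap (𝓞 Y) (𝓞 X) m) (hm : m = 1 + 4 * t)
    (hn : ∀ y : Y, algebraMap Y X y ≠ β) (hc : IsCoprime m s) : Squarefree (Ideal.span {algebraMap (𝓞 Y) (𝓞 X) s}) := by
  have hS0 : algebraMap (𝓞 Y) (𝓞 X) s ≠ 0 := by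
    rw [Ne, FaithfulSMul.algebraMap_eq_zero_iff]; exact hs0
  have hI0 : Ideal.span {algebraMap (𝓞 Y) (𝓞 X) s} ≠ 0 := by
    rw [Ne, Ideal.zero_eq_bot, Ideal.span_singleton_eq_bot]; exact hS0
  rw [squarefree_iff_no_irreducibles hI0]
  intro P hP hPs
  have hPp : Prime P := hP.prime
  have hP0 : P ≠ ⊥ := hPp.ne_zero
  have hPI : P.IsPrime := Ideal.isPrime_of_prime hPp
  have hPm : P.IsMaximal := hPI.isMaximal hP0
  set q := P.comap (algebraMap (𝓞 Y) (𝓞 X)) with hq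
  have hqm : q.IsMaximal := Ideal.isMaximal_comap_of_isIntegral_of_isMaximal P
  have hsP : algebraMap (𝓞 Y) (𝓞 X) s ∈ P := by
    have := Ideal.le_of_dvd hPs
    rw [Ideal.span_singleton_le_iff_mem] at this
    exact Ideal.mul_le_left this
  have hsq : s ∈ q := hsP
  have hq0 : q ≠ ⊥ := by
    intro h; rw [h, Ideal.mem_bot] at hsq; exact hs0 hsq
  obtain ⟨r, hr⟩ : q ∣ Ideal.span {s} := by
    rw [Ideal.dvd_span_singleton]; exact hsq
  have hrq : ¬ q ∣ r := by
    rintro ⟨r', rfl⟩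
    have : q * q ∣ Ideal.span {s} := ⟨r', by rw [hr, mul_assoc]⟩
    have := hs q this
    exact hqm.ne_top (Ideal.isUnit_iff.1 this)
  have hmap : Ideal.span {algebraMap (𝓞 Y) (𝓞 X) s} = q.map (algebraMap (𝓞 Y) (𝓞 X)) * r.map (algebraMap (𝓞 Y) (𝓞 X)) := by
    rw [← Ideal.map_mul, ← hr, Ideal.map_span, Set.image_singleton]
  have hPr : ¬ P ∣ r.map (algebraMap (𝓞 Y) (𝓞 X)) := by
    rw [Ideal.dvd_iff_le, Ideal.map_le_iff_le_comap]
    intro h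
    exact hrq (Ideal.dvd_iff_le.2 h)
  have hP2 : P ^ 2 ∣ q.map (algebraMap (𝓞 Y) (𝓞 X)) := by
    rw [hmap, ← sq] at hPs
    exact hPp.pow_dvd_of_dvd_mul_right 2 hPr hPs
  have hmq := ram_mem_one h2 β m t hβ hm hn q hqm hq0 P hPI rfl hP2
  obtain ⟨a, b, hab⟩ := hc
  apply hqm.ne_top
  rw [Ideal.eq_top_iff_one, ← hab]
  exact Ideal.add_mem _ (Ideal.mul_mem_left _ _ hmq) (Ideal.mul_mem_left _ _ hsq)

lemma sqfree_base (h2Y : Module.finrank ℚ Y = 2) (s : 𝓞 Y) (hs : s ^ 2 = 2) : Squarefree (Ideal.span {s}) := by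
  have h := s_absNorm h2Y s hs
  have h1 := prime_of_absNorm Nat.prime_two _ h
  have hs0 : s ≠ 0 := by rintro rfl; norm_num at hs
  exact (Ideal.prime_of_isPrime (by rw [Ne, Ideal.span_singleton_eq_bot]; exact hs0) h1).irreducible.squarefree

/-- Elements `s * unit * m`, with `m` prime to `s`, are not squares when `(s)` is squarefree. -/
lemma sqfree_not_square (s : 𝓞 Y) (hs : s ^ 2 = 2) (hsf : Squarefree (Ideal.span {s})) (m : 𝓞 Y) (hm : IsCoprime m s) :
    ¬ IsSquare ((s * m : 𝓞 Y) : Y) := by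
  have hs0 : s ≠ 0 := by rintro rfl; norm_num at hs
  have hnu : ¬ IsUnit s := by
    intro h
    have : IsUnit (2 : 𝓞 Y) := by rw [← hs]; exact h.pow 2
    have h3 : IsUnit (Algebra.norm ℤ (2 : 𝓞 Y)) := this.map (Algebra.norm ℤ)
    rw [show (2 : 𝓞 Y) = algebraMap ℤ (𝓞 Y) 2 by simp, Algebra.norm_algebraMap, Int.isUnit_iff_natAbs_eq, Int.natAbs_pow] at h3
    have : 0 < Module.finrank ℤ (𝓞 Y) := Module.finrank_pos
    simp at h3
    omega
  obtain ⟨q, hq, hsq⟩ := exists_max_ideal_of_mem_nonunits hnu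
  refine not_square_of_val q hq.isPrime _ (Ideal.mul_mem_right _ _ hsq) ?_
  intro h
  have hmq : m ∉ q := by
    intro hmq
    obtain ⟨a, b, hab⟩ := hm
    apply hq.ne_top
    rw [Ideal.eq_top_iff_one, ← hab]
    exact Ideal.add_mem _ (Ideal.mul_mem_left _ _ hmq) (Ideal.mul_mem_left _ _ hsq)
  have hqp : Prime q := Ideal.prime_of_isPrime (by rintro rfl; rw [Ideal.mem_bot] at hsq; exact hs0 hsq) hq.isPrime
  rw [← Ideal.dvd_span_singleton, ← Ideal.span_singleton_mul_span_singleton] at h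
  have h' := hqp.pow_dvd_of_dvd_mul_right 2 (by rwa [Ideal.dvd_span_singleton]) h
  rw [sq] at h'
  exact hq.ne_top (Ideal.isUnit_iff.1 (hsf q h'))

open NumberField.IsCMField in
lemma tau_root [IsTotallyReal Y] [IsCMField X] (h2 : Module.finrank Y X = 2) (τ : X ≃ₐ[Y] X) (hτ1 : τ ≠ 1) (ζ : X) (n : ℕ) (hn : n ≠ 0) (hζ : ζ ^ n = 1) :
    τ ζ = ζ⁻¹ := by
  let φ : X →+* ℂ := Classical.choice (inferInstance : Nonempty _)
  rw [← complexConj_eq h2 τ hτ1]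
  apply φ.injective
  rw [complexEmbedding_complexConj, map_inv₀, Complex.inv_eq_conj]
  apply Complex.norm_eq_one_of_pow_eq_one (n := n) _ hn
  rw [← map_pow, hζ, map_one]

lemma prim_two {R : Type*} [Field R] [CharZero R] (ζ : R) (n : ℕ) (h : ζ ^ 2 ^ n = -1) : IsPrimitiveRoot ζ (2 ^ (n + 1)) := by
  rw [IsPrimitiveRoot.iff_orderOf]
  have : Fact (Nat.Prime 2) := ⟨Nat.prime_two⟩
  apply orderOf_eq_prime_pow
  · rw [h]; norm_num
  · rw [pow_succ, pow_mul, h]; norm_num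

lemma eq_pm_s (s : 𝓞 Y) (hs : s ^ 2 = 2) (t : Y) (ht : t ^ 2 = 2) : t = s ∨ t = -s := by
  apply sq_eq_sq_iff_eq_or_eq_neg.1
  rw [ht, sq_coe s hs]

/-- `s + 1` and `s - 1` are inverse units when `s² = 2`. -/
lemma s_units (s : 𝓞 Y) (hs : s ^ 2 = 2) : (s + 1) * (s - 1) = 1 := by linear_combination hs

/-- `2 + √2` is `√2` times a unit, and `√2` is squarefree. -/
lemma two_add_not_square (s : 𝓞 Y) (hs : s ^ 2 = 2) (hsf : Squarefree (Ideal.span {s})) (t : Y) (ht : t ^ 2 = 2)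
    (w : (𝓞 Y)ˣ) (m : 𝓞 Y) (hm : IsCoprime m s) (x : Y) : x ^ 2 ≠ (2 + t) * ((w : 𝓞 Y) : Y) * m := by
  intro h
  have hu := s_units s hs
  have hs' : ((s : 𝓞 Y) : Y) ^ 2 = 2 := sq_coe s hs
  have hcop : ∀ a b : 𝓞 Y, a * b = 1 → IsCoprime (a * w * m) s := by
    intro a b hab
    have ha : IsUnit (a * w) := (IsUnit.of_mul_eq_one b hab).mul w.isUnit
    exact (isCoprime_mul_unit_left_left ha m s).2 hm
  rcases eq_pm_s s hs t ht with rfl | rfl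
  · refine sqfree_not_square s hs hsf ((s + 1) * w * m) (hcop _ _ hu) ⟨x, ?_⟩
    rw [← sq, h]
    simp only [map_mul, map_add, map_one]
    linear_combination (((w : 𝓞 Y) : Y) * m) * hs'
  · refine sqfree_not_square s hs hsf ((s - 1) * w * m) (hcop _ _ (by rw [mul_comm, hu])) ⟨x, ?_⟩
    rw [← sq, h]
    simp only [map_mul, map_sub, map_one]
    linear_combination (((w : 𝓞 Y) : Y) * m) * hs'

/-- `X` contains the eighth roots of unity `ζ`, and `ζ / ζ̄ = ζ²` has order four. -/
lemma mm_four [IsTotallyReal Y] [IsCMField X] (h2 : Module.finrank Y X = 2) (s : 𝓞 Y) (hs : s ^ 2 = 2) (γ : X) (hγ : γ ^ 2 = -1) :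
    4 ∣ mm X := by
  obtain ⟨τ, hτ1, hτ2, hfix⟩ := exists_invol h2
  have hs' : ((s : 𝓞 Y) : Y) ^ 2 = 2 := sq_coe s hs
  have hS : (algebraMap Y X s) ^ 2 = 2 := by rw [← map_pow, hs', map_ofNat]
  have hS0 : algebraMap Y X s ≠ 0 := by intro h; rw [h] at hS; norm_num at hS
  set ζ := (1 + γ) / algebraMap Y X s with hζd
  have h1 : ζ ^ 2 = γ := by
    rw [hζd, div_pow, hS, div_eq_iff two_ne_zero]; linear_combination hγ
  have h8 : ζ ^ 8 = 1 := by
    calc ζ ^ 8 = ((ζ ^ 2) ^ 2) ^ 2 := by ring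
      _ = 1 := by rw [h1, hγ]; norm_num
  have hint : IsIntegral ℤ ζ := IsIntegral.of_pow (n := 8) (by norm_num) (by rw [h8]; exact isIntegral_one)
  obtain ⟨z, hz⟩ : ∃ z : 𝓞 X, (z : X) = ζ := ⟨⟨ζ, hint⟩, rfl⟩
  have hzu : IsUnit z := by
    apply IsUnit.of_mul_eq_one (z ^ 7)
    apply coe_inj'
    rw [cmul, cpow, hz, cone, ← h8]; ring
  have hτζ := tau_root h2 τ hτ1 ζ 8 (by norm_num) h8
  have hζ0 : ζ ≠ 0 := by intro h; rw [h] at h8; norm_num at h8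
  rw [show 4 = 2 ^ 2 by norm_num, mm_iff h2 τ hτ1]
  refine ⟨hzu.unit, γ, prim_two γ 1 (by rw [pow_one, hγ]), ?_⟩
  rw [IsUnit.unit_spec, hz, hτζ, ← h1]
  field_simp

lemma zeta_sum [IsTotallyReal Y] [IsCMField X] (h2 : Module.finrank Y X = 2) (τ : X ≃ₐ[Y] X) (hτ1 : τ ≠ 1) (hfix : ∀ x, τ x = x → ∃ y : Y, algebraMap Y X y = x)
    (ζ : X) (n : ℕ) (hn : n ≠ 0) (hζ : ζ ^ n = 1) : ∃ y : Y, algebraMap Y X y = ζ + ζ⁻¹ := by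
  have := tau_root h2 τ hτ1 ζ n hn hζ
  apply hfix
  rw [map_add, map_inv₀, this, inv_inv, add_comm]

/-- If `√2` is squarefree in `Y` then `8 ∤ mm X`: from `u = ζ ū` with `ζ` of order eight, `(1 + ζ) / u` lies
in `Y` and its square is `2 + √2` times a unit. -/
lemma mm_not_eight [IsTotallyReal Y] [IsCMField X] (h2 : Module.finrank Y X = 2) (s : 𝓞 Y) (hs : s ^ 2 = 2)
    (hsf : Squarefree (Ideal.span {s})) : ¬ 8 ∣ mm X := by
  obtain ⟨τ, hτ1, hτ2, hfix⟩ := exists_invol h2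
  rw [show 8 = 2 ^ 3 by norm_num, mm_iff h2 τ hτ1]
  rintro ⟨u, ζ, hζ, hu⟩
  have h8 : ζ ^ 8 = 1 := hζ.pow_eq_one
  have h4 : ζ ^ 4 = -1 := by
    have : ζ ^ 4 ≠ 1 := hζ.pow_ne_one_of_pos_of_lt (by norm_num) (by norm_num)
    have h : (ζ ^ 4 - 1) * (ζ ^ 4 + 1) = 0 := by linear_combination h8
    rcases mul_eq_zero.1 h with h | h
    · exact absurd (sub_eq_zero.1 h) this
    · exact eq_neg_of_add_eq_zero_left h
  have hζ0 : ζ ≠ 0 := by intro h; rw [h] at h8; norm_num at h8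
  have hτζ := tau_root h2 τ hτ1 ζ 8 (by norm_num) h8
  obtain ⟨t, ht⟩ := zeta_sum h2 τ hτ1 hfix ζ 8 (by norm_num) h8
  have ht2 : t ^ 2 = 2 := by
    apply (algebraMap Y X).injective
    rw [map_pow, ht, map_ofNat]; field_simp; linear_combination h4
  obtain ⟨v, hv⟩ := unit_norm τ hτ2 hfix u
  have hu0 : ((u : 𝓞 X) : X) ≠ 0 := by simp
  have hτu0 : τ ((u : 𝓞 X) : X) ≠ 0 := by simp
  obtain ⟨α, hα⟩ := hfix ((1 + ζ) / ((u : 𝓞 X) : X)) (by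
    rw [map_div₀, map_add, map_one, hτζ, div_eq_div_iff hτu0 hu0]; field_simp; linear_combination (ζ + 1) * hu)
  refine two_add_not_square s hs hsf t ht2 v⁻¹ 1 isCoprime_one_left α ?_
  have hv0 : ((v : 𝓞 Y) : Y) ≠ 0 := by simp
  have hvi := cinv v
  apply (algebraMap Y X).injective
  rw [hvi, map_pow, hα, map_mul, map_mul, map_add, ht, map_inv₀, hv, map_ofNat, cone, map_one, mul_one]
  have : ((u : 𝓞 X) : X) ^ 2 = ζ * (((u : 𝓞 X) : X) * τ ((u : 𝓞 X) : X)) := by linear_combination ((u : 𝓞 X) : X) * hu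
  rw [div_pow, this]
  field_simp
  ring

/-- If `√2 v = α²` in `Y` for a unit `v`, then `(1 + ζ) / α` with `ζ` of order eight is a unit with quotient
`ζ`. -/
lemma mm_eight_up [IsTotallyReal Y] [IsCMField X] (h2 : Module.finrank Y X = 2) (s : 𝓞 Y) (hs : s ^ 2 = 2) (γ : X) (hγ : γ ^ 2 = -1)
    (α : 𝓞 Y) (v : (𝓞 Y)ˣ) (hα : α ^ 2 = s * v) : 8 ∣ mm X := by
  obtain ⟨τ, hτ1, hτ2, hfix⟩ := exists_invol h2
  have hs' : ((s : 𝓞 Y) : Y) ^ 2 = 2 := sq_coe s hs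
  have hS : (algebraMap Y X s) ^ 2 = 2 := by rw [← map_pow, hs', map_ofNat]
  have hS0 : algebraMap Y X s ≠ 0 := by intro h; rw [h] at hS; norm_num at hS
  set S := algebraMap Y X s with hSd
  set ζ := (1 + γ) / S with hζd
  have h1 : ζ ^ 2 = γ := by
    rw [hζd, div_pow, hS, div_eq_iff two_ne_zero]; linear_combination hγ
  have h4 : ζ ^ 4 = -1 := by
    calc ζ ^ 4 = (ζ ^ 2) ^ 2 := by ring
      _ = _ := by rw [h1, hγ]
  have h8 : ζ ^ 8 = 1 := by
    calc ζ ^ 8 = (ζ ^ 4) ^ 2 := by ring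
      _ = 1 := by rw [h4]; norm_num
  have hζ0 : ζ ≠ 0 := by intro h; rw [h] at h8; norm_num at h8
  have hζS : ζ ^ 2 + 1 = S * ζ := by
    rw [h1, hζd]; field_simp; ring
  have hτζ := tau_root h2 τ hτ1 ζ 8 (by norm_num) h8
  have hA : (algebraMap Y X α) ^ 2 = S * algebraMap Y X ((v : 𝓞 Y) : Y) := by
    rw [← map_pow, ← map_pow (algebraMap (𝓞 Y) Y), hα, map_mul (algebraMap (𝓞 Y) Y), map_mul]
  set V := algebraMap Y X ((v : 𝓞 Y) : Y) with hV
  have hV0 : V ≠ 0 := by simp [hV]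
  have hA0 : algebraMap Y X α ≠ 0 := by
    intro h; rw [h] at hA
    exact mul_ne_zero hS0 hV0 (by rw [← hA]; norm_num)
  have hint : IsIntegral ℤ ζ := IsIntegral.of_pow (n := 8) (by norm_num) (by rw [h8]; exact isIntegral_one)
  obtain ⟨z, hz⟩ : ∃ z : 𝓞 X, (z : X) = ζ := ⟨⟨ζ, hint⟩, rfl⟩
  have hzu : IsUnit z := by
    apply IsUnit.of_mul_eq_one (z ^ 7)
    apply coe_inj'
    rw [cmul, cpow, hz, cone, ← h8]; ring
  have hw1 : IsUnit (algebraMap (𝓞 Y) (𝓞 X) (s + 1)) := (IsUnit.of_mul_eq_one _ (s_units s hs)).map _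
  have hw2 : IsUnit (algebraMap (𝓞 Y) (𝓞 X) ((v⁻¹ : (𝓞 Y)ˣ) : 𝓞 Y)) := (v⁻¹).isUnit.map _
  set w := z * algebraMap (𝓞 Y) (𝓞 X) (s + 1) * algebraMap (𝓞 Y) (𝓞 X) ((v⁻¹ : (𝓞 Y)ˣ) : 𝓞 Y) with hw
  have hwu : IsUnit w := (hzu.mul hw1).mul hw2
  have hvi := cinv v
  have hwc : (w : X) = ζ * (S + 1) * V⁻¹ := by
    rw [hw, cmul, cmul, hz, calg, calg, hvi, map_inv₀, cadd, map_add, cone, map_one]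
  have hsq : ((1 + ζ) / algebraMap Y X α) ^ 2 = (w : X) := by
    rw [div_pow, hA, hwc]
    field_simp
    linear_combination hζS - ζ * hS
  have huint : IsIntegral ℤ ((1 + ζ) / algebraMap Y X α) := IsIntegral.of_pow (n := 2) (by norm_num) (by rw [hsq]; exact RingOfIntegers.isIntegral_coe w)
  obtain ⟨u, hu⟩ : ∃ z : 𝓞 X, (z : X) = (1 + ζ) / algebraMap Y X α := ⟨⟨_, huint⟩, rfl⟩
  have huu : IsUnit u := by
    rw [← isUnit_pow_iff (n := 2) (by norm_num)]
    convert hwu using 1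
    apply coe_inj'
    rw [cpow, hu, hsq]
  rw [show 8 = 2 ^ 3 by norm_num, mm_iff h2 τ hτ1]
  refine ⟨huu.unit, ζ, prim_two ζ 2 (by norm_num [h4]), ?_⟩
  rw [IsUnit.unit_spec, hu, map_div₀, AlgEquiv.commutes, map_add, map_one, hτζ]
  field_simp
  ring

/-- If `16 ∣ mm X`, then `X` contains the sixteenth roots of unity `ζ`, and `x = ζ + ζ⁻¹` lies in `Y`. -/
lemma mm_sixteen [IsTotallyReal Y] [IsCMField X] (h2 : Module.finrank Y X = 2) (h : 16 ∣ mm X) :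
    ∃ x t : Y, t ^ 2 = 2 ∧ x ^ 2 = 2 + t := by
  obtain ⟨τ, hτ1, hτ2, hfix⟩ := exists_invol h2
  rw [show 16 = 2 ^ 4 by norm_num, mm_iff h2 τ hτ1] at h
  obtain ⟨u, ζ, hζ, hu⟩ := h
  have h16 : ζ ^ 16 = 1 := hζ.pow_eq_one
  have h8 : ζ ^ 8 = -1 := by
    have : ζ ^ 8 ≠ 1 := hζ.pow_ne_one_of_pos_of_lt (by norm_num) (by norm_num)
    have h : (ζ ^ 8 - 1) * (ζ ^ 8 + 1) = 0 := by linear_combination h16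
    rcases mul_eq_zero.1 h with h | h
    · exact absurd (sub_eq_zero.1 h) this
    · exact eq_neg_of_add_eq_zero_left h
  have hζ0 : ζ ≠ 0 := by intro h; rw [h] at h16; norm_num at h16
  obtain ⟨x, hx⟩ := zeta_sum h2 τ hτ1 hfix ζ 16 (by norm_num) h16
  obtain ⟨t, ht⟩ := zeta_sum h2 τ hτ1 hfix (ζ ^ 2) 16 (by norm_num) (by rw [← pow_mul, mul_comm, pow_mul, h16, one_pow])
  refine ⟨x, t, ?_, ?_⟩
  · apply (algebraMap Y X).injective
    rw [map_pow, ht, map_ofNat]; field_simp; linear_combination h8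
  · apply (algebraMap Y X).injective
    rw [map_pow, map_add, hx, ht, map_ofNat]; field_simp; ring

/-- In the quadratic extension `X = Y(√m)` with `m` odd the element `2 + √2` is not a square. -/
lemma not_sixteen_aux (h2 : Module.finrank Y X = 2) (s : 𝓞 Y) (hs : s ^ 2 = 2) (hsf : Squarefree (Ideal.span {s}))
    (m : 𝓞 Y) (β : 𝓞 X) (hβ : β ^ 2 = algebraMap (𝓞 Y) (𝓞 X) m) (hn : ∀ y : Y, algebraMap Y X y ≠ β) (hm : IsCoprime m s)
    (x t : X) (ht : t ^ 2 = 2) (hx : x ^ 2 = 2 + t) : False := by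
  obtain ⟨τ, hτ1, hτ2, hfix⟩ := exists_invol h2
  obtain ⟨T, hT, hT2⟩ : ∃ T : Y, algebraMap Y X T = t ∧ T ^ 2 = 2 := by
    have hs' : ((s : 𝓞 Y) : Y) ^ 2 = 2 := sq_coe s hs
    have hS : (algebraMap Y X s) ^ 2 = 2 := by rw [← map_pow, hs', map_ofNat]
    rcases sq_eq_sq_iff_eq_or_eq_neg.1 (ht.trans hS.symm) with h | h
    · exact ⟨s, h.symm, hs'⟩
    · exact ⟨-s, by rw [h, map_neg], by rw [neg_sq, hs']⟩
  obtain ⟨A, B, hA, hB, h3⟩ := norm_form τ hτ2 hfix (β : X) _ (coe_sq hβ) hn x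
  have hb := coe_sq hβ
  have hAB : A * B = 0 := by
    by_contra hAB
    apply hn ((2 + T - A ^ 2 - B ^ 2 * m) / (2 * (A * B)))
    rw [map_div₀, div_eq_iff (by rw [Ne, FaithfulSMul.algebraMap_eq_zero_iff]; exact mul_ne_zero two_ne_zero hAB)]
    simp only [map_sub, map_add, map_mul, map_pow, map_ofNat]
    rw [hT]
    rw [hA] at hx
    linear_combination algebraMap Y X B ^ 2 * hb - hx
  rcases mul_eq_zero.1 hAB with h | h
  · refine two_add_not_square s hs hsf T hT2 1 m hm (B * m) ?_
    apply (algebraMap Y X).injective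
    rw [h] at hA
    simp only [map_add, map_mul, map_pow, map_ofNat, Units.val_one, map_one, hT]
    rw [hA] at hx
    simp only [map_zero, zero_add] at hx
    linear_combination algebraMap Y X m * hx - algebraMap Y X B ^ 2 * algebraMap Y X m * hb
  · refine two_add_not_square s hs hsf T hT2 1 1 isCoprime_one_left A ?_
    apply (algebraMap Y X).injective
    rw [h] at hA
    simp only [map_add, map_mul, map_pow, map_ofNat, Units.val_one, map_one, hT]
    rw [hA] at hx
    simp only [map_zero, zero_mul, add_zero] at hx
    linear_combination hx

end mm
end H15

/-! ### The class number relation -/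

namespace H15
open Filter Topology

section rel
variable {k K F ks P L : Type*} [Field k] [NumberField k] [Field K] [NumberField K] [Field F] [NumberField F]
  [Field ks] [NumberField ks] [Field P] [NumberField P] [Field L] [NumberField L]
  [Algebra k K] [Algebra F ks] [Algebra P L] [IsTotallyReal k] [IsTotallyReal F] [IsTotallyReal P]
  [IsCMField K] [IsCMField ks] [IsCMField L]

/-- The relation of zeta residues after inserting the class number formulas for the three CM fields, in
squared form to clear the square roots of the discriminants. -/
lemma nat_rel (hK : Module.finrank k K = 2) (hks : Module.finrank F ks = 2) (hL : Module.finrank P L = 2)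
    (nk : Module.finrank ℚ k = 2) (nF : Module.finrank ℚ F = 4) (nP : Module.finrank ℚ P = 8)
    (hρ : dedekindZeta_residue L * dedekindZeta_residue F * dedekindZeta_residue k ^ 2 =
      dedekindZeta_residue P * dedekindZeta_residue ks * dedekindZeta_residue K ^ 2) :
    classNumber L ^ 2 * (discr P).natAbs * mm ks ^ 2 * classNumber F ^ 2 * (discr ks).natAbs * 16 * mm K ^ 4 *
      classNumber k ^ 4 * (discr K).natAbs ^ 2 =
    classNumber ks ^ 2 * (discr F).natAbs * classNumber K ^ 4 * (discr k).natAbs ^ 2 * mm L ^ 2 *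
      classNumber P ^ 2 * (discr L).natAbs := by
  have e1 := cm_residue P L hL
  have e2 := cm_residue F ks hks
  have e3 := cm_residue k K hK
  rw [nP] at e1
  rw [nF] at e2
  rw [nk] at e3
  have p1 := dedekindZeta_residue_pos P
  have p2 := dedekindZeta_residue_pos ks
  have p3 := dedekindZeta_residue_pos K
  have sq : ∀ n : ℤ, √|(n : ℝ)| ^ 2 = (n.natAbs : ℝ) := by
    intro n
    rw [Real.sq_sqrt (abs_nonneg _), Nat.cast_natAbs, Int.cast_abs]
  have q1 := sq (discr P)
  have q2 := sq (discr L)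
  have q3 := sq (discr F)
  have q4 := sq (discr ks)
  have q5 := sq (discr k)
  have q6 := sq (discr K)
  generalize √|(discr P : ℝ)| = x1 at *
  generalize √|(discr L : ℝ)| = x2 at *
  generalize √|(discr F : ℝ)| = x3 at *
  generalize √|(discr ks : ℝ)| = x4 at *
  generalize √|(discr k : ℝ)| = x5 at *
  generalize √|(discr K : ℝ)| = x6 at *
  generalize dedekindZeta_residue P = rP at *
  generalize dedekindZeta_residue L = rL at *
  generalize dedekindZeta_residue F = rF at *
  generalize dedekindZeta_residue ks = rks at *
  generalize dedekindZeta_residue k = rk at *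
  generalize dedekindZeta_residue K = rK at *
  have hpi : (2 * Real.pi) ≠ 0 := by positivity
  generalize 2 * Real.pi = ϖ at *
  have key : (classNumber L * x1) * (2 * mm ks * classNumber F * x4) * (2 * mm K * classNumber k * x6) ^ 2 =
      (2 * mm L * classNumber P * x2) * (classNumber ks * x3) * (classNumber K * x5) ^ 2 := by
    have h0 : rP * rks * rK ^ 2 * ϖ ^ 8 ≠ 0 := by positivity
    apply mul_left_cancel₀ h0
    calc _ = (rP * (ϖ ^ 8 * classNumber L * x1)) * (rks * (2 * mm ks * classNumber F * x4)) * (rK * (2 * mm K * classNumber k * x6)) ^ 2 := by ring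
      _ = (rL * rF * rk ^ 2) * ((2 * mm L * classNumber P * x2) * (classNumber ks * x3) * (classNumber K * x5) ^ 2) * ϖ ^ 8 := by
        rw [← e1, e2, e3]; ring
      _ = _ := by rw [hρ]; ring
  have key2 := congrArg (fun x ↦ x ^ 2 / 4) key
  have : ((classNumber L ^ 2 * (discr P).natAbs * mm ks ^ 2 * classNumber F ^ 2 * (discr ks).natAbs * 16 * mm K ^ 4 *
      classNumber k ^ 4 * (discr K).natAbs ^ 2 : ℕ) : ℝ) =
    ((classNumber ks ^ 2 * (discr F).natAbs * classNumber K ^ 4 * (discr k).natAbs ^ 2 * mm L ^ 2 *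
      classNumber P ^ 2 * (discr L).natAbs : ℕ) : ℝ) := by
    push_cast
    simp only [Nat.cast_natAbs, Int.cast_abs] at q1 q2 q3 q4 q5 q6 ⊢
    rw [← q1, ← q2, ← q3, ← q4, ← q5, ← q6]
    linear_combination key2
  exact_mod_cast this
end rel

/-- The two-adic valuation of `nat_rel`. -/
lemma val_rel {hL dP mks hF dks mK hk dK hks dF hK dk mL hP dL : ℕ}
    (h0 : hL ≠ 0 ∧ dP ≠ 0 ∧ mks ≠ 0 ∧ hF ≠ 0 ∧ dks ≠ 0 ∧ mK ≠ 0 ∧ hk ≠ 0 ∧ dK ≠ 0 ∧ hks ≠ 0 ∧ dF ≠ 0 ∧ hK ≠ 0 ∧ dk ≠ 0 ∧ mL ≠ 0 ∧ hP ≠ 0 ∧ dL ≠ 0)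
    (h : hL ^ 2 * dP * mks ^ 2 * hF ^ 2 * dks * 16 * mK ^ 4 * hk ^ 4 * dK ^ 2 =
      hks ^ 2 * dF * hK ^ 4 * dk ^ 2 * mL ^ 2 * hP ^ 2 * dL) :
    2 * padicValNat 2 hL + padicValNat 2 dP + 2 * padicValNat 2 mks + 2 * padicValNat 2 hF + padicValNat 2 dks + 4 + 4 * padicValNat 2 mK + 4 * padicValNat 2 hk + 2 * padicValNat 2 dK =
    2 * padicValNat 2 hks + padicValNat 2 dF + 4 * padicValNat 2 hK + 2 * padicValNat 2 dk + 2 * padicValNat 2 mL + 2 * padicValNat 2 hP + padicValNat 2 dL := by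
  obtain ⟨h1, h2, h3, h4, h5, h6, h7, h8, h9, h10, h11, h12, h13, h14, h15⟩ := h0
  have h16 : padicValNat 2 16 = 4 := by rw [show 16 = 2 ^ 4 by norm_num]; exact padicValNat.prime_pow 4
  have e := congrArg (padicValNat 2) h
  repeat rw [padicValNat.mul (by positivity) (by positivity)] at e
  simp only [padicValNat.pow, h16] at e
  omega
end H15

/-! ### Subfields of ℂ -/

namespace H15
open Filter Topology

section sub

/-- For subfields `A ≤ B` of `ℂ`, the inclusion as an algebra structure, found through `Fact`. -/
instance incAlg (A B : IntermediateField ℚ ℂ) [h : Fact (A ≤ B)] : Algebra A B :=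
  (IntermediateField.inclusion h.out).toRingHom.toAlgebra

instance incTower (A B C : IntermediateField ℚ ℂ) [Fact (A ≤ B)] [Fact (B ≤ C)] [Fact (A ≤ C)] : IsScalarTower A B C :=
  IsScalarTower.of_algebraMap_eq fun _ ↦ rfl

instance incTowerQ (A B : IntermediateField ℚ ℂ) [Fact (A ≤ B)] : IsScalarTower ℚ A B :=
  IsScalarTower.of_algebraMap_eq fun _ ↦ rfl

lemma alg_coe (A B : IntermediateField ℚ ℂ) [Fact (A ≤ B)] (x : A) : ((algebraMap A B x : B) : ℂ) = x := rfl

lemma numberField_adjoin (S : Set ℂ) [Finite S] (h : ∀ x ∈ S, IsIntegral ℚ x) : NumberField (IntermediateField.adjoin ℚ S) where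
  to_charZero := inferInstance
  to_finiteDimensional := finiteDimensional_adjoin h

lemma finrank_adjoin_sq {F : Type*} [Field F] [Algebra F ℂ] (x : ℂ) (m : F) (hx : x ^ 2 = algebraMap F ℂ m) (hn : ∀ y : F, algebraMap F ℂ y ≠ x) :
    Module.finrank F F⟮x⟯ = 2 := by
  have hint : IsIntegral F x := IsIntegral.of_pow (n := 2) (by norm_num) (by rw [hx]; exact isIntegral_algebraMap)
  have h1 : Module.finrank F F⟮x⟯ ≠ 1 := by
    rw [Ne, finrank_adjoin_simple_eq_one_iff, IntermediateField.mem_bot]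
    rintro ⟨y, hy⟩
    exact hn y hy
  rw [adjoin.finrank hint] at h1 ⊢
  have h2 : (minpoly F x).natDegree ≤ 2 := by
    have hp0 : (Polynomial.X ^ 2 - Polynomial.C m) ≠ 0 := Polynomial.X_pow_sub_C_ne_zero (by norm_num) m
    refine (Polynomial.natDegree_le_of_dvd (minpoly.dvd F x ?_) hp0).trans (by simp)
    simp [hx]
  have h3 := minpoly.natDegree_pos hint
  omega

/-- `B = A(x)` with `x² ∈ A` and `x ∉ A` is quadratic over `A`. -/
lemma finrank_quad (A B : IntermediateField ℚ ℂ) [h : Fact (A ≤ B)] (x : ℂ) (hxB : x ∈ B) (hx : x ∉ A) (hx2 : x ^ 2 ∈ A)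
    (hB : ∀ C : IntermediateField ℚ ℂ, A ≤ C → x ∈ C → B ≤ C) : Module.finrank A B = 2 := by
  have e : extendScalars h.out = A⟮x⟯ := by
    apply le_antisymm
    · intro y hy
      rw [mem_extendScalars] at hy
      have := hB (IntermediateField.restrictScalars ℚ A⟮x⟯) (fun y hy ↦ A⟮x⟯.algebraMap_mem ⟨y, hy⟩) (mem_adjoin_simple_self A x) hy
      exact this
    · rw [adjoin_simple_le_iff, mem_extendScalars]
      exact hxB
  let l : B ≃ₗ[A] (extendScalars h.out : IntermediateField A ℂ) :=
    { toFun := fun y ↦ ⟨y.1, y.2⟩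
      invFun := fun y ↦ ⟨y.1, y.2⟩
      map_add' := fun _ _ ↦ rfl
      map_smul' := fun _ _ ↦ rfl
      left_inv := fun _ ↦ rfl
      right_inv := fun _ ↦ rfl }
  rw [l.finrank_eq, e]
  refine finrank_adjoin_sq x (⟨x ^ 2, hx2⟩ : A) rfl ?_
  rintro y rfl
  exact hx y.2

/-- Kummer theory: the square classes of `A` that become squares in `B = A(x)` are those of `1` and `x²`. -/
lemma kummer (A B : IntermediateField ℚ ℂ) [Fact (A ≤ B)] [NumberField A] [NumberField B] (h2 : Module.finrank A B = 2) (x y : ℂ)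
    (hxB : x ∈ B) (hx : x ∉ A) (hx2 : x ^ 2 ∈ A) (hyB : y ∈ B) (hy2 : y ^ 2 ∈ A) : y ∈ A ∨ y * x ∈ A := by
  obtain ⟨τ, hτ1, hτ2, hfix⟩ := exists_invol h2
  obtain ⟨u, v, h, -, -⟩ := norm_form τ hτ2 hfix (⟨x, hxB⟩ : B) (⟨x ^ 2, hx2⟩ : A) rfl (fun w hw ↦ hx (by
    have := congrArg Subtype.val hw
    simp only [alg_coe] at this
    rw [← this]; exact w.2)) ⟨y, hyB⟩
  have h' : y = u + v * x := congrArg Subtype.val h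
  by_cases hu : (u : ℂ) = 0
  · right
    rw [h', hu, zero_add, mul_assoc, ← sq]
    exact mul_mem v.2 hx2
  by_cases hv : (v : ℂ) = 0
  · left
    rw [h', hv, zero_mul, add_zero]
    exact u.2
  · exfalso
    apply hx
    have : x = (y ^ 2 - u ^ 2 - v ^ 2 * x ^ 2) / (2 * u * v) := by
      rw [h']; field_simp; ring
    rw [this]
    exact div_mem (sub_mem (sub_mem hy2 (pow_mem u.2 2)) (mul_mem (pow_mem v.2 2) hx2)) (mul_mem (mul_mem (ofNat_mem A 2) u.2) v.2)

/-- The ring of integers of a subfield of `ℂ`, embedded in `ℂ`. -/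
def toC (A : IntermediateField ℚ ℂ) : 𝓞 A →+* ℂ := A.val.toRingHom.comp (algebraMap (𝓞 A) A)

lemma toC_inj {A : IntermediateField ℚ ℂ} {x y : 𝓞 A} (h : toC A x = toC A y) : x = y :=
  RingOfIntegers.coe_injective (Subtype.val_injective h)

/-- An integral complex number, as an element of the ring of integers of a subfield containing it. -/
def el (A : IntermediateField ℚ ℂ) (x : ℂ) (hx : x ∈ A) (hi : IsIntegral ℤ x) : 𝓞 A :=
  ⟨⟨x, hx⟩, by
    have : IsIntegral ℤ (algebraMap A ℂ ⟨x, hx⟩) := hi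
    exact (isIntegral_algebraMap_iff (FaithfulSMul.algebraMap_injective A ℂ)).1 this⟩

@[simp] lemma toC_el (A : IntermediateField ℚ ℂ) (x : ℂ) (hx : x ∈ A) (hi : IsIntegral ℤ x) : toC A (el A x hx hi) = x := rfl

@[simp] lemma toC_alg (A B : IntermediateField ℚ ℂ) [Fact (A ≤ B)] (y : 𝓞 A) : toC B (algebraMap (𝓞 A) (𝓞 B) y) = toC A y := rfl

lemma el_ne (A B : IntermediateField ℚ ℂ) [Fact (A ≤ B)] (x : ℂ) (hx : x ∈ B) (hi : IsIntegral ℤ x) (hA : x ∉ A) (y : A) :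
    algebraMap A B y ≠ (el B x hx hi : 𝓞 B) := by
  intro h
  have : (y : ℂ) = x := congrArg Subtype.val h
  exact hA (this ▸ y.2)

end sub
end H15

/-! ### The concrete fields -/

namespace H15
open Filter Topology

section fields

/-- `√2` -/
def qa : ℂ := (Real.sqrt 2 : ℂ)
/-- `√p` -/
def qb (p : ℕ) : ℂ := (Real.sqrt p : ℂ)
/-- `√π` -/
def qr (c d : ℤ) : ℂ := (Real.sqrt (piR c d) : ℂ)

/-- `ℚ(√2)` -/
def fk : IntermediateField ℚ ℂ := IntermediateField.adjoin ℚ {qa}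
/-- `ℚ(√2, √p)` -/
def fF (p : ℕ) : IntermediateField ℚ ℂ := IntermediateField.adjoin ℚ {qa, qb p}
/-- `ℚ(√2, √π)` -/
def fE (c d : ℤ) : IntermediateField ℚ ℂ := IntermediateField.adjoin ℚ {qa, qr c d}
/-- `ℚ(√2, √π, √p)`, the maximal real subfield of `L` -/
def fP (p : ℕ) (c d : ℤ) : IntermediateField ℚ ℂ := IntermediateField.adjoin ℚ {qa, qr c d, qb p}
/-- `ℚ(√2, √π, i)` -/
def fM (c d : ℤ) : IntermediateField ℚ ℂ := IntermediateField.adjoin ℚ {qa, qr c d, I}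
/-- `ℚ(√2, √-π, √p)` -/
def fN (p : ℕ) (z : ℂ) : IntermediateField ℚ ℂ := IntermediateField.adjoin ℚ {qa, z, qb p}

lemma kstar_eq (p : ℕ) : kstar p = IntermediateField.adjoin ℚ {qa, qb p, I} := rfl
lemma Lfield_eq (p : ℕ) (c d : ℤ) : Lfield p c d = IntermediateField.adjoin ℚ {qa, qr c d, qb p, I} := rfl
lemma Qmpi_eq (z : ℂ) : Qmpi z = IntermediateField.adjoin ℚ {z} := rfl

/-- The standing hypotheses; `z` is a square root of `-π`. -/
class Hyp (p : outParam ℕ) (c d : outParam ℤ) (z : ℂ) : Prop where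
  hp : p.Prime
  hp8 : p % 8 = 1
  hc : 0 < c
  hd : d ≠ 0
  hcd : (p : ℤ) = c ^ 2 - 32 * d ^ 2
  hz : z ^ 2 = -pE c d qa

lemma qa_sq : qa ^ 2 = 2 := by
  rw [qa, ← ofReal_pow, Real.sq_sqrt (by norm_num)]; norm_num
lemma qb_sq (p : ℕ) : qb p ^ 2 = p := by
  rw [qb, ← ofReal_pow, Real.sq_sqrt (by positivity)]; norm_num

lemma sqI' : (I : ℂ) ^ 2 = -1 := I_sq

lemma int_of_sq {x y : ℂ} (h : x ^ 2 = y) (hy : IsIntegral ℤ y) : IsIntegral ℤ x :=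
  IsIntegral.of_pow (n := 2) (by norm_num) (by rw [h]; exact hy)
lemma qa_int : IsIntegral ℤ qa := int_of_sq qa_sq (by simpa using isIntegral_algebraMap (R := ℤ) (A := ℂ) (x := 2))
lemma qb_int (p : ℕ) : IsIntegral ℤ (qb p) := int_of_sq (qb_sq p) (by simpa using isIntegral_algebraMap (R := ℤ) (A := ℂ) (x := p))
lemma int_pE (c d : ℤ) : IsIntegral ℤ (pE c d qa) := by
  have h : ∀ n : ℤ, IsIntegral ℤ (n : ℂ) := fun n ↦ isIntegral_algebraMap (R := ℤ) (A := ℂ) (x := n)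
  have h4 : IsIntegral ℤ (4 : ℂ) := by simpa using h 4
  exact (h c).add ((h4.mul (h d)).mul qa_int)
lemma I_int : IsIntegral ℤ I := int_of_sq sqI' isIntegral_one.neg

lemma piR_eq (c d : ℤ) : ((piR c d : ℝ) : ℂ) = pE c d qa := by
  simp [piR, pE, qa]


lemma qr_sq {p : ℕ} {c d : ℤ} (z : ℂ) [hy : Hyp p c d z] : qr c d ^ 2 = pE c d qa := by
  rw [← piR_eq, qr, ← ofReal_pow, Real.sq_sqrt]
  have := pE_pos (d := d) hy.hp hy.hcd hy.hc (Real.sqrt 2) (Real.sq_sqrt (by norm_num))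
  exact this.le

lemma qr_int {p : ℕ} {c d : ℤ} (z : ℂ) [hy : Hyp p c d z] : IsIntegral ℤ (qr c d) := int_of_sq (qr_sq z) (int_pE c d)
lemma z_int {p : ℕ} {c d : ℤ} (z : ℂ) [hy : Hyp p c d z] : IsIntegral ℤ z := int_of_sq hy.hz (int_pE c d).neg
lemma p_ne {p : ℕ} {c d : ℤ} (z : ℂ) [hy : Hyp p c d z] : (p : ℂ) ≠ 0 := by exact_mod_cast hy.hp.ne_zero
lemma pp {p : ℕ} {c d : ℤ} (z : ℂ) [hy : Hyp p c d z] : pE c d qa * pE c (-d) qa = p := pE_mul hy.hcd qa qa_sq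
lemma pE_ne {p : ℕ} {c d : ℤ} (z : ℂ) [hy : Hyp p c d z] : pE c d qa ≠ 0 := left_ne_zero_of_mul (by rw [pp z]; exact p_ne z)
lemma z_ne {p : ℕ} {c d : ℤ} (z : ℂ) [hy : Hyp p c d z] : z ≠ 0 := by
  intro h
  have := hy.hz
  rw [h] at this
  exact pE_ne z (by rw [← neg_eq_zero, ← this]; norm_num)
lemma qr_ne {p : ℕ} {c d : ℤ} (z : ℂ) [hy : Hyp p c d z] : qr c d ≠ 0 := by
  intro h
  have := qr_sq z
  rw [h] at this
  exact pE_ne z (by rw [← this]; norm_num)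
/-- `√p / √-π` is a square root of `-π'`. -/
lemma z'_sq {p : ℕ} {c d : ℤ} (z : ℂ) [hy : Hyp p c d z] : (qb p / z) ^ 2 = -pE c (-d) qa := by
  rw [div_pow, qb_sq, hy.hz, ← pp z, div_eq_iff (neg_ne_zero.2 (pE_ne z))]; ring
lemma r'_sq {p : ℕ} {c d : ℤ} (z : ℂ) [hy : Hyp p c d z] : (qb p / qr c d) ^ 2 = pE c (-d) qa := by
  rw [div_pow, qb_sq, qr_sq z, ← pp z, div_eq_iff (pE_ne z)]; ring
lemma zI {p : ℕ} {c d : ℤ} (z : ℂ) [hy : Hyp p c d z] : z * I = qr c d ∨ z * I = -qr c d := by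
  apply sq_eq_sq_iff_eq_or_eq_neg.1
  rw [mul_pow, hy.hz, sqI', qr_sq z]; ring
lemma z'_int {p : ℕ} {c d : ℤ} (z : ℂ) [hy : Hyp p c d z] : IsIntegral ℤ (qb p / z) := int_of_sq (z'_sq z) (int_pE c _).neg
lemma r'_int {p : ℕ} {c d : ℤ} (z : ℂ) [hy : Hyp p c d z] : IsIntegral ℤ (qb p / qr c d) := int_of_sq (r'_sq z) (int_pE c _)

lemma hcd' {p : ℕ} {c d : ℤ} (z : ℂ) [hy : Hyp p c d z] : (p : ℤ) = c ^ 2 - 32 * (-d) ^ 2 := by rw [neg_sq]; exact hy.hcd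

end fields
end H15

/-! ### Inclusions -/

namespace H15
open Filter Topology

section mem

lemma ad_le {S : Set ℂ} {C : IntermediateField ℚ ℂ} : IntermediateField.adjoin ℚ S ≤ C ↔ ∀ x ∈ S, x ∈ C :=
  IntermediateField.adjoin_le_iff

lemma mem_of_ad {S : Set ℂ} {x : ℂ} (h : x ∈ S) : x ∈ IntermediateField.adjoin ℚ S := IntermediateField.subset_adjoin ℚ S h

lemma fk_le {C : IntermediateField ℚ ℂ} : fk ≤ C ↔ qa ∈ C := by
  simp [fk, ad_le]
lemma fF_le {p : ℕ} {C : IntermediateField ℚ ℂ} : fF p ≤ C ↔ qa ∈ C ∧ qb p ∈ C := by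
  simp only [fF, ad_le, Set.mem_insert_iff, Set.mem_singleton_iff, forall_eq_or_imp, forall_eq]
lemma fE_le {c d : ℤ} {C : IntermediateField ℚ ℂ} : fE c d ≤ C ↔ qa ∈ C ∧ qr c d ∈ C := by
  simp only [fE, ad_le, Set.mem_insert_iff, Set.mem_singleton_iff, forall_eq_or_imp, forall_eq]
lemma fP_le {p : ℕ} {c d : ℤ} {C : IntermediateField ℚ ℂ} : fP p c d ≤ C ↔ qa ∈ C ∧ qr c d ∈ C ∧ qb p ∈ C := by
  simp only [fP, ad_le, Set.mem_insert_iff, Set.mem_singleton_iff, forall_eq_or_imp, forall_eq]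
lemma fM_le {c d : ℤ} {C : IntermediateField ℚ ℂ} : fM c d ≤ C ↔ qa ∈ C ∧ qr c d ∈ C ∧ I ∈ C := by
  simp only [fM, ad_le, Set.mem_insert_iff, Set.mem_singleton_iff, forall_eq_or_imp, forall_eq]
lemma fN_le {p : ℕ} {z : ℂ} {C : IntermediateField ℚ ℂ} : fN p z ≤ C ↔ qa ∈ C ∧ z ∈ C ∧ qb p ∈ C := by
  simp only [fN, ad_le, Set.mem_insert_iff, Set.mem_singleton_iff, forall_eq_or_imp, forall_eq]
lemma ks_le {p : ℕ} {C : IntermediateField ℚ ℂ} : kstar p ≤ C ↔ qa ∈ C ∧ qb p ∈ C ∧ I ∈ C := by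
  simp only [kstar_eq, ad_le, Set.mem_insert_iff, Set.mem_singleton_iff, forall_eq_or_imp, forall_eq]
lemma L_le {p : ℕ} {c d : ℤ} {C : IntermediateField ℚ ℂ} : Lfield p c d ≤ C ↔ qa ∈ C ∧ qr c d ∈ C ∧ qb p ∈ C ∧ I ∈ C := by
  simp only [Lfield_eq, ad_le, Set.mem_insert_iff, Set.mem_singleton_iff, forall_eq_or_imp, forall_eq]
lemma K_le {z : ℂ} {C : IntermediateField ℚ ℂ} : Qmpi z ≤ C ↔ z ∈ C := by
  simp [Qmpi_eq, ad_le]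

variable (p : ℕ) (c d : ℤ) (z : ℂ)

lemma aF : qa ∈ fF p := (fF_le.1 le_rfl).1
lemma bF : qb p ∈ fF p := (fF_le.1 le_rfl).2
lemma aE : qa ∈ fE c d := (fE_le.1 le_rfl).1
lemma rE : qr c d ∈ fE c d := (fE_le.1 le_rfl).2
lemma aP : qa ∈ fP p c d := (fP_le.1 le_rfl).1
lemma rP : qr c d ∈ fP p c d := (fP_le.1 le_rfl).2.1
lemma bP : qb p ∈ fP p c d := (fP_le.1 le_rfl).2.2
lemma aM : qa ∈ fM c d := (fM_le.1 le_rfl).1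
lemma rM : qr c d ∈ fM c d := (fM_le.1 le_rfl).2.1
lemma iMm : I ∈ fM c d := (fM_le.1 le_rfl).2.2
lemma aN : qa ∈ fN p z := (fN_le.1 le_rfl).1
lemma zN : z ∈ fN p z := (fN_le.1 le_rfl).2.1
lemma bN : qb p ∈ fN p z := (fN_le.1 le_rfl).2.2
lemma aks : qa ∈ kstar p := (ks_le.1 le_rfl).1
lemma bks : qb p ∈ kstar p := (ks_le.1 le_rfl).2.1
lemma iks : I ∈ kstar p := (ks_le.1 le_rfl).2.2
lemma aL : qa ∈ Lfield p c d := (L_le.1 le_rfl).1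
lemma rL : qr c d ∈ Lfield p c d := (L_le.1 le_rfl).2.1
lemma bL : qb p ∈ Lfield p c d := (L_le.1 le_rfl).2.2.1
lemma iL : I ∈ Lfield p c d := (L_le.1 le_rfl).2.2.2
lemma ak : qa ∈ fk := fk_le.1 le_rfl
lemma zK : z ∈ Qmpi z := K_le.1 le_rfl

instance : Fact (fk ≤ fF p) := ⟨fk_le.2 (aF p)⟩
instance : Fact (fk ≤ fE c d) := ⟨fk_le.2 (aE c d)⟩
instance : Fact (fk ≤ fN p z) := ⟨fk_le.2 (aN p z)⟩
instance : Fact (fF p ≤ fP p c d) := ⟨fF_le.2 ⟨aP p c d, bP p c d⟩⟩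
instance : Fact (fF p ≤ kstar p) := ⟨fF_le.2 ⟨aks p, bks p⟩⟩
instance : Fact (fF p ≤ fN p z) := ⟨fF_le.2 ⟨aN p z, bN p z⟩⟩
instance : Fact (fF p ≤ Lfield p c d) := ⟨fF_le.2 ⟨aL p c d, bL p c d⟩⟩
instance : Fact (fE c d ≤ fP p c d) := ⟨fE_le.2 ⟨aP p c d, rP p c d⟩⟩
instance : Fact (fP p c d ≤ Lfield p c d) := ⟨fP_le.2 ⟨aL p c d, rL p c d, bL p c d⟩⟩
instance : Fact (kstar p ≤ Lfield p c d) := ⟨ks_le.2 ⟨aL p c d, bL p c d, iL p c d⟩⟩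
instance : Fact (Qmpi z ≤ fN p z) := ⟨K_le.2 (zN p z)⟩
instance : Fact (Qmpi (qb p / z) ≤ fN p z) := ⟨K_le.2 (div_mem (bN p z) (zN p z))⟩

variable {p c d}

lemma pE_mem {A : IntermediateField ℚ ℂ} (h : qa ∈ A) (c d : ℤ) : pE c d qa ∈ A :=
  add_mem (intCast_mem A c) (mul_mem (mul_mem (by simpa using intCast_mem A 4) (intCast_mem A d)) h)

lemma aK [hy : Hyp p c d z] : qa ∈ Qmpi z := by
  have hd : (4 * (d : ℂ)) ≠ 0 := by
    have := hy.hd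
    simpa using this
  have h : qa = (-z ^ 2 - c) / (4 * d) := by
    rw [hy.hz, eq_div_iff hd, pE]; ring
  rw [h]
  have hz := zK z
  exact div_mem (sub_mem (neg_mem (pow_mem hz 2)) (intCast_mem _ c)) (mul_mem (by simpa using intCast_mem (Qmpi z) 4) (intCast_mem _ d))

instance [hy : Hyp p c d z] : Fact (fk ≤ Qmpi z) := ⟨fk_le.2 (aK z)⟩

/-- From `z i = ± √π`: any two of `z`, `i`, `√π` generate the third. -/
lemma z_of [hy : Hyp p c d z] {A : IntermediateField ℚ ℂ} (hr : qr c d ∈ A) (hi : I ∈ A) : z ∈ A := by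
  have h : z = -((z * I) * I) := by linear_combination z * sqI'
  rw [h]
  rcases zI z with e | e <;> rw [e]
  · exact neg_mem (mul_mem hr hi)
  · exact neg_mem (mul_mem (neg_mem hr) hi)
lemma r_of [hy : Hyp p c d z] {A : IntermediateField ℚ ℂ} (h : z * I ∈ A) : qr c d ∈ A := by
  rcases zI z with e | e
  · rwa [← e]
  · rw [← neg_neg (qr c d), ← e]; exact neg_mem h
lemma i_of [hy : Hyp p c d z] {A : IntermediateField ℚ ℂ} (hr : qr c d ∈ A) (hz : z ∈ A) : I ∈ A := by
  have h : I = (z * I) / z := by rw [mul_div_cancel_left₀ _ (z_ne z)]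
  rw [h]
  rcases zI z with e | e <;> rw [e]
  · exact div_mem hr hz
  · exact div_mem (neg_mem hr) hz

instance [hy : Hyp p c d z] : Fact (fN p z ≤ Lfield p c d) := ⟨fN_le.2 ⟨aL p c d, z_of z (rL p c d) (iL p c d), bL p c d⟩⟩
instance [hy : Hyp p c d z] : Fact (Qmpi z ≤ fM c d) := ⟨K_le.2 (z_of z (rM c d) (iMm c d))⟩

/-- The conjugate data: `π' = c - 4d√2` and `√p / z`, a square root of `-π'`. -/
lemma Hyp.conj [hy : Hyp p c d z] : Hyp p c (-d) (qb p / z) :=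
  ⟨hy.hp, hy.hp8, hy.hc, neg_ne_zero.2 hy.hd, hcd' z, z'_sq z⟩

lemma toQ {x : ℂ} (h : IsIntegral ℤ x) : IsIntegral ℚ x := h.tower_top

instance : NumberField fk := numberField_adjoin _ (by simpa using toQ qa_int)
instance : NumberField (fF p) := numberField_adjoin _ (by simpa using ⟨toQ qa_int, toQ (qb_int p)⟩)
instance : NumberField (kstar p) := by
  rw [kstar_eq]; exact numberField_adjoin _ (by simpa using ⟨toQ qa_int, toQ (qb_int p), toQ I_int⟩)
instance [hy : Hyp p c d z] : NumberField (Qmpi z) := by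
  rw [Qmpi_eq]; exact numberField_adjoin _ (by simpa using toQ (z_int z))
instance [hy : Hyp p c d z] : NumberField (fN p z) := numberField_adjoin _ (by simpa using ⟨toQ qa_int, toQ (z_int z), toQ (qb_int p)⟩)
lemma qr_int0 (c d : ℤ) : IsIntegral ℤ (qr c d) := by
  by_cases h : 0 ≤ piR c d
  · exact int_of_sq (by rw [← piR_eq, qr, ← ofReal_pow, Real.sq_sqrt h]) (int_pE c d)
  · rw [qr, Real.sqrt_eq_zero_of_nonpos (not_le.1 h).le]
    simpa using isIntegral_zero
instance : NumberField (fE c d) := numberField_adjoin _ (by simpa using ⟨toQ qa_int, toQ (qr_int0 c d)⟩)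
instance : NumberField (fP p c d) := numberField_adjoin _ (by simpa using ⟨toQ qa_int, toQ (qr_int0 c d), toQ (qb_int p)⟩)
instance : NumberField (fM c d) := numberField_adjoin _ (by simpa using ⟨toQ qa_int, toQ (qr_int0 c d), toQ I_int⟩)
instance : NumberField (Lfield p c d) := by
  rw [Lfield_eq]; exact numberField_adjoin _ (by simpa using ⟨toQ qa_int, toQ (qr_int0 c d), toQ (qb_int p), toQ I_int⟩)
end mem
end H15

/-! ### Degrees -/

namespace H15
open Filter Topology

section notmem

/-- The element `√2` of the ring of integers of a field containing it. -/
def es (A : IntermediateField ℚ ℂ) (h : qa ∈ A) : 𝓞 A := el A qa h qa_int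

lemma es_sq (A : IntermediateField ℚ ℂ) (h : qa ∈ A) : es A h ^ 2 = 2 :=
  toC_inj (by rw [map_pow, es, toC_el, qa_sq, map_ofNat])
lemma toC_es (A : IntermediateField ℚ ℂ) (h : qa ∈ A) : toC A (es A h) = qa := toC_el _ _ _ _
lemma toC_self (A : IntermediateField ℚ ℂ) (y : 𝓞 A) :
    toC A (@algebraMap (𝓞 A) (𝓞 A) _ _ (@inst_ringOfIntegersAlgebra A A _ _ (Algebra.id _)) y) = toC A y := rfl
lemma toC_pE (A : IntermediateField ℚ ℂ) (h : qa ∈ A) (c d : ℤ) : toC A (pE c d (es A h)) = pE c d qa := by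
  rw [map_pE, toC_es]
lemma alg_es (A B : IntermediateField ℚ ℂ) [Fact (A ≤ B)] (h : qa ∈ A) (h' : qa ∈ B) :
    algebraMap (𝓞 A) (𝓞 B) (es A h) = es B h' := toC_inj (by rw [toC_alg, toC_es, toC_es])

lemma qa_not : ∀ y : ℚ, algebraMap ℚ ℂ y ≠ qa := by
  intro y h
  have h1 : ((y : ℝ) : ℂ) = ((Real.sqrt 2 : ℝ) : ℂ) := by
    rw [← qa, ← h]; simp
  have h2 := ofReal_injective h1
  exact irrational_sqrt_two ⟨y, h2⟩

lemma fin_k : Module.finrank ℚ fk = 2 :=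
  finrank_adjoin_sq qa (2 : ℚ) (by rw [qa_sq]; simp) qa_not

variable {p : ℕ} {c d : ℤ} (z : ℂ)

lemma b_k [hy : Hyp p c d z] : qb p ∉ fk := fun h ↦
  F_not_mem (X := fk) fin_k (es fk ak) (es_sq _ _) hy.hp hy.hp8 hy.hcd (el fk (qb p) h (qb_int p))
    (toC_inj (by rw [map_pow, toC_el, qb_sq, map_natCast])) _ rfl
lemma r_k [hy : Hyp p c d z] : qr c d ∉ fk := fun h ↦
  E_not_mem (X := fk) fin_k (es fk ak) (es_sq _ _) hy.hp hy.hcd (el fk (qr c d) h (qr_int z))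
    (toC_inj (by rw [map_pow, toC_el, qr_sq z, toC_self, toC_pE])) _ rfl
lemma z_k [hy : Hyp p c d z] : z ∉ fk := fun h ↦
  K_not_mem (X := fk) fin_k (es fk ak) (es_sq _ _) hy.hp hy.hcd (el fk z h (z_int z))
    (toC_inj (by rw [map_pow, toC_el, hy.hz, toC_self, map_neg, toC_pE])) _ rfl
lemma r'_k [hy : Hyp p c d z] : qb p / qr c d ∉ fk := fun h ↦
  E_not_mem (X := fk) (d := -d) fin_k (es fk ak) (es_sq _ _) hy.hp (hcd' z) (el fk (qb p / qr c d) h (r'_int z))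
    (toC_inj (by rw [map_pow, toC_el, r'_sq z, toC_self, toC_pE])) _ rfl
lemma z'_k [hy : Hyp p c d z] : qb p / z ∉ fk := by
  haveI := Hyp.conj z
  exact z_k (qb p / z)

lemma b2 {A : IntermediateField ℚ ℂ} : qb p ^ 2 ∈ A := by rw [qb_sq]; exact _root_.natCast_mem A p
lemma r2 [hy : Hyp p c d z] {A : IntermediateField ℚ ℂ} (h : qa ∈ A) : qr c d ^ 2 ∈ A := by rw [qr_sq z]; exact pE_mem h c d
lemma z2 [hy : Hyp p c d z] {A : IntermediateField ℚ ℂ} (h : qa ∈ A) : z ^ 2 ∈ A := by rw [hy.hz]; exact neg_mem (pE_mem h c d)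
lemma i2 {A : IntermediateField ℚ ℂ} : I ^ 2 ∈ A := by rw [sqI']; exact neg_mem (one_mem A)

/-- `√2`, `√π` and `√p` are real. -/
lemma i_P : I ∉ fP p c d := by
  intro h
  have hle : fP p c d ≤ (IsScalarTower.toAlgHom ℚ ℝ ℂ).fieldRange :=
    fP_le.2 ⟨⟨_, rfl⟩, ⟨_, rfl⟩, ⟨_, rfl⟩⟩
  obtain ⟨x, hx⟩ := hle h
  have := congrArg Complex.im hx
  simp at this

lemma i_F : I ∉ fF p := fun h ↦ i_P (c := 1) (d := 1) (Fact.out (p := fF p ≤ fP p 1 1) h)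
lemma i_k : I ∉ fk := fun h ↦ i_F (p := 1) (Fact.out (p := fk ≤ fF 1) h)

/-- If `x² ∈ A`, then `x b ∈ A` would give `b / x = x b / x² ∈ A`. -/
lemma mul_not {A : IntermediateField ℚ ℂ} {x b : ℂ} (hx0 : x ≠ 0) (hx2 : x ^ 2 ∈ A) (h : b / x ∉ A) : x * b ∉ A := by
  intro hm
  apply h
  have : b / x = x * b / x ^ 2 := by field_simp
  rw [this]
  exact div_mem hm hx2

lemma fin_F [hy : Hyp p c d z] : Module.finrank fk (fF p) = 2 :=
  finrank_quad fk (fF p) (qb p) (bF p) (b_k z) b2 fun C h1 h2 ↦ fF_le.2 ⟨fk_le.1 h1, h2⟩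
lemma fin_E [hy : Hyp p c d z] : Module.finrank fk (fE c d) = 2 :=
  finrank_quad fk (fE c d) (qr c d) (rE c d) (r_k z) (r2 z ak) fun C h1 h2 ↦ fE_le.2 ⟨fk_le.1 h1, h2⟩
lemma fin_K [hy : Hyp p c d z] : Module.finrank fk (Qmpi z) = 2 :=
  finrank_quad fk (Qmpi z) z (zK z) (z_k z) (z2 z ak) fun C h1 h2 ↦ K_le.2 h2

lemma r_F [hy : Hyp p c d z] : qr c d ∉ fF p := fun h ↦
  (kummer fk (fF p) (fin_F z) (qb p) (qr c d) (bF p) (b_k z) b2 h (r2 z ak)).elim (r_k z) (mul_not (qr_ne z) (r2 z ak) (r'_k z))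
lemma z_F [hy : Hyp p c d z] : z ∉ fF p := fun h ↦
  (kummer fk (fF p) (fin_F z) (qb p) z (bF p) (b_k z) b2 h (z2 z ak)).elim (z_k z) (mul_not (z_ne z) (z2 z ak) (z'_k z))
lemma b_E [hy : Hyp p c d z] : qb p ∉ fE c d := fun h ↦
  (kummer fk (fE c d) (fin_E z) (qr c d) (qb p) (rE c d) (r_k z) (r2 z ak) h b2).elim (b_k z)
    (by rw [mul_comm]; exact mul_not (qr_ne z) (r2 z ak) (r'_k z))
lemma b_K [hy : Hyp p c d z] : qb p ∉ Qmpi z := fun h ↦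
  (kummer fk (Qmpi z) (fin_K z) z (qb p) (zK z) (z_k z) (z2 z ak) h b2).elim (b_k z)
    (by rw [mul_comm]; exact mul_not (z_ne z) (z2 z ak) (z'_k z))
lemma i_K [hy : Hyp p c d z] : I ∉ Qmpi z := fun h ↦
  (kummer fk (Qmpi z) (fin_K z) z I (zK z) (z_k z) (z2 z ak) h i2).elim i_k
    (by rw [mul_comm]; exact fun h ↦ r_k z (r_of z h))
lemma r_K [hy : Hyp p c d z] : qr c d ∉ Qmpi z := fun h ↦ i_K z (i_of z h (zK z))

lemma fin_P [hy : Hyp p c d z] : Module.finrank (fF p) (fP p c d) = 2 :=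
  finrank_quad _ _ (qr c d) (rP p c d) (r_F z) (r2 z (aF p)) fun C h1 h2 ↦
    fP_le.2 ⟨(fF_le.1 h1).1, h2, (fF_le.1 h1).2⟩
lemma fin_PE [hy : Hyp p c d z] : Module.finrank (fE c d) (fP p c d) = 2 :=
  finrank_quad _ _ (qb p) (bP p c d) (b_E z) b2 fun C h1 h2 ↦
    fP_le.2 ⟨(fE_le.1 h1).1, (fE_le.1 h1).2, h2⟩
lemma fin_ks : Module.finrank (fF p) (kstar p) = 2 :=
  finrank_quad _ _ I (iks p) i_F i2 fun C h1 h2 ↦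
    ks_le.2 ⟨(fF_le.1 h1).1, (fF_le.1 h1).2, h2⟩
lemma fin_N [hy : Hyp p c d z] : Module.finrank (fF p) (fN p z) = 2 :=
  finrank_quad _ _ z (zN p z) (z_F z) (z2 z (aF p)) fun C h1 h2 ↦
    fN_le.2 ⟨(fF_le.1 h1).1, h2, (fF_le.1 h1).2⟩
lemma fin_NK [hy : Hyp p c d z] : Module.finrank (Qmpi z) (fN p z) = 2 :=
  finrank_quad _ _ (qb p) (bN p z) (b_K z) b2 fun C h1 h2 ↦
    fN_le.2 ⟨h1 (aK z), K_le.1 h1, h2⟩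
lemma fin_M [hy : Hyp p c d z] : Module.finrank (Qmpi z) (fM c d) = 2 :=
  finrank_quad _ _ I (iMm c d) (i_K z) i2 fun C h1 h2 ↦
    fM_le.2 ⟨h1 (aK z), r_of z (mul_mem (K_le.1 h1) h2), h2⟩

lemma fin_NK' [hy : Hyp p c d z] [hy' : Hyp p c (-d) (qb p / z)] : Module.finrank (Qmpi (qb p / z)) (fN p z) = 2 :=
  finrank_quad _ _ (qb p) (bN p z) (b_K _) b2 fun C h1 h2 ↦ by
    refine fN_le.2 ⟨h1 (aK _), ?_, h2⟩
    have hb : qb p ≠ 0 := fun h ↦ b_k z (by rw [h]; exact zero_mem _)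
    have : z = qb p / (qb p / z) := by
      have := z_ne z
      field_simp
    rw [this]
    exact div_mem h2 (K_le.1 h1)
lemma z_K' [hy : Hyp p c d z] [hy' : Hyp p c (-d) (qb p / z)] : z ∉ Qmpi (qb p / z) := fun h ↦
  b_K (qb p / z) (by
    have : qb p = qb p / z * z := by rw [div_mul_cancel₀ _ (z_ne z)]
    have h' := mul_mem (zK (qb p / z)) h
    rwa [← this] at h')

lemma i_N [hy : Hyp p c d z] : I ∉ fN p z := fun h ↦
  (kummer _ _ (fin_N z) z I (zN p z) (z_F z) (z2 z (aF p)) h i2).elim i_F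
    (by rw [mul_comm]; exact fun h ↦ r_F z (r_of z h))
lemma r_N [hy : Hyp p c d z] : qr c d ∉ fN p z := fun h ↦ i_N z (i_of z h (zN p z))
lemma r_ks [hy : Hyp p c d z] : qr c d ∉ kstar p := fun h ↦
  (kummer _ _ fin_ks I (qr c d) (iks p) i_F i2 h (r2 z (aF p))).elim (r_F z)
    fun h ↦ z_F z (by
      have e : z = -(z * I) * I := by linear_combination z * sqI'
      rw [e]
      rcases zI z with e | e <;> rw [e]
      · rw [neg_mul]; exact neg_mem h
      · rwa [neg_neg])

lemma fin_L [hy : Hyp p c d z] : Module.finrank (fP p c d) (Lfield p c d) = 2 :=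
  finrank_quad _ _ I (iL p c d) i_P i2 fun C h1 h2 ↦
    L_le.2 ⟨(fP_le.1 h1).1, (fP_le.1 h1).2.1, (fP_le.1 h1).2.2, h2⟩
lemma fin_Lks [hy : Hyp p c d z] : Module.finrank (kstar p) (Lfield p c d) = 2 :=
  finrank_quad _ _ (qr c d) (rL p c d) (r_ks z) (r2 z (aks p)) fun C h1 h2 ↦
    L_le.2 ⟨(ks_le.1 h1).1, h2, (ks_le.1 h1).2.1, (ks_le.1 h1).2.2⟩
lemma fin_LN [hy : Hyp p c d z] : Module.finrank (fN p z) (Lfield p c d) = 2 :=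
  finrank_quad _ _ I (iL p c d) (i_N z) i2 fun C h1 h2 ↦
    L_le.2 ⟨(fN_le.1 h1).1, r_of z (mul_mem (fN_le.1 h1).2.1 h2), (fN_le.1 h1).2.2, h2⟩
lemma r'_not [hy : Hyp p c d z] {A : IntermediateField ℚ ℂ} (hr : qr c d ∈ A) (h : qb p ∉ A) : qb p / qr c d ∉ A := fun h' ↦
  h (by have := mul_mem h' hr; rwa [div_mul_cancel₀ _ (qr_ne z)] at this)
lemma r'_not' [hy : Hyp p c d z] {A : IntermediateField ℚ ℂ} (hb : qb p ∈ A) (h : qr c d ∉ A) : qb p / qr c d ∉ A := fun h' ↦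
  h (by
    have hb' : qb p ≠ 0 := fun h ↦ b_k z (by rw [h]; exact zero_mem _)
    have := div_mem hb h'; rwa [div_div_cancel₀ hb'] at this)

end notmem
end H15

/-! ### Zeta residues and signatures -/

namespace H15
open Filter Topology

section glob
variable {p : ℕ} {c d : ℤ} (z : ℂ)

lemma deg_K [hy : Hyp p c d z] : Module.finrank ℚ (Qmpi z) = 4 := by
  rw [← Module.finrank_mul_finrank ℚ fk (Qmpi z), fin_k, fin_K z]
lemma deg_F [hy : Hyp p c d z] : Module.finrank ℚ (fF p) = 4 := by
  rw [← Module.finrank_mul_finrank ℚ fk (fF p), fin_k, fin_F z]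
lemma deg_P [hy : Hyp p c d z] : Module.finrank ℚ (fP p c d) = 8 := by
  rw [← Module.finrank_mul_finrank ℚ (fF p) (fP p c d), deg_F z, fin_P z]

open Polynomial in
lemma minpoly_z [hy : Hyp p c d z] : minpoly ℚ z = X ^ 4 + C (2 * c : ℚ) * X ^ 2 + C (p : ℚ) := by
  have hi : IsIntegral ℚ z := toQ (z_int z)
  have hdeg : (minpoly ℚ z).natDegree = 4 := by
    rw [← adjoin.finrank hi]; exact deg_K z
  have hm : (X ^ 4 + C (2 * c : ℚ) * X ^ 2 + C (p : ℚ)).Monic := by monicity!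
  have hd : (X ^ 4 + C (2 * c : ℚ) * X ^ 2 + C (p : ℚ)).natDegree = 4 := by compute_degree!
  refine (eq_of_monic_of_dvd_of_natDegree_le (minpoly.monic hi) hm (minpoly.dvd ℚ z ?_) (by rw [hd, hdeg])).symm
  have h4 : z ^ 4 = pE c d qa ^ 2 := by
    have := hy.hz
    linear_combination (z ^ 2 - pE c d qa) * this
  have hp : (p : ℂ) = c ^ 2 - 32 * d ^ 2 := by exact_mod_cast congrArg (Int.cast : ℤ → ℂ) hy.hcd
  simp only [map_add, map_mul, map_pow, aeval_X, aeval_C, map_intCast, map_natCast, map_ofNat]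
  rw [h4, hy.hz, hp]
  have := qa_sq
  simp only [pE]
  linear_combination 16 * d ^ 2 * this

/-- The fields `ℚ(√(-π))` and `ℚ(√(-π'))` are generated by roots of the same irreducible polynomial. -/
lemma K_equiv [hy : Hyp p c d z] [hy' : Hyp p c (-d) (qb p / z)] : Nonempty (Qmpi z ≃+* Qmpi (qb p / z)) :=
  ⟨(minpoly.algEquiv (toQ (z_int z)).isAlgebraic ((minpoly_z z).trans (minpoly_z (qb p / z)).symm)).toRingEquiv⟩

/-- Distinctness of intermediate fields in the form used by `v4_zeta`. -/
lemma sep (A B D : IntermediateField ℚ ℂ) [Fact (A ≤ D)] [Fact (B ≤ D)] {x : ℂ} (hx : x ∈ A) (hB : x ∉ B) :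
    ∃ x : A, ∀ y : B, algebraMap B D y ≠ algebraMap A D x :=
  ⟨⟨x, hx⟩, fun y h ↦ hB (by
    have e : (y : ℂ) = x := congrArg Subtype.val h
    rw [← e]; exact y.2)⟩

/-- Zeta residues: `L/F` and `N/k` are Klein four extensions. -/
lemma residues [hy : Hyp p c d z] :
    dedekindZeta_residue (Lfield p c d) * dedekindZeta_residue (fF p) * dedekindZeta_residue fk ^ 2 =
      dedekindZeta_residue (fP p c d) * dedekindZeta_residue (kstar p) * dedekindZeta_residue (Qmpi z) ^ 2 := by
  haveI := Hyp.conj z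
  have h1 := v4_zeta (k := fF p) (K1 := fP p c d) (K2 := kstar p) (K3 := fN p z) (L := Lfield p c d)
    (fin_P z) fin_ks (fin_N z) (fin_L z) (fin_Lks z) (fin_LN z)
    (sep _ _ _ (rP p c d) (r_ks z))
    (sep _ _ _ (rP p c d) (r_N z))
    (sep _ _ _ (iks p) (i_N z))
  have h2 := v4_zeta (k := fk) (K1 := fF p) (K2 := Qmpi z) (K3 := Qmpi (qb p / z)) (L := fN p z)
    (fin_F z) (fin_K z) (fin_K _) (fin_N z) (fin_NK z) (fin_NK' z)
    (sep _ _ _ (bF p) (b_K z))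
    (sep _ _ _ (bF p) (b_K (qb p / z)))
    (sep _ _ _ (zK z) (z_K' z))
  obtain ⟨e⟩ := K_equiv z
  rw [← residue_congr e] at h2
  have hF : dedekindZeta_residue (fF p) ≠ 0 := dedekindZeta_residue_ne_zero _
  apply mul_right_cancel₀ hF
  linear_combination dedekindZeta_residue fk ^ 2 * h1 + dedekindZeta_residue (fP p c d) * dedekindZeta_residue (kstar p) * h2

lemma k_real : IsTotallyReal fk := base_real fin_k (es fk ak) (es_sq _ _)

/-- `√p` in a ring of integers -/
def eb (A : IntermediateField ℚ ℂ) (h : qb p ∈ A) : 𝓞 A := el A (qb p) h (qb_int p)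
lemma eb_sq (A : IntermediateField ℚ ℂ) (h : qb p ∈ A) : eb A h ^ 2 = (p : 𝓞 A) :=
  toC_inj (by rw [map_pow, eb, toC_el, qb_sq, map_natCast])
lemma eb_ne (A B : IntermediateField ℚ ℂ) [Fact (A ≤ B)] (h : qb p ∈ B) (hA : qb p ∉ A) (y : A) : algebraMap A B y ≠ eb B h :=
  el_ne A B _ _ _ hA y
lemma eb_sq' (A B : IntermediateField ℚ ℂ) [Fact (A ≤ B)] (h : qb p ∈ B) : eb B h ^ 2 = algebraMap (𝓞 A) (𝓞 B) (p : 𝓞 A) := by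
  rw [eb_sq, map_natCast]
/-- `√π` in a ring of integers -/
def er (A : IntermediateField ℚ ℂ) (h : qr c d ∈ A) : 𝓞 A := el A (qr c d) h (qr_int0 c d)
lemma er_sq [hy : Hyp p c d z] (A B : IntermediateField ℚ ℂ) [Fact (A ≤ B)] (h : qr c d ∈ B) (ha : qa ∈ A) :
    er B h ^ 2 = algebraMap (𝓞 A) (𝓞 B) (pE c d (es A ha)) :=
  toC_inj (by rw [map_pow, er, toC_el, qr_sq z, toC_alg, toC_pE])
lemma er_ne (A B : IntermediateField ℚ ℂ) [Fact (A ≤ B)] (h : qr c d ∈ B) (hA : qr c d ∉ A) (y : A) : algebraMap A B y ≠ er B h :=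
  el_ne A B _ _ _ hA y
/-- `√π' = √p / √π` in a ring of integers -/
def er' [hy : Hyp p c d z] (A : IntermediateField ℚ ℂ) (h : qb p / qr c d ∈ A) : 𝓞 A := el A (qb p / qr c d) h (r'_int z)
lemma er'_sq [hy : Hyp p c d z] (A B : IntermediateField ℚ ℂ) [Fact (A ≤ B)] (h : qb p / qr c d ∈ B) (ha : qa ∈ A) :
    er' z B h ^ 2 = algebraMap (𝓞 A) (𝓞 B) (pE c (-d) (es A ha)) :=
  toC_inj (by rw [map_pow, er', toC_el, r'_sq z, toC_alg, toC_pE])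
lemma er'_ne [hy : Hyp p c d z] (A B : IntermediateField ℚ ℂ) [Fact (A ≤ B)] (h : qb p / qr c d ∈ B) (hA : qb p / qr c d ∉ A) (y : A) :
    algebraMap A B y ≠ er' z B h :=
  el_ne A B _ _ _ hA y
/-- `√-π` in a ring of integers -/
def ez [hy : Hyp p c d z] (A : IntermediateField ℚ ℂ) (h : z ∈ A) : 𝓞 A := el A z h (z_int z)
lemma ez_sq [hy : Hyp p c d z] (A B : IntermediateField ℚ ℂ) [Fact (A ≤ B)] (h : z ∈ B) (ha : qa ∈ A) :
    ez z B h ^ 2 = algebraMap (𝓞 A) (𝓞 B) (-pE c d (es A ha)) :=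
  toC_inj (by rw [map_pow, ez, toC_el, hy.hz, toC_alg, map_neg, toC_pE])
lemma ez_ne [hy : Hyp p c d z] (A B : IntermediateField ℚ ℂ) [Fact (A ≤ B)] (h : z ∈ B) (hA : z ∉ A) (y : A) :
    algebraMap A B y ≠ ez z B h :=
  el_ne A B _ _ _ hA y
/-- `i` in a ring of integers -/
def ei (A : IntermediateField ℚ ℂ) (h : I ∈ A) : 𝓞 A := el A I h I_int
lemma ei_sq (A : IntermediateField ℚ ℂ) (h : I ∈ A) : ei A h ^ 2 = -1 :=
  toC_inj (by rw [map_pow, ei, toC_el, sqI', map_neg, map_one])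
lemma ei_ne (A B : IntermediateField ℚ ℂ) [Fact (A ≤ B)] (h : I ∈ B) (hA : I ∉ A) (y : A) :
    algebraMap A B y ≠ ei B h :=
  el_ne A B _ _ _ hA y

lemma F_tr [hy : Hyp p c d z] : IsTotallyReal (fF p) := by
  haveI := k_real
  exact F_real (Y := fk) (fin_F z) hy.hp (eb _ (bF p)) (eb_sq _ _) (eb_ne _ _ _ (b_k z))
lemma E_tr [hy : Hyp p c d z] : IsTotallyReal (fE c d) := by
  haveI := k_real
  exact E_real (Y := fk) (fin_E z) (es fk ak) (es_sq _ _) hy.hp hy.hcd hy.hc (er _ (rE c d)) (er_sq z _ _ _ _) (er_ne _ _ _ (r_k z))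
lemma P_tr [hy : Hyp p c d z] : IsTotallyReal (fP p c d) := by
  haveI := F_tr z
  exact E_real (Y := fF p) (fin_P z) (es _ (aF p)) (es_sq _ _) hy.hp hy.hcd hy.hc (er _ (rP p c d)) (er_sq z _ _ _ _) (er_ne _ _ _ (r_F z))

lemma tc_of_i (A : IntermediateField ℚ ℂ) [NumberField A] (h : I ∈ A) : IsTotallyComplex A :=
  totally_complex_of (Y := A) (X := A) (ei A h : 𝓞 A) (-1) (by
    rw [← cpow, ei_sq, cneg, cone]; simp) (by simp)
lemma K_tc [hy : Hyp p c d z] : IsTotallyComplex (Qmpi z) :=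
  K_complex (Y := fk) (es fk ak) (es_sq _ _) hy.hp hy.hcd hy.hc (ez z _ (zK z)) (ez_sq z _ _ _ _)

lemma K_cm [hy : Hyp p c d z] : IsCMField (Qmpi z) := by
  haveI := k_real; haveI := K_tc z; exact cm_of (fin_K z)
lemma ks_cm [hy : Hyp p c d z] : IsCMField (kstar p) := by
  haveI := F_tr z; haveI := tc_of_i _ (iks p); exact cm_of (Y := fF p) fin_ks
lemma L_cm [hy : Hyp p c d z] : IsCMField (Lfield p c d) := by
  haveI := P_tr z; haveI := tc_of_i _ (iL p c d); exact cm_of (fin_L z)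

end glob
end H15

/-! ### Two-adic valuations -/

namespace H15
open Filter Topology

section arith

lemma pE_one {R : Type*} [CommRing R] {c : ℤ} (hc : c % 4 = 1) (d : ℤ) (s : R) :
    pE c d s = 1 + 4 * (((c / 4 : ℤ) : R) + d * s) := by
  have h : c = 1 + 4 * (c / 4) := by omega
  have h' : (c : R) = 1 + 4 * ((c / 4 : ℤ) : R) := by exact_mod_cast congrArg (Int.cast : ℤ → R) h
  rw [pE, h']; ring

lemma pE_neg_one {R : Type*} [CommRing R] {c : ℤ} (hc : c % 4 = 3) (d : ℤ) (s : R) :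
    -pE c d s = 1 + 4 * (((-c / 4 : ℤ) : R) + (-d : ℤ) * s) := by
  rw [← pE_one (by omega)]
  simp only [pE, Int.cast_neg]; ring

lemma pE_cop {R : Type*} [CommRing R] {c : ℤ} (hc : c % 2 = 1) (d : ℤ) (s : R) (hs : s ^ 2 = 2) : IsCoprime (pE c d s) s := by
  have h : c = 1 + 2 * (c / 2) := by omega
  have h' : (c : R) = 1 + 2 * ((c / 2 : ℤ) : R) := by exact_mod_cast congrArg (Int.cast : ℤ → R) h
  refine ⟨1, -(s * ((c / 2 : ℤ) : R) + 4 * d), ?_⟩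
  rw [pE, h']
  linear_combination -((c / 2 : ℤ) : R) * hs

lemma val_eq {m n : ℕ} (h : 2 ^ n ∣ m) (h' : ¬ 2 ^ (n + 1) ∣ m) : padicValNat 2 m = n := by
  have hm : m ≠ 0 := by rintro rfl; exact h' (dvd_zero _)
  have h1 := (padicValNat_dvd_iff_le (p := 2) hm).1 h
  have h2 := mt (padicValNat_dvd_iff_le (p := 2) hm).2 h'
  omega

lemma val_odd {m : ℕ} (h' : ¬ 2 ∣ m) : padicValNat 2 m = 0 := padicValNat.eq_zero_of_not_dvd h'

end arith

section vals
variable {p : ℕ} {c d : ℤ} (z : ℂ)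

lemma p_odd [hy : Hyp p c d z] : Odd p := by
  have := hy.hp8
  exact Nat.odd_iff.2 (by omega)
lemma c_odd [hy : Hyp p c d z] : c % 2 = 1 := by
  have h1 := hy.hcd
  have h2 := hy.hp8
  rcases Int.emod_two_eq_zero_or_one c with h | h
  · exfalso
    obtain ⟨e, he⟩ := Int.dvd_of_emod_eq_zero h
    rw [he] at h1
    have : (p : ℤ) = 2 * (2 * e ^ 2 - 16 * d ^ 2) := by rw [h1]; ring
    omega
  · exact h

lemma pE_dvd [hy : Hyp p c d z] (A : IntermediateField ℚ ℂ) (h : qa ∈ A) : pE c d (es A h) ∣ ((p : ℕ) : 𝓞 A) :=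
  ⟨_, (pE_mul hy.hcd _ (es_sq A h)).symm⟩

/-- The 2-part of the discriminant of `B = A(√π)` with `π ≡ 1 (mod 4)`. -/
lemma disc_r [hy : Hyp p c d z] (hc4 : c % 4 = 1) (A B : IntermediateField ℚ ℂ) [NumberField A] [NumberField B] [Fact (A ≤ B)]
    (h2 : Module.finrank A B = 2) (ha : qa ∈ A) (hr : qr c d ∈ B) (hn : qr c d ∉ A) :
    padicValNat 2 (discr B).natAbs = 2 * padicValNat 2 (discr A).natAbs :=
  discr_odd h2 (er B hr) (pE c d (es A ha)) _ (er_sq z A B hr ha) (pE_one hc4 d _) (er_ne A B hr hn) p (p_odd z) (pE_dvd z A ha)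

/-- The 2-part of the discriminant of `B = A(√(-π))` with `-π ≡ 1 (mod 4)`. -/
lemma disc_z [hy : Hyp p c d z] (hc4 : c % 4 = 3) (A B : IntermediateField ℚ ℂ) [NumberField A] [NumberField B] [Fact (A ≤ B)]
    (h2 : Module.finrank A B = 2) (ha : qa ∈ A) (hr : z ∈ B) (hn : z ∉ A) :
    padicValNat 2 (discr B).natAbs = 2 * padicValNat 2 (discr A).natAbs :=
  discr_odd h2 (ez z B hr) (-pE c d (es A ha)) _ (ez_sq z A B hr ha) (pE_neg_one hc4 d _) (ez_ne z A B hr hn) p (p_odd z)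
    (neg_dvd.2 (pE_dvd z A ha))

/-- The 2-part of the discriminant of `B = A(√p)`. -/
lemma disc_b [hy : Hyp p c d z] (A B : IntermediateField ℚ ℂ) [NumberField A] [NumberField B] [Fact (A ≤ B)]
    (h2 : Module.finrank A B = 2) (hr : qb p ∈ B) (hn : qb p ∉ A) :
    padicValNat 2 (discr B).natAbs = 2 * padicValNat 2 (discr A).natAbs :=
  discr_odd h2 (eb B hr) p _ (eb_sq' A B hr) (p_four hy.hp8) (eb_ne A B hr hn) p (p_odd z) dvd_rfl

/-- `√2` is squarefree in `F`, since `F / ℚ(√2)` is unramified above two. -/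
lemma sqf_F [hy : Hyp p c d z] : Squarefree (Ideal.span {es (fF p) (aF p)}) := by
  have h0 : es fk ak ≠ 0 := fun h ↦ by
    have := es_sq fk ak
    rw [h] at this
    norm_num at this
  have h := sqfree_step (fin_F z) (es fk ak) h0 (sqfree_base fin_k _ (es_sq _ _)) (eb _ (bF p)) p _ (eb_sq' fk _ (bF p)) (p_four hy.hp8)
    (eb_ne _ _ _ (b_k z)) (by
      have := pE_cop (c := p) (by have := hy.hp8; omega) 0 (es fk ak) (es_sq _ _)
      simpa [pE] using this)
  rwa [alg_es fk (fF p) ak (aF p)] at h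

lemma v_mks [hy : Hyp p c d z] [IsTotallyReal (fF p)] [IsCMField (kstar p)] : padicValNat 2 (mm (kstar p)) = 2 :=
  val_eq (mm_four (Y := fF p) fin_ks (es _ (aF p)) (es_sq _ _) (ei _ (iks p) : 𝓞 (kstar p)) (by rw [← cpow, ei_sq, cneg, cone]))
    (mm_not_eight (Y := fF p) fin_ks (es _ (aF p)) (es_sq _ _) (sqf_F z))

lemma v_mK [hy : Hyp p c d z] [IsCMField (Qmpi z)] : padicValNat 2 (mm (Qmpi z)) = 0 :=
  val_odd (K_mm (fin_K z) fin_k (es fk ak) (es_sq _ _) hy.hp hy.hcd (ez z _ (zK z)) (ez_sq z _ _ _ _))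

/-- For `c ≡ 1 (mod 4)`, the extension `P / ℚ(√2)` is unramified above two, so `√2` is squarefree in `P`. -/
lemma v_mL_eq [hy : Hyp p c d z] (hc4 : c % 4 = 1) [IsTotallyReal (fP p c d)] [IsCMField (Lfield p c d)] : padicValNat 2 (mm (Lfield p c d)) = 2 := by
  have h0 : es (fF p) (aF p) ≠ 0 := fun h ↦ by
    have := es_sq (fF p) (aF p)
    rw [h] at this
    norm_num at this
  have h := sqfree_step (fin_P z) (es _ (aF p)) h0 (sqf_F z) (er _ (rP p c d)) _ _ (er_sq z (fF p) _ (rP p c d) (aF p)) (pE_one hc4 d _)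
    (er_ne _ _ _ (r_F z)) (pE_cop (by omega) d _ (es_sq _ _))
  rw [alg_es (fF p) (fP p c d) (aF p) (aP p c d)] at h
  exact val_eq (mm_four (fin_L z) (es _ (aP p c d)) (es_sq _ _) (ei _ (iL p c d) : 𝓞 (Lfield p c d)) (by rw [← cpow, ei_sq, cneg, cone]))
    (mm_not_eight (fin_L z) (es _ (aP p c d)) (es_sq _ _) h)

/-- An ideal with principal square is principal when the class number is odd. -/
lemma principal_of_sq {X : Type*} [Field X] [NumberField X] (hX : ¬ 2 ∣ classNumber X) (𝔭 : Ideal (𝓞 X)) (s : 𝓞 X) (hs : s ≠ 0)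
    (h : 𝔭 ^ 2 = Ideal.span {s}) : ∃ (α : 𝓞 X) (v : (𝓞 X)ˣ), α ^ 2 = s * v := by
  have h0 : 𝔭 ≠ 0 := by
    rintro rfl
    rw [zero_pow two_ne_zero] at h
    exact hs (Ideal.span_singleton_eq_bot.1 h.symm)
  let P : (Ideal (𝓞 X))⁰ := ⟨𝔭, mem_nonZeroDivisors_of_ne_zero h0⟩
  have h1 : ClassGroup.mk0 P ^ 2 = 1 := by
    rw [← map_pow, ClassGroup.mk0_eq_one_iff]
    refine ⟨s, ?_⟩
    simpa [P] using h
  have h2 : ClassGroup.mk0 P = 1 := by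
    have hc : (2 : ℕ).Coprime (Nat.card (ClassGroup (𝓞 X))) := by
      rw [card_class]; exact (Nat.Prime.coprime_iff_not_dvd Nat.prime_two).2 hX
    exact (powCoprime hc.symm).injective (by simpa [powCoprime] using h1)
  rw [ClassGroup.mk0_eq_one_iff] at h2
  obtain ⟨α, hα⟩ := h2
  have hα' : 𝔭 = Ideal.span {α} := hα
  rw [hα', Ideal.span_singleton_pow, Ideal.span_singleton_eq_span_singleton] at h
  obtain ⟨u, hu⟩ := h
  refine ⟨α, u⁻¹, ?_⟩
  rw [← hu, Units.mul_inv_cancel_right]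

lemma es_ne0 (A : IntermediateField ℚ ℂ) (h : qa ∈ A) : es A h ≠ 0 := fun h' ↦ by
  have := es_sq A h
  rw [h'] at this
  norm_num at this

/-- For `c ≡ 3 (mod 4)`, the prime above `√2` ramifies in `E`, and as `E` has odd class number, `√2` is a
unit times a square there. -/
lemma v_mL_ne [hy : Hyp p c d z] (hc4 : c % 4 = 3) (hE : ¬ 2 ∣ classNumber (fE c d)) [IsTotallyReal (fP p c d)] [IsCMField (Lfield p c d)] :
    padicValNat 2 (mm (Lfield p c d)) = 3 := by
  obtain ⟨𝔭, h𝔭⟩ := K_prime (c := -c) (d := -d) (es fk ak) (es_sq _ _) (by omega) (er _ (rE c d))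
    ((er_sq z fk _ (rE c d) ak).trans (by congr 1; simp only [pE, Int.cast_neg]; ring))
  rw [alg_es fk (fE c d) ak (aE c d)] at h𝔭
  obtain ⟨α, v, hα⟩ := principal_of_sq hE 𝔭 _ (es_ne0 _ _) h𝔭
  refine val_eq (mm_eight_up (fin_L z) (es _ (aP p c d)) (es_sq _ _) (ei _ (iL p c d) : 𝓞 (Lfield p c d)) (by rw [← cpow, ei_sq, cneg, cone])
    (algebraMap (𝓞 (fE c d)) (𝓞 (fP p c d)) α) (Units.map (algebraMap (𝓞 (fE c d)) (𝓞 (fP p c d))).toMonoidHom v) ?_) ?_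
  · rw [← map_pow, hα, map_mul, alg_es _ (fP p c d) _ (aP p c d)]; rfl
  · intro h
    obtain ⟨x, t, ht, hx⟩ := mm_sixteen (fin_L z) h
    exact not_sixteen_aux (fin_P z) (es _ (aF p)) (es_sq _ _) (sqf_F z) _ (er _ (rP p c d)) (er_sq z (fF p) _ (rP p c d) (aF p))
      (er_ne _ _ _ (r_F z)) (pE_cop (by omega) d _ (es_sq _ _)) x t ht hx

/-- The class number relation with the totally real class numbers still present. -/
lemma master [hy : Hyp p c d z] [IsTotallyReal fk] [IsTotallyReal (fF p)] [IsTotallyReal (fP p c d)] [IsCMField (Qmpi z)] [IsCMField (kstar p)]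
    [IsCMField (Lfield p c d)] (hmL : mm (Lfield p c d) ≠ 0) :
    2 * padicValNat 2 (classNumber (Lfield p c d)) + padicValNat 2 (discr (fP p c d)).natAbs + 2 * padicValNat 2 (classNumber (fF p))
      + padicValNat 2 (discr (kstar p)).natAbs + 8 + 2 * padicValNat 2 (discr (Qmpi z)).natAbs =
    2 * padicValNat 2 (classNumber (kstar p)) + padicValNat 2 (discr (fF p)).natAbs + 4 * padicValNat 2 (classNumber (Qmpi z))
      + 2 * padicValNat 2 (discr fk).natAbs + 2 * padicValNat 2 (mm (Lfield p c d)) + 2 * padicValNat 2 (classNumber (fP p c d))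
      + padicValNat 2 (discr (Lfield p c d)).natAbs := by
  have h := nat_rel (fin_K z) (fin_ks (p := p)) (fin_L z) fin_k (deg_F z) (deg_P z) (residues z)
  have h1 := v_mks z
  have h2 := v_mK z
  have hmK : mm (Qmpi z) ≠ 0 := fun h0 ↦
    K_mm (fin_K z) fin_k (es fk ak) (es_sq _ _) hy.hp hy.hcd (ez z _ (zK z)) (ez_sq z _ _ _ _) (by rw [h0]; exact dvd_zero _)
  have hmks : mm (kstar p) ≠ 0 := fun h0 ↦ by rw [h0] at h1; simp at h1
  have hd : ∀ A : IntermediateField ℚ ℂ, [NumberField A] → (discr A).natAbs ≠ 0 := fun A _ ↦ Int.natAbs_ne_zero.2 (discr_ne_zero A)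
  have hh : ∀ A : IntermediateField ℚ ℂ, [NumberField A] → classNumber A ≠ 0 := fun A _ ↦ classNumber_ne_zero A
  have h3 := val_rel ⟨hh _, hd _, hmks, hh _, hd _, hmK, hh _, hd _, hh _, hd _, hh _, hd _, hmL, hh _, hd _⟩ h
  rw [h1, h2, base_classNumber fin_k (es fk ak) (es_sq _ _)] at h3
  rw [padicValNat.one] at h3
  omega

end vals
end H15

/-! ### The two cases -/

namespace H15
open Filter Topology

section fin
variable {p : ℕ} {c d : ℤ} (z : ℂ)

/-- The case `(2/p)₄ = (p/2)₄`. -/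
lemma main_eq [hy : Hyp p c d z] (hc4 : c % 4 = 1) :
    padicValNat 2 (classNumber (Lfield p c d)) + 3 = padicValNat 2 (classNumber (kstar p)) + 2 * padicValNat 2 (classNumber (Qmpi z)) := by
  haveI := k_real; haveI := F_tr z; haveI := P_tr z; haveI := K_cm z; haveI := ks_cm z; haveI := L_cm z
  have hm := v_mL_eq z hc4
  have h := master z (fun h0 ↦ by rw [h0] at hm; simp at hm)
  have d1 := disc_r z hc4 (kstar p) (Lfield p c d) (fin_Lks z) (aks p) (rL p c d) (r_ks z)
  have d2 := disc_r z hc4 (fF p) (fP p c d) (fin_P z) (aF p) (rP p c d) (r_F z)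
  have d3 := disc_b z fk (fF p) (fin_F z) (bF p) (b_k z)
  have d4 := disc_r z hc4 (fN p z) (Lfield p c d) (fin_LN z) (aN p z) (rL p c d) (r_N z)
  have d5 := disc_b z (Qmpi z) (fN p z) (fin_NK z) (bN p z) (b_K z)
  obtain ⟨o, ho, e⟩ := unram_class (fin_P z) (places_real (fin_P z))
    (unram_pair (fin_P z) (er _ (rP p c d)) (er' z _ (div_mem (bP p c d) (rP p c d))) _ _ _ _ (er_sq z (fF p) _ _ (aF p))
      (er'_sq z (fF p) _ _ (aF p)) (pE_one hc4 d _) (pE_one hc4 (-d) _) (pE_coprime hy.hp (by have := hy.hp8; omega) hy.hcd _ (es_sq _ _))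
      (er_ne _ _ _ (r_F z)) (er'_ne z _ _ _ (r'_not' z (bF p) (r_F z))))
    (F_cyc (fin_F z) fin_k (es fk ak) (es_sq _ _) hy.hp hy.hp8 hy.hcd (eb _ (bF p)) (eb_sq _ _))
  have ev := congrArg (padicValNat 2) e
  have ho0 : o ≠ 0 := by rintro rfl; exact ho (dvd_zero _)
  rw [padicValNat.mul (classNumber_ne_zero _) two_ne_zero, padicValNat.mul (classNumber_ne_zero _) ho0, val_odd ho, padicValNat.self (by norm_num)] at ev
  omega

lemma z_ks [hy : Hyp p c d z] : z ∉ kstar p := fun h ↦ r_ks z (r_of z (mul_mem h (iks p)))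
lemma z_P [hy : Hyp p c d z] : z ∉ fP p c d := fun h ↦ i_P (i_of z (rP p c d) h)

/-- The case `(2/p)₄ ≠ (p/2)₄`. -/
lemma main_ne [hy : Hyp p c d z] (hc4 : c % 4 = 3) (hne : ¬ ((2 : ZMod p) ^ ((p - 1) / 4) = 1 ↔ (-1 : ℤ) ^ ((p - 1) / 8) = 1)) :
    padicValNat 2 (classNumber (Lfield p c d)) + 1 = padicValNat 2 (classNumber (kstar p)) := by
  haveI := k_real; haveI := F_tr z; haveI := P_tr z; haveI := K_cm z; haveI := ks_cm z; haveI := L_cm z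
  haveI := E_tr z
  haveI : Fact p.Prime := ⟨hy.hp⟩
  have oE := E_odd (fin_E z) fin_k (es fk ak) (es_sq _ _) hy.hp8 hy.hcd hy.hc hne (er _ (rE c d)) (er_sq z _ _ _ _)
  have oF := F_odd (fin_F z) fin_k (es fk ak) (es_sq _ _) hy.hp8 hy.hcd hne (eb _ (bF p)) (eb_sq _ _)
  have oK := K_odd (fin_K z) fin_k (es fk ak) (es_sq _ _) hy.hp hy.hcd hy.hc hc4 (ez z _ (zK z)) (ez_sq z _ _ _ _)
  have oP := P_odd (fin_PE z) (es _ (aE c d)) (es_sq _ _) (d := -d) hy.hp8 (hcd' z) hne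
    (by
      have := absNorm_ext (fin_E z) (pE c (-d) (es fk ak))
      rwa [map_pE, alg_es fk (fE c d) ak (aE c d), pE_absNorm fin_k _ (es_sq _ _) (hcd' z)] at this) oE
    (eb _ (bP p c d)) (er' z _ (div_mem (bP p c d) (rP p c d))) (eb_sq _ _) (er'_sq z (fE c d) _ _ (aE c d))
    (eb_ne _ _ _ (b_E z)) (er'_ne z _ _ _ (r'_not z (rE c d) (b_E z)))
  have hm := v_mL_ne z hc4 oE
  have h := master z (fun h0 ↦ by rw [h0] at hm; simp at hm)
  have d1 := disc_z z hc4 (kstar p) (Lfield p c d) (fin_Lks z) (aks p) (z_of z (rL p c d) (iL p c d)) (z_ks z)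
  have d2 := disc_z z hc4 (fP p c d) (Lfield p c d) (fin_L z) (aP p c d) (z_of z (rL p c d) (iL p c d)) (z_P z)
  have d3 := disc_b z fk (fF p) (fin_F z) (bF p) (b_k z)
  have d4 := disc_z z hc4 fk (Qmpi z) (fin_K z) ak (zK z) (z_k z)
  rw [val_odd oF, val_odd oK, val_odd oP, hm] at h
  omega

/-- `L / k*` is unramified, generated by `√π` as well as by `√π'`. -/
lemma ks_even [hy : Hyp p c d z] (hc4 : c % 4 = 1) : 1 ≤ padicValNat 2 (classNumber (kstar p)) := by
  haveI := tc_of_i _ (iks p); haveI := tc_of_i _ (iL p c d)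
  refine one_le_padicValNat_of_dvd (classNumber_ne_zero _) ?_
  have rm : qb p / qr c d ∈ Lfield p c d := div_mem (bL p c d) (rL p c d)
  exact unram_even (fin_Lks z) (places_complex (fin_Lks z))
    (unram_pair (fin_Lks z) (er _ (rL p c d)) (er' z _ rm) _ _ _ _ (er_sq z (kstar p) _ _ (aks p))
      (er'_sq z (kstar p) _ _ (aks p)) (pE_one hc4 d _) (pE_one hc4 (-d) _) (pE_coprime hy.hp (by have := hy.hp8; omega) hy.hcd _ (es_sq _ _))
      (er_ne _ _ _ (r_ks z)) (er'_ne z _ _ _ (r'_not' z (bks p) (r_ks z))))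

/-- `K(i) = K(√π)` is unramified over `K`. -/
lemma hK_even [hy : Hyp p c d z] (hc4 : c % 4 = 1) : 1 ≤ padicValNat 2 (classNumber (Qmpi z)) := by
  haveI := K_tc z
  refine one_le_padicValNat_of_dvd (classNumber_ne_zero _) ?_
  exact K_even (fin_M z) _ _ (pE_one hc4 d _) (er _ (rM c d)) (ei _ (iMm c d)) (er_sq z (Qmpi z) _ _ (aK z)) (ei_sq _ _)
    (er_ne _ _ _ (r_K z)) (ei_ne _ _ _ (i_K z))

/-- If both symbols are `-1`, the 2-class group of `K` has order two. -/
lemma hK_two [hy : Hyp p c d z] (hc4 : c % 4 = 1) (h : ¬ (-1 : ℤ) ^ ((p - 1) / 8) = 1) : padicValNat 2 (classNumber (Qmpi z)) = 1 := by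
  haveI : Fact p.Prime := ⟨hy.hp⟩
  have := K_two (fin_K z) fin_k (es fk ak) (es_sq _ _) hy.hp8 hy.hcd hy.hc hc4 h (ez z _ (zK z)) (ez_sq z _ _ _ _)
  exact val_eq (by simpa using this.1) (by simpa using this.2)

/-- The order of a 2-Sylow subgroup of the class group is the 2-part of the class number. -/
lemma syl_card (A : IntermediateField ℚ ℂ) [NumberField A] (P : Sylow 2 (ClassGroup (𝓞 A))) :
    Nat.card P = 2 ^ padicValNat 2 (classNumber A) := by
  rw [Sylow.card_eq_multiplicity, card_class, Nat.factorization_def _ Nat.prime_two]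

/-- For positive `c` and `d`, `c ≡ 1 (mod 4)` exactly when `(2/p)₄ = (p/2)₄`. -/
lemma c_mod [hy : Hyp p c d z] (hd : 0 < d) : c % 4 = 1 ↔ ((2 : ZMod p) ^ ((p - 1) / 4) = 1 ↔ (-1 : ℤ) ^ ((p - 1) / 8) = 1) := by
  haveI : Fact p.Prime := ⟨hy.hp⟩
  obtain ⟨c', rfl⟩ := Int.eq_ofNat_of_zero_le hy.hc.le
  obtain ⟨d', rfl⟩ := Int.eq_ofNat_of_zero_le hd.le
  rw [← cong_equal hy.hp8 c' d' (by have := hy.hc; omega) (by omega) hy.hcd]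
  omega

end fin
end H15

theorem statement_15 (p : ℕ) (hp : p.Prime) (hp8 : p % 8 = 1)
    (c d : ℤ) (hc : 0 < c) (hd : 0 < d) (hcd : (p : ℤ) = c ^ 2 - 32 * d ^ 2)
    -- z = √(−π) :
    (z : ℂ) (hz : z ^ 2 = -((c : ℂ) + 4 * (d : ℂ) * (Real.sqrt 2 : ℂ))) :
    ∀ (P : Sylow 2 (ClassGroup (𝓞 (Qmpi z))))
      (PL : Sylow 2 (ClassGroup (𝓞 (Lfield p c d))))
      (Pk : Sylow 2 (ClassGroup (𝓞 (kstar p)))),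
      (((2 : ZMod p) ^ ((p - 1) / 4) = 1 ∧ (-1 : ℤ) ^ ((p - 1) / 8) = 1) →
        Nat.card PL = (Nat.card P / 2) ^ 2 * (Nat.card Pk / 2)) ∧
      (¬ ((2 : ZMod p) ^ ((p - 1) / 4) = 1 ∧ (-1 : ℤ) ^ ((p - 1) / 8) = 1) →
        Nat.card PL = Nat.card Pk / 2) := by
  intro P PL Pk
  haveI hy : H15.Hyp p c d z := ⟨hp, hp8, hc, hd.ne', hcd, hz⟩
  have hcm := H15.c_mod z hd
  have hodd := H15.c_odd z
  rw [H15.syl_card, H15.syl_card, H15.syl_card]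
  have half : ∀ n, 1 ≤ n → 2 ^ n / 2 = 2 ^ (n - 1) := by
    intro n hn
    obtain ⟨m, rfl⟩ := Nat.exists_eq_add_of_le' hn
    rw [pow_succ, Nat.mul_div_cancel _ two_pos, Nat.add_sub_cancel]
  constructor
  · rintro ⟨h1, h2⟩
    have h4 : c % 4 = 1 := hcm.2 (by tauto)
    have e := H15.main_eq z h4
    have e1 := H15.ks_even z h4
    have e2 := H15.hK_even z h4
    rw [half _ e1, half _ e2, ← pow_mul, ← pow_add]
    congr 1
    omega
  · intro hn
    suffices h : padicValNat 2 (classNumber (Lfield p c d)) + 1 = padicValNat 2 (classNumber (kstar p)) by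
      rw [← h, half _ (by omega), Nat.add_sub_cancel]
    by_cases h4 : c % 4 = 1
    · have e := H15.main_eq z h4
      have e2 := H15.hK_two z h4 (by have := hcm.1 h4; tauto)
      omega
    · exact H15.main_ne z (by omega) (fun h ↦ h4 (hcm.2 h))
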